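/- The sequence of functionals {𝓘_ε}_{ε>0} is equicoercive on the metric space (𝓜, d_𝓜) and, as ε→0, Γ-converges in 𝓜 to the functional 𝓘(μ) = sup_{φ∈C_c^∞((0,T)×ℝ)} [ −⟨⟨μ(ι),φ_t⟩⟩ − ⟨⟨μ(f),φ_x⟩⟩ − (1/2)⟨⟨μ(σ)φ_x,φ_x⟩⟩ ]. -/

import Mathlib

/-!
The functional `𝓘_ε` is a supremum over test functions `φ` of expressions that, after the viscous
term is integrated by parts through a primitive of `D`, are affine in the Young measure `δ_u`
(`testExpr`, resting on the weak chain rule `chain_rule`).  All three assertions start from this.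

*Equicoercivity.*  A bound on `𝓘_ε` controls the time increments of `x ↦ ∫₀ˣ μ(ι)`, uniformly in
`ε` (`exists_KZ`, obtained by testing with `α(t) ψ(x)` and scaling `ψ`).  The sets `KZ` of Young
measures with a given modulus of continuity of these potentials are compact for `d_𝓜`: Prokhorov's
theorem gives a weak* limit kernel, and weak convergence of equicontinuous potentials is uniform in
time, hence holds in `𝒰` (`seqCompact_KZ`).

*Γ-liminf.*  For fixed `φ` the expressions pass to the limit along weak* convergent sequences and
the viscous term is `O(ε)` (`gammaLiminf`).

*Γ-limsup.*  Let `𝓘(μ) ≤ c`.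
1. By Riesz representation the conservation law `∂ₜ μ(ι) + ∂ₓ (μ(f) + μ(σ) P) = 0` holds for some
   `P` with `∫ μ(σ) P² ≤ 2 c` (`exists_riesz`).
2. Contracting the strip and mollifying turns the pair (density, current) into `(w_x, -w_t)` with a
   smooth potential `w`; Cauchy-Schwarz preserves the cost (`layerA`).  Mixing with the state `1/2`
   makes the mobility uniformly positive (`layerB`).  Replacing the averages by finite mixtures of
   states `Λ i ∈ (0,1)` with continuous weights `θ i`, and cutting off the potential for large `|x|`,
   gives `layerC`.
3. With `E = (-w_t - ∑ θ f(Λ)) / ∑ θ σ(Λ)`, the gradient of `w` is the mixture, with weights `θ i`, of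
   the gradients `(-f(Λ i) - σ(Λ i) E, Λ i)`, and `∑ θ (current - f)² / σ = (∑ θ σ(Λ)) E²`.  Any two
   gradients on the plane are rank-one connected, so the mixture is realized by oscillations of a
   smooth potential: one atom at a time on a small ball (`relax_tile`), then on a packing by balls
   (`relax_field`).  This yields a smooth `u = w_x` with values in a compact subset of `(0,1)`, close
   to `μ` as a Young measure, whose inviscid cost is close to that of `μ`
   (`exists_approx_potential`).
4. For this fixed smooth `u` the viscous correction is `O(ε)` (`Ieps_potU_le`, `exists_recovery`), and
   a diagonal choice over countably many tests gives the recovery sequence; its barycenters converge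
   in `𝒰` by the compactness of the sublevels (`gammaLimsup`).
-/

open MeasureTheory Set Filter Topology
open scoped ENNReal Classical

noncomputable section

namespace GammaSCL

/-! ### Spatial test functions and the metric on `U` -/

/-- Smooth compactly supported test functions on `ℝ`, supported in `(-N, N)`. -/
structure STest (N : ℝ) where
  toFun : ℝ → ℝ
  smooth : ContDiff ℝ (⊤ : ℕ∞) toFun
  cpt : HasCompactSupport toFun
  supp : Function.support toFun ⊆ Ioo (-N) N

/-- The negative Sobolev seminorm `‖w‖_{-1,N}`. -/
def negNorm (N : ℝ) (w : ℝ → ℝ) : ℝ :=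
  sSup { r : ℝ | ∃ φ : STest N, (∫ x, deriv φ.toFun x ^ 2) = 1 ∧ r = ∫ x, w x * φ.toFun x }

/-- The metric `d_U` on the space `U` of measurable `[0,1]`-valued functions. -/
def dU (u v : ℝ → ℝ) : ℝ :=
  ∑' n : ℕ, (2 : ℝ)⁻¹ ^ (n + 1) *
    (negNorm ((n : ℝ) + 1) (fun x => u x - v x) /
      (1 + negNorm ((n : ℝ) + 1) (fun x => u x - v x)))

/-- The space `𝒰 = C([0,T]; U)`. -/
structure cU (T : ℝ) where
  toFun : ℝ × ℝ → ℝ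
  meas : Measurable toFun
  mem01 : ∀ p, toFun p ∈ Icc (0:ℝ) 1
  cont : ∀ t₀ ∈ Icc (0:ℝ) T, ∀ δ > 0, ∃ ζ > 0, ∀ t ∈ Icc (0:ℝ) T,
    |t - t₀| < ζ → dU (fun x => toFun (t, x)) (fun x => toFun (t₀, x)) < δ

/-- The uniform metric `d_𝒰` on `𝒰`. -/
def dcU (T : ℝ) (u v : cU T) : ℝ :=
  sSup { r : ℝ | ∃ t ∈ Icc (0:ℝ) T,
    r = dU (fun x => u.toFun (t, x)) (fun x => v.toFun (t, x)) }

/-- The metric `d_𝒳` on `𝒳`. -/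
def dX (T : ℝ) (u v : cU T) : ℝ :=
  (∑' n : ℕ, (2 : ℝ)⁻¹ ^ (n + 1) *
    ∫ p in Icc (0:ℝ) T ×ˢ Icc (-((n : ℝ) + 1)) ((n : ℝ) + 1), |u.toFun p - v.toFun p|) +
  dcU T u v

/-! ### Space-time test functions -/

/-- Smooth test functions compactly supported in `(0,T) × ℝ`. -/
structure TTest (T : ℝ) where
  toFun : ℝ × ℝ → ℝ
  smooth : ContDiff ℝ (⊤ : ℕ∞) toFun
  cpt : HasCompactSupport toFun
  supp : Function.support toFun ⊆ Ioo (0 : ℝ) T ×ˢ (univ : Set ℝ)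

/-- Smooth test functions compactly supported in `[0,T] × ℝ` (no vanishing at `t = 0, T`). -/
structure TTestC where
  toFun : ℝ × ℝ → ℝ
  smooth : ContDiff ℝ (⊤ : ℕ∞) toFun
  cpt : HasCompactSupport toFun

/-- Partial derivative in `t`. -/
def ptF (ψ : ℝ × ℝ → ℝ) : ℝ × ℝ → ℝ := fun p => fderiv ℝ ψ p (1, 0)
/-- Partial derivative in `x`. -/
def pxF (ψ : ℝ × ℝ → ℝ) : ℝ × ℝ → ℝ := fun p => fderiv ℝ ψ p (0, 1)

/-- The `L²([0,T] × ℝ)` inner product `⟨⟨g, h⟩⟩`. -/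
def pair (T : ℝ) (g h : ℝ × ℝ → ℝ) : ℝ :=
  ∫ p in Icc (0:ℝ) T ×ˢ (univ : Set ℝ), g p * h p

/-! ### Weak derivatives -/

/-- Locally square integrable on `[0,T] × ℝ`. -/
def L2loc (T : ℝ) (w : ℝ × ℝ → ℝ) : Prop :=
  Measurable w ∧ ∀ R > 0, IntegrableOn (fun p => w p ^ 2) (Icc (0:ℝ) T ×ˢ Icc (-R) R)

/-- `w` is the weak `x`-derivative of `u`. -/
def HasWeakDx (T : ℝ) (u w : ℝ × ℝ → ℝ) : Prop :=
  ∀ φ : TTest T, pair T u (pxF φ.toFun) = - pair T w φ.toFun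

/-- `u` admits a locally square integrable weak `x`-derivative. -/
def hasDx (T : ℝ) (u : ℝ × ℝ → ℝ) : Prop := ∃ w, L2loc T w ∧ HasWeakDx T u w

/-- A choice of weak `x`-derivative. -/
def wDx (T : ℝ) (u : ℝ × ℝ → ℝ) : ℝ × ℝ → ℝ :=
  if h : hasDx T u then h.choose else 0

/-! ### The parabolic cost functional -/

/-- The expression inside the supremum defining `I_ε`. -/
def IexprW (f D σ : ℝ → ℝ) (T ε : ℝ) (u w : ℝ × ℝ → ℝ) (φ : TTest T) : ℝ :=
  - pair T u (ptF φ.toFun) - pair T (fun p => f (u p)) (pxF φ.toFun)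
    + ε / 2 * pair T (fun p => D (u p) * w p) (pxF φ.toFun)
    - 1 / 2 * pair T (fun p => σ (u p) * pxF φ.toFun p) (pxF φ.toFun)

/-- The cost functional `I_ε : 𝒰 → [0,+∞]`. -/
def Ieps (f D σ : ℝ → ℝ) (T ε : ℝ) (u : cU T) : ℝ≥0∞ :=
  if hasDx T u.toFun then
    ⨆ φ : TTest T, ENNReal.ofReal (IexprW f D σ T ε u.toFun (wDx T u.toFun) φ)
  else ⊤

/-- The rescaled cost functional `H_ε := ε⁻¹ I_ε`. -/
def Heps (f D σ : ℝ → ℝ) (T ε : ℝ) (u : cU T) : ℝ≥0∞ :=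
  ENNReal.ofReal ε⁻¹ * Ieps f D σ T ε u

/-! ### Young measures -/

/-- The space `𝓜` of Young measures. -/
structure YM (T : ℝ) where
  m : ℝ × ℝ → Measure ℝ
  prob : ∀ p, IsProbabilityMeasure (m p)
  supp01 : ∀ p, m p (Icc (0:ℝ) 1)ᶜ = 0
  meas : ∀ F : ℝ → ℝ, Continuous F → Measurable fun p => ∫ l, F l ∂ m p
  bar_mem : ∀ p, (∫ l, l ∂ m p) ∈ Icc (0:ℝ) 1
  bar_cont : ∀ t₀ ∈ Icc (0:ℝ) T, ∀ δ > 0, ∃ ζ > 0, ∀ t ∈ Icc (0:ℝ) T,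
    |t - t₀| < ζ →
      dU (fun x => ∫ l, l ∂ m (t, x)) (fun x => ∫ l, l ∂ m (t₀, x)) < δ

/-- The moment `μ(F)`. -/
def YM.mom {T : ℝ} (μ : YM T) (F : ℝ → ℝ) : ℝ × ℝ → ℝ := fun p => ∫ l, F l ∂ μ.m p

/-- The barycenter `μ(ι)` of a Young measure, as an element of `𝒰`. -/
def YM.bar {T : ℝ} (μ : YM T) : cU T :=
  ⟨fun p => ∫ l, l ∂ μ.m p, μ.meas (fun l => l) continuous_id', μ.bar_mem, μ.bar_cont⟩

/-- The metric `d_𝓜 = d_w + d_𝒰(μ(ι), ν(ι))`. -/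
def dM (T : ℝ) (dw : YM T → YM T → ℝ) (μ ν : YM T) : ℝ :=
  dw μ ν + dcU T μ.bar ν.bar

/-- `dw` is a distance generating the weak* topology on Young measures. -/
def GeneratesWeakStar (T : ℝ) (dw : YM T → YM T → ℝ) : Prop :=
  (∀ μ ν, dw μ ν = dw ν μ) ∧ (∀ μ ν, 0 ≤ dw μ ν) ∧
  ∀ (μ : ℕ → YM T) (ν : YM T),
    Tendsto (fun n => dw (μ n) ν) atTop (𝓝 0) ↔
      ∀ g : ℝ × (ℝ × ℝ) → ℝ, Continuous g → HasCompactSupport g →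
        Tendsto
          (fun n => ∫ p in Icc (0:ℝ) T ×ˢ (univ : Set ℝ), ∫ l, g (l, p) ∂ (μ n).m p)
          atTop
          (𝓝 (∫ p in Icc (0:ℝ) T ×ˢ (univ : Set ℝ), ∫ l, g (l, p) ∂ ν.m p))

/-- The lift `𝓘_ε` of `I_ε` to Young measures. -/
def calIeps (f D σ : ℝ → ℝ) (T ε : ℝ) (μ : YM T) : ℝ≥0∞ :=
  if h : ∃ u : cU T, ∀ p, μ.m p = Measure.dirac (u.toFun p) then
    Ieps f D σ T ε h.choose
  else ⊤

/-- The limiting functional `𝓘` on Young measures. -/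
def calI (f σ : ℝ → ℝ) (T : ℝ) (μ : YM T) : ℝ≥0∞ :=
  ⨆ φ : TTest T, ENNReal.ofReal
    (- pair T (μ.mom (fun l => l)) (ptF φ.toFun) - pair T (μ.mom f) (pxF φ.toFun)
      - 1 / 2 * pair T (fun p => μ.mom σ p * pxF φ.toFun p) (pxF φ.toFun))

/-! ### Γ-convergence via sequences -/

/-- Sequential compactness with respect to a distance function. -/
def SeqCompactIn {α : Type*} (d : α → α → ℝ) (K : Set α) : Prop :=
  ∀ x : ℕ → α, (∀ n, x n ∈ K) → ∃ y ∈ K, ∃ s : ℕ → ℕ, StrictMono s ∧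
    Tendsto (fun n => d (x (s n)) y) atTop (𝓝 0)

/-- Equicoercivity of a family of functionals. -/
def Equicoercive {α : Type*} (d : α → α → ℝ) (F : ℝ → α → ℝ≥0∞) : Prop :=
  ∀ M : ℝ, 0 < M → ∃ K : Set α, SeqCompactIn d K ∧
    ∀ ε ∈ Ioc (0:ℝ) 1, { x : α | F ε x ≤ ENNReal.ofReal M } ⊆ K

/-- The Γ-liminf inequality `Γ-liminf F_ε ≥ G`. -/
def GammaLiminfGE {α : Type*} (d : α → α → ℝ) (F : ℝ → α → ℝ≥0∞) (G : α → ℝ≥0∞) : Prop :=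
  ∀ (x : α) (e : ℕ → ℝ) (xs : ℕ → α), (∀ n, 0 < e n) → Tendsto e atTop (𝓝 0) →
    Tendsto (fun n => d (xs n) x) atTop (𝓝 0) →
    G x ≤ Filter.liminf (fun n => F (e n) (xs n)) atTop

/-- The Γ-limsup inequality `Γ-limsup F_ε ≤ G`. -/
def GammaLimsupLE {α : Type*} (d : α → α → ℝ) (F : ℝ → α → ℝ≥0∞) (G : α → ℝ≥0∞) : Prop :=
  ∀ (x : α) (e : ℕ → ℝ), (∀ n, 0 < e n) → Tendsto e atTop (𝓝 0) →
    ∃ xs : ℕ → α, Tendsto (fun n => d (xs n) x) atTop (𝓝 0) ∧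
      Filter.limsup (fun n => F (e n) (xs n)) atTop ≤ G x

/-- Γ-convergence of `F_ε` to `G`. -/
def GammaConvergesTo {α : Type*} (d : α → α → ℝ) (F : ℝ → α → ℝ≥0∞) (G : α → ℝ≥0∞) : Prop :=
  GammaLiminfGE d F G ∧ GammaLimsupLE d F G

/-! ### Entropies, entropy production, kinetic measures -/

/-- Weak solutions to `u_t + f(u)_x = 0`. -/
def IsWeakSolution (f : ℝ → ℝ) (T : ℝ) (u : ℝ × ℝ → ℝ) : Prop :=
  ∀ φ : TTest T, pair T u (ptF φ.toFun) + pair T (fun p => f (u p)) (pxF φ.toFun) = 0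

/-- Derivative within `[0,1]`. -/
def dIcc (g : ℝ → ℝ) : ℝ → ℝ := fun v => derivWithin g (Icc 0 1) v

/-- An entropy–entropy flux pair. -/
structure Entropy (f : ℝ → ℝ) where
  eta : ℝ → ℝ
  q : ℝ → ℝ
  smooth : ContDiffOn ℝ 2 eta (Icc 0 1)
  qcont : ContinuousOn q (Icc 0 1)
  flux : ∀ a ∈ Icc (0:ℝ) 1, ∀ b ∈ Icc (0:ℝ) 1,
    q b - q a = ∫ v in a..b, dIcc eta v * deriv f v

/-- The `η`-entropy production `℘_{η,u}(φ)`. -/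
def entProd (f : ℝ → ℝ) (T : ℝ) (E : Entropy f) (u : ℝ × ℝ → ℝ) (φ : TTest T) : ℝ :=
  - pair T (fun p => E.eta (u p)) (ptF φ.toFun) - pair T (fun p => E.q (u p)) (pxF φ.toFun)

/-- `‖℘_{η,u}‖_{TV,L}`. -/
def TVabs (f : ℝ → ℝ) (T : ℝ) (E : Entropy f) (L : ℝ) (u : ℝ × ℝ → ℝ) : ℝ≥0∞ :=
  ⨆ φ : { φ : TTest T // Function.support φ.toFun ⊆ Ioo (0:ℝ) T ×ˢ Ioo (-L) L ∧
          ∀ p, |φ.toFun p| ≤ 1 },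
    ENNReal.ofReal (entProd f T E u φ.1)

/-- `‖℘⁺_{η,u}‖_{TV,L}`. -/
def TVpos (f : ℝ → ℝ) (T : ℝ) (E : Entropy f) (L : ℝ) (u : ℝ × ℝ → ℝ) : ℝ≥0∞ :=
  ⨆ φ : { φ : TTest T // Function.support φ.toFun ⊆ Ioo (0:ℝ) T ×ˢ Ioo (-L) L ∧
          ∀ p, φ.toFun p ∈ Icc (0:ℝ) 1 },
    ENNReal.ofReal (entProd f T E u φ.1)

/-- Entropy-measure solutions: every entropy production extends to a Radon measure. -/
def EMsol (f : ℝ → ℝ) (T : ℝ) (u : cU T) : Prop :=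
  IsWeakSolution f T u.toFun ∧ ∀ E : Entropy f, ∀ L > 0, TVabs f T E L u.toFun ≠ ⊤

/-- `v`-derivative (within `[0,1]`) of a sampler. -/
def dv1 (θ : ℝ → ℝ × ℝ → ℝ) : ℝ → ℝ × ℝ → ℝ :=
  fun v p => derivWithin (fun w => θ w p) (Icc 0 1) v

/-- An entropy sampler together with a conjugated entropy flux sampler. -/
structure Sampler (f : ℝ → ℝ) (T : ℝ) where
  θ : ℝ → ℝ × ℝ → ℝ
  Q : ℝ → ℝ × ℝ → ℝ
  cpt : HasCompactSupport (Function.uncurry θ)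
  supp : Function.support (Function.uncurry θ) ⊆
    Icc (0:ℝ) 1 ×ˢ (Ioo (0:ℝ) T ×ˢ (univ : Set ℝ))
  smooth_p : ∀ v, ContDiff ℝ (⊤ : ℕ∞) (θ v)
  smooth_v : ∀ p, ContDiffOn ℝ 2 (fun v => θ v p) (Icc 0 1)
  cont0 : Continuous (Function.uncurry θ)
  cont1 : ContinuousOn (Function.uncurry (dv1 θ)) (Icc (0:ℝ) 1 ×ˢ (univ : Set (ℝ × ℝ)))
  cont2 : ContinuousOn (Function.uncurry (dv1 (dv1 θ))) (Icc (0:ℝ) 1 ×ˢ (univ : Set (ℝ × ℝ)))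
  Qsmooth : ∀ v, ContDiff ℝ 1 (Q v)
  Qflux : ∀ (p : ℝ × ℝ), ∀ a ∈ Icc (0:ℝ) 1, ∀ b ∈ Icc (0:ℝ) 1,
    Q b p - Q a p = ∫ v in a..b, dv1 θ v p * deriv f v

/-- The `ϑ`-sampled entropy production `P_{ϑ,u}`. -/
def Ptheta (f : ℝ → ℝ) (T : ℝ) (S : Sampler f T) (u : ℝ × ℝ → ℝ) : ℝ :=
  - ∫ p in Icc (0:ℝ) T ×ˢ (univ : Set ℝ),
      (fderiv ℝ (S.θ (u p)) p (1, 0) + fderiv ℝ (S.Q (u p)) p (0, 1))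

/-- `(ρp, ρn)` is a decomposition of the kinetic measure `ϱ_u` of a weak solution `u`. -/
def IsKineticMeasure (f : ℝ → ℝ) (T : ℝ) (u : ℝ × ℝ → ℝ)
    (ρp ρn : ℝ → Measure (ℝ × ℝ)) : Prop :=
  (∀ v, ρp v ((Ioo (0:ℝ) T ×ˢ (univ : Set ℝ))ᶜ) = 0 ∧
        ρn v ((Ioo (0:ℝ) T ×ˢ (univ : Set ℝ))ᶜ) = 0) ∧
  (∀ L > 0, ∃ C : ℝ≥0∞, C ≠ ⊤ ∧ ∀ v ∈ Icc (0:ℝ) 1,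
      ρp v (Icc (0:ℝ) T ×ˢ Icc (-L) L) + ρn v (Icc (0:ℝ) T ×ˢ Icc (-L) L) ≤ C) ∧
  (∀ g : ℝ × ℝ → ℝ, Continuous g → HasCompactSupport g →
      Measurable fun v => (∫ p, g p ∂ ρp v) - ∫ p, g p ∂ ρn v) ∧
  ∀ S : Sampler f T, Ptheta f T S u =
    ∫ v in Icc (0:ℝ) 1,
      ((∫ p, dv1 (dv1 S.θ) v p ∂ ρp v) - ∫ p, dv1 (dv1 S.θ) v p ∂ ρn v)

/-- The Γ-entropy cost functional `H`. -/
def Hfun (f D σ : ℝ → ℝ) (T : ℝ) (u : cU T) : ℝ≥0∞ :=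
  if IsWeakSolution f T u.toFun then
    ⨅ ρ : { ρ : (ℝ → Measure (ℝ × ℝ)) × (ℝ → Measure (ℝ × ℝ)) //
            IsKineticMeasure f T u.toFun ρ.1 ρ.2 },
      ∫⁻ v in Icc (0:ℝ) 1, ENNReal.ofReal (D v / σ v) * ρ.1.1 v univ
  else ⊤

/-- Entropic solutions. -/
def EntropicSol (f : ℝ → ℝ) (T : ℝ) (u : cU T) : Prop :=
  IsWeakSolution f T u.toFun ∧
  ∀ E : Entropy f, (∀ v ∈ Icc (0:ℝ) 1, 0 ≤ dIcc (dIcc E.eta) v) →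
    ∀ φ : TTest T, (∀ p, 0 ≤ φ.toFun p) → entProd f T E u.toFun φ ≤ 0

/-- There is no interval in which `f` is affine. -/
def NoAffinePiece (f : ℝ → ℝ) : Prop :=
  ∀ a b : ℝ, 0 ≤ a → a < b → b ≤ 1 →
    ¬ ∃ c d : ℝ, ∀ v ∈ Icc a b, f v = c * v + d

/-- Entropy-splittable solutions. -/
def Splittable (f : ℝ → ℝ) (T : ℝ) (u : cU T) : Prop :=
  EMsol f T u ∧
  ∃ Ep En : Set (ℝ × ℝ), IsClosed Ep ∧ IsClosed En ∧
    Ep ⊆ Icc (0:ℝ) T ×ˢ (univ : Set ℝ) ∧ En ⊆ Icc (0:ℝ) T ×ˢ (univ : Set ℝ) ∧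
    (∃ ρp ρn : ℝ → Measure (ℝ × ℝ), IsKineticMeasure f T u.toFun ρp ρn ∧
      ∀ᵐ v ∂(volume.restrict (Icc (0:ℝ) 1)), ρp v Epᶜ = 0 ∧ ρn v Enᶜ = 0) ∧
    ∀ L > 0, ∀ a b : ℝ, 0 ≤ a → a < b → b ≤ T →
      ∃ a' b' : ℝ, a ≤ a' ∧ a' < b' ∧ b' ≤ b ∧
        ∀ t ∈ Ioo a' b', ∀ x ∈ Icc (-L) L, (t, x) ∉ Ep ∩ En

/-- Nice solutions with respect to `σ`: the set `𝒮_σ`. -/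
def NiceSol (f D σ : ℝ → ℝ) (T : ℝ) (u : cU T) : Prop :=
  Splittable f T u ∧ Hfun f D σ T u ≠ ⊤ ∧
  ∀ L > 0, ∃ δ > 0,
    ∀ᵐ p ∂(volume.restrict (Icc (0:ℝ) T ×ˢ Icc (-L) L)), δ ≤ σ (u.toFun p)

/-- The relaxed functional `H̄`. -/
def Hbar (f D σ : ℝ → ℝ) (T : ℝ) (u : cU T) : ℝ≥0∞ :=
  ⨅ s : { s : ℕ → cU T // (∀ n, NiceSol f D σ T (s n)) ∧
          Tendsto (fun n => dX T (s n) u) atTop (𝓝 0) },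
    Filter.liminf (fun n => Hfun f D σ T (s.1 n)) atTop

/-- Continuity in time with values in `L¹_loc(ℝ)`. -/
def ContL1 (T : ℝ) (u : ℝ × ℝ → ℝ) : Prop :=
  ∀ t₀ ∈ Icc (0:ℝ) T, ∀ R > 0, ∀ δ > 0, ∃ ζ > 0, ∀ t ∈ Icc (0:ℝ) T,
    |t - t₀| < ζ → (∫ x in Icc (-R) R, |u (t, x) - u (t₀, x)|) < δ

/-! ### The relaxation `R_{f,σ}` and the Γ-limit `I` on `𝒰` -/

/-- The function `R_{f,σ}(w,c)`. -/
def Rfs (f σ : ℝ → ℝ) (w c : ℝ) : ℝ≥0∞ :=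
  ⨅ ν : { ν : Measure ℝ // IsProbabilityMeasure ν ∧ ν (Icc (0:ℝ) 1)ᶜ = 0 ∧ (∫ l, l ∂ν) = w },
    if (∫ l, σ l ∂ν.1) = 0 then (if (∫ l, f l ∂ν.1) = c then 0 else ⊤)
    else ENNReal.ofReal ((∫ l, f l ∂ν.1 - c) ^ 2 / ∫ l, σ l ∂ν.1)

/-- The Γ-limit `I` of `I_ε` on `𝒰`. -/
def Ilim (f σ : ℝ → ℝ) (T : ℝ) (u : cU T) : ℝ≥0∞ :=
  ⨅ Φ : { Φ : ℝ × ℝ → ℝ // L2loc T Φ ∧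
          ∀ φ : TTest T, - pair T Φ (pxF φ.toFun) = pair T u.toFun (ptF φ.toFun) },
    ∫⁻ p in Icc (0:ℝ) T ×ˢ (univ : Set ℝ), Rfs f σ (u.toFun p) (Φ.1 p)

/-! ### The classes `𝓜_g` and `𝓜₀` -/

/-- The class `𝓜_g`. -/
def Mg (f σ : ℝ → ℝ) (T : ℝ) (μ : YM T) : Prop :=
  calI f σ T μ ≠ ⊤ ∧
  ∃ r > 0, ∃ L > 0, ∃ ν : Measure ℝ, IsProbabilityMeasure ν ∧ ν (Icc (0:ℝ) 1)ᶜ = 0 ∧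
    (∀ p : ℝ × ℝ, p.1 ∈ Icc (0:ℝ) T → r ≤ μ.mom (fun l => l) p ∧ r ≤ μ.mom σ p) ∧
    ∀ p : ℝ × ℝ, p.1 ∈ Icc (0:ℝ) T → L < |p.2| → μ.m p = ν

/-- The class `𝓜₀` of Dirac masses of smooth functions in `𝓜_g`. -/
def M0 (f σ : ℝ → ℝ) (T : ℝ) (μ : YM T) : Prop :=
  Mg f σ T μ ∧ ∃ u : ℝ × ℝ → ℝ, ContDiff ℝ 1 u ∧ (∀ p, u p ∈ Icc (0:ℝ) 1) ∧
    ∀ p, μ.m p = Measure.dirac (u p)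

/-! ### The spaces `𝓓¹_a` and the Riesz representation of the cost -/

/-- `P` represents (the gradient of) an element of the Hilbert space `𝓓¹_a`. -/
def InD1 (T : ℝ) (a P : ℝ × ℝ → ℝ) : Prop :=
  Measurable P ∧ IntegrableOn (fun p => a p * P p ^ 2) (Icc (0:ℝ) T ×ˢ (univ : Set ℝ)) ∧
  ∀ δ > 0, ∃ φ : TTestC,
    (∫ p in Icc (0:ℝ) T ×ˢ (univ : Set ℝ), a p * (P p - pxF φ.toFun p) ^ 2) < δ

/-- The extended linear functional `ℓ^u_ε(φ)` with boundary terms. -/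
def ellC (f D : ℝ → ℝ) (T ε : ℝ) (u w : ℝ × ℝ → ℝ) (φ : TTestC) : ℝ :=
  (∫ x, u (T, x) * φ.toFun (T, x)) - (∫ x, u (0, x) * φ.toFun (0, x))
    - pair T u (ptF φ.toFun) - pair T (fun p => f (u p)) (pxF φ.toFun)
    + ε / 2 * pair T (fun p => D (u p) * w p) (pxF φ.toFun)

/-- `u` is a weak solution to `u_t + f(u)_x = (ε/2)(D(u)u_x)_x - (σ(u)Ψ_x)_x` with `Ψ_x = P`. -/
def rieszEq (f D σ : ℝ → ℝ) (T ε : ℝ) (u w P : ℝ × ℝ → ℝ) : Prop :=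
  ∀ φ : TTestC,
    (∫ x, u (T, x) * φ.toFun (T, x)) - (∫ x, u (0, x) * φ.toFun (0, x))
      - (pair T u (ptF φ.toFun)
        + pair T (fun p => f (u p) - ε / 2 * (D (u p) * w p) + σ (u p) * P p)
            (pxF φ.toFun)) = 0

/-- `μ(ι)_t + μ(f)_x = -(μ(σ) P)_x` weakly. -/
def calIEq (f σ : ℝ → ℝ) (T : ℝ) (μ : YM T) (P : ℝ × ℝ → ℝ) : Prop :=
  ∀ φ : TTest T,
    - pair T (μ.mom (fun l => l)) (ptF φ.toFun) - pair T (μ.mom f) (pxF φ.toFun)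
      = pair T (fun p => μ.mom σ p * P p) (pxF φ.toFun)

/-! ### The cost functional on `L¹_loc` -/

/-- Locally integrable on `[0,T] × ℝ`. -/
def L1loc (T : ℝ) (u : ℝ × ℝ → ℝ) : Prop :=
  Measurable u ∧ ∀ R > 0, IntegrableOn u (Icc (0:ℝ) T ×ˢ Icc (-R) R)

/-- The cost functional `Î_ε` on `L¹_loc([0,T] × ℝ)`. -/
def Ihat (f D σ : ℝ → ℝ) (T ε : ℝ) (u : ℝ × ℝ → ℝ) : ℝ≥0∞ :=
  if L2loc T (fun p => f (u p)) ∧ hasDx T u then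
    ⨆ φ : TTest T, ENNReal.ofReal (IexprW f D σ T ε u (wDx T u) φ)
  else ⊤

/-! ### Hamilton–Jacobi equations -/

/-- The space `𝓑` (representatives of equivalence classes modulo additive constants). -/
structure HJ (T : ℝ) where
  b : ℝ × ℝ → ℝ
  meas : Measurable b
  sq : ∀ t ∈ Icc (0:ℝ) T, ∀ R > 0, IntegrableOn (fun x => b (t, x) ^ 2) (Icc (-R) R)
  contL2 : ∀ t₀ ∈ Icc (0:ℝ) T, ∀ R > 0, ∀ δ > 0, ∃ ζ > 0, ∀ t ∈ Icc (0:ℝ) T,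
    |t - t₀| < ζ → (∫ x in Icc (-R) R, (b (t, x) - b (t₀, x)) ^ 2) < δ
  ux : cU T
  hux : ∀ φ : TTest T, pair T b (pxF φ.toFun) = - pair T ux.toFun φ.toFun

/-- The part of the distance on `𝓑` involving the infimum over additive constants. -/
def dConst (T : ℝ) (b1 b2 : HJ T) : ℝ :=
  sInf { r : ℝ | ∃ c : ℝ, r = sSup { s : ℝ | ∃ t ∈ Icc (0:ℝ) T,
    s = ∑' n : ℕ, (2 : ℝ)⁻¹ ^ (n + 1) *
      Real.sqrt (∫ x in Icc (-((n : ℝ) + 1)) ((n : ℝ) + 1),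
        (b1.b (t, x) - b2.b (t, x) + c) ^ 2) } }

/-- The metric `d_𝓑`. -/
def dB (T : ℝ) (b1 b2 : HJ T) : ℝ := dcU T b1.ux b2.ux + dConst T b1 b2

/-- The metric `d_𝒴`. -/
def dY (T : ℝ) (b1 b2 : HJ T) : ℝ := dX T b1.ux b2.ux + dConst T b1 b2

/-- The expression inside the supremum defining `J_ε`. -/
def JexprW (f D σ : ℝ → ℝ) (T ε : ℝ) (bb uxf w2 : ℝ × ℝ → ℝ) (φ : TTest T) : ℝ :=
  - pair T bb (ptF φ.toFun) + pair T (fun p => f (uxf p)) φ.toFun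
    - ε / 2 * pair T (fun p => D (uxf p) * w2 p) φ.toFun
    - 1 / 2 * pair T (fun p => σ (uxf p) * φ.toFun p) φ.toFun

/-- The cost functional `J_ε` on `𝓑`. -/
def Jeps (f D σ : ℝ → ℝ) (T ε : ℝ) (b : HJ T) : ℝ≥0∞ :=
  if hasDx T b.ux.toFun then
    ⨆ φ : TTest T, ENNReal.ofReal (JexprW f D σ T ε b.b b.ux.toFun (wDx T b.ux.toFun) φ)
  else ⊤

/-- The rescaled cost functional `K_ε := ε⁻¹ J_ε`. -/
def Keps (f D σ : ℝ → ℝ) (T ε : ℝ) (b : HJ T) : ℝ≥0∞ :=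
  ENNReal.ofReal ε⁻¹ * Jeps f D σ T ε b

/-- Weak solutions to `b_t + f(b_x) = 0`. -/
def HJWeakSol (f : ℝ → ℝ) (T : ℝ) (b : HJ T) : Prop :=
  ∀ φ : TTest T, - pair T b.b (ptF φ.toFun) + pair T (fun p => f (b.ux.toFun p)) φ.toFun = 0

/-- The compatibility condition `b_x = μ(ι)` defining `𝓐`. -/
def APred (T : ℝ) (bm : HJ T × YM T) : Prop :=
  ∀ᵐ p ∂(volume.restrict (Icc (0:ℝ) T ×ˢ (univ : Set ℝ))),
    bm.1.ux.toFun p = bm.2.mom (fun l => l) p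

/-- The metric `d_𝓐`. -/
def dA (T : ℝ) (dw : YM T → YM T → ℝ)
    (x y : { bm : HJ T × YM T // APred T bm }) : ℝ :=
  dB T x.1.1 y.1.1 + dM T dw x.1.2 y.1.2

/-- The lift `𝓙_ε` of `J_ε` to `𝓐`. -/
def calJeps (f D σ : ℝ → ℝ) (T ε : ℝ) (x : { bm : HJ T × YM T // APred T bm }) : ℝ≥0∞ :=
  if ∀ p, x.1.2.m p = Measure.dirac (x.1.1.ux.toFun p) then Jeps f D σ T ε x.1.1 else ⊤

/-- The limiting functional `𝓙` on `𝓐`. -/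
def calJ (f σ : ℝ → ℝ) (T : ℝ) (x : { bm : HJ T × YM T // APred T bm }) : ℝ≥0∞ :=
  ⨆ φ : TTest T, ENNReal.ofReal
    (- pair T x.1.1.b (ptF φ.toFun) + pair T (x.1.2.mom f) φ.toFun
      - 1 / 2 * pair T (fun p => x.1.2.mom σ p * φ.toFun p) φ.toFun)

/-! ### Jump sets and BV solutions -/

/-- The function `ρ(v, u⁺, u⁻)` of Remark 2.3. -/
def rhoJ (f : ℝ → ℝ) (v a b : ℝ) : ℝ :=
  if v ∈ Icc (min a b) (max a b) then
    f b * (a - v) + f a * (v - b) - f v * (a - b)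
  else 0

/-! ### The seminorms `‖·‖_{-1,N}` and the distances `d_U`, `d_𝒰` -/

lemma hasCompactSupport_sq {α : Type*} [TopologicalSpace α] {φ : α → ℝ} (h : HasCompactSupport φ) :
    HasCompactSupport fun x => φ x ^ 2 := by
  simp only [sq]; exact h.mul_right

/-- Integration by parts against the potential `x ↦ ∫₀ˣ w`. -/
lemma integral_mul_eq_neg_potential {w : ℝ → ℝ} (hw : LocallyIntegrable w) {φ : ℝ → ℝ}
    (hφ : ContDiff ℝ (⊤ : ℕ∞) φ) {N : ℝ} (hN : 0 < N)
    (hs : Function.support φ ⊆ Ioo (-N) N) :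
    ∫ x, w x * φ x = - ∫ x in (-N)..N, (∫ y in (0:ℝ)..x, w y) * deriv φ x := by
  have hwi : IntervalIntegrable w volume (-N) N := (hw.integrableOn_isCompact isCompact_uIcc).intervalIntegrable
  have hV := hwi.absolutelyContinuousOnInterval_intervalIntegral
    (c := 0) (by rw [uIcc_of_le (by linarith)]; constructor <;> linarith)
  have hφ1 : AbsolutelyContinuousOnInterval φ (-N) N :=
    ContDiffOn.absolutelyContinuousOnInterval (hφ.of_le (by norm_num)).contDiffOn
  have h0 : ∀ x, x ∉ Ioo (-N) N → φ x = 0 := fun x hx => by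
    by_contra h; exact hx (hs h)
  have e := hV.integral_mul_deriv_eq_deriv_mul hφ1
  rw [e, h0 N (by simp), h0 (-N) (by simp)]
  have e2 : ∫ x in (-N)..N, deriv (fun x => ∫ y in (0:ℝ)..x, w y) x * φ x
      = ∫ x in (-N)..N, w x * φ x := by
    apply intervalIntegral.integral_congr_ae
    filter_upwards [_root_.LocallyIntegrable.ae_hasDerivAt_integral hw] with x hx _
    rw [(hx 0).deriv]
  rw [e2, intervalIntegral.integral_of_le (by linarith),
    ← setIntegral_eq_integral_of_forall_compl_eq_zero (s := Ioc (-N) N)]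
  · simp [intervalIntegral.integral_of_le (show -N ≤ N by linarith)]
  · intro x hx
    rw [h0 x (fun h => hx (Ioo_subset_Ioc_self h)), mul_zero]

lemma abs_integral_mul_le_of_potential {w : ℝ → ℝ} (hw : LocallyIntegrable w) {φ : ℝ → ℝ}
    (hφ : ContDiff ℝ (⊤ : ℕ∞) φ) (hc : HasCompactSupport φ) {N : ℝ} (hN : 0 < N)
    (hs : Function.support φ ⊆ Ioo (-N) N) {B : ℝ}
    (hB : ∀ x ∈ Icc (-N) N, |∫ y in (0:ℝ)..x, w y| ≤ B)
    (h1 : ∫ x, deriv φ x ^ 2 = 1) :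
    |∫ x, w x * φ x| ≤ B * (N + 1) := by
  have hB0 : 0 ≤ B := (abs_nonneg _).trans (hB 0 (by constructor <;> linarith))
  rw [integral_mul_eq_neg_potential hw hφ hN hs, abs_neg]
  have hcont : Continuous (deriv φ) := hφ.continuous_deriv (by norm_num)
  have hInt : Integrable (fun x => deriv φ x ^ 2) := by
    exact (hcont.pow 2).integrable_of_hasCompactSupport (hasCompactSupport_sq hc.deriv)
  calc |∫ x in (-N)..N, (∫ y in (0:ℝ)..x, w y) * deriv φ x|
      ≤ ∫ x in (-N)..N, B * ((1 + deriv φ x ^ 2) / 2) := by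
        rw [← Real.norm_eq_abs]
        apply intervalIntegral.norm_integral_le_of_norm_le (by linarith)
        · filter_upwards with x hx
          rw [norm_mul, Real.norm_eq_abs, Real.norm_eq_abs]
          apply mul_le_mul (hB x (Ioc_subset_Icc_self hx)) _ (abs_nonneg _) hB0
          nlinarith [sq_abs (deriv φ x), sq_nonneg (|deriv φ x| - 1)]
        · apply Continuous.intervalIntegrable; fun_prop
    _ = B * ((2 * N + ∫ x in (-N)..N, deriv φ x ^ 2) / 2) := by
        rw [intervalIntegral.integral_const_mul, intervalIntegral.integral_div,
          intervalIntegral.integral_add (by simp) (Continuous.intervalIntegrable (by fun_prop) _ _)]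
        simp; ring_nf; simp
    _ ≤ B * (N + 1) := by
        apply mul_le_mul_of_nonneg_left _ hB0
        have : ∫ x in (-N)..N, deriv φ x ^ 2 ≤ 1 := by
          rw [intervalIntegral.integral_of_le (by linarith), ← h1]
          exact setIntegral_le_integral hInt (ae_of_all _ fun x => sq_nonneg _)
        linarith

lemma negNorm_nonneg (N : ℝ) (w : ℝ → ℝ) : 0 ≤ negNorm N w := by
  unfold negNorm
  by_cases h : ∃ φ : STest N, (∫ x, deriv φ.toFun x ^ 2) = 1
  · obtain ⟨φ, hφ⟩ := h
    rcases le_total 0 (∫ x, w x * φ.toFun x) with h0 | h0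
    · exact Real.sSup_nonneg' ⟨_, ⟨φ, hφ, rfl⟩, h0⟩
    · refine Real.sSup_nonneg' ⟨_, ⟨⟨fun x => - φ.toFun x, φ.smooth.neg, φ.cpt.neg, ?_⟩, ?_, rfl⟩, ?_⟩
      · intro x hx; apply φ.supp; simpa using hx
      · have : (fun x => deriv (fun x => - φ.toFun x) x ^ 2) = fun x => deriv φ.toFun x ^ 2 := by
          ext x; simp
        rw [this]; exact hφ
      · simp [integral_neg]; exact h0
  · have : {r : ℝ | ∃ φ : STest N, (∫ x, deriv φ.toFun x ^ 2) = 1 ∧ r = ∫ x, w x * φ.toFun x} = ∅ := by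
      ext r; simp only [mem_ofPred_eq, mem_empty_iff_false, iff_false]
      rintro ⟨φ, hφ, -⟩; exact h ⟨φ, hφ⟩
    rw [this]; simp

lemma negNorm_le_of_potential {w : ℝ → ℝ} (hw : LocallyIntegrable w) {N : ℝ} (hN : 0 < N) {B : ℝ}
    (hB : ∀ x ∈ Icc (-N) N, |∫ y in (0:ℝ)..x, w y| ≤ B) : negNorm N w ≤ B * (N + 1) := by
  have hB0 : 0 ≤ B := (abs_nonneg _).trans (hB 0 (by constructor <;> linarith))
  apply Real.sSup_le
  · rintro r ⟨φ, h1, rfl⟩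
    exact (le_abs_self _).trans
      (abs_integral_mul_le_of_potential hw φ.smooth φ.cpt hN φ.supp hB h1)
  · positivity

lemma abs_potential_le {w : ℝ → ℝ} (hw1 : ∀ x, |w x| ≤ 1) (x : ℝ) :
    |∫ y in (0:ℝ)..x, w y| ≤ |x| := by
  have := intervalIntegral.norm_integral_le_of_norm_le_const (a := 0) (b := x) (C := 1) (f := w)
    (fun y _ => hw1 y)
  simpa using this

lemma locallyIntegrable_of_bdd {w : ℝ → ℝ} (hw : Measurable w) {C : ℝ} (hw1 : ∀ x, |w x| ≤ C) :
    LocallyIntegrable w := by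
  apply (locallyIntegrable_const C).mono hw.aestronglyMeasurable
  filter_upwards with x
  exact (hw1 x).trans (le_abs_self _)

/-- Duality: `|∫ wφ| ≤ ‖w‖_{-1,N} ‖φ_x‖₂`. -/
lemma abs_integral_le_negNorm {w : ℝ → ℝ} (hw : Measurable w) (hw1 : ∀ x, |w x| ≤ 1)
    {N : ℝ} (hN : 0 < N) (φ : STest N) :
    |∫ x, w x * φ.toFun x| ≤ negNorm N w * Real.sqrt (∫ x, deriv φ.toFun x ^ 2) := by
  have hwl := locallyIntegrable_of_bdd hw hw1
  set s := ∫ x, deriv φ.toFun x ^ 2 with hs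
  have hcont : Continuous (deriv φ.toFun) := φ.smooth.continuous_deriv (by norm_num)
  have hs0 : 0 ≤ s := integral_nonneg fun x => sq_nonneg _
  have hInt : Integrable (fun x => deriv φ.toFun x ^ 2) := by
    exact (hcont.pow 2).integrable_of_hasCompactSupport (hasCompactSupport_sq φ.cpt.deriv)
  rcases hs0.eq_or_lt with h0 | h0
  · -- `φ_x = 0`, hence `∫ wφ = 0`
    have hd : ∀ x, deriv φ.toFun x = 0 := by
      have := (integral_eq_zero_iff_of_nonneg (fun x => sq_nonneg (deriv φ.toFun x)) hInt).1
        (hs ▸ h0.symm)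
      have h2 := ((hcont.pow 2).ae_eq_iff_eq volume continuous_zero).1 this
      intro x; simpa using congrFun h2 x
    rw [integral_mul_eq_neg_potential hwl φ.smooth hN φ.supp]
    simp [hd, ← h0]
  · set c := (Real.sqrt s)⁻¹ with hc
    have hsq : 0 < Real.sqrt s := Real.sqrt_pos.2 h0
    have key : ∀ e : ℝ, e ^ 2 = 1 → e * c * ∫ x, w x * φ.toFun x ≤ negNorm N w := by
      intro e he
      apply le_csSup
      · refine ⟨N * (N + 1), ?_⟩
        rintro r ⟨ψ, h1, rfl⟩
        refine (le_abs_self _).trans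
          (abs_integral_mul_le_of_potential hwl ψ.smooth ψ.cpt hN ψ.supp (fun x hx => ?_) h1)
        exact (abs_potential_le hw1 x).trans (abs_le.2 hx)
      · refine ⟨⟨fun x => e * c * φ.toFun x, contDiff_const.mul φ.smooth, φ.cpt.mul_left, ?_⟩, ?_, ?_⟩
        · intro x hx; apply φ.supp; intro h; apply hx; simp [h]
        · have : (fun x => deriv (fun x => e * c * φ.toFun x) x ^ 2)
              = fun x => c ^ 2 * deriv φ.toFun x ^ 2 := by
            ext x; rw [deriv_const_mul _ (φ.smooth.differentiable (by norm_num) x)]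
            linear_combination (c ^ 2 * deriv φ.toFun x ^ 2) * he
          rw [this, integral_const_mul, ← hs, hc, inv_pow, Real.sq_sqrt hs0]
          field_simp
        · rw [← integral_const_mul]; congr 1; ext x; ring
    have k1 := key 1 (by norm_num)
    have k2 := key (-1) (by norm_num)
    have : c * |∫ x, w x * φ.toFun x| ≤ negNorm N w := by
      rcases abs_choice (∫ x, w x * φ.toFun x) with h | h <;> rw [h] <;> linarith
    rw [hc, inv_mul_eq_div, div_le_iff₀ hsq] at this
    exact this

lemma div_one_add_mono {a b : ℝ} (ha : 0 ≤ a) (hab : a ≤ b) : a / (1 + a) ≤ b / (1 + b) := by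
  rw [div_le_div_iff₀ (by linarith) (by linarith)]; nlinarith

lemma dU_term_bounds (u v : ℝ → ℝ) (n : ℕ) :
    0 ≤ (2 : ℝ)⁻¹ ^ (n + 1) * (negNorm ((n : ℝ) + 1) (fun x => u x - v x) /
      (1 + negNorm ((n : ℝ) + 1) (fun x => u x - v x))) ∧
    (2 : ℝ)⁻¹ ^ (n + 1) * (negNorm ((n : ℝ) + 1) (fun x => u x - v x) /
      (1 + negNorm ((n : ℝ) + 1) (fun x => u x - v x))) ≤ (2 : ℝ)⁻¹ ^ (n + 1) := by
  have h := negNorm_nonneg ((n : ℝ) + 1) (fun x => u x - v x)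
  refine ⟨by positivity, ?_⟩
  apply mul_le_of_le_one_right (by positivity)
  rw [div_le_one (by linarith)]; linarith

lemma summable_half : Summable fun n : ℕ => (2 : ℝ)⁻¹ ^ (n + 1) :=
  (summable_nat_add_iff 1).2 (summable_geometric_of_lt_one (by norm_num) (by norm_num))

lemma tsum_half : ∑' n : ℕ, (2 : ℝ)⁻¹ ^ (n + 1) = 1 := by
  simp_rw [pow_succ]
  rw [tsum_mul_right, tsum_geometric_of_lt_one (by norm_num) (by norm_num)]; norm_num

lemma dU_summable (u v : ℝ → ℝ) : Summable fun n : ℕ => (2 : ℝ)⁻¹ ^ (n + 1) *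
    (negNorm ((n : ℝ) + 1) (fun x => u x - v x) /
      (1 + negNorm ((n : ℝ) + 1) (fun x => u x - v x))) :=
  Summable.of_nonneg_of_le (fun n => (dU_term_bounds u v n).1) (fun n => (dU_term_bounds u v n).2)
    summable_half

lemma dU_nonneg (u v : ℝ → ℝ) : 0 ≤ dU u v := tsum_nonneg fun n => (dU_term_bounds u v n).1

lemma dU_le_one (u v : ℝ → ℝ) : dU u v ≤ 1 := by
  rw [← tsum_half]
  exact (dU_summable u v).tsum_le_tsum (fun n => (dU_term_bounds u v n).2) summable_half

/-- Closeness of the potentials on a large interval implies closeness for `d_U`. -/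
lemma dU_lt_of_potential {η : ℝ} (hη : 0 < η) : ∃ N : ℝ, 0 < N ∧ ∃ δ > 0, ∀ u v : ℝ → ℝ,
    Measurable u → Measurable v → (∀ x, u x ∈ Icc (0:ℝ) 1) → (∀ x, v x ∈ Icc (0:ℝ) 1) →
    (∀ x ∈ Icc (-N) N, |∫ y in (0:ℝ)..x, (u y - v y)| ≤ δ) → dU u v < η := by
  obtain ⟨K, hK⟩ := ((tendsto_sum_nat_add fun n : ℕ => (2 : ℝ)⁻¹ ^ (n + 1)).eventually
    (gt_mem_nhds (half_pos hη))).exists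
  refine ⟨K + 1, by positivity, η / 4 / (K + 2), by positivity, fun u v hu hv hu1 hv1 h => ?_⟩
  have hw : LocallyIntegrable (fun x => u x - v x) := by
    refine locallyIntegrable_of_bdd (hu.sub hv) (C := 1) fun x => ?_
    have := hu1 x; have := hv1 x
    rw [abs_le]; constructor <;> linarith [(hu1 x).1, (hu1 x).2, (hv1 x).1, (hv1 x).2]
  unfold dU
  rw [← (dU_summable u v).sum_add_tsum_nat_add K]
  have h1 : ∑ n ∈ Finset.range K, (2 : ℝ)⁻¹ ^ (n + 1) *
      (negNorm ((n : ℝ) + 1) (fun x => u x - v x) /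
      (1 + negNorm ((n : ℝ) + 1) (fun x => u x - v x))) ≤ η / 4 := by
    calc _ ≤ ∑ n ∈ Finset.range K, (2 : ℝ)⁻¹ ^ (n + 1) * (η / 4) := by
          apply Finset.sum_le_sum
          intro n hn
          have hnK : (n : ℝ) + 1 ≤ K := by exact_mod_cast Finset.mem_range.1 hn
          apply mul_le_mul_of_nonneg_left _ (by positivity)
          have h0 := negNorm_nonneg ((n : ℝ) + 1) (fun x => u x - v x)
          have hb : negNorm ((n : ℝ) + 1) (fun x => u x - v x) ≤ η / 4 / (K + 2) * ((n + 1) + 1) := by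
            apply negNorm_le_of_potential hw (by positivity)
            intro x hx
            apply h
            constructor <;> linarith [hx.1, hx.2]
          calc _ ≤ negNorm ((n : ℝ) + 1) (fun x => u x - v x) := div_le_self h0 (by linarith)
            _ ≤ η / 4 / (K + 2) * ((n + 1) + 1) := hb
            _ ≤ η / 4 / (K + 2) * (K + 2) := by
              apply mul_le_mul_of_nonneg_left _ (by positivity); linarith
            _ = η / 4 := by field_simp
      _ = (∑ n ∈ Finset.range K, (2 : ℝ)⁻¹ ^ (n + 1)) * (η / 4) := by rw [Finset.sum_mul]
      _ ≤ 1 * (η / 4) := by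
          apply mul_le_mul_of_nonneg_right _ (by positivity)
          rw [← tsum_half]
          exact summable_half.sum_le_tsum _ (fun n _ => by positivity)
      _ = η / 4 := one_mul _
  have h2 : ∑' n : ℕ, (2 : ℝ)⁻¹ ^ (n + K + 1) *
      (negNorm (((n + K : ℕ) : ℝ) + 1) (fun x => u x - v x) /
      (1 + negNorm (((n + K : ℕ) : ℝ) + 1) (fun x => u x - v x))) < η / 2 := by
    refine lt_of_le_of_lt (Summable.tsum_le_tsum (fun n => (dU_term_bounds u v (n + K)).2) ?_ ?_) hK
    · exact (summable_nat_add_iff K).2 (dU_summable u v)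
    · exact (summable_nat_add_iff K).2 summable_half
  linarith

lemma dU_self (u : ℝ → ℝ) : dU u u = 0 := by
  unfold dU
  have : ∀ n : ℕ, negNorm ((n : ℝ) + 1) (fun x => u x - u x) = 0 := by
    intro n
    apply le_antisymm _ (negNorm_nonneg _ _)
    apply Real.sSup_le _ le_rfl
    rintro r ⟨φ, _, rfl⟩
    simp
  simp only [this]; simp

/-- Convergence for `d_U` implies convergence against smooth compactly supported tests. -/
lemma dU_small_test {ψ : ℝ → ℝ} (hψ : ContDiff ℝ (⊤ : ℕ∞) ψ) (hc : HasCompactSupport ψ)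
    {η : ℝ} (hη : 0 < η) : ∃ δ > 0, ∀ u v : ℝ → ℝ,
    Measurable u → Measurable v → (∀ x, u x ∈ Icc (0:ℝ) 1) → (∀ x, v x ∈ Icc (0:ℝ) 1) →
    dU u v < δ → |∫ x, (u x - v x) * ψ x| < η := by
  obtain ⟨R, hR⟩ := hc.isCompact.isBounded.subset_closedBall 0
  obtain ⟨n, hn⟩ := exists_nat_gt R
  have hs : Function.support ψ ⊆ Ioo (-((n : ℝ) + 1)) ((n : ℝ) + 1) := by
    intro x hx
    have := hR (subset_tsupport _ hx)
    rw [mem_closedBall_zero_iff, Real.norm_eq_abs, abs_le] at this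
    constructor <;> linarith [this.1, this.2]
  let φ : STest ((n : ℝ) + 1) := ⟨ψ, hψ, hc, hs⟩
  set S := Real.sqrt (∫ x, deriv φ.toFun x ^ 2) + 1 with hS
  have hS0 : 0 < S := by positivity
  set a := η / S with ha
  have ha0 : 0 < a := by positivity
  refine ⟨(2 : ℝ)⁻¹ ^ (n + 1) * (a / (1 + a)), by positivity, fun u v hu hv hu1 hv1 h => ?_⟩
  have hb : ∀ x, |u x - v x| ≤ 1 := fun x => by
    rw [abs_le]; constructor <;> linarith [(hu1 x).1, (hu1 x).2, (hv1 x).1, (hv1 x).2]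
  have h1 := (dU_summable u v).le_tsum n (fun k _ => (dU_term_bounds u v k).1)
  have h2 := lt_of_le_of_lt h1 h
  rw [mul_lt_mul_iff_right₀ (by positivity)] at h2
  have h3 : negNorm ((n : ℝ) + 1) (fun x => u x - v x) < a := by
    by_contra hcon
    exact absurd (div_one_add_mono ha0.le (not_lt.1 hcon)) (not_le.2 h2)
  calc _ ≤ _ := abs_integral_le_negNorm (hu.sub hv) hb (by positivity) φ
    _ ≤ negNorm ((n : ℝ) + 1) (fun x => u x - v x) * S := by
        apply mul_le_mul_of_nonneg_left _ (negNorm_nonneg _ _); linarith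
    _ < a * S := by apply mul_lt_mul_of_pos_right h3 hS0
    _ = η := by rw [ha]; field_simp

lemma dcU_nonneg {T : ℝ} (u v : cU T) : 0 ≤ dcU T u v := by
  apply Real.sSup_nonneg
  rintro r ⟨t, _, rfl⟩; exact dU_nonneg _ _

lemma dcU_le {T : ℝ} {u v : cU T} {B : ℝ} (hB : 0 ≤ B)
    (h : ∀ t ∈ Icc (0:ℝ) T, dU (fun x => u.toFun (t, x)) (fun x => v.toFun (t, x)) ≤ B) :
    dcU T u v ≤ B := by
  apply Real.sSup_le _ hB
  rintro r ⟨t, ht, rfl⟩; exact h t ht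

lemma dcU_self {T : ℝ} (u : cU T) : dcU T u u = 0 :=
  le_antisymm (dcU_le le_rfl fun t _ => by rw [dU_self]) (dcU_nonneg _ _)

/-! ### Space-time test functions -/

/-- The strip `[0,T] × ℝ`. -/
abbrev Om (T : ℝ) : Set (ℝ × ℝ) := Icc (0:ℝ) T ×ˢ (univ : Set ℝ)

lemma measurableSet_Om (T : ℝ) : MeasurableSet (Om T) := measurableSet_Icc.prod MeasurableSet.univ

lemma contDiff_pxF {φ : ℝ × ℝ → ℝ} (h : ContDiff ℝ (⊤ : ℕ∞) φ) : ContDiff ℝ (⊤ : ℕ∞) (pxF φ) :=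
  (h.fderiv_right (m := (⊤ : ℕ∞)) (by simp)).clm_apply contDiff_const

lemma contDiff_ptF {φ : ℝ × ℝ → ℝ} (h : ContDiff ℝ (⊤ : ℕ∞) φ) : ContDiff ℝ (⊤ : ℕ∞) (ptF φ) :=
  (h.fderiv_right (m := (⊤ : ℕ∞)) (by simp)).clm_apply contDiff_const

lemma cpt_pxF {φ : ℝ × ℝ → ℝ} (h : HasCompactSupport φ) : HasCompactSupport (pxF φ) :=
  h.fderiv_apply ℝ _

lemma cpt_ptF {φ : ℝ × ℝ → ℝ} (h : HasCompactSupport φ) : HasCompactSupport (ptF φ) :=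
  h.fderiv_apply ℝ _

/-- A continuous function whose support lies in the closed strip vanishes on its boundary. -/
lemma support_subset_open_strip {T : ℝ} {g : ℝ × ℝ → ℝ} (hg : Continuous g)
    (h : Function.support g ⊆ Icc (0:ℝ) T ×ˢ (univ : Set ℝ)) :
    Function.support g ⊆ Ioo (0:ℝ) T ×ˢ (univ : Set ℝ) := by
  have := interior_maximal h hg.isOpen_support
  rwa [interior_prod_eq, interior_Icc, interior_univ] at this

lemma TTest.tsupport_subset {T : ℝ} (φ : TTest T) : tsupport φ.toFun ⊆ Om T :=
  closure_minimal (φ.supp.trans (prod_mono Ioo_subset_Icc_self subset_rfl))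
    (isClosed_Icc.prod isClosed_univ)

/-- The `x`-derivative of a test function is a test function. -/
def TTest.px {T : ℝ} (φ : TTest T) : TTest T where
  toFun := pxF φ.toFun
  smooth := contDiff_pxF φ.smooth
  cpt := cpt_pxF φ.cpt
  supp := by
    apply support_subset_open_strip (contDiff_pxF φ.smooth).continuous
    intro p hp
    apply φ.tsupport_subset
    apply support_fderiv_subset ℝ
    intro h; apply hp; simp [pxF, h]

/-- The `t`-derivative of a test function is a test function. -/
def TTest.pt {T : ℝ} (φ : TTest T) : TTest T where
  toFun := ptF φ.toFun
  smooth := contDiff_ptF φ.smooth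
  cpt := cpt_ptF φ.cpt
  supp := by
    apply support_subset_open_strip (contDiff_ptF φ.smooth).continuous
    intro p hp
    apply φ.tsupport_subset
    apply support_fderiv_subset ℝ
    intro h; apply hp; simp [ptF, h]

lemma TTest.cont {T : ℝ} (φ : TTest T) : Continuous φ.toFun := φ.smooth.continuous

lemma TTest.zero_of_not_mem {T : ℝ} (φ : TTest T) {p : ℝ × ℝ} (hp : p ∉ Om T) : φ.toFun p = 0 := by
  by_contra h
  exact hp (prod_mono Ioo_subset_Icc_self subset_rfl (φ.supp h))

lemma pair_eq_integral {T : ℝ} (g : ℝ × ℝ → ℝ) (φ : TTest T) :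
    pair T g φ.toFun = ∫ p, g p * φ.toFun p :=
  setIntegral_eq_integral_of_forall_compl_eq_zero fun p hp => by
    rw [φ.zero_of_not_mem hp, mul_zero]

/-- Product of a bounded measurable function with a continuous compactly supported one. -/
lemma integrable_bdd_mul {α : Type*} [TopologicalSpace α] [MeasurableSpace α] [BorelSpace α]
    {μ : Measure α} [IsFiniteMeasureOnCompacts μ] {g k : α → ℝ}
    (hg : AEStronglyMeasurable g μ) {C : ℝ} (hC : ∀ p, |g p| ≤ C)
    (hk : Continuous k) (hc : HasCompactSupport k) : Integrable (fun p => g p * k p) μ :=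
  (hk.integrable_of_hasCompactSupport hc).bdd_mul hg (ae_of_all _ hC)

/-- Integration by parts on the plane. -/
lemma integral_pxF_parts {g φ : ℝ × ℝ → ℝ} (hg : ContDiff ℝ (⊤ : ℕ∞) g)
    (hφ : ContDiff ℝ (⊤ : ℕ∞) φ) (hc : HasCompactSupport φ) :
    ∫ p, g p * pxF φ p = - ∫ p, pxF g p * φ p := by
  apply integral_mul_fderiv_eq_neg_fderiv_mul_of_integrable
  · exact ((contDiff_pxF hg).continuous.mul hφ.continuous).integrable_of_hasCompactSupport hc.mul_left
  · exact (hg.continuous.mul (contDiff_pxF hφ).continuous).integrable_of_hasCompactSupport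
      (cpt_pxF hc).mul_left
  · exact (hg.continuous.mul hφ.continuous).integrable_of_hasCompactSupport hc.mul_left
  · exact fun x _ => hg.differentiable (by simp) x
  · exact fun x _ => hφ.differentiable (by simp) x

lemma integral_ptF_parts {g φ : ℝ × ℝ → ℝ} (hg : ContDiff ℝ (⊤ : ℕ∞) g)
    (hφ : ContDiff ℝ (⊤ : ℕ∞) φ) (hc : HasCompactSupport φ) :
    ∫ p, g p * ptF φ p = - ∫ p, ptF g p * φ p := by
  apply integral_mul_fderiv_eq_neg_fderiv_mul_of_integrable
  · exact ((contDiff_ptF hg).continuous.mul hφ.continuous).integrable_of_hasCompactSupport hc.mul_left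
  · exact (hg.continuous.mul (contDiff_ptF hφ).continuous).integrable_of_hasCompactSupport
      (cpt_ptF hc).mul_left
  · exact (hg.continuous.mul hφ.continuous).integrable_of_hasCompactSupport hc.mul_left
  · exact fun x _ => hg.differentiable (by simp) x
  · exact fun x _ => hφ.differentiable (by simp) x

/-! ### Moments of Young measures -/

section YMbasic
variable {T : ℝ}

lemma YM.ae_mem (μ : YM T) (p : ℝ × ℝ) : ∀ᵐ l ∂ μ.m p, l ∈ Icc (0:ℝ) 1 := by
  rw [ae_iff]; exact μ.supp01 p

lemma exists_bound_01 {F : ℝ → ℝ} (hF : Continuous F) : ∃ C, 0 ≤ C ∧ ∀ l ∈ Icc (0:ℝ) 1, |F l| ≤ C := by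
  obtain ⟨C, hC⟩ := isCompact_Icc.exists_bound_of_continuousOn (s := Icc (0:ℝ) 1) hF.continuousOn
  exact ⟨C, (norm_nonneg _).trans (hC 0 (by simp)), hC⟩

lemma YM.integrable (μ : YM T) (p : ℝ × ℝ) {F : ℝ → ℝ} (hF : Continuous F) :
    Integrable F (μ.m p) := by
  have := μ.prob p
  obtain ⟨C, _, hC⟩ := exists_bound_01 hF
  refine Integrable.of_bound hF.aestronglyMeasurable C ?_
  filter_upwards [μ.ae_mem p] with l hl using hC l hl

lemma YM.mom_bound (μ : YM T) (p : ℝ × ℝ) {F : ℝ → ℝ} {C : ℝ}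
    (hC : ∀ l ∈ Icc (0:ℝ) 1, |F l| ≤ C) : |μ.mom F p| ≤ C := by
  have := μ.prob p
  have h := norm_integral_le_of_norm_le_const (μ := μ.m p) (f := F) (C := C) (by
    filter_upwards [μ.ae_mem p] with l hl using hC l hl)
  simpa [YM.mom] using h

lemma YM.mom_congr (μ : YM T) {F G : ℝ → ℝ} (h : ∀ l ∈ Icc (0:ℝ) 1, F l = G l) :
    μ.mom F = μ.mom G := by
  ext p
  apply integral_congr_ae
  filter_upwards [μ.ae_mem p] with l hl using h l hl

lemma YM.mom_mono (μ : YM T) {F G : ℝ → ℝ} (hF : Continuous F) (hG : Continuous G)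
    (h : ∀ l ∈ Icc (0:ℝ) 1, F l ≤ G l) (p : ℝ × ℝ) : μ.mom F p ≤ μ.mom G p := by
  apply integral_mono_ae (μ.integrable p hF) (μ.integrable p hG)
  filter_upwards [μ.ae_mem p] with l hl using h l hl

lemma YM.mom_const (μ : YM T) (c : ℝ) (p : ℝ × ℝ) : μ.mom (fun _ => c) p = c := by
  have := μ.prob p
  simp [YM.mom]

lemma YM.mom_sub (μ : YM T) {F G : ℝ → ℝ} (hF : Continuous F) (hG : Continuous G) (p : ℝ × ℝ) :
    μ.mom (fun l => F l - G l) p = μ.mom F p - μ.mom G p :=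
  integral_sub (μ.integrable p hF) (μ.integrable p hG)

lemma YM.mom_sum (μ : YM T) {ι : Type*} (s : Finset ι) {F : ι → ℝ → ℝ} (c : ι → ℝ)
    (hF : ∀ i, Continuous (F i)) (p : ℝ × ℝ) :
    μ.mom (fun l => ∑ i ∈ s, c i * F i l) p = ∑ i ∈ s, c i * μ.mom (F i) p := by
  unfold YM.mom
  rw [integral_finsetSum _ fun i _ => (μ.integrable p (hF i)).const_mul _]
  simp_rw [integral_const_mul]

/-- The Young measure of a function in `𝒰`. -/
def diracYM (u : cU T) : YM T where
  m p := Measure.dirac (u.toFun p)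
  prob p := inferInstance
  supp01 p := by
    rw [Measure.dirac_apply' _ measurableSet_Icc.compl]
    simp [(u.mem01 p).1, (u.mem01 p).2]
  meas F hF := by
    simp only [integral_dirac]; exact hF.measurable.comp u.meas
  bar_mem p := by simpa using u.mem01 p
  bar_cont := by simpa using u.cont

lemma cU.ext_toFun {u v : cU T} (h : u.toFun = v.toFun) : u = v := by
  cases u; cases v; simp_all

lemma diracYM_mom (u : cU T) (F : ℝ → ℝ) : (diracYM u).mom F = fun p => F (u.toFun p) := by
  ext p; simp [YM.mom, diracYM]

lemma diracYM_bar (u : cU T) : (diracYM u).bar = u :=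
  cU.ext_toFun (by simp [YM.bar, diracYM])

lemma calIeps_dirac (f D σ : ℝ → ℝ) (ε : ℝ) (u : cU T) :
    calIeps f D σ T ε (diracYM u) = Ieps f D σ T ε u := by
  have h : ∃ v : cU T, ∀ p, (diracYM u).m p = Measure.dirac (v.toFun p) := ⟨u, fun p => rfl⟩
  rw [calIeps, dif_pos h]
  congr 1
  apply cU.ext_toFun
  ext p
  have := h.choose_spec p
  have h2 := congrArg (fun m => ∫ l, l ∂m) this
  simpa [diracYM] using h2.symm

lemma YM.ext_m {μ ν : YM T} (h : μ.m = ν.m) : μ = ν := by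
  cases μ; cases ν; simp_all

lemma eq_dirac_of_calIeps_ne_top {f D σ : ℝ → ℝ} {ε : ℝ} {μ : YM T}
    (h : calIeps f D σ T ε μ ≠ ⊤) : μ = diracYM μ.bar := by
  unfold calIeps at h
  split_ifs at h with hx
  · obtain ⟨u, hu⟩ := hx
    apply YM.ext_m
    ext1 p
    have : (∫ l, l ∂μ.m p) = u.toFun p := by rw [hu p]; simp
    simp only [diracYM, YM.bar]
    rw [this, hu p]
  · exact absurd rfl h

end YMbasic

/-! ### Piecewise linear partitions of unity -/

/-- The hat function. -/
def hat (y : ℝ) : ℝ := max 0 (1 - |y|)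

lemma hat_nonneg (y : ℝ) : 0 ≤ hat y := le_max_left _ _

lemma hat_le_one (y : ℝ) : hat y ≤ 1 := max_le zero_le_one (by linarith [abs_nonneg y])

lemma continuous_hat : Continuous hat := by unfold hat; fun_prop

lemma hat_eq_zero {y : ℝ} (h : 1 ≤ |y|) : hat y = 0 := max_eq_left (by linarith)

/-- Linear interpolation at integer nodes. -/
lemma hat_sum {N : ℕ} {y : ℝ} (h0 : 0 ≤ y) (hN : y ≤ N) (c : ℕ → ℝ) :
    ∑ j ∈ Finset.range (N + 2), hat (y - j) * c j
      = (1 - (y - ⌊y⌋₊)) * c ⌊y⌋₊ + (y - ⌊y⌋₊) * c (⌊y⌋₊ + 1) := by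
  set k := ⌊y⌋₊ with hk
  have h1 : (k : ℝ) ≤ y := Nat.floor_le h0
  have h2 : y < k + 1 := Nat.lt_floor_add_one y
  have hkN : k ≤ N := by
    have : (k : ℝ) ≤ N := h1.trans hN
    exact_mod_cast this
  rw [← Finset.sum_subset (s₁ := {k, k + 1})]
  · rw [Finset.sum_pair (by omega)]
    congr 2
    · rw [hat, abs_of_nonneg (by linarith), max_eq_right (by linarith)]
    · push_cast
      rw [hat, abs_of_nonpos (by linarith), max_eq_right (by linarith)]; ring
  · intro j hj
    simp only [Finset.mem_insert, Finset.mem_singleton] at hj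
    rw [Finset.mem_range]; omega
  · intro j _ hj
    simp only [Finset.mem_insert, Finset.mem_singleton, not_or] at hj
    rw [hat_eq_zero, zero_mul]
    rcases lt_or_gt_of_ne hj.1 with h | h
    · have : (j : ℝ) + 1 ≤ k := by exact_mod_cast h
      rw [abs_of_nonneg (by linarith)]; linarith
    · have : (k : ℝ) + 2 ≤ j := by exact_mod_cast (by omega : k + 2 ≤ j)
      rw [abs_of_nonpos (by linarith)]; linarith

lemma hat_sum_one {N : ℕ} {y : ℝ} (h0 : 0 ≤ y) (hN : y ≤ N) :
    ∑ j ∈ Finset.range (N + 2), hat (y - j) = 1 := by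
  have := hat_sum h0 hN (fun _ => 1)
  simpa using this

lemma hat_sum_id {N : ℕ} {y : ℝ} (h0 : 0 ≤ y) (hN : y ≤ N) :
    ∑ j ∈ Finset.range (N + 2), hat (y - j) * (j : ℝ) = y := by
  rw [hat_sum h0 hN (fun j => (j : ℝ))]; push_cast; ring

lemma hat_approx {N : ℕ} {y : ℝ} (h0 : 0 ≤ y) (hN : y ≤ N) {c : ℕ → ℝ} {g η : ℝ}
    (h : ∀ j : ℕ, |y - j| < 1 → |c j - g| ≤ η) :
    |∑ j ∈ Finset.range (N + 2), hat (y - j) * c j - g| ≤ η := by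
  have h1 := hat_sum_one h0 hN
  have e : ∑ j ∈ Finset.range (N + 2), hat (y - j) * c j - g
      = ∑ j ∈ Finset.range (N + 2), hat (y - j) * (c j - g) := by
    simp_rw [mul_sub]
    rw [Finset.sum_sub_distrib, ← Finset.sum_mul, h1, one_mul]
  rw [e]
  calc _ ≤ ∑ j ∈ Finset.range (N + 2), |hat (y - j) * (c j - g)| := Finset.abs_sum_le_sum_abs _ _
    _ ≤ ∑ j ∈ Finset.range (N + 2), hat (y - j) * η := by
        apply Finset.sum_le_sum
        intro j _
        rw [abs_mul, abs_of_nonneg (hat_nonneg _)]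
        by_cases hj : |y - j| < 1
        · exact mul_le_mul_of_nonneg_left (h j hj) (hat_nonneg _)
        · rw [hat_eq_zero (not_lt.1 hj)]; simp
    _ = η := by rw [← Finset.sum_mul, h1, one_mul]

/-! ### Weak* convergence of Young measures -/

section weakstar
variable {T : ℝ}

/-- Convergence of Young measures against product test functions. -/
def WConv (μ : ℕ → YM T) (ν : YM T) : Prop :=
  ∀ F : ℝ → ℝ, Continuous F → ∀ k : ℝ × ℝ → ℝ, Continuous k → HasCompactSupport k →
    Tendsto (fun n => ∫ p in Om T, (μ n).mom F p * k p) atTop (𝓝 (∫ p in Om T, ν.mom F p * k p))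

lemma mom_mul_integrable (μ : YM T) {F : ℝ → ℝ} (hF : Continuous F) {k : ℝ × ℝ → ℝ}
    (hk : Continuous k) (hc : HasCompactSupport k) :
    Integrable (fun p => μ.mom F p * k p) (volume.restrict (Om T)) := by
  obtain ⟨C, _, hC⟩ := exists_bound_01 hF
  exact integrable_bdd_mul (μ.meas F hF).aestronglyMeasurable
    (fun p => μ.mom_bound p hC) hk hc

/-- Uniform approximation of a test function by sums of products. -/
lemma exists_hat_approx {g : ℝ × (ℝ × ℝ) → ℝ} (hg : Continuous g) (hc : HasCompactSupport g)
    {η : ℝ} (hη : 0 < η) : ∃ N : ℕ, 0 < N ∧ ∀ p, ∀ l ∈ Icc (0:ℝ) 1,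
      |g (l, p) - ∑ j ∈ Finset.range (N + 2), g ((j : ℝ) / N, p) * hat (N * l - j)| ≤ η := by
  have hu := hc.uniformContinuous_of_continuous hg
  obtain ⟨δ, hδ, h⟩ := Metric.uniformContinuous_iff.1 hu η hη
  obtain ⟨N, hN⟩ := exists_nat_gt (1 / δ)
  have hN0 : (0:ℝ) < N := lt_trans (by positivity) hN
  refine ⟨N, by exact_mod_cast hN0, fun p l hl => ?_⟩
  rw [abs_sub_comm]
  simp_rw [mul_comm (g _) (hat _)]
  apply hat_approx (by have := hl.1; positivity) (by nlinarith [hl.2])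
  intro j hj
  apply le_of_lt
  rw [← Real.dist_eq]
  apply h
  rw [Prod.dist_eq, dist_self, max_lt_iff]
  refine ⟨?_, hδ⟩
  rw [Real.dist_eq]
  have e : (j : ℝ) / N - l = -((N * l - j) / N) := by field_simp; ring
  rw [e, abs_neg, abs_div, abs_of_pos hN0, div_lt_iff₀ hN0]
  rw [div_lt_iff₀ hδ] at hN
  linarith

lemma slice_cont {g : ℝ × (ℝ × ℝ) → ℝ} (hg : Continuous g) (a : ℝ) :
    Continuous fun p => g (a, p) := by fun_prop

lemma slice_cpt {g : ℝ × (ℝ × ℝ) → ℝ} (hc : HasCompactSupport g) (a : ℝ) :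
    HasCompactSupport fun p => g (a, p) := by
  apply HasCompactSupport.intro (hc.isCompact.image continuous_snd)
  intro p hp
  by_contra h
  exact hp ⟨(a, p), subset_tsupport _ h, rfl⟩

lemma slice_zero {g : ℝ × (ℝ × ℝ) → ℝ} {p : ℝ × ℝ}
    (hp : p ∉ Prod.snd '' tsupport g) (a : ℝ) : g (a, p) = 0 := by
  by_contra h
  exact hp ⟨(a, p), subset_tsupport _ h, rfl⟩

lemma integral_hat_sum (μ : YM T) (g : ℝ × (ℝ × ℝ) → ℝ) (N : ℕ) (p : ℝ × ℝ) :
    ∫ l, (∑ j ∈ Finset.range (N + 2), g ((j : ℝ) / N, p) * hat (N * l - j)) ∂ μ.m p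
      = ∑ j ∈ Finset.range (N + 2), μ.mom (fun l => hat (N * l - j)) p * g ((j : ℝ) / N, p) := by
  have := μ.mom_sum (Finset.range (N + 2)) (F := fun j l => hat (N * l - j))
    (fun j => g ((j : ℝ) / N, p))
    (fun i => continuous_hat.comp (by fun_prop)) p
  unfold YM.mom at this ⊢
  rw [this]
  simp_rw [mul_comm]

/-- Integrating the interpolation of `g` against `μ_p` costs at most the uniform error `η`. -/
lemma integral_hat_close (μ : YM T) {g : ℝ × (ℝ × ℝ) → ℝ} (hg : Continuous g) {N : ℕ} {η : ℝ}
    (p : ℝ × ℝ) (h : ∀ l ∈ Icc (0:ℝ) 1,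
      |g (l, p) - ∑ j ∈ Finset.range (N + 2), g ((j : ℝ) / N, p) * hat (N * l - j)| ≤ η) :
    |∫ l, g (l, p) ∂ μ.m p - ∑ j ∈ Finset.range (N + 2),
      μ.mom (fun l => hat (N * l - j)) p * g ((j : ℝ) / N, p)| ≤ η := by
  rw [← integral_hat_sum]
  have hcs : Continuous fun l => ∑ j ∈ Finset.range (N + 2), g ((j : ℝ) / N, p) * hat (N * l - j) :=
    continuous_finsetSum _ fun j _ => continuous_const.mul (continuous_hat.comp (by fun_prop))
  have := μ.mom_bound p h
  rwa [μ.mom_sub (by fun_prop) hcs] at this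

lemma measurable_integral_slice (μ : YM T) {g : ℝ × (ℝ × ℝ) → ℝ} (hg : Continuous g)
    (hc : HasCompactSupport g) : Measurable fun p => ∫ l, g (l, p) ∂ μ.m p := by
  choose N hN0 hN using fun n : ℕ => exists_hat_approx hg hc (η := 1 / ((n : ℝ) + 1)) (by positivity)
  apply measurable_of_tendsto_metrizable (f := fun n p => ∑ j ∈ Finset.range (N n + 2),
      μ.mom (fun l => hat (N n * l - j)) p * g ((j : ℝ) / N n, p))
  · intro n
    apply Finset.measurable_fun_sum
    intro j _
    exact (μ.meas _ (continuous_hat.comp (by fun_prop))).mul (slice_cont hg _).measurable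
  · rw [tendsto_pi_nhds]
    intro p
    rw [tendsto_iff_dist_tendsto_zero]
    refine squeeze_zero (fun _ => dist_nonneg) (fun n => ?_) tendsto_one_div_add_atTop_nhds_zero_nat
    rw [dist_comm, Real.dist_eq]
    exact integral_hat_close μ hg p (hN n p)

/-- Testing on products is enough: sums of products of hat functions and slices of `g`
approximate `g` uniformly. -/
lemma WConv.tendsto {μ : ℕ → YM T} {ν : YM T} (h : WConv μ ν) {g : ℝ × (ℝ × ℝ) → ℝ}
    (hg : Continuous g) (hc : HasCompactSupport g) :
    Tendsto (fun n => ∫ p in Om T, ∫ l, g (l, p) ∂ (μ n).m p) atTop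
      (𝓝 (∫ p in Om T, ∫ l, g (l, p) ∂ ν.m p)) := by
  rw [Metric.tendsto_atTop]
  intro η hη
  set B := Prod.snd '' tsupport g with hB
  have hBc : IsCompact B := hc.isCompact.image continuous_snd
  have hBm : MeasurableSet B := hBc.isClosed.measurableSet
  set V := (volume.restrict (Om T)).real B with hV
  have hV0 : 0 ≤ V := measureReal_nonneg
  have hVfin : (volume.restrict (Om T)) B ≠ ⊤ := hBc.measure_lt_top.ne
  obtain ⟨N, hN0, hN⟩ := exists_hat_approx hg hc (η := η / (4 * (V + 1))) (by positivity)
  have hInt : ∀ (ρ : YM T) (j : ℕ), Integrable (fun p =>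
      ρ.mom (fun l => hat (N * l - j)) p * g ((j : ℝ) / N, p)) (volume.restrict (Om T)) :=
    fun ρ j => mom_mul_integrable ρ (continuous_hat.comp (by fun_prop))
      (slice_cont hg _) (slice_cpt hc _)
  have key : ∀ ρ : YM T, |(∫ p in Om T, ∫ l, g (l, p) ∂ ρ.m p) -
      ∑ j ∈ Finset.range (N + 2), ∫ p in Om T, ρ.mom (fun l => hat (N * l - j)) p *
        g ((j : ℝ) / N, p)| ≤ η / 4 := by
    intro ρ
    rw [← integral_finsetSum _ fun j _ => hInt ρ j]
    obtain ⟨C, hC⟩ := hg.bounded_above_of_compact_support hc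
    have hi : Integrable (fun p => ∫ l, g (l, p) ∂ ρ.m p) (volume.restrict (Om T)) := by
      apply Integrable.mono' (g := B.indicator fun _ => C)
      · exact (integrable_indicator_iff hBm).2 (integrableOn_const hVfin)
      · exact (measurable_integral_slice ρ hg hc).aestronglyMeasurable
      · refine ae_of_all _ fun p => ?_
        by_cases hp : p ∈ B
        · rw [indicator_of_mem hp]
          exact ρ.mom_bound p (F := fun l => g (l, p)) fun l _ => hC _
        · rw [indicator_of_notMem hp]
          simp [slice_zero hp]
    rw [← integral_sub hi (integrable_finsetSum _ fun j _ => hInt ρ j), ← Real.norm_eq_abs]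
    calc _ ≤ ∫ p in Om T, B.indicator (fun _ => η / (4 * (V + 1))) p := by
          apply norm_integral_le_of_norm_le
          · exact (integrable_indicator_iff hBm).2 (integrableOn_const hVfin)
          · refine ae_of_all _ fun p => ?_
            by_cases hp : p ∈ B
            · rw [indicator_of_mem hp]
              exact integral_hat_close ρ hg p (hN p)
            · rw [indicator_of_notMem hp]
              simp [slice_zero hp]
      _ = V * (η / (4 * (V + 1))) := by
          rw [integral_indicator hBm]; simp [hV, measureReal_restrict_apply hBm]
      _ ≤ η / 4 := by
          rw [mul_div_assoc', div_le_div_iff₀ (by positivity) (by norm_num)]; nlinarith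
  have h2 : Tendsto (fun n => ∑ j ∈ Finset.range (N + 2), ∫ p in Om T,
      (μ n).mom (fun l => hat (N * l - j)) p * g ((j : ℝ) / N, p)) atTop
      (𝓝 (∑ j ∈ Finset.range (N + 2), ∫ p in Om T,
      ν.mom (fun l => hat (N * l - j)) p * g ((j : ℝ) / N, p))) :=
    tendsto_finsetSum _ fun j _ => h _ (continuous_hat.comp (by fun_prop)) _
      (slice_cont hg _) (slice_cpt hc _)
  obtain ⟨n0, hn0⟩ := Metric.tendsto_atTop.1 h2 (η / 4) (by positivity)
  refine ⟨n0, fun n hn => ?_⟩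
  have a1 := abs_le.1 (key (μ n))
  have a2 := abs_le.1 (key ν)
  have a3 := hn0 n hn
  rw [Real.dist_eq, abs_lt] at a3 ⊢
  constructor <;> linarith [a1.1, a1.2, a2.1, a2.2, a3.1, a3.2]

/-- Convergence for `d_w` is convergence against product test functions. -/
lemma dw_iff {dw : YM T → YM T → ℝ} (hdw : GeneratesWeakStar T dw) (μ : ℕ → YM T) (ν : YM T) :
    Tendsto (fun n => dw (μ n) ν) atTop (𝓝 0) ↔ WConv μ ν := by
  rw [hdw.2.2 μ ν]
  constructor
  · intro h F hF k hk hc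
    -- the factor `min 1 (3 * hat (l / 3))` is a compactly supported cutoff equal to one on `[0,1]`
    have h2 := h (fun q => (F q.1 * min 1 (3 * hat (q.1 / 3)) * k q.2)) (by
        have := continuous_hat; fun_prop) (by
      apply HasCompactSupport.intro ((isCompact_Icc (a := (-3:ℝ)) (b := 3)).prod hc.isCompact)
      rintro ⟨l, p⟩ hq
      simp only [mem_prod, not_and_or] at hq
      rcases hq with hl | hp
      · rw [hat_eq_zero]
        · simp
        · by_contra h1
          rw [not_le, abs_lt] at h1
          apply hl; constructor <;> linarith [h1.1, h1.2]
      · rw [image_eq_zero_of_notMem_tsupport hp]; simp)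
    have e : ∀ ρ : YM T, ∀ p, ∫ l, F l * min 1 (3 * hat (l / 3)) * k p ∂ ρ.m p = ρ.mom F p * k p := by
      intro ρ p
      rw [integral_mul_const, YM.mom]
      congr 1
      apply integral_congr_ae
      filter_upwards [ρ.ae_mem p] with l hl
      have : min 1 (3 * hat (l / 3)) = 1 := by
        apply min_eq_left
        rw [hat, abs_of_nonneg (by linarith [hl.1])]
        have := le_max_right 0 (1 - l / 3)
        linarith [hl.2]
      rw [this, mul_one]
    simpa only [e] using h2
  · intro h g hg hc
    exact h.tendsto hg hc

end weakstar

/-! ### Mollification -/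

/-- The correlation `z ↦ ∫ ρ (y - z) h y dy` of `h` with the kernel `ρ`. -/
def mol (ρ h : ℝ × ℝ → ℝ) (z : ℝ × ℝ) : ℝ := ∫ y, ρ (y - z) * h y

lemma mol_eq_convolution (ρ h : ℝ × ℝ → ℝ) :
    mol ρ h = convolution h (fun z => ρ (-z)) (ContinuousLinearMap.lsmul ℝ ℝ) volume := by
  ext z
  rw [convolution_def, mol]
  congr 1
  ext y
  simp [mul_comm]

lemma hasCompactSupport_neg_arg {ρ : ℝ × ℝ → ℝ} (hc : HasCompactSupport ρ) :
    HasCompactSupport (fun z => ρ (-z)) :=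
  hc.comp_homeomorph (Homeomorph.neg (ℝ × ℝ))

lemma contDiff_mol {ρ h : ℝ × ℝ → ℝ} (hρ : ContDiff ℝ (⊤ : ℕ∞) ρ) (hc : HasCompactSupport ρ)
    (hh : LocallyIntegrable h) : ContDiff ℝ (⊤ : ℕ∞) (mol ρ h) := by
  rw [mol_eq_convolution]
  exact (hasCompactSupport_neg_arg hc).contDiff_convolution_right _ hh (hρ.comp contDiff_neg)

lemma continuous_mol {ρ h : ℝ × ℝ → ℝ} (hρ : Continuous ρ) (hc : HasCompactSupport ρ)
    (hh : LocallyIntegrable h) : Continuous (mol ρ h) := by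
  rw [mol_eq_convolution]
  exact (hasCompactSupport_neg_arg hc).continuous_convolution_right _ hh
    (hρ.comp continuous_neg)

lemma fderiv_mol {ρ h : ℝ × ℝ → ℝ} (hρ : ContDiff ℝ (⊤ : ℕ∞) ρ) (hc : HasCompactSupport ρ)
    (hh : LocallyIntegrable h) (z v : ℝ × ℝ) :
    fderiv ℝ (mol ρ h) z v = - mol (fun y => fderiv ℝ ρ y v) h z := by
  have hc' := hasCompactSupport_neg_arg hc
  have hρ' : ContDiff ℝ (⊤ : ℕ∞) (fun z => ρ (-z)) := hρ.comp contDiff_neg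
  rw [mol_eq_convolution, (hc'.hasFDerivAt_convolution_right _ hh
    (hρ'.of_le (by exact_mod_cast le_top)) z).fderiv,
    convolution_precompR_apply _ hh (hc'.fderiv ℝ)
      (hρ'.continuous_fderiv (by simp)) z v, mol_eq_convolution, ]
  have : (fun a => (fderiv ℝ (fun z => ρ (-z)) a) v) = fun a => - (fderiv ℝ ρ (-a)) v := by
    ext a
    have hd : HasFDerivAt (fun z => ρ (-z))
        ((fderiv ℝ ρ (-a)).comp (-ContinuousLinearMap.id ℝ (ℝ × ℝ))) a :=
      ((hρ.differentiable (by simp)) (-a)).hasFDerivAt.comp a (hasFDerivAt_id a).neg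
    rw [hd.fderiv]; simp
  rw [this]
  simp only [convolution_def]
  rw [← integral_neg]
  congr 1; ext y; simp

lemma pxF_mol {ρ h : ℝ × ℝ → ℝ} (hρ : ContDiff ℝ (⊤ : ℕ∞) ρ) (hc : HasCompactSupport ρ)
    (hh : LocallyIntegrable h) (z : ℝ × ℝ) :
    pxF (mol ρ h) z = - mol (pxF ρ) h z := fderiv_mol hρ hc hh z _

lemma ptF_mol {ρ h : ℝ × ℝ → ℝ} (hρ : ContDiff ℝ (⊤ : ℕ∞) ρ) (hc : HasCompactSupport ρ)
    (hh : LocallyIntegrable h) (z : ℝ × ℝ) :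
    ptF (mol ρ h) z = - mol (ptF ρ) h z := fderiv_mol hρ hc hh z _

lemma shift_cpt {ρ : ℝ × ℝ → ℝ} (hc : HasCompactSupport ρ) (z : ℝ × ℝ) :
    HasCompactSupport (fun y => ρ (y - z)) :=
  hc.comp_homeomorph (Homeomorph.subRight z)

lemma mol_integrable {ρ h : ℝ × ℝ → ℝ} (hρ : Continuous ρ) (hc : HasCompactSupport ρ)
    (hh : LocallyIntegrable h) (z : ℝ × ℝ) : Integrable (fun y => ρ (y - z) * h y) := by
  have := hh.integrable_smul_left_of_hasCompactSupport
    (hρ.comp (continuous_id.sub continuous_const)) (shift_cpt hc z)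
  simpa using this

lemma mol_sub {ρ g h : ℝ × ℝ → ℝ} (hρ : Continuous ρ) (hc : HasCompactSupport ρ)
    (hg : LocallyIntegrable g) (hh : LocallyIntegrable h) (z : ℝ × ℝ) :
    mol ρ (fun y => g y - h y) z = mol ρ g z - mol ρ h z := by
  rw [mol, mol, mol, ← integral_sub (mol_integrable hρ hc hg z) (mol_integrable hρ hc hh z)]
  congr 1; ext y; ring

lemma mol_mono {ρ g h : ℝ × ℝ → ℝ} (hρ : Continuous ρ) (hc : HasCompactSupport ρ)
    (h0 : ∀ z, 0 ≤ ρ z)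
    (hg : LocallyIntegrable g) (hh : LocallyIntegrable h) (hgh : ∀ y, g y ≤ h y) (z : ℝ × ℝ) :
    mol ρ g z ≤ mol ρ h z :=
  integral_mono (mol_integrable hρ hc hg z) (mol_integrable hρ hc hh z)
    fun y => mul_le_mul_of_nonneg_left (hgh y) (h0 _)

lemma integral_shift (ρ : ℝ × ℝ → ℝ) (z : ℝ × ℝ) : ∫ y, ρ (y - z) = ∫ y, ρ y :=
  integral_sub_right_eq_self ρ z

lemma mol_integrable' {ρ h : ℝ × ℝ → ℝ} (hρ : Continuous ρ) (hc : HasCompactSupport ρ)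
    (hh : Integrable h) : Integrable (mol ρ h) := by
  rw [mol_eq_convolution]
  exact hh.integrable_convolution _ ((hρ.comp continuous_neg).integrable_of_hasCompactSupport
    (hasCompactSupport_neg_arg hc))

lemma integral_mol {ρ h : ℝ × ℝ → ℝ} (hρ : Continuous ρ) (hc : HasCompactSupport ρ)
    (hh : Integrable h) : ∫ z, mol ρ h z = (∫ z, ρ z) * ∫ z, h z := by
  have hi : Integrable (fun z => ρ (-z)) :=
    (hρ.comp continuous_neg).integrable_of_hasCompactSupport (hasCompactSupport_neg_arg hc)
  rw [mol_eq_convolution, integral_convolution _ hh hi]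
  simp only [ContinuousLinearMap.lsmul_apply, smul_eq_mul]
  rw [integral_neg_eq_self ρ volume, mul_comm]

lemma abs_mol_le {ρ h : ℝ × ℝ → ℝ} (h0 : ∀ z, 0 ≤ ρ z) (z : ℝ × ℝ) :
    |mol ρ h z| ≤ mol ρ (fun y => |h y|) z := by
  refine (abs_integral_le_integral_abs).trans (le_of_eq ?_)
  unfold mol; congr 1; ext y; rw [abs_mul, abs_of_nonneg (h0 _)]

/-- The standard mollifier of radius `2 / (n + 1)`. -/
def bmp (n : ℕ) : ContDiffBump (0 : ℝ × ℝ) :=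
  ⟨1 / ((n : ℝ) + 1), 2 / ((n : ℝ) + 1), by positivity, by gcongr; norm_num⟩

/-- The kernel of the standard mollifier. -/
def ker (n : ℕ) : ℝ × ℝ → ℝ := (bmp n).normed volume

lemma ker_smooth (n : ℕ) : ContDiff ℝ (⊤ : ℕ∞) (ker n) := (bmp n).contDiff_normed
lemma ker_cont (n : ℕ) : Continuous (ker n) := (ker_smooth n).continuous
lemma ker_cpt (n : ℕ) : HasCompactSupport (ker n) := (bmp n).hasCompactSupport_normed
lemma ker_nonneg (n : ℕ) (z : ℝ × ℝ) : 0 ≤ ker n z := (bmp n).nonneg_normed z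
lemma ker_integral (n : ℕ) : ∫ z, ker n z = 1 := (bmp n).integral_normed
lemma ker_zero (n : ℕ) {z : ℝ × ℝ} (h : 2 / ((n : ℝ) + 1) ≤ ‖z‖) : ker n z = 0 := by
  by_contra hz
  have : z ∈ Function.support ((bmp n).normed volume) := hz
  rw [(bmp n).support_normed_eq] at this
  simp [bmp] at this
  linarith

lemma rad_tendsto : Tendsto (fun n : ℕ => 2 / ((n : ℝ) + 1)) atTop (𝓝 0) := by
  have := (tendsto_one_div_add_atTop_nhds_zero_nat (𝕜 := ℝ)).const_mul 2
  simpa [div_eq_mul_inv] using this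

lemma mol_ker_eq (n : ℕ) (h : ℝ × ℝ → ℝ) :
    mol (ker n) h =
      convolution ((bmp n).normed volume) h (ContinuousLinearMap.lsmul ℝ ℝ) volume := by
  ext z
  rw [convolution_eq_swap, mol]
  congr 1; ext y
  have : ker n (y - z) = (bmp n).normed volume (z - y) := by
    rw [← (bmp n).normed_neg, neg_sub]; rfl
  simp [this]

lemma ae_mol_tendsto {h : ℝ × ℝ → ℝ} (hh : LocallyIntegrable h) :
    ∀ᵐ z, Tendsto (fun n => mol (ker n) h z) atTop (𝓝 (h z)) := by
  have := ContDiffBump.ae_convolution_tendsto_right_of_locallyIntegrable (φ := bmp)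
    (l := atTop) (K := 2) (μ := volume) (g := h) rad_tendsto
    (Eventually.of_forall fun n => by simp [bmp]; ring_nf; rfl) hh
  filter_upwards [this] with z hz
  simpa [mol_ker_eq] using hz

lemma mol_ker_sub_le {c : ℝ × ℝ → ℝ} (hc : Continuous c) {n : ℕ} {z : ℝ × ℝ} {a : ℝ}
    (h : ∀ y, dist y z < 2 / ((n : ℝ) + 1) → |c y - c z| ≤ a) :
    |mol (ker n) c z - c z| ≤ a := by
  have h1 : mol (ker n) c z - c z = ∫ y, ker n (y - z) * (c y - c z) := by
    have : c z = ∫ y, ker n (y - z) * c z := by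
      rw [integral_mul_const, integral_shift, ker_integral, one_mul]
    conv_lhs => rw [this]
    rw [mol, ← integral_sub (mol_integrable (ker_cont n) (ker_cpt n) hc.locallyIntegrable z)
      (mol_integrable (h := fun _ => c z) (ker_cont n) (ker_cpt n)
        continuous_const.locallyIntegrable z)]
    congr 1; ext y; ring
  rw [h1]
  have h2 : ∫ y, ker n (y - z) * a = a := by
    rw [integral_mul_const, integral_shift, ker_integral, one_mul]
  conv_rhs => rw [← h2]
  rw [← Real.norm_eq_abs]
  refine norm_integral_le_of_norm_le (mol_integrable (h := fun _ => a) (ker_cont n) (ker_cpt n)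
        continuous_const.locallyIntegrable z) (ae_of_all _ fun y => ?_)
  rw [Real.norm_eq_abs, abs_mul, abs_of_nonneg (ker_nonneg n _)]
  by_cases hy : dist y z < 2 / ((n : ℝ) + 1)
  · exact mul_le_mul_of_nonneg_left (h y hy) (ker_nonneg n _)
  · rw [ker_zero n (by rw [← dist_eq_norm]; linarith)]; simp

/-- Mollifications converge in `L¹`. -/
lemma tendsto_integral_mol_sub {h : ℝ × ℝ → ℝ} (hh : Integrable h) :
    Tendsto (fun n => ∫ z, |mol (ker n) h z - h z|) atTop (𝓝 0) := by
  rw [Metric.tendsto_atTop]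
  intro ε hε
  obtain ⟨c, hcc, hce, hc, hci⟩ := hh.exists_hasCompactSupport_integral_sub_le
    (show (0:ℝ) < ε / 4 by positivity)
  -- uniform continuity controls the mollification of `c`, which lives in a fixed ball
  obtain ⟨R, hR⟩ := hcc.isCompact.isBounded.subset_closedBall 0
  set V := volume.real (Metric.closedBall (0 : ℝ × ℝ) (R + 2))
  have hV : 0 ≤ V := measureReal_nonneg
  have hUC := hcc.uniformContinuous_of_continuous hc
  obtain ⟨d, hd, hcd⟩ := Metric.uniformContinuous_iff.1 hUC (ε / (4 * (V + 1))) (by positivity)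
  obtain ⟨n0, hn0⟩ := (rad_tendsto.eventually (gt_mem_nhds hd)).exists_forall_of_atTop
  refine ⟨n0, fun n hn => ?_⟩
  have hrad : 2 / ((n : ℝ) + 1) ≤ 2 := by
    rw [div_le_iff₀ (by positivity)]; nlinarith [(Nat.cast_nonneg n : (0:ℝ) ≤ n)]
  have hsub : Integrable (fun y => h y - c y) := hh.sub hci
  have hl := hh.locallyIntegrable
  have hlc := hci.locallyIntegrable
  have hpt : ∀ z, |mol (ker n) c z - c z| ≤
      (Metric.closedBall (0 : ℝ × ℝ) (R + 2)).indicator (fun _ => ε / (4 * (V + 1))) z := by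
    intro z
    by_cases hz : z ∈ Metric.closedBall (0 : ℝ × ℝ) (R + 2)
    · rw [indicator_of_mem hz]
      apply mol_ker_sub_le hc
      intro y hy
      exact (hcd (hy.trans (hn0 n hn))).le
    · rw [indicator_of_notMem hz]
      have hz' : R + 2 < ‖z‖ := by simpa using hz
      have hzero : ∀ y, R < ‖y‖ → c y = 0 := by
        intro y hy
        by_contra h0
        have := hR (subset_tsupport _ h0)
        simp at this; linarith
      apply mol_ker_sub_le hc
      intro y hy
      have : ‖z‖ ≤ ‖y‖ + dist y z := by
        rw [dist_comm, dist_eq_norm]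
        have := norm_add_le y (z - y); simpa using this
      rw [hzero y (by linarith), hzero z (by linarith)]; simp
  have h1 : ∫ z, |mol (ker n) c z - c z| ≤ ε / 4 := by
    calc _ ≤ ∫ z, (Metric.closedBall (0 : ℝ × ℝ) (R + 2)).indicator
              (fun _ => ε / (4 * (V + 1))) z := by
          apply integral_mono ((mol_integrable' (ker_cont n) (ker_cpt n) hci).sub hci).abs
          · exact (integrable_indicator_iff measurableSet_closedBall).2
              (integrableOn_const (measure_closedBall_lt_top.ne))
          · exact hpt
      _ = V * (ε / (4 * (V + 1))) := by
          rw [integral_indicator measurableSet_closedBall, setIntegral_const, smul_eq_mul]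
      _ ≤ ε / 4 := by
          rw [← mul_div_assoc, div_le_div_iff₀ (by positivity) (by positivity)]; nlinarith
  have h2 : ∫ z, |mol (ker n) (fun y => h y - c y) z| ≤ ε / 4 := by
    calc _ ≤ ∫ z, mol (ker n) (fun y => |h y - c y|) z := by
          apply integral_mono (mol_integrable' (ker_cont n) (ker_cpt n) hsub).abs
            (mol_integrable' (ker_cont n) (ker_cpt n) hsub.abs)
          intro z; exact abs_mol_le (ker_nonneg n) z
      _ ≤ ε / 4 := by
          rw [integral_mol (ker_cont n) (ker_cpt n) hsub.abs, ker_integral, one_mul]; exact hce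
  rw [Real.dist_eq, sub_zero, abs_of_nonneg (integral_nonneg fun _ => abs_nonneg _)]
  calc ∫ z, |mol (ker n) h z - h z|
      ≤ ∫ z, (|mol (ker n) (fun y => h y - c y) z| + |mol (ker n) c z - c z| + |h z - c z|) := by
        apply integral_mono ((mol_integrable' (ker_cont n) (ker_cpt n) hh).sub hh).abs
        · exact ((mol_integrable' (ker_cont n) (ker_cpt n) hsub).abs.add
            ((mol_integrable' (ker_cont n) (ker_cpt n) hci).sub hci).abs).add hsub.abs
        intro z
        simp only
        rw [mol_sub (ker_cont n) (ker_cpt n) hl hlc]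
        have e : mol (ker n) h z - h z = (mol (ker n) h z - mol (ker n) c z) +
          (mol (ker n) c z - c z) + (-(h z - c z)) := by ring
        rw [Pi.sub_apply, e]
        refine (abs_add_le _ _).trans ?_
        rw [abs_neg]
        gcongr
        exact abs_add_le _ _
    _ = (∫ z, |mol (ker n) (fun y => h y - c y) z|) + (∫ z, |mol (ker n) c z - c z|) +
          ∫ z, |h z - c z| := by
        rw [integral_add, integral_add]
        · exact (mol_integrable' (ker_cont n) (ker_cpt n) hsub).abs
        · exact ((mol_integrable' (ker_cont n) (ker_cpt n) hci).sub hci).abs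
        · exact (mol_integrable' (ker_cont n) (ker_cpt n) hsub).abs.add
            ((mol_integrable' (ker_cont n) (ker_cpt n) hci).sub hci).abs
        · exact hsub.abs
    _ < ε := by
        have : ∫ z, |h z - c z| ≤ ε / 4 := hce
        linarith

/-! ### The chain rule for weak derivatives -/

/-- A square integrable function on a finite-measure set is integrable. -/
lemma integrableOn_of_sq {w : ℝ × ℝ → ℝ} {S : Set (ℝ × ℝ)} (hw : Measurable w)
    (hS : volume S ≠ ⊤) (h : IntegrableOn (fun p => w p ^ 2) S) : IntegrableOn w S := by
  have h1 : IntegrableOn (fun _ : ℝ × ℝ => (1:ℝ)) S := integrableOn_const hS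
  refine (h1.add h).mono' hw.aestronglyMeasurable (ae_of_all _ fun p => ?_)
  simp only [Real.norm_eq_abs, Pi.add_apply]
  nlinarith [sq_nonneg (|w p| - 1), sq_abs (w p), abs_nonneg (w p)]

lemma measurable_pxF {g : ℝ × ℝ → ℝ} (h : ContDiff ℝ (⊤ : ℕ∞) g) : Measurable (pxF g) :=
  (contDiff_pxF h).continuous.measurable

/-- The primitive of `D`. -/
def prim (D : ℝ → ℝ) (v : ℝ) : ℝ := ∫ s in (0:ℝ)..v, D s

lemma hasDerivAt_prim {D : ℝ → ℝ} (hD : Continuous D) (v : ℝ) : HasDerivAt (prim D) (D v) v :=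
  intervalIntegral.integral_hasDerivAt_right (hD.intervalIntegrable _ _)
    (hD.stronglyMeasurableAtFilter _ _) hD.continuousAt

lemma continuous_prim {D : ℝ → ℝ} (hD : Continuous D) : Continuous (prim D) :=
  continuous_iff_continuousAt.2 fun v => (hasDerivAt_prim hD v).continuousAt

lemma chain_parts {D : ℝ → ℝ} (hD : Continuous D) {g η : ℝ × ℝ → ℝ}
    (hg : ContDiff ℝ (⊤ : ℕ∞) g) (hη : ContDiff ℝ (⊤ : ℕ∞) η) (hc : HasCompactSupport η) :
    ∫ p, prim D (g p) * pxF η p = - ∫ p, (D (g p) * pxF g p) * η p := by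
  have hd : ∀ p, HasFDerivAt (fun p => prim D (g p)) (D (g p) • fderiv ℝ g p) p := fun p =>
    (hasDerivAt_prim hD (g p)).comp_hasFDerivAt p ((hg.differentiable (by simp)) p).hasFDerivAt
  have he : (fun p => D (g p) * pxF g p) =
      fun p => fderiv ℝ (fun p => prim D (g p)) p (0, 1) := by
    ext p; rw [(hd p).fderiv]; simp [pxF]
  have hcont : Continuous (fun p => D (g p) * pxF g p) :=
    (hD.comp hg.continuous).mul (contDiff_pxF hg).continuous
  have hpc : Continuous (fun p => prim D (g p)) := (continuous_prim hD).comp hg.continuous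
  rw [he] at hcont
  simp_rw [fun p => congrFun he p]
  apply integral_mul_fderiv_eq_neg_fderiv_mul_of_integrable
  · exact (hcont.mul hη.continuous).integrable_of_hasCompactSupport hc.mul_left
  · exact (hpc.mul (contDiff_pxF hη).continuous).integrable_of_hasCompactSupport
      (cpt_pxF hc).mul_left
  · exact (hpc.mul hη.continuous).integrable_of_hasCompactSupport hc.mul_left
  · exact fun p _ => (hd p).differentiableAt
  · exact fun p _ => (hη.differentiable (by simp)) p

/-- A smooth time cutoff, vanishing near `0` and `T`. -/
def tcut (T : ℝ) (k : ℕ) (t : ℝ) : ℝ :=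
  Real.smoothTransition (k * t - 1) * Real.smoothTransition (k * (T - t) - 1)

lemma tcut_smooth (T : ℝ) (k : ℕ) : ContDiff ℝ (⊤ : ℕ∞) (tcut T k) :=
  (Real.smoothTransition.contDiff.comp ((contDiff_const.mul contDiff_id).sub contDiff_const)).mul
    (Real.smoothTransition.contDiff.comp
      ((contDiff_const.mul (contDiff_const.sub contDiff_id)).sub contDiff_const))

lemma tcut_nonneg (T : ℝ) (k : ℕ) (t : ℝ) : 0 ≤ tcut T k t :=
  mul_nonneg (Real.smoothTransition.nonneg _) (Real.smoothTransition.nonneg _)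

lemma tcut_le_one (T : ℝ) (k : ℕ) (t : ℝ) : tcut T k t ≤ 1 :=
  mul_le_one₀ (Real.smoothTransition.le_one _) (Real.smoothTransition.nonneg _)
    (Real.smoothTransition.le_one _)

lemma tcut_ne_zero {T : ℝ} {k : ℕ} {t : ℝ} (h : tcut T k t ≠ 0) :
    1 < k * t ∧ 1 < k * (T - t) := by
  constructor
  · by_contra h'
    exact h (by rw [tcut, Real.smoothTransition.zero_of_nonpos (by linarith), zero_mul])
  · by_contra h'
    exact h (by rw [tcut, mul_comm, Real.smoothTransition.zero_of_nonpos (by linarith), zero_mul])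

lemma tcut_eventually {T t : ℝ} (ht : t ∈ Ioo 0 T) : ∀ᶠ k : ℕ in atTop, tcut T k t = 1 := by
  have h1 : ∀ᶠ k : ℕ in atTop, (2:ℝ) ≤ k * t :=
    (tendsto_natCast_atTop_atTop.atTop_mul_const ht.1).eventually_ge_atTop 2
  have h2 : ∀ᶠ k : ℕ in atTop, (2:ℝ) ≤ k * (T - t) :=
    (tendsto_natCast_atTop_atTop.atTop_mul_const (sub_pos.2 ht.2)).eventually_ge_atTop 2
  filter_upwards [h1, h2] with k a b
  rw [tcut, Real.smoothTransition.one_of_one_le (by linarith),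
    Real.smoothTransition.one_of_one_le (by linarith), one_mul]

/-- A test function multiplied by the time cutoff. -/
def TTest.cut {T : ℝ} (φ : TTest T) (k : ℕ) : TTest T where
  toFun p := tcut T k p.1 * φ.toFun p
  smooth := ((tcut_smooth T k).comp contDiff_fst).mul φ.smooth
  cpt := φ.cpt.mul_left
  supp _ hp := φ.supp (right_ne_zero_of_mul hp)

lemma TTest.cut_px {T : ℝ} (φ : TTest T) (k : ℕ) (p : ℝ × ℝ) :
    pxF (φ.cut k).toFun p = tcut T k p.1 * pxF φ.toFun p := by
  have h1 : HasFDerivAt (fun q : ℝ × ℝ => tcut T k q.1)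
      (deriv (tcut T k) p.1 • ContinuousLinearMap.fst ℝ ℝ ℝ) p :=
    (((tcut_smooth T k).differentiable (by simp)) p.1).hasDerivAt.comp_hasFDerivAt p
      hasFDerivAt_fst
  have h2 := ((φ.smooth.differentiable (by simp)) p).hasFDerivAt
  have h3 : HasFDerivAt (φ.cut k).toFun _ p := h1.mul h2
  rw [pxF, h3.fderiv]
  simp [pxF]

lemma TTest.abs_bound {T : ℝ} (φ : TTest T) : ∃ C, 0 ≤ C ∧ ∀ p, |φ.toFun p| ≤ C := by
  obtain ⟨C, hC⟩ := φ.cont.bounded_above_of_compact_support φ.cpt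
  exact ⟨C, (norm_nonneg _).trans (hC 0), hC⟩

/-- The chain rule for test functions staying away from the boundary of the strip. -/
lemma chain_rule_cut {T : ℝ} {D : ℝ → ℝ} (hD : Continuous D) {u w : ℝ × ℝ → ℝ}
    (hu : Measurable u) (hu1 : ∀ p, u p ∈ Icc (0:ℝ) 1) (hw : L2loc T w) (h : HasWeakDx T u w)
    (η : TTest T) {d : ℝ} (hd : 0 < d) (hη : ∀ p, η.toFun p ≠ 0 → d < p.1 ∧ p.1 < T - d) :
    pair T (fun p => D (u p) * w p) η.toFun =
      - pair T (fun p => prim D (u p)) (pxF η.toFun) := by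
  obtain ⟨R, hR⟩ := η.cpt.isCompact.isBounded.subset_closedBall 0
  have hηR : ∀ p, η.toFun p ≠ 0 → |p.2| ≤ R := by
    intro p hp
    have := hR (subset_tsupport _ hp)
    rw [mem_closedBall_zero_iff] at this
    exact (norm_snd_le p).trans this
  set R' := max R 0 + 2 with hR'
  have hR0 : 0 < R' := by positivity
  set B : Set (ℝ × ℝ) := Icc (0:ℝ) T ×ˢ Icc (-R') R' with hB
  have hBm : MeasurableSet B := measurableSet_Icc.prod measurableSet_Icc
  have hBfin : volume B ≠ ⊤ := (isCompact_Icc.prod isCompact_Icc).measure_lt_top.ne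
  set ub : ℝ × ℝ → ℝ := (Om T).indicator u
  set wb : ℝ × ℝ → ℝ := B.indicator w
  have hub : Measurable ub := hu.indicator (measurableSet_Om T)
  have hub1 : ∀ p, |ub p| ≤ 1 := by
    intro p
    by_cases hp : p ∈ Om T
    · simp only [ub, indicator_of_mem hp, abs_le]
      constructor <;> linarith [(hu1 p).1, (hu1 p).2]
    · simp [ub, indicator_of_notMem hp]
  have hubl : LocallyIntegrable ub :=
    (continuous_const (y := (1:ℝ))).locallyIntegrable.mono hub.aestronglyMeasurable
      (ae_of_all _ fun p => by simpa using hub1 p)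
  have hwi : Integrable wb :=
    (integrable_indicator_iff hBm).2 (integrableOn_of_sq hw.1 hBfin (hw.2 R' hR0))
  have hwl := hwi.locallyIntegrable
  obtain ⟨Cη, hCη0, hCη⟩ := η.abs_bound
  obtain ⟨CD, hCD⟩ := (isCompact_Icc (a := (-1:ℝ)) (b := 1)).exists_bound_of_continuousOn
    hD.continuousOn
  obtain ⟨CP, hCP⟩ := (isCompact_Icc (a := (-1:ℝ)) (b := 1)).exists_bound_of_continuousOn
    (continuous_prim hD).continuousOn
  have hm1 : ∀ n p, |mol (ker n) ub p| ≤ 1 := by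
    intro n p
    refine (abs_mol_le (ker_nonneg n) p).trans ?_
    have : mol (ker n) (fun _ => 1) p = 1 := by
      simp [mol, integral_shift, ker_integral]
    rw [← this]
    exact mol_mono (ker_cont n) (ker_cpt n) (ker_nonneg n)
      (hubl.mono hub.norm.aestronglyMeasurable (ae_of_all _ fun _ => by simp))
      continuous_const.locallyIntegrable hub1 p
  have hms : ∀ n, ContDiff ℝ (⊤ : ℕ∞) (mol (ker n) ub) := fun n =>
    contDiff_mol (ker_smooth n) (ker_cpt n) hubl
  -- on the support of `η` the mollified function has derivative the mollification of `w`
  have hder : ∀ n : ℕ, 2 / ((n : ℝ) + 1) < d → ∀ p, η.toFun p ≠ 0 →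
      pxF (mol (ker n) ub) p = mol (ker n) wb p := by
    intro n hn p hp
    have hkz : ∀ q, ker n (q - p) ≠ 0 → |q.1 - p.1| < 2 / ((n : ℝ) + 1) ∧
        |q.2 - p.2| < 2 / ((n : ℝ) + 1) := by
      intro q hq
      have : ‖q - p‖ < 2 / ((n : ℝ) + 1) := by
        by_contra h'; exact hq (ker_zero n (not_lt.1 h'))
      exact ⟨(norm_fst_le (q - p)).trans_lt this, (norm_snd_le (q - p)).trans_lt this⟩
    let φ : TTest T :=
      { toFun := fun q => ker n (q - p)
        smooth := (ker_smooth n).comp (contDiff_id.sub contDiff_const)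
        cpt := shift_cpt (ker_cpt n) p
        supp := by
          intro q hq
          have h1 := abs_lt.1 (hkz q hq).1
          have h2 := hη p hp
          refine ⟨⟨?_, ?_⟩, mem_univ _⟩ <;> linarith [h1.1, h1.2] }
    have hφx : ∀ q, pxF φ.toFun q = pxF (ker n) (q - p) := by
      intro q
      have hd : HasFDerivAt φ.toFun
          ((fderiv ℝ (ker n) (q - p)).comp (ContinuousLinearMap.id ℝ (ℝ × ℝ))) q :=
        HasFDerivAt.comp (g := ker n) (f := fun q => q - p) q
          ((ker_smooth n).differentiable (by simp) (q - p)).hasFDerivAt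
          ((hasFDerivAt_id q).sub_const p)
      simp [pxF, hd.fderiv]
    rw [pxF_mol (ker_smooth n) (ker_cpt n) hubl]
    have e1 : mol (pxF (ker n)) ub p = pair T u (pxF φ.toFun) := by
      have := pair_eq_integral u φ.px
      simp only [TTest.px] at this
      rw [this, mol]
      congr 1; ext q
      by_cases hq : q ∈ Om T
      · simp only [ub, indicator_of_mem hq, hφx]; ring
      · have := φ.px.zero_of_not_mem hq
        simp only [TTest.px] at this
        rw [this]; simp [ub, indicator_of_notMem hq]
    have e2 : mol (ker n) wb p = pair T w φ.toFun := by
      rw [pair_eq_integral, mol]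
      congr 1; ext q
      by_cases hq : q ∈ B
      · simp only [wb, indicator_of_mem hq, φ]; ring
      · simp only [wb, indicator_of_notMem hq, φ, mul_zero]
        symm
        rw [mul_eq_zero]; right
        by_contra hk
        apply hq
        have h1 := abs_lt.1 (hkz q hk).1
        have h1' := abs_lt.1 (hkz q hk).2
        have h2 := hη p hp
        have h3 := abs_le.1 (hηR p hp)
        have h4 : 2 / ((n : ℝ) + 1) ≤ 2 := by
          rw [div_le_iff₀ (by positivity)]; nlinarith [(Nat.cast_nonneg n : (0:ℝ) ≤ n)]
        have h5 := le_max_left R 0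
        refine ⟨⟨by linarith, by linarith⟩, ⟨?_, ?_⟩⟩ <;> simp only [hR'] <;> linarith
    rw [e1, h φ, e2, neg_neg]
  have hae : ∀ᵐ p, Tendsto (fun n => mol (ker n) ub p) atTop (𝓝 (ub p)) := ae_mol_tendsto hubl
  have hmem : ∀ n p, mol (ker n) ub p ∈ Icc (-1:ℝ) 1 := fun n p => abs_le.1 (hm1 n p)
  -- convergence of the two sides
  have hL : Tendsto (fun n => ∫ p, prim D (mol (ker n) ub p) * pxF η.toFun p) atTop
      (𝓝 (∫ p, prim D (ub p) * pxF η.toFun p)) := by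
    have hηx := η.px.cont.integrable_of_hasCompactSupport (μ := volume) η.px.cpt
    apply tendsto_integral_of_dominated_convergence (fun p => CP * |η.px.toFun p|)
    · intro n
      exact (((continuous_prim hD).comp (hms n).continuous).mul η.px.cont).aestronglyMeasurable
    · exact hηx.abs.const_mul _
    · intro n
      refine ae_of_all _ fun p => ?_
      rw [norm_mul]
      exact mul_le_mul_of_nonneg_right (hCP _ (hmem n p)) (abs_nonneg _)
    · filter_upwards [hae] with p hp
      exact (((continuous_prim hD).tendsto _).comp hp).mul_const _
  have hwm : Integrable fun p => |wb p| := hwi.abs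
  have hub2 : ∀ p, ub p ∈ Icc (-1:ℝ) 1 := fun p => abs_le.1 (hub1 p)
  have hR1 : Tendsto (fun n => ∫ p, (D (mol (ker n) ub p) * wb p) * η.toFun p) atTop
      (𝓝 (∫ p, (D (ub p) * wb p) * η.toFun p)) := by
    apply tendsto_integral_of_dominated_convergence (fun p => (CD * |wb p|) * Cη)
    · intro n
      exact (((hD.comp (hms n).continuous).aestronglyMeasurable).mul hwi.1).mul
        η.cont.aestronglyMeasurable
    · exact (hwm.const_mul _).mul_const _
    · intro n
      refine ae_of_all _ fun p => ?_
      rw [norm_mul, norm_mul]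
      have := hCD _ (hmem n p)
      exact mul_le_mul (mul_le_mul_of_nonneg_right this (abs_nonneg _)) (hCη p) (abs_nonneg _)
        (mul_nonneg ((norm_nonneg _).trans this) (abs_nonneg _))
    · filter_upwards [hae] with p hp
      exact (((hD.tendsto _).comp hp).mul_const _).mul_const _
  have hR2 : Tendsto (fun n => ∫ p, (D (mol (ker n) ub p) * (mol (ker n) wb p - wb p)) * η.toFun p)
      atTop (𝓝 0) := by
    have h0 := (tendsto_integral_mol_sub hwi).const_mul (CD * Cη)
    rw [mul_zero] at h0
    refine squeeze_zero_norm (fun n => ?_) h0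
    rw [← integral_const_mul]
    refine norm_integral_le_of_norm_le
      ((((mol_integrable' (ker_cont n) (ker_cpt n) hwi).sub hwi).abs).const_mul _)
      (ae_of_all _ fun p => ?_)
    rw [norm_mul, norm_mul]
    have := hCD _ (hmem n p)
    calc _ ≤ CD * |mol (ker n) wb p - wb p| * Cη :=
          mul_le_mul (mul_le_mul_of_nonneg_right this (abs_nonneg _)) (hCη p) (abs_nonneg _)
            (mul_nonneg ((norm_nonneg _).trans this) (abs_nonneg _))
      _ = _ := by ring
  have hR3 := hR1.add hR2
  rw [add_zero] at hR3
  have hEq : ∀ᶠ n : ℕ in atTop, ∫ p, prim D (mol (ker n) ub p) * pxF η.toFun p =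
      -((∫ p, (D (mol (ker n) ub p) * wb p) * η.toFun p) +
        ∫ p, (D (mol (ker n) ub p) * (mol (ker n) wb p - wb p)) * η.toFun p) := by
    filter_upwards [rad_tendsto.eventually (gt_mem_nhds hd)] with n hn
    rw [chain_parts hD (hms n) η.smooth η.cpt, ← integral_add]
    · congr 2; ext p
      by_cases hp : η.toFun p = 0
      · simp [hp]
      · rw [hder n hn p hp]; ring
    · have hcd : Continuous (fun p => D (mol (ker n) ub p) * η.toFun p) :=
        (hD.comp (hms n).continuous).mul η.cont
      have := hwl.integrable_smul_left_of_hasCompactSupport hcd η.cpt.mul_left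
      refine this.congr (ae_of_all _ fun p => ?_)
      simp; ring
    · have hcd : Continuous (fun p => D (mol (ker n) ub p) * η.toFun p) :=
        (hD.comp (hms n).continuous).mul η.cont
      have := ((mol_integrable' (ker_cont n) (ker_cpt n)
        hwi).sub hwi).locallyIntegrable.integrable_smul_left_of_hasCompactSupport hcd η.cpt.mul_left
      refine this.congr (ae_of_all _ fun p => ?_)
      simp; ring
  have hfin := tendsto_nhds_unique (hL.congr' hEq) hR3.neg
  rw [pair_eq_integral]
  have hp2 := pair_eq_integral (fun p => prim D (u p)) η.px
  simp only [TTest.px] at hp2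
  rw [hp2]
  have e1 : ∫ p, prim D (u p) * pxF η.toFun p = ∫ p, prim D (ub p) * pxF η.toFun p := by
    congr 1; ext p
    by_cases hq : p ∈ Om T
    · simp [ub, indicator_of_mem hq]
    · have := η.px.zero_of_not_mem hq
      simp only [TTest.px] at this
      rw [this]; simp
  have e2 : ∫ p, D (u p) * w p * η.toFun p = ∫ p, D (ub p) * wb p * η.toFun p := by
    congr 1; ext p
    by_cases hp : η.toFun p = 0
    · simp [hp]
    · have h2 := hη p hp
      have h3 := abs_le.1 (hηR p hp)
      have h5 := le_max_left R 0
      have hpB : p ∈ B := by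
        refine ⟨⟨by linarith, by linarith⟩, ⟨?_, ?_⟩⟩ <;> simp only [hR'] <;> linarith
      have hpO : p ∈ Om T := ⟨hpB.1, mem_univ _⟩
      simp [ub, wb, indicator_of_mem hpB, indicator_of_mem hpO]
  rw [e1, e2, hfin, neg_neg]

lemma L2loc.integrableOn_mul {T : ℝ} {w : ℝ × ℝ → ℝ} (hw : L2loc T w) (φ : TTest T) :
    IntegrableOn (fun p => w p * φ.toFun p) (Om T) := by
  obtain ⟨R, hR⟩ := φ.cpt.isCompact.isBounded.subset_closedBall 0
  obtain ⟨C, hC0, hC⟩ := φ.abs_bound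
  set R' := max R 0 + 1 with hR'
  have hR0 : 0 < R' := by positivity
  have hi := integrableOn_of_sq hw.1 (isCompact_Icc.prod isCompact_Icc).measure_lt_top.ne
    (hw.2 R' hR0)
  have h1 : IntegrableOn (fun p => w p * φ.toFun p) (Icc (0:ℝ) T ×ˢ Icc (-R') R') := by
    refine (hi.norm.mul_const C).mono' (hw.1.aestronglyMeasurable.mul φ.cont.aestronglyMeasurable)
      (ae_of_all _ fun p => ?_)
    rw [norm_mul]
    exact mul_le_mul_of_nonneg_left (hC p) (norm_nonneg _)
  refine h1.of_forall_sdiff_eq_zero (measurableSet_Om T) ?_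
  rintro p ⟨hp, hp'⟩
  by_contra h
  apply hp'
  have := hR (subset_tsupport _ (right_ne_zero_of_mul h))
  rw [mem_closedBall_zero_iff] at this
  have h3 := abs_le.1 ((norm_snd_le p).trans this)
  have h5 := le_max_left R 0
  refine ⟨hp.1, ⟨?_, ?_⟩⟩ <;> simp only [hR'] <;> linarith

/-- The chain rule for weak derivatives, tested against `η`. -/
lemma chain_rule {T : ℝ} {D : ℝ → ℝ} (hD : Continuous D) {u w : ℝ × ℝ → ℝ}
    (hu : Measurable u) (hu1 : ∀ p, u p ∈ Icc (0:ℝ) 1) (hw : L2loc T w) (h : HasWeakDx T u w)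
    (η : TTest T) :
    pair T (fun p => D (u p) * w p) η.toFun =
      - pair T (fun p => prim D (u p)) (pxF η.toFun) := by
  obtain ⟨CD, hCD⟩ := (isCompact_Icc (a := (0:ℝ)) (b := 1)).exists_bound_of_continuousOn
    hD.continuousOn
  obtain ⟨CP, hCP⟩ := (isCompact_Icc (a := (0:ℝ)) (b := 1)).exists_bound_of_continuousOn
    (continuous_prim hD).continuousOn
  have hae : ∀ p : ℝ × ℝ, ∀ k : ℕ, |tcut T k p.1| ≤ 1 := fun p k => by
    rw [abs_of_nonneg (tcut_nonneg _ _ _)]; exact tcut_le_one _ _ _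
  have h1 : Tendsto (fun k : ℕ => pair T (fun p => D (u p) * w p) (η.cut k).toFun) atTop
      (𝓝 (pair T (fun p => D (u p) * w p) η.toFun)) := by
    apply tendsto_integral_of_dominated_convergence (fun p => CD * |w p * η.toFun p|)
    · intro k
      exact (((hD.measurable.comp hu).mul hw.1).mul
        (η.cut k).cont.measurable).aestronglyMeasurable
    · exact (hw.integrableOn_mul η).abs.const_mul _
    · intro k
      refine ae_of_all _ fun p => ?_
      have e : D (u p) * w p * (η.cut k).toFun p =
        D (u p) * (tcut T k p.1 * (w p * η.toFun p)) := by simp only [TTest.cut]; ring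
      rw [e, norm_mul, norm_mul]
      have := hCD _ (hu1 p)
      refine mul_le_mul this ?_ (by positivity) ((norm_nonneg _).trans this)
      exact mul_le_of_le_one_left (norm_nonneg _) (hae p k)
    · refine ae_of_all _ fun p => ?_
      by_cases hp : η.toFun p = 0
      · simp [TTest.cut, hp]
      · apply tendsto_const_nhds.congr'
        filter_upwards [tcut_eventually (η.supp hp).1] with k hk
        simp [TTest.cut, hk]
  have h2 : Tendsto (fun k : ℕ => pair T (fun p => prim D (u p)) (pxF (η.cut k).toFun)) atTop
      (𝓝 (pair T (fun p => prim D (u p)) (pxF η.toFun))) := by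
    apply tendsto_integral_of_dominated_convergence (fun p => CP * |η.px.toFun p|)
    · intro k
      exact (((continuous_prim hD).measurable.comp hu).mul
        (η.cut k).px.cont.measurable).aestronglyMeasurable
    · exact (η.px.cont.integrable_of_hasCompactSupport η.px.cpt).abs.integrableOn.const_mul _
    · intro k
      refine ae_of_all _ fun p => ?_
      rw [norm_mul, TTest.cut_px, norm_mul]
      have := hCP _ (hu1 p)
      refine mul_le_mul this ?_ (by positivity) ((norm_nonneg _).trans this)
      exact mul_le_of_le_one_left (norm_nonneg _) (hae p k)
    · refine ae_of_all _ fun p => ?_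
      simp only [TTest.cut_px]
      by_cases hp : η.px.toFun p = 0
      · simp only [TTest.px] at hp; simp [hp]
      · apply tendsto_const_nhds.congr'
        filter_upwards [tcut_eventually (η.px.supp hp).1] with k hk
        simp [hk]
  refine tendsto_nhds_unique (h1.congr' ?_) h2.neg
  filter_upwards [eventually_ge_atTop 1] with k hk
  have hk0 : (0:ℝ) < k := by exact_mod_cast hk
  apply chain_rule_cut hD hu hu1 hw h (η.cut k) (d := 1 / (k:ℝ)) (by positivity)
  intro p hp
  have := tcut_ne_zero (left_ne_zero_of_mul hp)
  constructor
  · rw [div_lt_iff₀ hk0]; linarith [this.1]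
  · have h' : 1 / (k:ℝ) < T - p.1 := by rw [div_lt_iff₀ hk0]; linarith [this.2]
    linarith

section

/-! ### Equicontinuous potentials and uniform convergence of barycenters -/

/-- The signed indicator of the interval between `0` and `x`. -/
def ind (x y : ℝ) : ℝ :=
  (Ioc 0 x).indicator (fun _ => (1:ℝ)) y - (Ioc x 0).indicator (fun _ => (1:ℝ)) y

lemma integrable_ind (x : ℝ) : Integrable (ind x) := by
  have i1 : Integrable ((Ioc 0 x).indicator (fun _ => (1:ℝ))) :=
    (integrable_indicator_iff measurableSet_Ioc).2 (integrableOn_const (by simp))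
  have i2 : Integrable ((Ioc x 0).indicator (fun _ => (1:ℝ))) :=
    (integrable_indicator_iff measurableSet_Ioc).2 (integrableOn_const (by simp))
  exact i1.sub i2

lemma intervalIntegral_eq_ind {w : ℝ → ℝ} {C : ℝ} (hw : Measurable w) (hb : ∀ y, |w y| ≤ C)
    (x : ℝ) : (∫ y in (0:ℝ)..x, w y) = ∫ y, w y * ind x y := by
  rw [intervalIntegral, ← integral_indicator measurableSet_Ioc,
    ← integral_indicator measurableSet_Ioc]
  have hw1 : ∀ a b, Integrable ((Ioc a b).indicator w) := fun a b => by
    rw [integrable_indicator_iff measurableSet_Ioc]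
    exact Measure.integrableOn_of_bounded (M := C) (by simp) hw.aestronglyMeasurable
      (ae_of_all _ hb)
  rw [← integral_sub (hw1 _ _) (hw1 _ _)]
  congr 1; ext y
  simp only [ind, indicator]
  split_ifs <;> ring

/-- The primitive in `x` of a bounded function is the limit of integrals against smooth tests,
uniformly over functions bounded by one. -/
lemma exists_smooth_approx (x : ℝ) {η : ℝ} (hη : 0 < η) :
    ∃ ψ : ℝ → ℝ, ContDiff ℝ (⊤ : ℕ∞) ψ ∧ HasCompactSupport ψ ∧
      ∀ w : ℝ → ℝ, Measurable w → (∀ y, |w y| ≤ 1) →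
        |(∫ y in (0:ℝ)..x, w y) - ∫ y, w y * ψ y| ≤ η := by
  have hi := integrable_ind x
  obtain ⟨ψ, hc, hs, hle⟩ := MemLp.exist_eLpNorm_sub_le (p := 1) ENNReal.one_ne_top le_rfl
    (memLp_one_iff_integrable.2 hi) hη
  refine ⟨ψ, hs, hc, fun w hw hb => ?_⟩
  have hψi : Integrable ψ := hs.continuous.integrable_of_hasCompactSupport hc
  have hwh : Integrable (fun y => w y * ind x y) :=
    hi.bdd_mul hw.aestronglyMeasurable (ae_of_all _ fun y => by simpa using hb y)
  have hwψ : Integrable (fun y => w y * ψ y) :=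
    hψi.bdd_mul hw.aestronglyMeasurable (ae_of_all _ fun y => by simpa using hb y)
  rw [intervalIntegral_eq_ind hw hb, ← integral_sub hwh hwψ]
  have hd : Integrable (ind x - ψ) := hi.sub hψi
  have := (eLpNorm_one_eq_lintegral_enorm (f := ind x - ψ) (μ := volume)) ▸ hle
  have h2 : ∫ y, |ind x y - ψ y| ≤ η := by
    have h3 := hd.norm
    have e : ∫ y, |ind x y - ψ y| = (∫⁻ y, ‖(ind x - ψ) y‖ₑ).toReal := by
      rw [← integral_norm_eq_lintegral_enorm hd.aestronglyMeasurable]; rfl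
    rw [e]
    exact ENNReal.toReal_le_of_le_ofReal hη.le this
  refine (abs_integral_le_integral_abs).trans (le_trans ?_ h2)
  refine integral_mono (hwh.sub hwψ).abs hd.abs fun y => ?_
  simp only
  rw [← mul_sub, abs_mul]
  exact mul_le_of_le_one_left (abs_nonneg _) (hb y)

/-- Equicontinuous functions on `[0,T]` whose integrals against continuous tests vanish in the limit
converge to zero uniformly. -/
lemma unif_of_weak {ι : Type*} {l : Filter ι} {T : ℝ} (hT : 0 < T) {g : ι → ℝ → ℝ}
    (heq : ∀ η > 0, ∃ ζ > 0, ∀ i, ∀ s ∈ Icc 0 T, ∀ t ∈ Icc 0 T, |s - t| < ζ → |g i s - g i t| ≤ η)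
    (hInt : ∀ k : ℝ → ℝ, Continuous k → HasCompactSupport k →
      Tendsto (fun i => ∫ t in Icc 0 T, g i t * k t) l (𝓝 0)) {η : ℝ} (hη : 0 < η) :
    ∀ᶠ i in l, ∀ t ∈ Icc 0 T, |g i t| ≤ η := by
  have hcont : ∀ i, ContinuousOn (g i) (Icc 0 T) := by
    intro i
    rw [Metric.continuousOn_iff]
    intro b hb ε hε
    obtain ⟨ζ, hζ, H⟩ := heq (ε/2) (half_pos hε)
    refine ⟨ζ, hζ, fun a ha hab => ?_⟩
    have := H i a ha b hb hab
    rw [Real.dist_eq]; linarith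
  obtain ⟨ζ, hζ, H⟩ := heq (η/4) (by linarith)
  have hpt : ∀ t₀ ∈ Icc 0 T, ∀ᶠ i in l, |g i t₀| ≤ η / 2 := by
    intro t₀ ht₀
    set k : ℝ → ℝ := fun t => hat ((t - t₀) / ζ) with hk
    have hkc : Continuous k := continuous_hat.comp (by fun_prop)
    have hks : HasCompactSupport k := by
      apply HasCompactSupport.intro (isCompact_Icc (a := t₀ - ζ) (b := t₀ + ζ))
      intro y hy
      apply hat_eq_zero
      rw [abs_div, abs_of_pos hζ, le_div_iff₀ hζ, one_mul]
      by_contra hlt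
      push Not at hlt
      rw [abs_lt] at hlt
      exact hy ⟨by linarith [hlt.1], by linarith [hlt.2]⟩
    have hkpos : 0 < ∫ t in Icc 0 T, k t := by
      rw [setIntegral_pos_iff_support_of_nonneg_ae (ae_of_all _ fun t => hat_nonneg _)
        (hkc.continuousOn.integrableOn_compact isCompact_Icc)]
      have hsub : Ioo (max 0 (t₀ - ζ)) (min T (t₀ + ζ)) ⊆ Function.support k ∩ Icc 0 T := by
        intro y hy
        have h1 := (max_lt_iff.1 hy.1)
        have h2 := (lt_min_iff.1 hy.2)
        refine ⟨?_, h1.1.le, h2.1.le⟩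
        have : |(y - t₀)/ζ| < 1 := by
          rw [abs_div, abs_of_pos hζ, div_lt_one hζ, abs_lt]
          exact ⟨by linarith, by linarith⟩
        simp only [Function.mem_support, hk, hat]
        exact (lt_max_of_lt_right (by linarith)).ne'
      refine lt_of_lt_of_le ?_ (measure_mono hsub)
      rw [Real.volume_Ioo, ENNReal.ofReal_pos, sub_pos, max_lt_iff]
      exact ⟨lt_min hT (by linarith [ht₀.1]), lt_min (by linarith [ht₀.2]) (by linarith)⟩
    set c := ∫ t in Icc 0 T, k t
    have hev := (hInt k hkc hks).eventually (Metric.ball_mem_nhds 0 (ε := η/4*c) (by positivity))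
    filter_upwards [hev] with i hi
    rw [dist_zero_right, Real.norm_eq_abs] at hi
    have i1 : IntegrableOn (fun t => g i t * k t) (Icc 0 T) :=
      ((hcont i).mul hkc.continuousOn).integrableOn_compact isCompact_Icc
    have i2 : IntegrableOn (fun t => (g i t₀ - g i t) * k t) (Icc 0 T) :=
      ((continuousOn_const.sub (hcont i)).mul hkc.continuousOn).integrableOn_compact isCompact_Icc
    have e : g i t₀ * c = (∫ t in Icc 0 T, g i t * k t) + ∫ t in Icc 0 T, (g i t₀ - g i t) * k t := by
      rw [← integral_add i1 i2, ← integral_const_mul]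
      congr 1; ext t; ring
    have hb : |∫ t in Icc 0 T, (g i t₀ - g i t) * k t| ≤ η/4 * c := by
      refine abs_integral_le_integral_abs.trans ?_
      rw [← integral_const_mul]
      refine setIntegral_mono_on i2.abs
        ((hkc.continuousOn.integrableOn_compact isCompact_Icc).const_mul _) measurableSet_Icc ?_
      intro t ht
      rw [abs_mul, abs_of_nonneg (hat_nonneg _ : 0 ≤ k t)]
      by_cases hd : |t₀ - t| < ζ
      · exact mul_le_mul_of_nonneg_right (H i t₀ ht₀ t ht hd) (hat_nonneg _)
      · have : k t = 0 := by
          apply hat_eq_zero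
          rw [abs_div, abs_of_pos hζ, le_div_iff₀ hζ, one_mul, abs_sub_comm]
          exact not_lt.1 hd
        rw [show hat ((t - t₀) / ζ) = 0 from this, this]; simp
    have : |g i t₀| * c ≤ η/2 * c := by
      rw [← abs_of_pos hkpos, ← abs_mul, abs_of_pos hkpos, e]
      refine (abs_add_le _ _).trans ?_
      linarith
    exact le_of_mul_le_mul_right this hkpos
  obtain ⟨S, hS, hcov⟩ := (isCompact_Icc (a := (0:ℝ)) (b := T)).elim_nhds_subcover
    (fun t => Metric.ball t ζ) (fun t _ => Metric.ball_mem_nhds t hζ)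
  have : ∀ᶠ i in l, ∀ t₀ ∈ S, |g i t₀| ≤ η/2 := by
    rw [Filter.eventually_all_finset]
    exact fun t₀ h => hpt t₀ (hS t₀ h)
  filter_upwards [this] with i hi t ht
  obtain ⟨t₀, ht₀, hb⟩ := mem_iUnion₂.1 (hcov ht)
  have h1 := H i t ht t₀ (hS t₀ ht₀) (by simpa [Real.dist_eq] using hb)
  have h2 := hi t₀ ht₀
  calc |g i t| = |(g i t - g i t₀) + g i t₀| := by ring_nf
    _ ≤ _ := abs_add_le _ _
    _ ≤ η := by linarith

/-- Weak* convergence of bounded functions, tested on `C_c`, extends to integrable tests. -/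
lemma tendsto_integral_of_Cc {ι : Type*} {l : Filter ι} {T : ℝ} {a : ι → ℝ × ℝ → ℝ} {C : ℝ}
    (ha : ∀ i, Measurable (a i)) (hb : ∀ i p, |a i p| ≤ C)
    (hk : ∀ k : ℝ × ℝ → ℝ, Continuous k → HasCompactSupport k →
      Tendsto (fun i => ∫ p in Om T, a i p * k p) l (𝓝 0))
    {h : ℝ × ℝ → ℝ} (hh : Integrable h (volume.restrict (Om T))) :
    Tendsto (fun i => ∫ p in Om T, a i p * h p) l (𝓝 0) := by
  rw [Metric.tendsto_nhds]
  intro ε hε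
  have hC : 0 < |C| + 1 := by positivity
  obtain ⟨k, hc, hle, hkc, hki⟩ := hh.exists_hasCompactSupport_integral_sub_le
    (ε := ε / (2 * (|C| + 1))) (by positivity)
  filter_upwards [(hk k hkc hc).eventually (Metric.ball_mem_nhds 0 (half_pos hε))] with i hi
  rw [dist_zero_right, Real.norm_eq_abs] at hi
  rw [dist_zero_right, Real.norm_eq_abs]
  have i1 : Integrable (fun p => a i p * h p) (volume.restrict (Om T)) :=
    hh.bdd_mul (ha i).aestronglyMeasurable (ae_of_all _ fun y => by simpa using hb i y)
  have i2 : Integrable (fun p => a i p * k p) (volume.restrict (Om T)) :=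
    hki.bdd_mul (ha i).aestronglyMeasurable (ae_of_all _ fun y => by simpa using hb i y)
  have e : ∫ p in Om T, a i p * h p = (∫ p in Om T, a i p * k p) +
      ∫ p in Om T, a i p * (h p - k p) := by
    rw [← integral_add i2]
    · congr 1; ext p; ring
    · exact (i1.sub i2).congr (ae_of_all _ fun p => by simp; ring)
  have hb2 : |∫ p in Om T, a i p * (h p - k p)| ≤ ε/2 := by
    refine abs_integral_le_integral_abs.trans ?_
    have : ∫ p in Om T, |a i p * (h p - k p)| ≤ ∫ p in Om T, (|C| + 1) * ‖h p - k p‖ := by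
      refine integral_mono ((i1.sub i2).congr (ae_of_all _ fun p => by simp; ring)).abs
        ((hh.sub hki).norm.const_mul _) fun p => ?_
      simp only [abs_mul, Real.norm_eq_abs]
      exact mul_le_mul_of_nonneg_right ((hb i p).trans (by linarith [le_abs_self C])) (abs_nonneg _)
    refine this.trans ?_
    rw [integral_const_mul]
    calc (|C|+1) * _ ≤ (|C|+1) * (ε / (2 * (|C| + 1))) := by gcongr
      _ = ε/2 := by field_simp
  rw [e]
  refine (abs_add_le _ _).trans_lt ?_
  linarith

/-- Weak convergence to zero and equicontinuity in time of the spatial primitives at `x` give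
convergence to zero uniformly in time. -/
lemma unif_pot {ι : Type*} {l : Filter ι} {T : ℝ} (hT : 0 < T) {a : ι → ℝ × ℝ → ℝ} {C : ℝ} (x : ℝ)
    (ha : ∀ i, Measurable (a i)) (hb : ∀ i p, |a i p| ≤ C)
    (heq : ∀ η > 0, ∃ ζ > 0, ∀ i, ∀ s ∈ Icc 0 T, ∀ t ∈ Icc 0 T, |s - t| < ζ →
      |(∫ y in (0:ℝ)..x, a i (s, y)) - ∫ y in (0:ℝ)..x, a i (t, y)| ≤ η)
    (hk : ∀ k : ℝ × ℝ → ℝ, Continuous k → HasCompactSupport k →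
      Tendsto (fun i => ∫ p in Om T, a i p * k p) l (𝓝 0)) {η : ℝ} (hη : 0 < η) :
    ∀ᶠ i in l, ∀ t ∈ Icc 0 T, |∫ y in (0:ℝ)..x, a i (t, y)| ≤ η := by
  refine unif_of_weak hT heq (fun k hkc hks => ?_) hη
  have hki : Integrable k (volume.restrict (Icc 0 T)) :=
    hkc.continuousOn.integrableOn_compact isCompact_Icc
  have hvol : (volume.restrict (Om T) : Measure (ℝ × ℝ)) =
      (volume.restrict (Icc 0 T)).prod volume := by
    rw [Om, Measure.volume_eq_prod, ← Measure.prod_restrict, Measure.restrict_univ]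
  have hh : Integrable (fun p : ℝ × ℝ => k p.1 * ind x p.2) (volume.restrict (Om T)) := by
    rw [hvol]
    exact hki.mul_prod (integrable_ind x)
  refine (tendsto_integral_of_Cc ha hb hk hh).congr fun i => ?_
  have hI : Integrable (fun p : ℝ × ℝ => a i p * (k p.1 * ind x p.2)) (volume.restrict (Om T)) :=
    hh.bdd_mul (ha i).aestronglyMeasurable (ae_of_all _ fun y => by simpa using hb i y)
  rw [hvol] at hI ⊢
  rw [integral_prod _ hI]
  refine integral_congr_ae (ae_of_all _ fun t => ?_)
  simp only
  rw [intervalIntegral_eq_ind (w := fun y => a i (t, y)) ((ha i).comp measurable_prodMk_left)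
    (fun y => hb i (t, y)),
    ← integral_mul_const]
  congr 1; ext y; ring

variable {T : ℝ}

lemma YM.bar_meas (μ : YM T) : Measurable μ.bar.toFun := μ.bar.meas

lemma YM.bar_slice (μ : YM T) (t : ℝ) : Measurable fun y => μ.bar.toFun (t, y) :=
  μ.bar.meas.comp measurable_prodMk_left

lemma YM.bar_abs (μ : YM T) (p : ℝ × ℝ) : |μ.bar.toFun p| ≤ 1 :=
  abs_le.2 ⟨by linarith [(μ.bar.mem01 p).1], (μ.bar.mem01 p).2⟩

lemma YM.bar_sub_abs (μ ν : YM T) (p q : ℝ × ℝ) : |μ.bar.toFun p - ν.bar.toFun q| ≤ 1 :=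
  abs_le.2 ⟨by linarith [(μ.bar.mem01 p).1, (ν.bar.mem01 q).2],
    by linarith [(μ.bar.mem01 p).2, (ν.bar.mem01 q).1]⟩

/-- The spatial primitive of the barycenter. -/
def pot (μ : YM T) (t x : ℝ) : ℝ := ∫ y in (0:ℝ)..x, μ.bar.toFun (t, y)

lemma YM.bar_ii (μ : YM T) (t a b : ℝ) :
    IntervalIntegrable (fun y => μ.bar.toFun (t, y)) volume a b :=
  ((locallyIntegrable_of_bdd (μ.bar_slice t) fun _ => μ.bar_abs _).integrableOn_isCompact
    isCompact_uIcc).intervalIntegrable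

lemma pot_sub (μ ν : YM T) (s t x : ℝ) :
    pot μ s x - pot ν t x = ∫ y in (0:ℝ)..x, (μ.bar.toFun (s, y) - ν.bar.toFun (t, y)) :=
  (intervalIntegral.integral_sub (μ.bar_ii _ _ _) (ν.bar_ii _ _ _)).symm

lemma pot_cont (μ : YM T) (x : ℝ) : ContinuousOn (fun t => pot μ t x) (Icc 0 T) := by
  rw [Metric.continuousOn_iff]
  intro t₀ ht₀ η hη
  obtain ⟨ψ, hs, hc, H⟩ := exists_smooth_approx x (half_pos hη)
  obtain ⟨δ, hδ, hd⟩ := dU_small_test hs hc (half_pos hη)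
  obtain ⟨ζ, hζ, hz⟩ := μ.bar.cont t₀ ht₀ δ hδ
  refine ⟨ζ, hζ, fun t ht hdist => ?_⟩
  rw [Real.dist_eq] at hdist ⊢
  have h1 := hd _ _ (μ.bar_slice t) (μ.bar_slice t₀) (fun y => μ.bar.mem01 _)
    (fun y => μ.bar.mem01 _) (hz t ht hdist)
  have h2 := H (fun y => μ.bar.toFun (t, y) - μ.bar.toFun (t₀, y))
    ((μ.bar_slice t).sub (μ.bar_slice t₀)) (fun y => μ.bar_sub_abs _ _ _)
  rw [pot_sub]
  have := abs_sub_abs_le_abs_sub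
    (∫ y in (0:ℝ)..x, (μ.bar.toFun (t, y) - μ.bar.toFun (t₀, y)))
    (∫ y, (μ.bar.toFun (t, y) - μ.bar.toFun (t₀, y)) * ψ y)
  linarith

lemma pot_equi (μ : YM T) (x : ℝ) {η : ℝ} (hη : 0 < η) :
    ∃ ζ > 0, ∀ s ∈ Icc 0 T, ∀ t ∈ Icc 0 T, |s - t| < ζ → |pot μ s x - pot μ t x| ≤ η := by
  have := isCompact_Icc.uniformContinuousOn_of_continuous (pot_cont μ x)
  rw [Metric.uniformContinuousOn_iff] at this
  obtain ⟨ζ, hζ, H⟩ := this η hη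
  exact ⟨ζ, hζ, fun s hs t ht h => (H s hs t ht h).le⟩

lemma pot_lip (μ : YM T) (t x y : ℝ) : |pot μ t x - pot μ t y| ≤ |x - y| := by
  rw [pot, pot, intervalIntegral.integral_interval_sub_left (μ.bar_ii _ _ _) (μ.bar_ii _ _ _)]
  have := intervalIntegral.norm_integral_le_of_norm_le_const (a := y) (b := x) (C := 1)
    (f := fun z => μ.bar.toFun (t, z)) (fun z _ => μ.bar_abs _)
  simpa using this

/-- Young measures whose barycenter potentials have the prescribed modulus of continuity in time:
the compact sets of the coercivity statement. -/
def KZ (T : ℝ) (ζ : ℝ → ℝ → ℝ) : Set (YM T) :=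
  {μ | ∀ x η, 0 < η → ∀ s ∈ Icc 0 T, ∀ t ∈ Icc 0 T, |s - t| < ζ x η → |pot μ s x - pot μ t x| ≤ η}

lemma WConv.bar_sub {μ : ℕ → YM T} {ν : YM T} (h : WConv μ ν) {k : ℝ × ℝ → ℝ} (hk : Continuous k)
    (hc : HasCompactSupport k) :
    Tendsto (fun n => ∫ p in Om T, ((μ n).bar.toFun p - ν.bar.toFun p) * k p) atTop (𝓝 0) := by
  have := (h (fun l => l) continuous_id' k hk hc).sub_const
    (∫ p in Om T, ν.mom (fun l => l) p * k p)
  rw [sub_self] at this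
  refine this.congr fun n => ?_
  rw [← integral_sub (mom_mul_integrable _ continuous_id' hk hc)
    (mom_mul_integrable _ continuous_id' hk hc)]
  congr 1; ext p
  simp only [YM.mom, YM.bar]; ring

/-- Pointwise-in-`x`, uniform-in-`t` convergence of potentials gives convergence of barycenters
in `𝒰`. -/
lemma dcU_tendsto_of_pot {μ : ℕ → YM T} {ν : YM T}
    (h : ∀ x : ℝ, ∀ η > 0, ∀ᶠ n in atTop, ∀ t ∈ Icc 0 T, |pot (μ n) t x - pot ν t x| ≤ η) :
    Tendsto (fun n => dcU T (μ n).bar ν.bar) atTop (𝓝 0) := by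
  rw [Metric.tendsto_atTop']
  intro η hη
  obtain ⟨N, hN, δ, hδ, H⟩ := dU_lt_of_potential (half_pos hη)
  obtain ⟨S, hS, hcov⟩ := (isCompact_Icc (a := -(N:ℝ)) (b := N)).elim_nhds_subcover
    (fun x => Metric.ball x (δ/3)) (fun t _ => Metric.ball_mem_nhds t (by positivity))
  have hev : ∀ᶠ n in atTop, ∀ x ∈ S, ∀ t ∈ Icc 0 T, |pot (μ n) t x - pot ν t x| ≤ δ/3 := by
    rw [Filter.eventually_all_finset]
    exact fun x _ => h x _ (by positivity)
  obtain ⟨n₀, hn₀⟩ := eventually_atTop.1 hev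
  refine ⟨n₀, fun n hn => ?_⟩
  rw [Real.dist_eq, sub_zero, abs_of_nonneg (dcU_nonneg _ _)]
  refine (dcU_le (half_pos hη).le fun t ht => ?_).trans_lt (half_lt_self hη)
  refine (H _ _ ((μ n).bar_slice t) (ν.bar_slice t) (fun y => (μ n).bar.mem01 _)
    (fun y => ν.bar.mem01 _) fun x hx => ?_).le
  rw [← pot_sub]
  obtain ⟨x₀, hx₀, hb⟩ := mem_iUnion₂.1 (hcov hx)
  rw [Metric.mem_ball, Real.dist_eq] at hb
  have h1 := pot_lip (μ n) t x x₀
  have h2 := pot_lip ν t x x₀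
  have h3 := hn₀ n hn.le x₀ hx₀ t ht
  rw [abs_le] at *
  constructor <;> linarith [h1.1, h1.2, h2.1, h2.2, h3.1, h3.2, (abs_lt.1 hb).1, (abs_lt.1 hb).2, hb]

/-- On the sets `KZ`, weak* convergence implies convergence of the barycenters in `𝒰`. -/
theorem dcU_tendsto_of_KZ (hT : 0 < T) {ζ : ℝ → ℝ → ℝ} (hζ : ∀ x η, 0 < η → 0 < ζ x η)
    {μ : ℕ → YM T} {ν : YM T} (hμ : ∀ n, μ n ∈ KZ T ζ) (h : WConv μ ν) :
    Tendsto (fun n => dcU T (μ n).bar ν.bar) atTop (𝓝 0) := by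
  refine dcU_tendsto_of_pot fun x η hη => ?_
  have := unif_pot (l := atTop) hT x (a := fun n p => (μ n).bar.toFun p - ν.bar.toFun p) (C := 1)
    (fun n => (μ n).bar_meas.sub ν.bar_meas) (fun n p => YM.bar_sub_abs _ _ _ _) ?_
    (fun k hk hc => h.bar_sub hk hc) hη
  · simpa only [← pot_sub] using this
  · intro η hη
    obtain ⟨ζ', hζ', H⟩ := pot_equi ν x (half_pos hη)
    refine ⟨min ζ' (ζ x (η/2)), lt_min hζ' (hζ _ _ (half_pos hη)), fun n s hs t ht hst => ?_⟩
    simp only [← pot_sub]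
    have h1 := H s hs t ht (hst.trans_le (min_le_left _ _))
    have h2 := hμ n x _ (half_pos hη) s hs t ht (hst.trans_le (min_le_right _ _))
    rw [abs_le] at *
    constructor <;> linarith [h1.1, h1.2, h2.1, h2.2]

end

section

/-! ### Compactness of Young measures -/

variable {T : ℝ}

/-- Projection of the line onto `[0,1]`. -/
def clip (l : ℝ) : ℝ := max 0 (min 1 l)

lemma continuous_clip : Continuous clip := by unfold clip; fun_prop

lemma clip_mem (l : ℝ) : clip l ∈ Icc (0:ℝ) 1 :=
  ⟨le_max_left _ _, max_le zero_le_one (min_le_left _ _)⟩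

lemma clip_of_mem {l : ℝ} (h : l ∈ Icc (0:ℝ) 1) : clip l = l := by
  rw [clip, min_eq_right h.2, max_eq_right h.1]

/-- Measurability of all continuous moments makes `p ↦ μ_p` a measurable map into measures. -/
lemma YM.measurable_m (μ : YM T) : Measurable μ.m := by
  have := μ.prob
  refine Measurable.measure_of_isPiSystem_of_isProbabilityMeasure
    (borel_eq_generateFrom_Iic ℝ ▸ BorelSpace.measurable_eq) isPiSystem_Iic ?_
  rintro _ ⟨a, rfl⟩
  -- continuous functions decreasing to the indicator of `(-∞, a]`
  set F : ℕ → ℝ → ℝ := fun n l => max 0 (min 1 (1 - n * (l - a))) with hF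
  have hFc : ∀ n, Continuous (F n) := fun n => by simp only [hF]; fun_prop
  have hlim : ∀ p, Tendsto (fun n => ∫ l, F n l ∂ μ.m p) atTop (𝓝 ((μ.m p).real (Iic a))) := by
    intro p
    rw [← integral_indicator_one measurableSet_Iic]
    refine tendsto_integral_of_dominated_convergence (fun _ => 1)
      (fun n => (hFc n).aestronglyMeasurable) (integrable_const _) (fun n => ae_of_all _ fun l => ?_)
      (ae_of_all _ fun l => ?_)
    · rw [Real.norm_eq_abs, abs_of_nonneg (le_max_left _ _)]
      exact max_le zero_le_one (min_le_left _ _)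
    · by_cases hl : l ≤ a
      · rw [indicator_of_mem (by exact hl)]
        refine tendsto_const_nhds.congr fun n => ?_
        have : (1:ℝ) ≤ 1 - n * (l - a) := by
          nlinarith [(Nat.cast_nonneg n : (0:ℝ) ≤ n)]
        simp [hF, min_eq_left this]
      · rw [indicator_of_notMem (by exact hl)]
        push Not at hl
        obtain ⟨N, hN⟩ := exists_nat_gt (1 / (l - a))
        refine tendsto_const_nhds.congr' ?_
        filter_upwards [eventually_ge_atTop N] with n hn
        have h1 : 1 / (l - a) ≤ n := hN.le.trans (by exact_mod_cast hn)
        rw [div_le_iff₀ (by linarith)] at h1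
        have : min 1 (1 - n * (l - a)) ≤ 0 := (min_le_right _ _).trans (by linarith)
        simp only [hF, max_eq_left this]
  have hm := measurable_of_tendsto_metrizable (fun n => μ.meas (F n) (hFc n))
    (tendsto_pi_nhds.2 hlim)
  have e : (fun p => μ.m p (Iic a)) = fun p => ENNReal.ofReal ((μ.m p).real (Iic a)) := by
    ext p; simp [Measure.real]
  rw [e]
  exact hm.ennreal_ofReal

/-- The Young measure as a Markov kernel. -/
def YM.ker (μ : YM T) : ProbabilityTheory.Kernel (ℝ × ℝ) ℝ := ⟨μ.m, μ.measurable_m⟩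

instance (μ : YM T) : ProbabilityTheory.IsMarkovKernel μ.ker := ⟨μ.prob⟩

/-- Density of the reference probability measure on `[0,T] × ℝ`. -/
def refDens (T : ℝ) (p : ℝ × ℝ) : ℝ := T⁻¹ * ProbabilityTheory.gaussianPDFReal 0 1 p.2

lemma refDens_cont : Continuous (refDens T) := by
  unfold refDens ProbabilityTheory.gaussianPDFReal
  fun_prop

lemma refDens_pos (hT : 0 < T) (p : ℝ × ℝ) : 0 < refDens T p :=
  mul_pos (inv_pos.2 hT) (ProbabilityTheory.gaussianPDFReal_pos _ _ _ one_ne_zero)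

/-- The reference probability measure on `[0,T] × ℝ`. -/
def refMeas (T : ℝ) : Measure (ℝ × ℝ) :=
  (volume.restrict (Om T)).withDensity fun p => ENNReal.ofReal (refDens T p)

lemma Om_prod (T : ℝ) : (volume.restrict (Om T) : Measure (ℝ × ℝ)) =
    (volume.restrict (Icc 0 T)).prod volume := by
  rw [Om, Measure.volume_eq_prod, ← Measure.prod_restrict, Measure.restrict_univ]

lemma refMeas_prob (hT : 0 < T) : IsProbabilityMeasure (refMeas T) := by
  constructor
  rw [refMeas, withDensity_apply _ MeasurableSet.univ, Measure.restrict_univ, Om_prod]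
  simp only [refDens, ENNReal.ofReal_mul (inv_nonneg.2 hT.le)]
  rw [lintegral_prod_mul (f := fun _ => ENNReal.ofReal T⁻¹)
    (g := fun x => ENNReal.ofReal (ProbabilityTheory.gaussianPDFReal 0 1 x)) (by fun_prop)
    (ProbabilityTheory.measurable_gaussianPDFReal _ _).ennreal_ofReal.aemeasurable]
  rw [lintegral_const, ProbabilityTheory.lintegral_gaussianPDFReal_eq_one 0 one_ne_zero]
  simp [← ENNReal.ofReal_mul (inv_nonneg.2 hT.le), inv_mul_cancel₀ hT.ne']

lemma integral_refMeas (hT : 0 < T) (h : ℝ × ℝ → ℝ) :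
    ∫ p, h p ∂ refMeas T = ∫ p in Om T, refDens T p * h p := by
  rw [refMeas, integral_withDensity_eq_integral_toReal_smul
    refDens_cont.measurable.ennreal_ofReal (ae_of_all _ fun p => by simp)]
  simp only [ENNReal.toReal_ofReal (refDens_pos hT _).le, smul_eq_mul]

lemma ae_Om_of_refMeas (hT : 0 < T) {P : ℝ × ℝ → Prop} (h : ∀ᵐ p ∂ refMeas T, P p) :
    ∀ᵐ p ∂ volume.restrict (Om T), P p :=
  (withDensity_absolutelyContinuous' refDens_cont.measurable.ennreal_ofReal.aemeasurable
    (ae_of_all _ fun p => by simp [refDens_pos hT p])).ae_le h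

open ProbabilityTheory in
/-- Prokhorov compactness: a subsequence of Young measures converges weak* to a kernel. -/
lemma exists_limit_kernel (hT : 0 < T) (μ : ℕ → YM T) :
    ∃ s : ℕ → ℕ, StrictMono s ∧ ∃ κ : Kernel (ℝ × ℝ) ℝ, IsMarkovKernel κ ∧
      (∀ᵐ p ∂ volume.restrict (Om T), κ p (Icc 0 1)ᶜ = 0) ∧
      ∀ F : ℝ → ℝ, Continuous F → ∀ k : ℝ × ℝ → ℝ, Continuous k → HasCompactSupport k →
        Tendsto (fun n => ∫ p in Om T, (μ (s n)).mom F p * k p) atTop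
          (𝓝 (∫ p in Om T, (∫ l, F l ∂ κ p) * k p)) := by
  have hγ := refMeas_prob hT
  set R : ℕ → ProbabilityMeasure ((ℝ × ℝ) × ℝ) := fun n =>
    ⟨(refMeas T) ⊗ₘ (μ n).ker, inferInstance⟩ with hR
  have hsupp : ∀ n, ((R n : Measure ((ℝ × ℝ) × ℝ))) (univ ×ˢ (Icc 0 1)ᶜ) = 0 := by
    intro n
    rw [hR]
    show ((refMeas T) ⊗ₘ (μ n).ker) _ = 0
    rw [Measure.compProd_apply (MeasurableSet.univ.prod measurableSet_Icc.compl)]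
    rw [lintegral_eq_zero_of_ae_eq_zero]
    refine ae_of_all _ fun p => ?_
    show (μ n).ker p (Prod.mk p ⁻¹' (univ ×ˢ (Icc (0:ℝ) 1)ᶜ)) = 0
    have : Prod.mk p ⁻¹' (univ ×ˢ (Icc (0:ℝ) 1)ᶜ) = (Icc (0:ℝ) 1)ᶜ := by ext; simp
    rw [this]
    exact (μ n).supp01 p
  have htight : IsTightMeasureSet {((ρ : ProbabilityMeasure ((ℝ × ℝ) × ℝ)) :
      Measure ((ℝ × ℝ) × ℝ)) | ρ ∈ range R} := by
    apply IsTightMeasureSet.prodMk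
    · refine (isTightMeasureSet_singleton (μ := refMeas T)).subset ?_
      rintro _ ⟨_, ⟨_, ⟨n, rfl⟩, rfl⟩, rfl⟩
      exact Measure.fst_compProd _ _
    · rw [isTightMeasureSet_iff_exists_isCompact_measure_compl_le]
      refine fun ε hε => ⟨Icc 0 1, isCompact_Icc, ?_⟩
      rintro _ ⟨_, ⟨_, ⟨n, rfl⟩, rfl⟩, rfl⟩
      rw [Measure.snd_apply measurableSet_Icc.compl]
      have : Prod.snd ⁻¹' (Icc (0:ℝ) 1)ᶜ = (univ : Set (ℝ × ℝ)) ×ˢ (Icc (0:ℝ) 1)ᶜ := by ext; simp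
      rw [this, hsupp n]; exact zero_le
  obtain ⟨ρ, -, s, hs, hlim⟩ := (isCompact_closure_of_isTightMeasureSet htight).isSeqCompact
    (fun n => subset_closure (mem_range_self n))
  have hfst : (ρ : Measure ((ℝ × ℝ) × ℝ)).fst = refMeas T := by
    have h1 := ProbabilityMeasure.tendsto_map_of_tendsto_of_continuous _ _ hlim continuous_fst
    have h2 : ∀ n, ((R ∘ s) n).map (continuous_fst.measurable.aemeasurable) =
        (⟨refMeas T, hγ⟩ : ProbabilityMeasure (ℝ × ℝ)) := by
      intro n
      apply Subtype.ext
      exact Measure.fst_compProd (refMeas T) _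
    simp only [h2] at h1
    have := tendsto_nhds_unique h1 tendsto_const_nhds
    exact congrArg Subtype.val this
  have hsρ : (ρ : Measure ((ℝ × ℝ) × ℝ)) (univ ×ˢ (Icc 0 1)ᶜ) = 0 := by
    have := ProbabilityMeasure.le_liminf_measure_open_of_tendsto hlim
      (isOpen_univ.prod isClosed_Icc.isOpen_compl : IsOpen (univ ×ˢ (Icc (0:ℝ) 1)ᶜ))
    simp only [Function.comp_apply, hsupp, liminf_const] at this
    exact le_antisymm this zero_le
  set κ := (ρ : Measure ((ℝ × ℝ) × ℝ)).condKernel with hκ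
  have hdis : refMeas T ⊗ₘ κ = (ρ : Measure ((ℝ × ℝ) × ℝ)) := by
    rw [← hfst]; exact Measure.disintegrate _ _
  have hae : ∀ᵐ p ∂ volume.restrict (Om T), κ p (Icc 0 1)ᶜ = 0 := by
    apply ae_Om_of_refMeas hT
    rw [← hdis, Measure.compProd_apply
      (MeasurableSet.univ.prod measurableSet_Icc.compl), lintegral_eq_zero_iff
      (Kernel.measurable_kernel_prodMk_left (MeasurableSet.univ.prod measurableSet_Icc.compl))]
      at hsρ
    filter_upwards [hsρ] with p hp
    have : Prod.mk p ⁻¹' (univ ×ˢ (Icc (0:ℝ) 1)ᶜ) = (Icc (0:ℝ) 1)ᶜ := by ext; simp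
    rwa [this] at hp
  refine ⟨s, hs, κ, inferInstance, hae, fun F hF k hk hc => ?_⟩
  obtain ⟨C, hC0, hC⟩ := exists_bound_01 hF
  have hq : Continuous fun p => k p / refDens T p :=
    hk.div refDens_cont fun p => (refDens_pos hT p).ne'
  have hqc : HasCompactSupport fun p => k p / refDens T p := by
    simp only [div_eq_mul_inv]; exact hc.mul_right
  obtain ⟨B, hB⟩ := hqc.exists_bound_of_continuous hq
  have hB0 : 0 ≤ B := (norm_nonneg _).trans (hB 0)
  set G : (ℝ × ℝ) × ℝ → ℝ := fun z => F (clip z.2) * (k z.1 / refDens T z.1) with hG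
  have hGc : Continuous G :=
    ((hF.comp continuous_clip).comp continuous_snd).mul (hq.comp continuous_fst)
  have hGb : ∀ z, ‖G z‖ ≤ C * B := fun z => by
    rw [hG, norm_mul]
    exact mul_le_mul (hC _ (clip_mem _)) (hB _) (norm_nonneg _) hC0
  have hInt : ∀ (η : Kernel (ℝ × ℝ) ℝ) [IsMarkovKernel η],
      ∫ z, G z ∂ (refMeas T ⊗ₘ η) = ∫ p in Om T, (∫ l, F (clip l) ∂ η p) * k p := by
    intro η _
    rw [Measure.integral_compProd (Integrable.of_bound hGc.aestronglyMeasurable _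
      (ae_of_all _ hGb)), integral_refMeas hT]
    congr 1; ext p
    simp only [hG]
    rw [integral_mul_const]
    have := (refDens_pos hT p).ne'
    field_simp
  have hconv := (ProbabilityMeasure.tendsto_iff_forall_integral_tendsto.1 hlim)
    (BoundedContinuousFunction.ofNormedAddCommGroup G hGc _ hGb)
  simp only [BoundedContinuousFunction.coe_ofNormedAddCommGroup] at hconv
  rw [← hdis, hInt κ] at hconv
  have hR2 : ∀ n, ∫ z, G z ∂ ((R ∘ s) n : Measure ((ℝ × ℝ) × ℝ)) =
      ∫ p in Om T, (μ (s n)).mom F p * k p := by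
    intro n
    rw [(μ (s n)).mom_congr (G := fun l => F (clip l)) fun l hl => by rw [clip_of_mem hl]]
    exact hInt (μ (s n)).ker
  simp only [hR2] at hconv
  convert hconv using 2
  refine integral_congr_ae ?_
  filter_upwards [hae] with p hp
  congr 1
  refine integral_congr_ae ?_
  filter_upwards [ae_iff.2 hp] with l hl
  rw [clip_of_mem hl]


lemma measurable_potential {a : ℝ × ℝ → ℝ} {C : ℝ} (ha : Measurable a) (hb : ∀ p, |a p| ≤ C) :
    Measurable fun p : ℝ × ℝ => ∫ y in (0:ℝ)..p.2, a (p.1, y) := by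
  have h1 : (fun p : ℝ × ℝ => ∫ y in (0:ℝ)..p.2, a (p.1, y)) =
      fun p : ℝ × ℝ => ∫ y, a (p.1, y) * ind p.2 y := by
    ext p
    exact intervalIntegral_eq_ind (ha.comp measurable_prodMk_left) (fun y => hb _) _
  rw [h1]
  have h2 : Measurable fun q : (ℝ × ℝ) × ℝ => ind q.1.2 q.2 := by
    unfold ind
    have e1 : (fun q : (ℝ × ℝ) × ℝ => (Ioc 0 q.1.2).indicator (fun _ => (1:ℝ)) q.2) =
      {q : (ℝ × ℝ) × ℝ | 0 < q.2 ∧ q.2 ≤ q.1.2}.indicator (fun _ => (1:ℝ)) := by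
      ext q; simp [indicator]
    have e2 : (fun q : (ℝ × ℝ) × ℝ => (Ioc q.1.2 0).indicator (fun _ => (1:ℝ)) q.2) =
      {q : (ℝ × ℝ) × ℝ | q.1.2 < q.2 ∧ q.2 ≤ 0}.indicator (fun _ => (1:ℝ)) := by
      ext q; simp [indicator]
    refine Measurable.sub ?_ ?_
    · rw [e1]
      exact measurable_const.indicator ((measurableSet_lt measurable_const measurable_snd).inter
        (measurableSet_le measurable_snd (measurable_snd.comp measurable_fst)))
    · rw [e2]
      exact measurable_const.indicator ((measurableSet_lt (measurable_snd.comp measurable_fst)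
        measurable_snd).inter (measurableSet_le measurable_snd measurable_const))
  have h3 : Measurable fun q : (ℝ × ℝ) × ℝ => a (q.1.1, q.2) * ind q.1.2 q.2 :=
    (ha.comp ((measurable_fst.comp measurable_fst).prodMk measurable_snd)).mul h2
  exact (h3.stronglyMeasurable.integral_prod_right' (ν := volume)).measurable

lemma abs_potential_le_mul {w : ℝ → ℝ} {C : ℝ} (h : ∀ x, |w x| ≤ C) (x : ℝ) :
    |∫ y in (0:ℝ)..x, w y| ≤ C * |x| := by
  have := intervalIntegral.norm_integral_le_of_norm_le_const (a := 0) (b := x) (C := C)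
    (f := w) (fun z _ => h z)
  simpa using this

lemma pot_mul_integrable {P g : ℝ × ℝ → ℝ} {C : ℝ} (hP : Measurable P)
    (hb : ∀ p : ℝ × ℝ, |P p| ≤ C * |p.2|) (hg : Continuous g) (hc : HasCompactSupport g)
    (μ : Measure (ℝ × ℝ)) [IsFiniteMeasureOnCompacts μ] :
    Integrable (fun p => P p * g p) μ := by
  have h1 : Integrable (fun p : ℝ × ℝ => C * |p.2| * g p) μ :=
    (Continuous.mul (by fun_prop) hg).integrable_of_hasCompactSupport hc.mul_left
  refine h1.norm.mono' (hP.aestronglyMeasurable.mul hg.aestronglyMeasurable) (ae_of_all _ fun p => ?_)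
  simp only [norm_mul, Real.norm_eq_abs]
  gcongr
  exact (hb p).trans (le_of_eq_of_le rfl ((le_abs_self _).trans (by rw [abs_mul])))

lemma hasDerivAt_slice {g : ℝ × ℝ → ℝ} (hg : ContDiff ℝ (⊤ : ℕ∞) g) (t x : ℝ) :
    HasDerivAt (fun x => g (t, x)) (pxF g (t, x)) x := by
  have h1 : HasFDerivAt g (fderiv ℝ g (t, x)) (t, x) :=
    ((hg.differentiable (by simp)) (t, x)).hasFDerivAt
  have h2 : HasDerivAt (fun x : ℝ => (t, x)) ((0:ℝ), (1:ℝ)) x :=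
    (hasDerivAt_const x t).prodMk (hasDerivAt_id x)
  exact h1.comp_hasDerivAt x h2

/-- Integration by parts in `x` on the strip, against the spatial primitive. -/
lemma integral_Om_parts {a : ℝ × ℝ → ℝ} {C : ℝ} (ha : Measurable a) (hb : ∀ p, |a p| ≤ C)
    {g : ℝ × ℝ → ℝ} (hg : ContDiff ℝ (⊤ : ℕ∞) g) (hc : HasCompactSupport g) :
    ∫ p in Om T, a p * g p =
      - ∫ p in Om T, (∫ y in (0:ℝ)..p.2, a (p.1, y)) * pxF g p := by
  have i1 : Integrable (fun p => a p * g p) (volume.restrict (Om T)) :=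
    integrable_bdd_mul ha.aestronglyMeasurable hb hg.continuous hc
  have i2 := pot_mul_integrable (measurable_potential ha hb)
    (fun p => abs_potential_le_mul (fun x => hb (p.1, x)) p.2) (contDiff_pxF hg).continuous
    (cpt_pxF hc) (volume.restrict (Om T))
  rw [Om_prod] at i1 i2 ⊢
  rw [integral_prod _ i1, integral_prod _ i2, ← integral_neg]
  congr 1; ext t
  obtain ⟨N, hN⟩ := hc.isCompact.isBounded.subset_ball (0 : ℝ × ℝ)
  have hzero : ∀ x, x ∉ Ioo (-(|N| + 1)) (|N| + 1) → (t, x) ∉ tsupport g := by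
    intro x hx hmem
    have := hN hmem
    rw [Metric.mem_ball, dist_zero_right, Prod.norm_def] at this
    have h2 : |x| < N := lt_of_le_of_lt (le_max_right _ _) this
    have h3 := abs_lt.1 (h2.trans_le ((le_abs_self N).trans (by linarith : |N| ≤ |N| + 1)))
    exact hx ⟨h3.1, h3.2⟩
  have hsm : ContDiff ℝ (⊤ : ℕ∞) fun x => g (t, x) := hg.comp (by fun_prop)
  have := integral_mul_eq_neg_potential (w := fun y => a (t, y))
    (locallyIntegrable_of_bdd (ha.comp measurable_prodMk_left) fun y => hb _) hsm
    (N := |N| + 1) (by positivity) (fun x hx => by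
      by_contra hn
      exact hx (image_eq_zero_of_notMem_tsupport (hzero x hn)))
  rw [this]
  congr 1
  rw [intervalIntegral.integral_of_le (by linarith [abs_nonneg N]),
    setIntegral_eq_integral_of_forall_compl_eq_zero]
  · congr 1; ext x
    rw [(hasDerivAt_slice hg t x).deriv]
  · intro x hx
    have hx2 : x ∉ Ioo (-(|N| + 1)) (|N| + 1) := fun h => hx ⟨h.1, h.2.le⟩
    rw [(hasDerivAt_slice hg t x).deriv, pxF,
      image_eq_zero_of_notMem_tsupport (f := fderiv ℝ g)
        (fun h => hzero x hx2 (tsupport_fderiv_subset ℝ h))]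
    simp

/-- Finitely many points control a family of 2-Lipschitz functions on an interval. -/
lemma exists_grid (N : ℝ) {δ : ℝ} (hδ : 0 < δ) :
    ∃ S : Finset ℝ, ∀ P : ℝ → ℝ, (∀ x y, |P x - P y| ≤ 2 * |x - y|) → (∀ x ∈ S, |P x| ≤ δ / 2) →
      ∀ x ∈ Icc (-N) N, |P x| ≤ δ := by
  obtain ⟨S, -, hcov⟩ := (isCompact_Icc (a := -N) (b := N)).elim_nhds_subcover
    (fun x => Metric.ball x (δ/4)) (fun t _ => Metric.ball_mem_nhds t (by positivity))
  refine ⟨S, fun P hP hS x hx => ?_⟩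
  obtain ⟨x₀, hx₀, hb⟩ := mem_iUnion₂.1 (hcov hx)
  rw [Metric.mem_ball, Real.dist_eq] at hb
  have h1 := hP x x₀
  have h2 := hS x₀ hx₀
  have := abs_sub_abs_le_abs_sub (P x) (P x₀)
  linarith

end

section

variable {T : ℝ}

/-- A jointly measurable version of the spatial derivative of a Lipschitz nondecreasing
potential. -/
lemma exists_deriv_field {W : ℝ × ℝ → ℝ} (hW : Measurable W) (h0 : ∀ t, W (t, 0) = 0)
    (hmono : ∀ t x y, x ≤ y → 0 ≤ W (t, y) - W (t, x) ∧ W (t, y) - W (t, x) ≤ y - x) :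
    ∃ U : ℝ × ℝ → ℝ, Measurable U ∧ (∀ p, U p ∈ Icc (0:ℝ) 1) ∧
      ∀ t x, ∫ y in (0:ℝ)..x, U (t, y) = W (t, x) := by
  set q : ℕ → ℝ × ℝ → ℝ := fun k p =>
    ((1:ℝ) / (k + 1))⁻¹ * (W (p.1, p.2 + 1 / (k + 1)) - W p) with hq
  have hqm : ∀ k, Measurable (q k) := fun k => by
    simp only [hq]
    exact ((hW.comp (measurable_fst.prodMk (measurable_snd.add_const _))).sub hW).const_mul _
  refine ⟨fun p => clip (limsup (fun k => q k p) atTop),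
    continuous_clip.measurable.comp (Measurable.limsup hqm), fun p => clip_mem _, fun t x => ?_⟩
  have hlip : LipschitzWith 1 fun x => W (t, x) := by
    apply LipschitzWith.of_dist_le_mul
    intro x y
    rw [Real.dist_eq, Real.dist_eq, NNReal.coe_one, one_mul]
    rcases le_total x y with h | h
    · rw [abs_sub_comm, abs_sub_comm x y, abs_of_nonneg (hmono t x y h).1,
        abs_of_nonneg (by linarith)]
      exact (hmono t x y h).2
    · rw [abs_of_nonneg (hmono t y x h).1, abs_of_nonneg (by linarith)]
      exact (hmono t y x h).2
  have hac : AbsolutelyContinuousOnInterval (fun x => W (t, x)) 0 x :=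
    (hlip.lipschitzOnWith (s := uIcc 0 x)).absolutelyContinuousOnInterval
  have hInt := hac.integral_deriv_eq_sub
  rw [h0, sub_zero] at hInt
  rw [← hInt]
  apply intervalIntegral.integral_congr_ae
  filter_upwards [hlip.ae_differentiableAt] with y hy _
  have hd := hy.hasDerivAt.tendsto_slope_zero_right
  have hs : Tendsto (fun k : ℕ => (1:ℝ) / (k + 1)) atTop (𝓝[>] 0) := by
    rw [tendsto_nhdsWithin_iff]
    exact ⟨tendsto_one_div_add_atTop_nhds_zero_nat,
      Eventually.of_forall fun k => by simp only [mem_Ioi]; positivity⟩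
  have hlim : Tendsto (fun k => q k (t, y)) atTop (𝓝 (deriv (fun x => W (t, x)) y)) := by
    refine (hd.comp hs).congr fun k => ?_
    simp [hq]
  have hmem : ∀ k, q k (t, y) ∈ Icc (0:ℝ) 1 := by
    intro k
    have hk : (0:ℝ) < 1 / (k + 1) := by positivity
    have := hmono t y (y + 1 / (k+1)) (by linarith)
    simp only [hq]
    refine ⟨mul_nonneg (inv_nonneg.2 hk.le) this.1, ?_⟩
    rw [inv_mul_le_iff₀ hk, mul_one]
    linarith [this.2]
  rw [hlim.limsup_eq, clip_of_mem (isClosed_Icc.mem_of_tendsto hlim (Eventually.of_forall hmem))]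

lemma pot_mono (μ : YM T) (t : ℝ) {x y : ℝ} (h : x ≤ y) :
    0 ≤ pot μ t y - pot μ t x ∧ pot μ t y - pot μ t x ≤ y - x := by
  constructor
  · rw [pot, pot, intervalIntegral.integral_interval_sub_left (μ.bar_ii _ _ _) (μ.bar_ii _ _ _)]
    exact intervalIntegral.integral_nonneg h fun z _ => (μ.bar.mem01 _).1
  · have := pot_lip μ t y x
    rw [abs_of_nonneg (by linarith : 0 ≤ y - x)] at this
    exact (le_abs_self _).trans this

/-- Clamping of the time variable to `[0,T]`. -/
def tcl (T t : ℝ) : ℝ := max 0 (min T t)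

lemma tcl_mem (hT : 0 < T) (t : ℝ) : tcl T t ∈ Icc 0 T :=
  ⟨le_max_left _ _, max_le hT.le (min_le_left _ _)⟩

lemma tcl_of_mem {t : ℝ} (h : t ∈ Icc 0 T) : tcl T t = t := by
  rw [tcl, min_eq_right h.2, max_eq_right h.1]

lemma continuous_tcl : Continuous (tcl T) := by unfold tcl; fun_prop

open ProbabilityTheory in
/-- Replacing a kernel on the null set where it is not supported in `[0,1]` with mean `U` by the
Dirac mass at `U` yields a Young measure. -/
lemma exists_YM_of_kernel (κ : Kernel (ℝ × ℝ) ℝ) [IsMarkovKernel κ] {U : ℝ × ℝ → ℝ}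
    (hU : Measurable U) (hU1 : ∀ p, U p ∈ Icc (0:ℝ) 1)
    (hcont : ∀ t₀ ∈ Icc (0:ℝ) T, ∀ δ > 0, ∃ ζ > 0, ∀ t ∈ Icc (0:ℝ) T, |t - t₀| < ζ →
      dU (fun x => U (t, x)) (fun x => U (t₀, x)) < δ) :
    ∃ ν : YM T, ν.bar.toFun = U ∧
      ∀ p, κ p (Icc 0 1)ᶜ = 0 → ∫ l, l ∂ κ p = U p → ν.m p = κ p := by
  set S : Set (ℝ × ℝ) := {p | κ p (Icc 0 1)ᶜ = 0 ∧ ∫ l, l ∂ κ p = U p} with hS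
  have hInt : ∀ F : ℝ → ℝ, Continuous F → Measurable fun p => ∫ l, F l ∂ κ p := fun F hF =>
    (StronglyMeasurable.integral_kernel (κ := κ) hF.stronglyMeasurable).measurable
  have hSm : MeasurableSet S :=
    (measurableSet_eq_fun (κ.measurable_coe measurableSet_Icc.compl) measurable_const).inter
      (measurableSet_eq_fun (hInt _ continuous_id') hU)
  set m : ℝ × ℝ → Measure ℝ := fun p => if p ∈ S then κ p else Measure.dirac (U p) with hm
  have hm1 : ∀ p ∈ S, m p = κ p := fun p hp => if_pos hp
  have hm2 : ∀ p ∉ S, m p = Measure.dirac (U p) := fun p hp => if_neg hp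
  have hbar : ∀ p, ∫ l, l ∂ m p = U p := by
    intro p
    by_cases hp : p ∈ S
    · rw [hm1 p hp]; exact hp.2
    · rw [hm2 p hp, integral_dirac]
  refine ⟨⟨m, fun p => ?_, fun p => ?_, fun F hF => ?_, fun p => by rw [hbar]; exact hU1 p, ?_⟩,
    funext hbar, fun p h1 h2 => hm1 p ⟨h1, h2⟩⟩
  · by_cases hp : p ∈ S
    · rw [hm1 p hp]; infer_instance
    · rw [hm2 p hp]; infer_instance
  · by_cases hp : p ∈ S
    · rw [hm1 p hp]; exact hp.1
    · rw [hm2 p hp, Measure.dirac_apply' _ measurableSet_Icc.compl]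
      simp [(hU1 p).1, (hU1 p).2]
  · have : (fun p => ∫ l, F l ∂ m p) = fun p => if p ∈ S then ∫ l, F l ∂ κ p else F (U p) := by
      ext p
      by_cases hp : p ∈ S
      · rw [hm1 p hp, if_pos hp]
      · rw [hm2 p hp, if_neg hp, integral_dirac]
    rw [this]
    exact Measurable.ite hSm (hInt F hF) (hF.measurable.comp hU)
  · simpa only [hbar] using hcont

open ProbabilityTheory in
/-- The sets `KZ` are weak* sequentially compact.  The limit kernel from Prokhorov's theorem is
modified on a null set so that its mean is the derivative of the limit potential at every time. -/
theorem compact_KZ (hT : 0 < T) {ζ : ℝ → ℝ → ℝ} (hζ : ∀ x η, 0 < η → 0 < ζ x η)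
    (μ : ℕ → YM T) (hμ : ∀ n, μ n ∈ KZ T ζ) :
    ∃ ν ∈ KZ T ζ, ∃ s : ℕ → ℕ, StrictMono s ∧ WConv (fun n => μ (s n)) ν := by
  obtain ⟨s, hs, κ, hκ, hsupp, hconv⟩ := exists_limit_kernel hT μ
  set μ' := fun n => μ (s n) with hμ'
  -- the potentials converge uniformly in time
  have hcau : ∀ x, ∀ η > 0, ∀ᶠ ij : ℕ × ℕ in atTop ×ˢ atTop, ∀ t ∈ Icc 0 T,
      |pot (μ' ij.1) t x - pot (μ' ij.2) t x| ≤ η := by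
    intro x η hη
    have := unif_pot (l := (atTop : Filter ℕ) ×ˢ (atTop : Filter ℕ)) hT x
      (a := fun ij p => (μ' ij.1).bar.toFun p - (μ' ij.2).bar.toFun p) (C := 1)
      (fun n => (YM.bar_meas _).sub (YM.bar_meas _)) (fun n p => YM.bar_sub_abs _ _ _ _) ?_ ?_ hη
    · simpa only [← pot_sub] using this
    · intro η hη
      refine ⟨ζ x (η/2), hζ _ _ (half_pos hη), fun ij s' hs t ht hst => ?_⟩
      simp only [← pot_sub]
      have h1 := hμ (s ij.1) x _ (half_pos hη) s' hs t ht hst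
      have h2 := hμ (s ij.2) x _ (half_pos hη) s' hs t ht hst
      rw [abs_le] at *
      constructor <;> linarith [h1.1, h1.2, h2.1, h2.2]
    · intro k hk hc
      have h := hconv (fun l => l) continuous_id' k hk hc
      have := (h.comp (tendsto_fst (f := (atTop : Filter ℕ)) (g := (atTop : Filter ℕ)))).sub
        (h.comp (tendsto_snd (f := (atTop : Filter ℕ)) (g := (atTop : Filter ℕ))))
      rw [sub_self] at this
      refine this.congr fun ij => ?_
      simp only [Function.comp]
      rw [← integral_sub (mom_mul_integrable _ continuous_id' hk hc)
        (mom_mul_integrable _ continuous_id' hk hc)]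
      congr 1; ext p
      simp only [YM.mom, YM.bar, hμ']; ring
  have hlim : ∀ t x, ∃ w, Tendsto (fun n => pot (μ' n) (tcl T t) x) atTop (𝓝 w) := by
    intro t x
    apply cauchySeq_tendsto_of_complete
    rw [cauchySeq_iff_tendsto, ← prod_atTop_atTop_eq, Metric.uniformity_eq_comap_nhds_zero,
      tendsto_comap_iff]
    rw [Metric.tendsto_nhds]
    intro ε hε
    filter_upwards [hcau x (ε/2) (half_pos hε)] with ij hij
    have := hij _ (tcl_mem hT t)
    simp only [Function.comp, Prod.map, dist_zero_right, Real.norm_eq_abs, Real.dist_eq, abs_abs]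
    linarith
  choose W' hW' using hlim
  set W : ℝ × ℝ → ℝ := fun p => W' p.1 p.2 with hWd
  have hWm : Measurable W := by
    refine measurable_of_tendsto_metrizable (f := fun n p => pot (μ' n) (tcl T p.1) p.2)
      (fun n => ?_) (tendsto_pi_nhds.2 fun p => hW' p.1 p.2)
    exact (measurable_potential (YM.bar_meas (μ' n)) (fun p => YM.bar_abs _ p)).comp
      ((continuous_tcl.measurable.comp measurable_fst).prodMk measurable_snd)
  obtain ⟨U, hUm, hU1, hUW⟩ := exists_deriv_field hWm
    (fun t => tendsto_nhds_unique (hW' t 0) (by simp [pot]))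
    (fun t x y hxy => ⟨
      ge_of_tendsto' ((hW' t y).sub (hW' t x)) fun n => (pot_mono (μ' n) _ hxy).1,
      le_of_tendsto' ((hW' t y).sub (hW' t x)) fun n => (pot_mono (μ' n) _ hxy).2⟩)
  have hUslice : ∀ t, Measurable fun x => U (t, x) := fun t => hUm.comp measurable_prodMk_left
  have hUabs : ∀ p, |U p| ≤ 1 := fun p => abs_le.2 ⟨by linarith [(hU1 p).1], (hU1 p).2⟩
  have hUii : ∀ t a b, IntervalIntegrable (fun y => U (t, y)) volume a b := fun t a b =>
    ((locallyIntegrable_of_bdd (hUslice t) fun _ => hUabs _).integrableOn_isCompact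
      isCompact_uIcc).intervalIntegrable
  have hWmod : ∀ x η, 0 < η → ∀ s ∈ Icc 0 T, ∀ t ∈ Icc 0 T, |s - t| < ζ x η →
      |W (s, x) - W (t, x)| ≤ η := by
    intro x η hη s' hs' t ht hst
    refine le_of_tendsto' ((hW' s' x).sub (hW' t x)).abs fun n => ?_
    rw [tcl_of_mem hs', tcl_of_mem ht]
    exact hμ (s n) x η hη s' hs' t ht hst
  have hUsub : ∀ t t₀ x, (∫ y in (0:ℝ)..x, (U (t, y) - U (t₀, y))) = W (t, x) - W (t₀, x) := by
    intro t t₀ x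
    rw [intervalIntegral.integral_sub (hUii _ _ _) (hUii _ _ _), hUW, hUW]
  obtain ⟨ν, hν, hνκ⟩ := exists_YM_of_kernel (T := T) κ hUm hU1 (by
    intro t₀ ht₀ δ hδ
    obtain ⟨N, hN, δ', hδ', H⟩ := dU_lt_of_potential hδ
    obtain ⟨S, hS⟩ := exists_grid N hδ'
    have : ∀ᶠ z in 𝓝[>] (0:ℝ), ∀ x ∈ S, z < ζ x (δ'/2) := by
      rw [Filter.eventually_all_finset]
      intro x _
      filter_upwards [Ioo_mem_nhdsGT (hζ x _ (half_pos hδ'))] with z hz using hz.2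
    obtain ⟨z, hz, hz0⟩ := (this.and self_mem_nhdsWithin).exists
    refine ⟨z, hz0, fun t ht htt => H _ _ (hUslice t) (hUslice t₀) (fun x => hU1 _)
      (fun x => hU1 _) ?_⟩
    refine hS _ (fun x y => ?_) (fun x hx => ?_)
    · rw [intervalIntegral.integral_interval_sub_left ((hUii _ _ _).sub (hUii _ _ _))
        ((hUii _ _ _).sub (hUii _ _ _))]
      refine (intervalIntegral.norm_integral_le_of_norm_le_const (C := 2) (f := fun z => U (t, z) - U (t₀, z)) fun z _ => ?_)
      refine (abs_sub _ _).trans ?_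
      linarith [hUabs (t, z), hUabs (t₀, z)]
    · rw [hUsub]
      exact hWmod x _ (half_pos hδ') t ht t₀ ht₀ (htt.trans (hz x hx)))
  have hpot : ∀ t x, pot ν t x = W (t, x) := fun t x => by rw [pot, hν, hUW]
  -- the mean of the limit kernel is the derivative of the limit potential
  have hmean : ∀ᵐ p ∂ volume.restrict (Om T), ∫ l, l ∂ κ p = U p := by
    set V : ℝ × ℝ → ℝ := fun p => ∫ l, clip l ∂ κ p with hV
    have hVm : Measurable V :=
      (StronglyMeasurable.integral_kernel (κ := κ) continuous_clip.stronglyMeasurable).measurable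
    have hV1 : ∀ p, |V p| ≤ 1 := fun p => by
      have := norm_integral_le_of_norm_le_const (μ := κ p) (f := clip) (C := 1)
        (ae_of_all _ fun l => by
          rw [Real.norm_eq_abs, abs_of_nonneg (clip_mem l).1]; exact (clip_mem l).2)
      simpa using this
    have hVe : ∀ᵐ p ∂ volume.restrict (Om T), V p = ∫ l, l ∂ κ p := by
      filter_upwards [hsupp] with p hp
      refine integral_congr_ae ?_
      filter_upwards [ae_iff.2 hp] with l hl using clip_of_mem hl
    have hz : ∀ᵐ p, (Om T).indicator (fun p => V p - U p) p = 0 := by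
      apply ae_eq_zero_of_integral_contDiff_smul_eq_zero
      · refine (locallyIntegrable_const (2:ℝ)).mono
          ((hVm.sub hUm).indicator (measurableSet_Om T)).aestronglyMeasurable (ae_of_all _ fun p => ?_)
        refine (norm_indicator_le_norm_self _ _).trans ?_
        refine (abs_sub _ _).trans ?_
        simp only [Real.norm_eq_abs, abs_two]
        linarith [hV1 p, hUabs p]
      · intro g hg hc
        have e1 : ∫ p, g p • (Om T).indicator (fun p => V p - U p) p =
            ∫ p in Om T, (V p - U p) * g p := by
          rw [← integral_indicator (measurableSet_Om T)]
          congr 1; ext p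
          by_cases hp : p ∈ Om T
          · simp [hp, mul_comm]
          · simp [hp]
        rw [e1]
        have e2 : ∫ p in Om T, (V p - U p) * g p =
            (∫ p in Om T, V p * g p) - ∫ p in Om T, U p * g p := by
          rw [← integral_sub (integrable_bdd_mul hVm.aestronglyMeasurable hV1 hg.continuous hc)
            (integrable_bdd_mul hUm.aestronglyMeasurable hUabs hg.continuous hc)]
          congr 1; ext p; ring
        have t1 := hconv (fun l => l) continuous_id' g hg.continuous hc
        have e3 : ∫ p in Om T, (∫ l, l ∂ κ p) * g p = ∫ p in Om T, V p * g p :=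
          integral_congr_ae (by filter_upwards [hVe] with p hp; rw [hp])
        rw [e3] at t1
        have hgx := (contDiff_pxF hg).continuous
        have t2 : Tendsto (fun n => ∫ p in Om T, (μ' n).mom (fun l => l) p * g p) atTop
            (𝓝 (∫ p in Om T, U p * g p)) := by
          rw [integral_Om_parts hUm hUabs hg hc]
          have : ∀ n, ∫ p in Om T, (μ' n).mom (fun l => l) p * g p =
              - ∫ p in Om T, pot (μ' n) p.1 p.2 * pxF g p := fun n =>
            integral_Om_parts (YM.bar_meas (μ' n)) (fun p => YM.bar_abs _ p) hg hc
          simp only [this]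
          apply Tendsto.neg
          refine tendsto_integral_of_dominated_convergence (fun p => |p.2| * |pxF g p|)
            (fun n => ((measurable_potential (YM.bar_meas (μ' n))
              (fun p => YM.bar_abs _ p)).mul hgx.measurable).aestronglyMeasurable)
            ?_ (fun n => ae_of_all _ fun p => ?_) ?_
          · exact (Continuous.mul (by fun_prop) hgx.abs).integrable_of_hasCompactSupport
              ((cpt_pxF hc).norm.mul_left)
          · rw [norm_mul, Real.norm_eq_abs, Real.norm_eq_abs]
            exact mul_le_mul_of_nonneg_right (abs_potential_le (fun x => YM.bar_abs _ _) _)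
              (abs_nonneg _)
          · filter_upwards [ae_restrict_mem (measurableSet_Om T)] with p hp
            have h1 := hW' p.1 p.2
            rw [tcl_of_mem hp.1] at h1
            rw [hUW]
            exact h1.mul_const _
        rw [e2, tendsto_nhds_unique t1 t2, sub_self]
    filter_upwards [ae_restrict_of_ae (s := Om T) hz, hVe, ae_restrict_mem (measurableSet_Om T)]
      with p hp hp2 hp3
    rw [indicator_of_mem hp3] at hp
    linarith
  refine ⟨ν, fun x η hη s hs t ht hst => ?_, s, hs, fun F hF k hk hc => ?_⟩
  · rw [hpot, hpot]; exact hWmod x η hη s hs t ht hst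
  · have := hconv F hF k hk hc
    have e : ∫ p in Om T, (∫ l, F l ∂ κ p) * k p = ∫ p in Om T, ν.mom F p * k p := by
      refine integral_congr_ae ?_
      filter_upwards [hsupp, hmean] with p h1 h2
      rw [YM.mom, hνκ p h1 h2]
    rwa [e] at this

/-- The sets `KZ` are sequentially compact for `d_𝓜`. -/
theorem seqCompact_KZ (hT : 0 < T) {ζ : ℝ → ℝ → ℝ} (hζ : ∀ x η, 0 < η → 0 < ζ x η)
    {dw : YM T → YM T → ℝ} (hdw : GeneratesWeakStar T dw) :
    SeqCompactIn (dM T dw) (KZ T ζ) := by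
  intro μ hμ
  obtain ⟨ν, hν, s, hs, hw⟩ := compact_KZ hT hζ μ hμ
  refine ⟨ν, hν, s, hs, ?_⟩
  have h1 := (dw_iff hdw _ _).2 hw
  have h2 := dcU_tendsto_of_KZ hT hζ (fun n => hμ (s n)) hw
  simpa [dM] using h1.add h2

end

/-! ### Extension of the coefficients, Γ-liminf and equicoercivity -/

/-- Coefficients enter only through their restrictions to `[0,1]`; composing with `clip` extends
them to continuous functions on the line. -/
theorem calIeps_clip {T : ℝ} (f D σ : ℝ → ℝ) (ε : ℝ) :
    calIeps (fun l => f (clip l)) (fun l => D (clip l)) (fun l => σ (clip l)) T ε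
      = calIeps f D σ T ε := by
  funext μ
  simp only [calIeps, Ieps, IexprW]
  by_cases h : ∃ u : cU T, ∀ p, μ.m p = Measure.dirac (u.toFun p)
  · simp only [dif_pos h, clip_of_mem (h.choose.mem01 _)]
  · simp only [dif_neg h]

theorem calI_clip {T : ℝ} (f σ : ℝ → ℝ) :
    calI (fun l => f (clip l)) (fun l => σ (clip l)) T = calI f σ T := by
  funext μ
  have h : ∀ g : ℝ → ℝ, μ.mom (fun l => g (clip l)) = μ.mom g := fun g =>
    μ.mom_congr fun l hl => by rw [clip_of_mem hl]
  simp only [calI, h]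

theorem continuous_comp_clip {g : ℝ → ℝ} (hg : ContinuousOn g (Icc 0 1)) :
    Continuous fun l => g (clip l) :=
  hg.comp_continuous continuous_clip clip_mem

/-- The functional tested against `φ`, with the viscous term integrated by parts (`prim D` is
a primitive of `D`) so that it makes sense for every Young measure. -/
def testExpr {T : ℝ} (f D σ : ℝ → ℝ) (ε : ℝ) (μ : YM T) (φ : TTest T) : ℝ :=
  - pair T (μ.mom fun l => l) (ptF φ.toFun) - pair T (μ.mom f) (pxF φ.toFun)
    - ε / 2 * pair T (μ.mom (prim D)) (pxF (pxF φ.toFun))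
    - 1 / 2 * pair T (fun p => μ.mom σ p * pxF φ.toFun p) (pxF φ.toFun)

theorem Iexpr_eq_testExpr {T : ℝ} {f D σ : ℝ → ℝ} (hD : Continuous D) (ε : ℝ) (u : cU T)
    {w : ℝ × ℝ → ℝ} (hw : L2loc T w) (h : HasWeakDx T u.toFun w) (φ : TTest T) :
    IexprW f D σ T ε u.toFun w φ = testExpr f D σ ε (diracYM u) φ := by
  have := chain_rule hD u.meas u.mem01 hw h φ.px
  simp only [IexprW, testExpr, diracYM_mom]
  rw [show pxF φ.toFun = φ.px.toFun from rfl, this]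
  ring

theorem testExpr_le {T : ℝ} {f D σ : ℝ → ℝ} (hD : Continuous D) (ε : ℝ) (μ : YM T)
    (φ : TTest T) : ENNReal.ofReal (testExpr f D σ ε μ φ) ≤ calIeps f D σ T ε μ := by
  by_cases h : calIeps f D σ T ε μ = ⊤
  · rw [h]; exact le_top
  have e := eq_dirac_of_calIeps_ne_top h
  rw [e, calIeps_dirac] at h ⊢
  rw [Ieps] at h ⊢
  by_cases hd : hasDx T μ.bar.toFun
  · rw [if_pos hd]
    have hs : L2loc T (wDx T μ.bar.toFun) ∧ HasWeakDx T μ.bar.toFun (wDx T μ.bar.toFun) := by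
      rw [wDx, dif_pos hd]; exact hd.choose_spec
    rw [← Iexpr_eq_testExpr hD ε μ.bar hs.1 hs.2 φ]
    exact le_iSup (fun φ => ENNReal.ofReal
      (IexprW f D σ T ε μ.bar.toFun (wDx T μ.bar.toFun) φ)) φ
  · rw [if_neg hd]; exact le_top

/-- The Γ-liminf inequality: `testExpr` is continuous along weak* convergent sequences, and its
viscous term vanishes with `ε`. -/
theorem gammaLiminf {T : ℝ} {f D σ : ℝ → ℝ} (hf : Continuous f) (hD : Continuous D)
    (hσ : Continuous σ) {dw : YM T → YM T → ℝ} (hdw : GeneratesWeakStar T dw) :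
    GammaLiminfGE (dM T dw) (fun ε => calIeps f D σ T ε) (calI f σ T) := by
  intro μ e μs he he0 hμ
  have hw : WConv μs μ := (dw_iff hdw μs μ).1
    (squeeze_zero (fun n => hdw.2.1 _ _) (fun n => le_add_of_nonneg_right (dcU_nonneg _ _)) hμ)
  refine iSup_le fun φ => ?_
  have hlim : Tendsto (fun n => testExpr f D σ (e n) (μs n) φ) atTop
      (𝓝 (- pair T (μ.mom (fun l => l)) (ptF φ.toFun) - pair T (μ.mom f) (pxF φ.toFun)
        - 0 / 2 * pair T (μ.mom (prim D)) (pxF (pxF φ.toFun))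
        - 1 / 2 * pair T (fun p => μ.mom σ p * pxF φ.toFun p) (pxF φ.toFun))) := by
    refine ((((hw _ continuous_id' _ φ.pt.cont φ.pt.cpt).neg).sub
      (hw f hf _ φ.px.cont φ.px.cpt)).sub ((he0.div_const 2).mul
      (hw _ (continuous_prim hD) _ φ.px.px.cont φ.px.px.cpt))).sub
      (Tendsto.const_mul _ ?_)
    have := hw σ hσ (fun p => φ.px.toFun p * φ.px.toFun p) (φ.px.cont.mul φ.px.cont)
      (φ.px.cpt.mul_left)
    simp only [← mul_assoc] at this
    exact this
  rw [zero_div, zero_mul, sub_zero] at hlim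
  have h2 := (ENNReal.continuous_ofReal.tendsto _).comp hlim
  refine h2.liminf_eq.symm.le.trans (liminf_le_liminf ?_)
  exact Eventually.of_forall fun n => testExpr_le hD _ _ φ

/-- A bound on the time derivative of the barycenter in terms of the cost, uniform in `ε`. -/
theorem testExpr_bound {T : ℝ} {f D σ : ℝ → ℝ} (hf : Continuous f) (hD : Continuous D)
    (hσ : Continuous σ) : ∃ C, 0 ≤ C ∧ ∀ ε ∈ Ioc (0:ℝ) 1, ∀ M, 0 ≤ M → ∀ μ : YM T,
      calIeps f D σ T ε μ ≤ ENNReal.ofReal M → ∀ φ : TTest T,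
      - pair T μ.bar.toFun (ptF φ.toFun) ≤ M + C * ((∫ p, |pxF φ.toFun p|)
        + (∫ p, (pxF φ.toFun p) ^ 2) + ∫ p, |pxF (pxF φ.toFun) p|) := by
  obtain ⟨C1, h1, hC1⟩ := exists_bound_01 hf
  obtain ⟨C2, h2, hC2⟩ := exists_bound_01 (continuous_prim hD)
  obtain ⟨C3, h3, hC3⟩ := exists_bound_01 hσ
  refine ⟨C1 + C2 + C3, by positivity, fun ε hε M hM μ hμ φ => ?_⟩
  have key : ∀ (F : ℝ → ℝ) (C : ℝ), (∀ l ∈ Icc (0:ℝ) 1, |F l| ≤ C) → ∀ η : TTest T,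
      |pair T (μ.mom F) η.toFun| ≤ C * ∫ p, |η.toFun p| := fun F C hF η => by
    rw [pair_eq_integral, ← integral_const_mul, ← Real.norm_eq_abs]
    refine norm_integral_le_of_norm_le
      ((η.cont.integrable_of_hasCompactSupport η.cpt).abs.const_mul C) (ae_of_all _ fun p => ?_)
    rw [Real.norm_eq_abs, abs_mul]
    exact mul_le_mul_of_nonneg_right (μ.mom_bound p hF) (abs_nonneg _)
  have hh := (ENNReal.ofReal_le_ofReal_iff hM).1 ((testExpr_le hD ε μ φ).trans hμ)
  have k1 := key f C1 hC1 φ.px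
  have k2 := key _ C2 hC2 φ.px.px
  have k3 : |pair T (fun p => μ.mom σ p * pxF φ.toFun p) (pxF φ.toFun)|
      ≤ C3 * ∫ p, (pxF φ.toFun p) ^ 2 := by
    rw [show pxF φ.toFun = φ.px.toFun from rfl, pair_eq_integral, ← integral_const_mul,
      ← Real.norm_eq_abs]
    have hi : Integrable (fun p => φ.px.toFun p ^ 2) :=
      (φ.px.cont.pow 2).integrable_of_hasCompactSupport (hasCompactSupport_sq φ.px.cpt)
    refine norm_integral_le_of_norm_le (hi.const_mul C3) (ae_of_all _ fun p => ?_)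
    rw [mul_assoc, ← sq, Real.norm_eq_abs, abs_mul, abs_of_nonneg (sq_nonneg (φ.px.toFun p))]
    exact mul_le_mul_of_nonneg_right (μ.mom_bound p hC3) (sq_nonneg _)
  change |pair T (μ.mom f) (pxF φ.toFun)| ≤ C1 * ∫ p, |pxF φ.toFun p| at k1
  change |pair T (μ.mom (prim D)) (pxF (pxF φ.toFun))| ≤ C2 * ∫ p, |pxF (pxF φ.toFun) p| at k2
  rw [testExpr] at hh
  change - pair T μ.bar.toFun (ptF φ.toFun) - _ - _ - _ ≤ M at hh
  have n1 : 0 ≤ ∫ p, |pxF φ.toFun p| := integral_nonneg fun p => abs_nonneg _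
  have n2 : 0 ≤ ∫ p, |pxF (pxF φ.toFun) p| := integral_nonneg fun p => abs_nonneg _
  have n3 : 0 ≤ ∫ p, (pxF φ.toFun p) ^ 2 := integral_nonneg fun p => sq_nonneg _
  set a1 := ∫ p, |pxF φ.toFun p|
  set a2 := ∫ p, |pxF (pxF φ.toFun) p|
  set a3 := ∫ p, (pxF φ.toFun p) ^ 2
  have b1 := (abs_le.1 k1).2
  have b3 := (abs_le.1 k3).2
  have b2 : ε / 2 * pair T (μ.mom (prim D)) (pxF (pxF φ.toFun)) ≤ C2 * a2 := by
    have := (le_abs_self _).trans k2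
    have c : 0 ≤ C2 * a2 := by positivity
    nlinarith [hε.1, hε.2]
  nlinarith [mul_nonneg h1 n2, mul_nonneg h1 n3, mul_nonneg h2 n1, mul_nonneg h2 n3,
    mul_nonneg h3 n1, mul_nonneg h3 n2, mul_nonneg h3 n3]

/-! ### Equicontinuity in time of the sublevels -/

/-- A smoothed indicator function of `[s,t]`, whose derivative is the difference of two bumps
`b` centred at `s` and at `t`. -/
theorem exists_window (s t ρ : ℝ) (hst : s < t) (hρ : 0 < ρ) :
    ∃ b α : ℝ → ℝ, Continuous b ∧ HasCompactSupport b ∧ (∀ y, 0 ≤ b y) ∧ (∫ y, b y) = 1 ∧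
      (∀ y, ρ ≤ |y| → b y = 0) ∧ ContDiff ℝ (⊤ : ℕ∞) α ∧
      (∀ r, deriv α r = b (r - s) - b (r - t)) ∧ (∀ r, 0 ≤ α r) ∧ (∀ r, α r ≤ 1) ∧
      (∀ r, r ∉ Ioo (s - ρ) (t + ρ) → α r = 0) := by
  let B : ContDiffBump (0:ℝ) := ⟨ρ / 2, ρ, half_pos hρ, half_lt_self hρ⟩
  set b : ℝ → ℝ := B.normed volume with hb
  have hbs : ContDiff ℝ (⊤ : ℕ∞) b := B.contDiff_normed
  have hbc : Continuous b := hbs.continuous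
  have hcs : HasCompactSupport b := B.hasCompactSupport_normed
  have hb0 : ∀ y, 0 ≤ b y := fun y => B.nonneg_normed y
  have hb1 : ∫ y, b y = 1 := B.integral_normed
  have hbz : ∀ y, ρ ≤ |y| → b y = 0 := fun y hy => by
    by_contra h
    have : y ∈ Function.support b := h
    rw [hb, B.support_normed_eq, mem_ball_zero_iff, Real.norm_eq_abs] at this
    exact absurd this (not_lt.2 hy)
  have hbi : Integrable b := hbc.integrable_of_hasCompactSupport hcs
  refine ⟨b, fun r => ∫ y in (r - t)..(r - s), b y, hbc, hcs, hb0, hb1, hbz, ?_, ?_, ?_, ?_, ?_⟩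
  all_goals
    have hder : ∀ r, HasDerivAt (fun r => ∫ y in (r - t)..(r - s), b y)
        (b (r - s) - b (r - t)) r := fun r => by
      have h1 : ∀ c, HasDerivAt (fun r => ∫ y in (0:ℝ)..(r - c), b y) (b (r - c)) r := fun c => by
        have := (intervalIntegral.integral_hasDerivAt_right (hbc.intervalIntegrable 0 (r - c))
          (hbc.stronglyMeasurableAtFilter _ _) hbc.continuousAt)
        have h2 := this.comp r ((hasDerivAt_id r).sub_const c)
        rw [mul_one] at h2
        exact h2
      refine ((h1 s).sub (h1 t)).congr_of_eventuallyEq (Eventually.of_forall fun r => ?_)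
      exact (intervalIntegral.integral_interval_sub_left (hbc.intervalIntegrable _ _)
        (hbc.intervalIntegrable _ _)).symm
  · rw [contDiff_infty_iff_deriv]
    refine ⟨fun r => (hder r).differentiableAt, ?_⟩
    rw [show deriv (fun r => ∫ y in (r - t)..(r - s), b y) = fun r => b (r - s) - b (r - t) from
      funext fun r => (hder r).deriv]
    exact (hbs.comp (contDiff_id.sub contDiff_const)).sub
      (hbs.comp (contDiff_id.sub contDiff_const))
  · exact fun r => (hder r).deriv
  · exact fun r => intervalIntegral.integral_nonneg (by linarith) fun y _ => hb0 y
  · intro r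
    beta_reduce
    rw [intervalIntegral.integral_of_le (by linarith), ← hb1]
    exact setIntegral_le_integral hbi (ae_of_all _ hb0)
  · intro r hr
    refine (intervalIntegral.integral_congr (g := fun _ => (0:ℝ)) fun y hy => hbz y ?_).trans
      (by simp)
    rw [uIcc_of_le (by linarith)] at hy
    rw [mem_Ioo, not_and_or, not_lt, not_lt] at hr
    rcases hr with hr | hr
    · rw [le_abs]; right; linarith [hy.2]
    · rw [le_abs]; left; linarith [hy.1]

/-- The test function `(t,x) ↦ α(t) ψ(x)`. -/
def prodTest {T : ℝ} (α ψ : ℝ → ℝ) (hα : ContDiff ℝ (⊤ : ℕ∞) α)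
    (hψ : ContDiff ℝ (⊤ : ℕ∞) ψ) (hψc : HasCompactSupport ψ) {a b : ℝ} (ha : 0 < a) (hb : b < T)
    (hz : ∀ r, r ∉ Ioo a b → α r = 0) : TTest T where
  toFun p := α p.1 * ψ p.2
  smooth := (hα.comp contDiff_fst).mul (hψ.comp contDiff_snd)
  cpt := by
    refine HasCompactSupport.of_support_subset_isCompact
      ((isCompact_Icc (a := a) (b := b)).prod hψc.isCompact) fun p hp => ?_
    have hp' : α p.1 * ψ p.2 ≠ 0 := hp
    refine ⟨?_, subset_tsupport _ (right_ne_zero_of_mul hp')⟩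
    by_contra h
    exact left_ne_zero_of_mul hp' (hz _ fun h' => h (Ioo_subset_Icc_self h'))
  supp := fun p hp => by
    have hp' : α p.1 * ψ p.2 ≠ 0 := hp
    refine ⟨?_, trivial⟩
    by_contra h
    exact left_ne_zero_of_mul hp' (hz _ fun h' => h ⟨ha.trans h'.1, h'.2.trans hb⟩)

theorem pxF_prod {α ψ : ℝ → ℝ} (hα : Differentiable ℝ α) (hψ : Differentiable ℝ ψ) :
    pxF (fun p => α p.1 * ψ p.2) = fun p => α p.1 * deriv ψ p.2 := by
  funext p
  have h1 : HasFDerivAt (fun p : ℝ × ℝ => α p.1) _ p :=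
    (hα p.1).hasDerivAt.hasFDerivAt.comp (g := α) (f := Prod.fst) p hasFDerivAt_fst
  have h2 : HasFDerivAt (fun p : ℝ × ℝ => ψ p.2) _ p :=
    (hψ p.2).hasDerivAt.hasFDerivAt.comp (g := ψ) (f := Prod.snd) p hasFDerivAt_snd
  have h3 : HasFDerivAt (fun p : ℝ × ℝ => α p.1 * ψ p.2) _ p := h1.mul h2
  rw [pxF, h3.fderiv]
  simp

theorem ptF_prod {α ψ : ℝ → ℝ} (hα : Differentiable ℝ α) (hψ : Differentiable ℝ ψ) :
    ptF (fun p => α p.1 * ψ p.2) = fun p => deriv α p.1 * ψ p.2 := by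
  funext p
  have h1 : HasFDerivAt (fun p : ℝ × ℝ => α p.1) _ p :=
    (hα p.1).hasDerivAt.hasFDerivAt.comp (g := α) (f := Prod.fst) p hasFDerivAt_fst
  have h2 : HasFDerivAt (fun p : ℝ × ℝ => ψ p.2) _ p :=
    (hψ p.2).hasDerivAt.hasFDerivAt.comp (g := ψ) (f := Prod.snd) p hasFDerivAt_snd
  have h3 : HasFDerivAt (fun p : ℝ × ℝ => α p.1 * ψ p.2) _ p := h1.mul h2
  rw [ptF, h3.fderiv]
  simp [mul_comm]

/-- The size of a spatial test function entering the modulus of continuity. -/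
def tsize (ψ : ℝ → ℝ) : ℝ :=
  (∫ x, |deriv ψ x|) + (∫ x, (deriv ψ x) ^ 2) + ∫ x, |deriv (deriv ψ) x|

theorem tsize_nonneg (ψ : ℝ → ℝ) : 0 ≤ tsize ψ := by
  unfold tsize
  have h1 : 0 ≤ ∫ x, |deriv ψ x| := integral_nonneg fun p => abs_nonneg _
  have h2 : 0 ≤ ∫ x, |deriv (deriv ψ) x| := integral_nonneg fun p => abs_nonneg _
  have h3 : 0 ≤ ∫ x, (deriv ψ x) ^ 2 := integral_nonneg fun p => sq_nonneg _
  positivity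

/-- Testing with `α(t) ψ(x)`, where `α` is a smoothed indicator of `[s,t]`, bounds the increment in
time of the barycenter tested against `ψ`. -/
theorem tmod_window {T : ℝ} {C : ℝ} (hC0 : 0 ≤ C) {M : ℝ} {μ : YM T}
    (hC : ∀ φ : TTest T,
      - pair T μ.bar.toFun (ptF φ.toFun) ≤ M + C * ((∫ p, |pxF φ.toFun p|)
        + (∫ p, (pxF φ.toFun p) ^ 2) + ∫ p, |pxF (pxF φ.toFun) p|))
    {ψ : ℝ → ℝ} (hψ : ContDiff ℝ (⊤ : ℕ∞) ψ) (hψc : HasCompactSupport ψ) {s t : ℝ} (hs : 0 < s)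
    (hst : s < t) (ht : t < T) {η : ℝ} (hη : 0 < η) :
    (∫ x, μ.bar.toFun (t, x) * ψ x) - (∫ x, μ.bar.toFun (s, x) * ψ x)
      ≤ M + C * ((t - s) * tsize ψ) + η := by
  have hψ1 : ContDiff ℝ (⊤ : ℕ∞) (deriv ψ) := (contDiff_infty_iff_deriv.1 hψ).2
  have hψ2 : ContDiff ℝ (⊤ : ℕ∞) (deriv (deriv ψ)) := (contDiff_infty_iff_deriv.1 hψ1).2
  have hψi : Integrable ψ := hψ.continuous.integrable_of_hasCompactSupport hψc
  set g : ℝ → ℝ := fun r => ∫ x, μ.bar.toFun (r, x) * ψ x with hg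
  have hsl : ∀ r, Integrable fun x => μ.bar.toFun (r, x) * ψ x := fun r =>
    integrable_bdd_mul (μ.bar_slice r).aestronglyMeasurable (fun x => μ.bar_abs _)
      hψ.continuous hψc
  have hgb : ∀ r, |g r| ≤ ∫ x, |ψ x| := fun r => by
    rw [← Real.norm_eq_abs]
    refine norm_integral_le_of_norm_le hψi.abs (ae_of_all _ fun x => ?_)
    rw [Real.norm_eq_abs, abs_mul]
    exact mul_le_of_le_one_left (abs_nonneg _) (μ.bar_abs _)
  have hgm : Measurable g := by
    have : StronglyMeasurable fun p : ℝ × ℝ => μ.bar.toFun p * ψ p.2 :=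
      (μ.bar_meas.mul (hψ.continuous.measurable.comp measurable_snd)).stronglyMeasurable
    exact (this.integral_prod_right' (ν := volume)).measurable
  -- continuity of `g` inside `(0,T)`
  have hgc : ∀ r, 0 < r → r < T → ∀ η > 0, ∃ δ > 0, ∀ y, |y - r| < δ → |g y - g r| ≤ η := by
    intro r h0 hT η hη
    obtain ⟨d, hd, hdd⟩ := dU_small_test hψ hψc hη
    obtain ⟨z, hz, hzz⟩ := μ.bar.cont r ⟨h0.le, hT.le⟩ d hd
    refine ⟨min z (min r (T - r)), by positivity [sub_pos.2 hT], fun y hy => ?_⟩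
    simp only [lt_min_iff] at hy
    have h1 := abs_lt.1 hy.2.1
    have h2 := abs_lt.1 hy.2.2
    have := hdd _ _ (μ.bar_slice y) (μ.bar_slice r) (fun x => μ.bar.mem01 _)
      (fun x => μ.bar.mem01 _) (hzz y ⟨by linarith, by linarith⟩ hy.1)
    rw [hg]
    beta_reduce
    rw [← integral_sub (hsl y) (hsl r)]
    simp only [← sub_mul]
    exact this.le
  obtain ⟨d1, hd1, hd1'⟩ := hgc t (hs.trans hst) ht (η / 4) (by positivity)
  obtain ⟨d2, hd2, hd2'⟩ := hgc s hs (hst.trans ht) (η / 4) (by positivity)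
  have hA := tsize_nonneg ψ
  set A := tsize ψ with hAdef
  have hden : 0 < 4 * (C * A + 1) := by positivity
  obtain ⟨ρ, hρ, hρlt⟩ : ∃ ρ > 0, ρ < min (min d1 d2) (min (min s (T - t)) (η / (4 * (C * A + 1)))) :=
    exists_between (by
      have : 0 < T - t := by linarith
      positivity)
  simp only [lt_min_iff] at hρlt
  obtain ⟨⟨hρ1, hρ2⟩, ⟨hρ3, hρ4⟩, hρ5⟩ := hρlt
  rw [lt_div_iff₀ hden] at hρ5
  obtain ⟨b, α, hbc, hbcs, hb0, hb1, hbz, hα, hα', hα0, hα1, hαz⟩ := exists_window s t ρ hst hρ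
  have hαd := hα.differentiable (by simp)
  have hψd := hψ.differentiable (by simp)
  have hψD := hψ1.differentiable (by simp)
  have hh := hC (prodTest α ψ hα hψ hψc (a := s - ρ) (b := t + ρ) (by linarith) (by linarith) hαz)
  have hpair := pair_eq_integral μ.bar.toFun
    (prodTest (T := T) α ψ hα hψ hψc (a := s - ρ) (b := t + ρ) (by linarith) (by linarith) hαz).pt
  change pair T μ.bar.toFun (ptF (fun p => α p.1 * ψ p.2)) =
    ∫ p, μ.bar.toFun p * ptF (fun p => α p.1 * ψ p.2) p at hpair
  change - pair T μ.bar.toFun (ptF (fun p => α p.1 * ψ p.2)) ≤ M + C * ((∫ p, |pxF (fun p => α p.1 * ψ p.2) p|)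
        + (∫ p, (pxF (fun p => α p.1 * ψ p.2) p) ^ 2) + ∫ p, |pxF (pxF (fun p => α p.1 * ψ p.2)) p|) at hh
  rw [hpair] at hh
  rw [pxF_prod hαd hψd, pxF_prod hαd hψD, ptF_prod hαd hψd] at hh
  have hαi : Integrable α := hα.continuous.integrable_of_hasCompactSupport
    (HasCompactSupport.of_support_subset_isCompact (isCompact_Icc (a := s - ρ) (b := t + ρ))
      fun r hr => by
        by_contra h
        exact hr (hαz r fun h' => h (Ioo_subset_Icc_self h')))
  have hα2 : ∀ r, α r ^ 2 ≤ α r := fun r => by nlinarith [hα0 r, hα1 r]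
  have hαle : ∫ r, α r ≤ t - s + 2 * ρ := by
    have : ∫ r, α r = ∫ r in Icc (s - ρ) (t + ρ), α r :=
      (setIntegral_eq_integral_of_forall_compl_eq_zero fun r hr =>
        hαz r fun h' => hr (Ioo_subset_Icc_self h')).symm
    rw [this]
    calc ∫ r in Icc (s - ρ) (t + ρ), α r ≤ ∫ r in Icc (s - ρ) (t + ρ), (1:ℝ) :=
          setIntegral_mono hαi.integrableOn (integrableOn_const (by simp)) hα1
      _ = t - s + 2 * ρ := by
          simp [Measure.real, Real.volume_Icc]
          rw [ENNReal.toReal_ofReal (by linarith)]; ring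
  have hαi0 : 0 ≤ ∫ r, α r := integral_nonneg hα0
  have hαsqle : ∫ r, α r ^ 2 ≤ ∫ r, α r :=
    integral_mono_of_nonneg (ae_of_all _ fun r => sq_nonneg _) hαi (ae_of_all _ hα2)
  have e1 : ∫ p : ℝ × ℝ, |α p.1 * deriv ψ p.2| = (∫ r, α r) * ∫ x, |deriv ψ x| := by
    simp_rw [abs_mul, abs_of_nonneg (hα0 _)]
    exact integral_prod_mul (μ := volume) (ν := volume) α fun x => |deriv ψ x|
  have e2 : ∫ p : ℝ × ℝ, |α p.1 * deriv (deriv ψ) p.2|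
      = (∫ r, α r) * ∫ x, |deriv (deriv ψ) x| := by
    simp_rw [abs_mul, abs_of_nonneg (hα0 _)]
    exact integral_prod_mul (μ := volume) (ν := volume) α fun x => |deriv (deriv ψ) x|
  have e3 : ∫ p : ℝ × ℝ, (α p.1 * deriv ψ p.2) ^ 2
      = (∫ r, α r ^ 2) * ∫ x, (deriv ψ x) ^ 2 := by
    simp_rw [mul_pow]
    exact integral_prod_mul (μ := volume) (ν := volume) (fun r => α r ^ 2)
      fun x => (deriv ψ x) ^ 2
  have e4 : ∫ p : ℝ × ℝ, μ.bar.toFun p * (deriv α p.1 * ψ p.2) = ∫ r, deriv α r * g r := by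
    rw [Measure.volume_eq_prod, integral_prod]
    · refine integral_congr_ae (ae_of_all _ fun r => ?_)
      simp only [hg]
      rw [← integral_const_mul]
      refine integral_congr_ae (ae_of_all _ fun x => ?_)
      simp only; ring
    · refine integrable_bdd_mul (k := fun p : ℝ × ℝ => deriv α p.1 * ψ p.2)
        μ.bar_meas.aestronglyMeasurable μ.bar_abs ?_ ?_
      · exact (((contDiff_infty_iff_deriv.1 hα).2.continuous.comp continuous_fst).mul
          (hψ.continuous.comp continuous_snd))
      · rw [← ptF_prod hαd hψd]
        exact (prodTest (T := T) α ψ hα hψ hψc (a := s - ρ) (b := t + ρ) (by linarith)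
          (by linarith) hαz).pt.cpt
  have hbi : Integrable b := hbc.integrable_of_hasCompactSupport hbcs
  have hbg : ∀ c, Integrable fun r => b (r - c) * g r := fun c => by
    refine ((hbi.comp_sub_right c).bdd_mul hgm.aestronglyMeasurable (c := ∫ x, |ψ x|)
      (ae_of_all _ hgb)).congr (ae_of_all _ fun r => mul_comm _ _)
  have happ : ∀ c, (∀ y, |y - c| < ρ → |g y - g c| ≤ η / 4) →
      |(∫ r, b (r - c) * g r) - g c| ≤ η / 4 := fun c hc => by
    have i1 : ∫ r, b (r - c) = 1 := by rw [integral_sub_right_eq_self, hb1]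
    have : (∫ r, b (r - c) * g r) - g c = ∫ r, b (r - c) * (g r - g c) := by
      simp_rw [mul_sub]
      rw [integral_sub (hbg c) ((hbi.comp_sub_right c).mul_const _), integral_mul_const, i1,
        one_mul]
    rw [this, ← Real.norm_eq_abs]
    refine (norm_integral_le_of_norm_le ((hbi.comp_sub_right c).mul_const (η / 4))
      (ae_of_all _ fun r => ?_)).trans (by rw [integral_mul_const, i1, one_mul])
    rw [Real.norm_eq_abs, abs_mul, abs_of_nonneg (hb0 _)]
    by_cases hr : |r - c| < ρ
    · exact mul_le_mul_of_nonneg_left (hc r hr) (hb0 _)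
    · rw [hbz _ (not_lt.1 hr)]; simp
  have a1 := abs_le.1 (happ t fun y hy => hd1' y (hy.trans hρ1))
  have a2 := abs_le.1 (happ s fun y hy => hd2' y (hy.trans hρ2))
  simp_rw [hα'] at e4
  simp_rw [sub_mul] at e4
  rw [integral_sub (hbg s) (hbg t)] at e4
  simp only [hα', sub_mul] at hh
  rw [e4, e1, e2, e3] at hh
  have q1 : 0 ≤ ∫ x, |deriv ψ x| := integral_nonneg fun p => abs_nonneg _
  have q2 : 0 ≤ ∫ x, |deriv (deriv ψ) x| := integral_nonneg fun p => abs_nonneg _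
  have q3 : 0 ≤ ∫ x, (deriv ψ x) ^ 2 := integral_nonneg fun p => sq_nonneg _
  have hfin : (∫ r, α r) * (∫ x, |deriv ψ x|) + (∫ r, α r ^ 2) * (∫ x, (deriv ψ x) ^ 2)
      + (∫ r, α r) * (∫ x, |deriv (deriv ψ) x|) ≤ (t - s + 2 * ρ) * A := by
    rw [hAdef, tsize]
    nlinarith [mul_le_mul_of_nonneg_right hαle q1, mul_le_mul_of_nonneg_right hαle q2,
      mul_le_mul_of_nonneg_right (hαsqle.trans hαle) q3]
  have hfin2 := mul_le_mul_of_nonneg_left hfin hC0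
  have : 2 * ρ * (C * A) ≤ η / 2 := by nlinarith
  change g t - g s ≤ _
  nlinarith

/-- A modulus of continuity for the potential at `x`.  The bound of `tmod_window` is applied to
`± K ψ` with `K` large, so that the constant `M` contributes only `M / K`. -/
theorem exists_zeta {T : ℝ} {C : ℝ} (hC0 : 0 ≤ C) {M : ℝ} (hM : 0 < M) (x : ℝ) {η : ℝ}
    (hη : 0 < η) : ∃ ζ > 0, ∀ μ : YM T, (∀ φ : TTest T,
      - pair T μ.bar.toFun (ptF φ.toFun) ≤ M + C * ((∫ p, |pxF φ.toFun p|)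
        + (∫ p, (pxF φ.toFun p) ^ 2) + ∫ p, |pxF (pxF φ.toFun) p|)) →
      ∀ s t, 0 < s → s < t → t < T → t - s < ζ → |pot μ t x - pot μ s x| ≤ η := by
  obtain ⟨ψ, hψ, hψc, happ⟩ := exists_smooth_approx x (η := η / 4) (by positivity)
  set K := 8 * M / η with hK
  have hK0 : 0 < K := by positivity
  set A := tsize (fun y => K * ψ y) + tsize (fun y => -K * ψ y) with hA
  have hA1 := tsize_nonneg (fun y => K * ψ y)
  have hA2 := tsize_nonneg (fun y => -K * ψ y)
  have hA0 : 0 ≤ A := add_nonneg hA1 hA2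
  refine ⟨η * K / 4 / (C * A + 1), by positivity, fun μ hμ s t hs hst ht hts => ?_⟩
  rw [lt_div_iff₀ (by positivity)] at hts
  have hi : ∀ r, Integrable fun y => μ.bar.toFun (r, y) * ψ y := fun r =>
    integrable_bdd_mul (μ.bar_slice r).aestronglyMeasurable (fun x => μ.bar_abs _)
      hψ.continuous hψc
  have key : ∀ c : ℝ, c * ∫ y, (μ.bar.toFun (t, y) - μ.bar.toFun (s, y)) * ψ y
      ≤ M + C * ((t - s) * tsize (fun y => c * ψ y)) + M := fun c => by
    have := tmod_window hC0 hμ (ψ := fun y => c * ψ y) (contDiff_const.mul hψ) hψc.mul_left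
      hs hst ht hM
    simp_rw [mul_left_comm _ c] at this
    rw [integral_const_mul, integral_const_mul, ← mul_sub, ← integral_sub (hi t) (hi s)] at this
    simpa only [sub_mul] using this
  have k1 := key K
  have k2 := key (-K)
  set J := ∫ y, (μ.bar.toFun (t, y) - μ.bar.toFun (s, y)) * ψ y with hJ
  have h3 := happ (fun y => μ.bar.toFun (t, y) - μ.bar.toFun (s, y))
    ((μ.bar_slice t).sub (μ.bar_slice s)) (fun y => μ.bar_sub_abs μ _ _)
  rw [pot_sub]
  have hts0 : 0 ≤ t - s := by linarith
  have hKe : K * η = 8 * M := by rw [hK]; field_simp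
  have m1 : C * ((t - s) * tsize (fun y => K * ψ y)) ≤ η * K / 4 := by
    have : C * ((t - s) * tsize (fun y => K * ψ y)) ≤ C * ((t - s) * A) := by gcongr; linarith
    nlinarith
  have m2 : C * ((t - s) * tsize (fun y => -K * ψ y)) ≤ η * K / 4 := by
    have : C * ((t - s) * tsize (fun y => -K * ψ y)) ≤ C * ((t - s) * A) := by gcongr; linarith
    nlinarith
  have j1 : J ≤ η / 2 := by
    by_contra h
    push Not at h
    nlinarith
  have j2 : -(η / 2) ≤ J := by
    by_contra h
    push Not at h
    nlinarith
  rw [abs_le] at h3 ⊢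
  constructor <;> linarith [h3.1, h3.2]

/-- Sublevel sets of the functionals lie in a set of Young measures whose barycentres are
equicontinuous in time, with a modulus that does not depend on `ε`. -/
theorem exists_KZ {T : ℝ} (hT : 0 < T) {f D σ : ℝ → ℝ} (hf : Continuous f) (hD : Continuous D)
    (hσ : Continuous σ) {M : ℝ} (hM : 0 < M) : ∃ ζ : ℝ → ℝ → ℝ, (∀ x η, 0 < η → 0 < ζ x η) ∧
      ∀ ε ∈ Ioc (0:ℝ) 1, ∀ μ : YM T, calIeps f D σ T ε μ ≤ ENNReal.ofReal M → μ ∈ KZ T ζ := by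
  obtain ⟨C, hC0, hC⟩ := testExpr_bound (T := T) hf hD hσ
  have H := fun (x η : ℝ) => fun h : 0 < η => exists_zeta (T := T) hC0 hM x h
  choose! ζ hζ hζ' using H
  refine ⟨ζ, hζ, fun ε hε μ hμ x η hη s hs t ht hst => ?_⟩
  have hInt : ∀ s t, s ∈ Ioo 0 T → t ∈ Ioo 0 T → |s - t| < ζ x η → s < t →
      |pot μ s x - pot μ t x| ≤ η := fun s t hs ht hst hlt => by
    rw [abs_sub_comm]
    rw [abs_sub_comm, abs_of_pos (sub_pos.2 hlt)] at hst
    exact hζ' x η hη μ (hC ε hε M hM.le μ hμ) s t hs.1 hlt ht.2 hst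
  have hint2 : ∀ s t, s ∈ Ioo 0 T → t ∈ Ioo 0 T → |s - t| < ζ x η →
      |pot μ s x - pot μ t x| ≤ η := fun s t hs ht hst => by
    rcases lt_trichotomy s t with h | h | h
    · exact hInt s t hs ht hst h
    · rw [h, sub_self, abs_zero]; exact hη.le
    · rw [abs_sub_comm] at hst ⊢
      exact hInt t s ht hs hst h
  have hc : ∀ s ∈ Icc 0 T, Tendsto (fun r : ℝ => pot μ (s + r * (T / 2 - s)) x) (𝓝[>] 0)
      (𝓝 (pot μ s x)) ∧ ∀ r ∈ Ioo (0:ℝ) 1, s + r * (T / 2 - s) ∈ Ioo 0 T := fun s hs => by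
    have hmem : ∀ r ∈ Ioo (0:ℝ) 1, s + r * (T / 2 - s) ∈ Ioo 0 T := fun r hr => by
      constructor
      · nlinarith [hs.1, hs.2, hr.1, hr.2, mul_nonneg hs.1 (sub_nonneg.2 hr.2.le),
          mul_pos hr.1 hT]
      · nlinarith [hs.1, hs.2, hr.1, hr.2, mul_nonneg (sub_nonneg.2 hs.2) (sub_nonneg.2 hr.2.le),
          mul_pos hr.1 hT]
    refine ⟨?_, hmem⟩
    have h1 : Tendsto (fun r : ℝ => s + r * (T / 2 - s)) (𝓝[>] 0) (𝓝[Icc 0 T] s) := by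
      refine tendsto_nhdsWithin_iff.2 ⟨?_, ?_⟩
      · have : Continuous fun r : ℝ => s + r * (T / 2 - s) := by fun_prop
        have := this.tendsto 0
        rw [zero_mul, add_zero] at this
        exact this.mono_left nhdsWithin_le_nhds
      · filter_upwards [Ioo_mem_nhdsGT (zero_lt_one' ℝ)] with r hr
        exact Ioo_subset_Icc_self (hmem r hr)
    exact Tendsto.comp (pot_cont μ x s hs) h1
  refine le_of_tendsto (((hc s hs).1.sub (hc t ht).1).abs) ?_
  filter_upwards [Ioo_mem_nhdsGT (zero_lt_one' ℝ)] with r hr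
  refine hint2 _ _ ((hc s hs).2 r hr) ((hc t ht).2 r hr) (lt_of_le_of_lt ?_ hst)
  rw [show s + r * (T / 2 - s) - (t + r * (T / 2 - t)) = (1 - r) * (s - t) by ring, abs_mul,
    abs_of_pos (sub_pos.2 hr.2)]
  exact mul_le_of_le_one_left (abs_nonneg _) (by linarith [hr.1])

/-- Equicoercivity, from the compactness of the sets `KZ` containing the sublevels. -/
theorem equicoercive {T : ℝ} (hT : 0 < T) {f D σ : ℝ → ℝ} (hf : Continuous f)
    (hD : Continuous D) (hσ : Continuous σ) {dw : YM T → YM T → ℝ}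
    (hdw : GeneratesWeakStar T dw) :
    Equicoercive (dM T dw) (fun ε => calIeps f D σ T ε) := by
  intro M hM
  obtain ⟨ζ, hζ, h⟩ := exists_KZ hT hf hD hσ hM
  exact ⟨KZ T ζ, seqCompact_KZ hT hζ hdw, fun ε hε μ hμ => h ε hε μ hμ⟩

/-! ### Countably many test functions suffice -/

theorem tendsto_of_approx {a : ℕ → ℝ} {A : ℝ} (h : ∀ η > 0, ∃ (b : ℕ → ℝ) (B : ℝ),
    Tendsto b atTop (𝓝 B) ∧ (∀ n, |a n - b n| ≤ η) ∧ |A - B| ≤ η) : Tendsto a atTop (𝓝 A) := by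
  rw [Metric.tendsto_atTop]
  intro η hη
  obtain ⟨b, B, hb, h1, h2⟩ := h (η / 4) (by positivity)
  obtain ⟨N, hN⟩ := Metric.tendsto_atTop.1 hb (η / 4) (by positivity)
  refine ⟨N, fun n hn => ?_⟩
  have h3 := hN n hn
  rw [Real.dist_eq] at h3 ⊢
  have h4 := abs_le.1 (h1 n)
  have h5 := abs_le.1 h2
  have h6 := abs_lt.1 h3
  rw [abs_lt]
  constructor <;> linarith [h4.1, h4.2, h5.1, h5.2, h6.1, h6.2]

/-- Continuous compactly supported functions contain a sequence dense in `L¹([0,T] × ℝ)`. -/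
theorem exists_dense_Cc (T : ℝ) : ∃ k : ℕ → ℝ × ℝ → ℝ, (∀ j, Continuous (k j)) ∧
    (∀ j, HasCompactSupport (k j)) ∧ ∀ h : ℝ × ℝ → ℝ, Continuous h → HasCompactSupport h →
      ∀ η > 0, ∃ j, ∫ p in Om T, |h p - k j p| ≤ η := by
  haveI : Fact ((1:ℝ≥0∞) ≠ ∞) := ⟨by simp⟩
  let μ : Measure (ℝ × ℝ) := volume.restrict (Om T)
  let S := {h : ℝ × ℝ → ℝ // Continuous h ∧ HasCompactSupport h}
  have hS : ∀ h : S, MemLp h.1 1 μ := fun h =>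
    memLp_one_iff_integrable.2 (h.2.1.integrable_of_hasCompactSupport h.2.2).restrict
  let e : S → Lp ℝ 1 μ := fun h => (hS h).toLp h.1
  let R := range e
  haveI : Nonempty R := ⟨⟨e ⟨0, continuous_const, HasCompactSupport.zero⟩, mem_range_self _⟩⟩
  have hd := TopologicalSpace.denseRange_denseSeq R
  have hch : ∀ j, ∃ h : S, e h = (TopologicalSpace.denseSeq R j : Lp ℝ 1 μ) := fun j =>
    (TopologicalSpace.denseSeq R j).2
  choose k hk using hch
  refine ⟨fun j => (k j).1, fun j => (k j).2.1, fun j => (k j).2.2, fun h hc hs η hη => ?_⟩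
  obtain ⟨j, hj⟩ := hd.exists_dist_lt (⟨e ⟨h, hc, hs⟩, mem_range_self _⟩ : R) hη
  refine ⟨j, ?_⟩
  rw [Subtype.dist_eq, ← hk, dist_eq_norm] at hj
  have : ‖e ⟨h, hc, hs⟩ - e (k j)‖ = ∫ p in Om T, |h p - (k j).1 p| := by
    rw [L1.norm_eq_integral_norm]
    refine integral_congr_ae ?_
    filter_upwards [Lp.coeFn_sub (e ⟨h, hc, hs⟩) (e (k j)), (hS ⟨h, hc, hs⟩).coeFn_toLp,
      (hS (k j)).coeFn_toLp] with p h1 h2 h3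
    rw [h1, Pi.sub_apply, h2, h3, Real.norm_eq_abs]
  rw [this] at hj
  exact hj.le

/-- A countable family of product tests determines weak* convergence. -/
theorem exists_tests (T : ℝ) : ∃ (F : ℕ → ℝ → ℝ) (k : ℕ → ℝ × ℝ → ℝ), (∀ j, Continuous (F j)) ∧
    (∀ j, Continuous (k j)) ∧ (∀ j, HasCompactSupport (k j)) ∧
    ∀ (μ : ℕ → YM T) (ν : YM T), (∀ j, Tendsto (fun n => ∫ p in Om T, (μ n).mom (F j) p * k j p)
      atTop (𝓝 (∫ p in Om T, ν.mom (F j) p * k j p))) → WConv μ ν := by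
  obtain ⟨k, hk, hkc, hkd⟩ := exists_dense_Cc T
  -- the index `j` codes a hat function `hat (N · - i)` together with a function `k m`
  let F0 : ℕ → ℕ → ℝ → ℝ := fun N i l => hat (N * l - i)
  have hF0 : ∀ N i, Continuous (F0 N i) := fun N i => by
    have := continuous_hat
    fun_prop
  refine ⟨fun j => F0 j.unpair.1.unpair.1 j.unpair.1.unpair.2, fun j => k j.unpair.2,
    fun j => hF0 _ _, fun j => hk _, fun j => hkc _, fun μ ν H => ?_⟩
  have H1 : ∀ N i m, Tendsto (fun n => ∫ p in Om T, (μ n).mom (F0 N i) p * k m p)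
      atTop (𝓝 (∫ p in Om T, ν.mom (F0 N i) p * k m p)) := fun N i m => by
    simpa using H (Nat.pair (Nat.pair N i) m)
  have H2 : ∀ N i (h : ℝ × ℝ → ℝ), Continuous h → HasCompactSupport h →
      Tendsto (fun n => ∫ p in Om T, (μ n).mom (F0 N i) p * h p)
      atTop (𝓝 (∫ p in Om T, ν.mom (F0 N i) p * h p)) := fun N i h hc hs => by
    refine tendsto_of_approx fun η hη => ?_
    obtain ⟨m, hm⟩ := hkd h hc hs η hη
    have hb : ∀ ξ : YM T, |(∫ p in Om T, ξ.mom (F0 N i) p * h p)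
        - ∫ p in Om T, ξ.mom (F0 N i) p * k m p| ≤ η := fun ξ => by
      rw [← integral_sub (mom_mul_integrable ξ (hF0 N i) hc hs)
        (mom_mul_integrable ξ (hF0 N i) (hk m) (hkc m)), ← Real.norm_eq_abs]
      refine (norm_integral_le_of_norm_le (g := fun p => |h p - k m p|) ?_
        (ae_of_all _ fun p => ?_)).trans hm
      · exact (((hc.integrable_of_hasCompactSupport hs).sub
          ((hk m).integrable_of_hasCompactSupport (hkc m))).abs).restrict
      · rw [← mul_sub, Real.norm_eq_abs, abs_mul]
        refine mul_le_of_le_one_left (abs_nonneg _) (ξ.mom_bound p fun l _ => ?_)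
        rw [abs_of_nonneg (hat_nonneg _)]
        exact hat_le_one _
    exact ⟨_, _, H1 N i m, fun n => hb _, hb _⟩
  intro F hF h hc hs
  refine tendsto_of_approx fun η hη => ?_
  have hi : Integrable (fun p => |h p|) (volume.restrict (Om T)) :=
    (hc.integrable_of_hasCompactSupport hs).abs.restrict
  set I := ∫ p in Om T, |h p| with hI
  have hI0 : 0 ≤ I := integral_nonneg fun p => abs_nonneg _
  obtain ⟨δ, hδ, hunif⟩ := Metric.uniformContinuousOn_iff.1
    ((isCompact_Icc (a := (-1:ℝ)) (b := 3)).uniformContinuousOn_of_continuous hF.continuousOn)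
    (η / (I + 1)) (by positivity)
  obtain ⟨N, hN⟩ := exists_nat_one_div_lt (lt_min hδ zero_lt_one)
  rw [lt_min_iff] at hN
  set N' := N + 1 with hN'
  have hNp : (0:ℝ) < (N' : ℝ) := by positivity
  set G : ℝ → ℝ := fun l => ∑ j ∈ Finset.range (N' + 2), F (j / N') * F0 N' j l with hG
  have hGc : Continuous G := continuous_finsetSum _ fun j _ => continuous_const.mul (hF0 _ _)
  have hFG : ∀ l ∈ Icc (0:ℝ) 1, |F l - G l| ≤ η / (I + 1) := fun l hl => by
    rw [abs_sub_comm, hG]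
    have := hat_approx (N := N') (y := N' * l) (by nlinarith [hl.1]) (by nlinarith [hl.2])
      (c := fun j => F (j / N')) (g := F l) (η := η / (I + 1)) (fun j hj => ?_)
    · simpa only [F0, mul_comm] using this
    · have hjl : |(j / N' : ℝ) - l| < 1 / N' := by
        rw [show (j / N' : ℝ) - l = -((N' * l - j) / N') by field_simp; ring, abs_neg, abs_div,
          abs_of_pos hNp]
        gcongr
      have hN1 : 1 / (N' : ℝ) < δ := by rw [hN']; push_cast; exact hN.1
      have hN2 : 1 / (N' : ℝ) < 1 := by rw [hN']; push_cast; exact hN.2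
      have hjl' := abs_lt.1 (hjl.trans hN2)
      refine (hunif _ ⟨by linarith [hl.1, hjl'.1], by linarith [hl.2, hjl'.2]⟩ _
        ⟨by linarith [hl.1], by linarith [hl.2]⟩ ?_).le
      rw [Real.dist_eq]
      exact hjl.trans hN1
  have hsum : ∀ ξ : YM T, ∫ p in Om T, ξ.mom G p * h p
      = ∑ j ∈ Finset.range (N' + 2), F (j / N') * ∫ p in Om T, ξ.mom (F0 N' j) p * h p :=
    fun ξ => by
      simp_rw [← integral_const_mul]
      rw [← integral_finsetSum _ fun j _ => (mom_mul_integrable ξ (hF0 N' j) hc hs).const_mul _]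
      refine integral_congr_ae (ae_of_all _ fun p => ?_)
      simp only [hG]
      rw [ξ.mom_sum _ _ fun j => hF0 N' j, Finset.sum_mul]
      exact Finset.sum_congr rfl fun j _ => mul_assoc _ _ _
  have hb : ∀ ξ : YM T, |(∫ p in Om T, ξ.mom F p * h p) - ∫ p in Om T, ξ.mom G p * h p| ≤ η :=
    fun ξ => by
      rw [← integral_sub (mom_mul_integrable ξ hF hc hs) (mom_mul_integrable ξ hGc hc hs),
        ← Real.norm_eq_abs]
      refine (norm_integral_le_of_norm_le (hi.const_mul (η / (I + 1)))
        (ae_of_all _ fun p => ?_)).trans ?_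
      · rw [← sub_mul, Real.norm_eq_abs, abs_mul, ← ξ.mom_sub hF hGc]
        exact mul_le_mul_of_nonneg_right (ξ.mom_bound p hFG) (abs_nonneg _)
      · rw [integral_const_mul, div_mul_eq_mul_div, div_le_iff₀ (by positivity)]
        nlinarith
  refine ⟨_, _, ?_, fun n => hb _, hb _⟩
  simp_rw [hsum]
  exact tendsto_finsetSum _ fun j _ => (H2 N' j h hc hs).const_mul _

/-! ### The Riesz representation of a finite cost -/

/-- Test functions as a vector space. -/
def testSpace (T : ℝ) : Submodule ℝ (ℝ × ℝ → ℝ) where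
  carrier := {h | ContDiff ℝ (⊤ : ℕ∞) h ∧ HasCompactSupport h ∧
    Function.support h ⊆ Ioo (0 : ℝ) T ×ˢ (univ : Set ℝ)}
  add_mem' := fun {a b} ha hb => ⟨ha.1.add hb.1, ha.2.1.add hb.2.1,
    (Function.support_add a b).trans (union_subset ha.2.2 hb.2.2)⟩
  zero_mem' := ⟨contDiff_const, HasCompactSupport.zero, by simp⟩
  smul_mem' := fun c a ha => ⟨contDiff_const.smul ha.1, ha.2.1.smul_left,
    (Function.support_const_smul_subset c a).trans ha.2.2⟩

/-- A member of `testSpace` as a test function. -/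
def toTest {T : ℝ} (w : testSpace T) : TTest T := ⟨w.1, w.2.1, w.2.2.1, w.2.2.2⟩

theorem pxF_add' {a b : ℝ × ℝ → ℝ} (ha : Differentiable ℝ a) (hb : Differentiable ℝ b) :
    pxF (a + b) = pxF a + pxF b := by
  funext p; simp [pxF, fderiv_add (ha p) (hb p)]

theorem ptF_add' {a b : ℝ × ℝ → ℝ} (ha : Differentiable ℝ a) (hb : Differentiable ℝ b) :
    ptF (a + b) = ptF a + ptF b := by
  funext p; simp [ptF, fderiv_add (ha p) (hb p)]

theorem pxF_smul' {a : ℝ × ℝ → ℝ} (c : ℝ) (ha : Differentiable ℝ a) :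
    pxF (c • a) = c • pxF a := by
  funext p; simp [pxF, fderiv_const_smul (ha p)]

theorem ptF_smul' {a : ℝ × ℝ → ℝ} (c : ℝ) (ha : Differentiable ℝ a) :
    ptF (c • a) = c • ptF a := by
  funext p; simp [ptF, fderiv_const_smul (ha p)]

theorem toTest_diff {T : ℝ} (w : testSpace T) : Differentiable ℝ w.1 :=
  w.2.1.differentiable (by simp)

/-- The linear part `φ ↦ -⟨⟨μ(ι),φ_t⟩⟩ - ⟨⟨μ(f),φ_x⟩⟩` of the cost. -/
def costLin {T : ℝ} {f : ℝ → ℝ} (hf : Continuous f) (μ : YM T) : testSpace T →ₗ[ℝ] ℝ where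
  toFun w := - pair T (μ.mom fun l => l) (ptF w.1) - pair T (μ.mom f) (pxF w.1)
  map_add' := fun a b => by
    have h1 : ∀ (w : testSpace T), Integrable (fun p => μ.mom (fun l => l) p * ptF w.1 p)
        (volume.restrict (Om T)) := fun w =>
      mom_mul_integrable μ continuous_id' (toTest w).pt.cont (toTest w).pt.cpt
    have h2 : ∀ (w : testSpace T), Integrable (fun p => μ.mom f p * pxF w.1 p)
        (volume.restrict (Om T)) := fun w =>
      mom_mul_integrable μ hf (toTest w).px.cont (toTest w).px.cpt
    simp only [pair, Submodule.coe_add, pxF_add' (toTest_diff a) (toTest_diff b),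
      ptF_add' (toTest_diff a) (toTest_diff b), Pi.add_apply, mul_add]
    rw [integral_add (h1 a) (h1 b), integral_add (h2 a) (h2 b)]
    ring
  map_smul' := fun c a => by
    simp only [pair, Submodule.coe_smul, pxF_smul' c (toTest_diff a),
      ptF_smul' c (toTest_diff a), Pi.smul_apply, smul_eq_mul, mul_left_comm _ c,
      integral_const_mul, RingHom.id_apply]
    ring

theorem YM.mom_nonneg {T : ℝ} (μ : YM T) {F : ℝ → ℝ} (hF : ∀ l ∈ Icc (0:ℝ) 1, 0 ≤ F l)
    (p : ℝ × ℝ) : 0 ≤ μ.mom F p :=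
  integral_nonneg_of_ae (by filter_upwards [μ.ae_mem p] with l hl using hF l hl)

/-- If the cost is at most `c`, the linear part of the cost is represented by a current `μ(σ) P`
with `∫ μ(σ) P² ≤ 2 c`, by Riesz representation in the closure of the `x`-derivatives of the tests
in `L²(μ(σ) dt dx)`. -/
theorem exists_riesz {T : ℝ} {f σ : ℝ → ℝ} (hf : Continuous f) (hσ : Continuous σ)
    (hσ0 : ∀ l ∈ Icc (0:ℝ) 1, 0 ≤ σ l) (μ : YM T) {c : ℝ} (hc : 0 ≤ c)
    (hμ : calI f σ T μ ≤ ENNReal.ofReal c) :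
    ∃ P : ℝ × ℝ → ℝ, Measurable P ∧
      Integrable (fun p => μ.mom σ p * P p ^ 2) (volume.restrict (Om T)) ∧
      ∫ p in Om T, μ.mom σ p * P p ^ 2 ≤ 2 * c ∧
      ∀ φ : TTest T, - pair T (μ.mom fun l => l) (ptF φ.toFun) - pair T (μ.mom f) (pxF φ.toFun)
        = ∫ p in Om T, μ.mom σ p * P p * pxF φ.toFun p := by
  set s := μ.mom σ with hs
  have hs0 : ∀ p, 0 ≤ s p := μ.mom_nonneg hσ0
  have hsm : Measurable s := μ.meas σ hσ
  obtain ⟨C, hC0, hC⟩ := exists_bound_01 hσ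
  have hsC : ∀ p, s p ≤ C := fun p => (le_abs_self _).trans (μ.mom_bound p hC)
  have hdm : Measurable fun p => Real.toNNReal (s p) := hsm.real_toNNReal
  let m : Measure (ℝ × ℝ) := (volume.restrict (Om T)).withDensity fun p => (Real.toNNReal (s p) : ℝ≥0∞)
  have hInt : ∀ g : ℝ × ℝ → ℝ, ∫ p, g p ∂m = ∫ p in Om T, s p * g p := fun g => by
    rw [integral_withDensity_eq_integral_smul hdm]
    refine integral_congr_ae (ae_of_all _ fun p => ?_)
    simp only [NNReal.smul_def, smul_eq_mul, Real.coe_toNNReal _ (hs0 p)]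
  have hintg : ∀ g : ℝ × ℝ → ℝ, Integrable g m ↔
      Integrable (fun p => s p * g p) (volume.restrict (Om T)) := fun g => by
    rw [integrable_withDensity_iff_integrable_smul hdm]
    refine integrable_congr (ae_of_all _ fun p => ?_)
    simp only [NNReal.smul_def, smul_eq_mul, Real.coe_toNNReal _ (hs0 p)]
  have hmem : ∀ φ : TTest T, MemLp φ.toFun 2 m := fun φ => by
    rw [memLp_two_iff_integrable_sq φ.cont.measurable.aestronglyMeasurable, hintg]
    refine (integrable_bdd_mul hsm.aestronglyMeasurable (C := C) (fun p => ?_) (φ.cont.pow 2)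
      (hasCompactSupport_sq φ.cpt))
    rw [abs_of_nonneg (hs0 p)]; exact hsC p
  let j : testSpace T →ₗ[ℝ] Lp ℝ 2 m :=
    { toFun := fun w => (hmem (toTest w).px).toLp _
      map_add' := fun a b => by
        rw [← MemLp.toLp_add]
        congr 1
        exact pxF_add' (toTest_diff a) (toTest_diff b)
      map_smul' := fun c a => by
        rw [RingHom.id_apply, ← MemLp.toLp_const_smul]
        congr 1
        exact pxF_smul' c (toTest_diff a) }
  have hj : ∀ w : testSpace T, (j w : ℝ × ℝ → ℝ) =ᵐ[m] pxF w.1 := fun w =>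
    MemLp.coeFn_toLp (hmem (toTest w).px)
  have hjn : ∀ w : testSpace T, ‖j w‖ ^ 2 = ∫ p in Om T, s p * pxF w.1 p ^ 2 := fun w => by
    rw [← real_inner_self_eq_norm_sq, L2.inner_def, ← hInt]
    refine integral_congr_ae ?_
    filter_upwards [hj w] with p hp
    rw [hp, real_inner_self_eq_norm_sq, Real.norm_eq_abs, sq_abs]
  let L := costLin hf μ
  have hquad : ∀ w : testSpace T, L w - 1 / 2 * ‖j w‖ ^ 2 ≤ c := fun w => by
    have := (le_iSup (fun φ : TTest T => ENNReal.ofReal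
      (- pair T (μ.mom (fun l => l)) (ptF φ.toFun) - pair T (μ.mom f) (pxF φ.toFun)
      - 1 / 2 * pair T (fun p => μ.mom σ p * pxF φ.toFun p) (pxF φ.toFun))) (toTest w)).trans hμ
    have := (ENNReal.ofReal_le_ofReal_iff hc).1 this
    rw [hjn]
    refine le_trans (le_of_eq ?_) this
    change L w - _ = L w - 1 / 2 * pair T (fun p => μ.mom σ p * pxF w.1 p) (pxF w.1)
    rw [pair]
    congr 2
    refine integral_congr_ae (ae_of_all _ fun p => ?_)
    simp only [← hs]; ring
  have hbound : ∀ w : testSpace T, ‖L w‖ ≤ Real.sqrt (2 * c) * ‖j w‖ := fun w => by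
    have hd := discrim_le_zero (a := ‖j w‖ ^ 2 / 2) (b := - L w) (c := c) fun x => by
      have := hquad (x • w)
      rw [map_smul, map_smul, norm_smul, smul_eq_mul, mul_pow, Real.norm_eq_abs, sq_abs] at this
      nlinarith
    rw [discrim] at hd
    rw [Real.norm_eq_abs]
    refine abs_le_of_sq_le_sq ?_ (by positivity)
    rw [mul_pow, Real.sq_sqrt (by positivity)]
    nlinarith
  obtain ⟨g, hg⟩ := j.rangeRestrict.exists_rightInverse_of_surjective j.range_rangeRestrict
  have hgj : ∀ v : LinearMap.range j, j (g v) = v := fun v => by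
    have := LinearMap.congr_fun hg v
    exact congrArg Subtype.val this
  let L' : LinearMap.range j →L[ℝ] ℝ := (L ∘ₗ g).mkContinuous (Real.sqrt (2 * c)) fun v => by
    have := hbound (g v)
    rwa [hgj] at this
  have hL' : ‖L'‖ ≤ Real.sqrt (2 * c) := LinearMap.mkContinuous_norm_le _ (Real.sqrt_nonneg _) _
  obtain ⟨G, hG, hGn⟩ := _root_.exists_extension_norm_eq (LinearMap.range j) L'
  let y : Lp ℝ 2 m := (InnerProductSpace.toDual ℝ (Lp ℝ 2 m)).symm G
  have hyn : ‖y‖ ≤ Real.sqrt (2 * c) := by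
    rw [LinearIsometryEquiv.norm_map, hGn]; exact hL'
  have hy : ∀ w : testSpace T, inner ℝ y (j w) = L w := fun w => by
    rw [InnerProductSpace.toDual_symm_apply, hG ⟨j w, LinearMap.mem_range_self j w⟩]
    change L (g ⟨j w, _⟩) = L w
    have h0 := hbound (g ⟨j w, LinearMap.mem_range_self j w⟩ - w)
    rw [map_sub, map_sub, hgj, sub_self, norm_zero, mul_zero] at h0
    exact sub_eq_zero.1 (norm_le_zero_iff.1 h0)
  refine ⟨y, (Lp.stronglyMeasurable y).measurable, ?_, ?_, fun φ => ?_⟩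
  · exact (hintg _).1 ((memLp_two_iff_integrable_sq (Lp.stronglyMeasurable y).aestronglyMeasurable).1
      (Lp.memLp y))
  · rw [← hInt (fun p => y p ^ 2)]
    have : ∫ p, y p ^ 2 ∂m = ‖y‖ ^ 2 := by
      rw [← real_inner_self_eq_norm_sq, L2.inner_def]
      refine integral_congr_ae (ae_of_all _ fun p => ?_)
      simp only [real_inner_self_eq_norm_sq, Real.norm_eq_abs, sq_abs]
    rw [this, ← Real.sq_sqrt (show (0:ℝ) ≤ 2 * c by positivity)]
    gcongr
  · have h := hy ⟨φ.toFun, φ.smooth, φ.cpt, φ.supp⟩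
    change _ = - pair T (μ.mom fun l => l) (ptF φ.toFun) - pair T (μ.mom f) (pxF φ.toFun) at h
    rw [← h, L2.inner_def]
    simp_rw [mul_assoc]
    rw [← hInt (fun p => y p * pxF φ.toFun p)]
    refine integral_congr_ae ?_
    filter_upwards [hj ⟨φ.toFun, φ.smooth, φ.cpt, φ.supp⟩] with p hp
    rw [hp, real_inner_comm]
    rfl

/-! ### Smooth potentials -/

/-- The gradient of a scalar function on the plane as a pair `(∂ₜ, ∂ₓ)`. -/
def grad (w : ℝ × ℝ → ℝ) (z : ℝ × ℝ) : ℝ × ℝ := (ptF w z, pxF w z)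

lemma fderiv_apply_eq (w : ℝ × ℝ → ℝ) (z v : ℝ × ℝ) :
    fderiv ℝ w z v = v.1 * ptF w z + v.2 * pxF w z := by
  have : v = v.1 • ((1 : ℝ), (0 : ℝ)) + v.2 • ((0 : ℝ), (1 : ℝ)) := by
    ext <;> simp
  conv_lhs => rw [this]
  rw [map_add, map_smul, map_smul]
  simp [ptF, pxF]

/-- The Poincaré lemma on the plane. -/
lemma exists_potential {B1 B2 : ℝ × ℝ → ℝ} (h1 : ContDiff ℝ (⊤ : ℕ∞) B1)
    (h2 : ContDiff ℝ (⊤ : ℕ∞) B2) (h : ∀ z, pxF B1 z = ptF B2 z) :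
    ∃ w : ℝ × ℝ → ℝ, ContDiff ℝ (⊤ : ℕ∞) w ∧ (∀ z, ptF w z = B1 z) ∧ ∀ z, pxF w z = B2 z := by
  set ω : ℝ × ℝ → (ℝ × ℝ →L[ℝ] ℝ) := fun z =>
    B1 z • ContinuousLinearMap.fst ℝ ℝ ℝ + B2 z • ContinuousLinearMap.snd ℝ ℝ ℝ with hω
  have hωs : ContDiff ℝ (⊤ : ℕ∞) ω := by
    exact (h1.smul contDiff_const).add (h2.smul contDiff_const)
  have hd : ∀ a, HasFDerivAt ω ((fderiv ℝ B1 a).smulRight (ContinuousLinearMap.fst ℝ ℝ ℝ) +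
      (fderiv ℝ B2 a).smulRight (ContinuousLinearMap.snd ℝ ℝ ℝ)) a := by
    intro a
    exact (((h1.differentiable (by simp)) a).hasFDerivAt.smul_const
        (ContinuousLinearMap.fst ℝ ℝ ℝ)).add
      (((h2.differentiable (by simp)) a).hasFDerivAt.smul_const (ContinuousLinearMap.snd ℝ ℝ ℝ))
  obtain ⟨w, hw⟩ := Convex.exists_forall_hasFDerivAt_of_fderiv_symmetric (𝕜 := ℝ) (ω := ω)
    convex_univ isOpen_univ (hωs.differentiable (by simp)).differentiableOn (by
      intro a _ x y
      rw [(hd a).fderiv]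
      simp only [add_apply, ContinuousLinearMap.smulRight_apply,
        smul_apply, ContinuousLinearMap.coe_fst', ContinuousLinearMap.coe_snd',
        smul_eq_mul, fderiv_apply_eq, h a]
      ring)
  have hf : fderiv ℝ w = ω := funext fun a => (hw a (mem_univ _)).fderiv
  refine ⟨w, ?_, ?_, ?_⟩
  · have := contDiff_infty_iff_fderiv (𝕜 := ℝ) (f := w)
    refine this.2 ⟨fun a => (hw a (mem_univ _)).differentiableAt, ?_⟩
    rw [hf]; exact hωs
  · intro z; simp [ptF, hf, hω]
  · intro z; simp [pxF, hf, hω]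

/-- A smooth reparametrization of time that maps `ℝ` into `[d, T - d]` and is affine on
`[0, T]`. -/
lemma exists_squeeze {T d : ℝ} (hd : 0 < d) (hdT : 4 * d < T) :
    ∃ s : ℝ → ℝ, ContDiff ℝ (⊤ : ℕ∞) s ∧ (∀ t, |s t - T / 2| ≤ T / 2 - d) ∧
      (∀ t ∈ Icc 0 T, s t = T / 2 + (1 - 4 * d / T) * (t - T / 2)) ∧
      ∀ t ∈ Icc 0 T, deriv s t = 1 - 4 * d / T := by
  have hT : 0 < T := by linarith
  set κ := 1 - 4 * d / T with hκ
  have hκT : κ * T = T - 4 * d := by rw [hκ]; field_simp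
  have hκ0 : 0 < κ := by
    rw [hκ, sub_pos, div_lt_one hT]; exact hdT
  let χ : ContDiffBump (T / 2) := ⟨(T / 2 - 3 / 2 * d) / κ, (T / 2 - d) / κ,
    div_pos (by linarith) hκ0, by gcongr; linarith⟩
  have hin : T / 2 < χ.rIn := by
    change T / 2 < (T / 2 - 3 / 2 * d) / κ
    rw [lt_div_iff₀ hκ0]; nlinarith
  have hloc : ∀ t ∈ Icc 0 T, χ =ᶠ[𝓝 t] 1 := by
    intro t ht
    apply χ.eventuallyEq_one_of_mem_ball
    rw [Metric.mem_ball, Real.dist_eq]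
    refine lt_of_le_of_lt ?_ hin
    rw [abs_le]; constructor <;> linarith [ht.1, ht.2]
  set s : ℝ → ℝ := fun t => T / 2 + κ * (t - T / 2) * χ t with hs
  have hloc' : ∀ t ∈ Icc 0 T, s =ᶠ[𝓝 t] fun t => T / 2 + κ * (t - T / 2) := by
    intro t ht
    filter_upwards [hloc t ht] with r hr
    simp [hs, hr]
  refine ⟨s, ?_, ?_, ?_, ?_⟩
  · have := χ.contDiff (n := (⊤ : ℕ∞))
    exact contDiff_const.add ((contDiff_const.mul (contDiff_id.sub contDiff_const)).mul this)
  · intro t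
    have e : s t - T / 2 = κ * (t - T / 2) * χ t := by simp [hs]
    rw [e, abs_mul, abs_mul, abs_of_pos hκ0, abs_of_nonneg χ.nonneg]
    by_cases ht : χ.rOut ≤ dist t (T / 2)
    · rw [χ.zero_of_le_dist ht]; simp; linarith
    · push Not at ht
      rw [Real.dist_eq] at ht
      change |t - T / 2| < (T / 2 - d) / κ at ht
      rw [lt_div_iff₀ hκ0] at ht
      have h1 := χ.le_one (x := t)
      have h0 := χ.nonneg (x := t)
      have : 0 ≤ κ * |t - T / 2| := by positivity
      nlinarith
  · intro t ht; exact (hloc' t ht).self_of_nhds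
  · intro t ht
    rw [(hloc' t ht).deriv_eq]
    have : HasDerivAt (fun t => T / 2 + κ * (t - T / 2)) (κ * 1) t :=
      (((hasDerivAt_id t).sub_const _).const_mul κ).const_add _
    rw [this.deriv, mul_one]

/-- Mollifying a weak conservation law, after squeezing the time interval, gives a smooth
potential. -/
lemma exists_mol_potential {T : ℝ} {n : ℕ} {u E : ℝ × ℝ → ℝ}
    (hu : LocallyIntegrable u volume) (hE : LocallyIntegrable E volume)
    (hcl : ∀ φ : TTest T, (∫ p, u p * ptF φ.toFun p) + ∫ p, E p * pxF φ.toFun p = 0)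
    {κ : ℝ} (hκ : κ ≠ 0)
    {s : ℝ → ℝ} (hs : ContDiff ℝ (⊤ : ℕ∞) s)
    (hs1 : ∀ t, |s t - T / 2| ≤ T / 2 - 2 / ((n : ℝ) + 1))
    (hs2 : ∀ t ∈ Icc 0 T, deriv s t = κ) :
    ∃ w : ℝ × ℝ → ℝ, ContDiff ℝ (⊤ : ℕ∞) w ∧
      (∀ z ∈ Om T, ptF w z = - mol (ker n) E (s z.1, κ * z.2)) ∧
      ∀ z, pxF w z = mol (ker n) u (s z.1, κ * z.2) := by
  set S : ℝ × ℝ → ℝ × ℝ := fun z => (s z.1, κ * z.2) with hS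
  have hSs : ContDiff ℝ (⊤ : ℕ∞) S :=
    (hs.comp contDiff_fst).prodMk (contDiff_const.mul contDiff_snd)
  have hmu := contDiff_mol (ker_smooth n) (ker_cpt n) hu
  have hmE := contDiff_mol (ker_smooth n) (ker_cpt n) hE
  have hds : ContDiff ℝ (⊤ : ℕ∞) (deriv s) := by
    have := (contDiff_infty_iff_deriv (𝕜 := ℝ) (f := s)).1 hs
    exact this.2
  have hSd : ∀ z : ℝ × ℝ, HasFDerivAt S
      ((deriv s z.1 • ContinuousLinearMap.fst ℝ ℝ ℝ).prod (κ • ContinuousLinearMap.snd ℝ ℝ ℝ)) z := by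
    intro z
    refine HasFDerivAt.prodMk ?_ ?_
    · exact (((hs.differentiable (by simp)) z.1).hasDerivAt).comp_hasFDerivAt z hasFDerivAt_fst
    · exact hasFDerivAt_snd.const_smul κ
  have hcomp : ∀ (g : ℝ × ℝ → ℝ), ContDiff ℝ (⊤ : ℕ∞) g → ∀ z,
      pxF (fun z => g (S z)) z = κ * pxF g (S z) ∧
      ptF (fun z => g (S z)) z = deriv s z.1 * ptF g (S z) := by
    intro g hg z
    have hd : HasFDerivAt (fun z => g (S z)) _ z :=
      HasFDerivAt.comp (g := g) (f := S) z ((hg.differentiable (by simp)) (S z)).hasFDerivAt (hSd z)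
    constructor
    · unfold pxF; rw [hd.fderiv]
      simp only [ContinuousLinearMap.comp_apply]; rw [fderiv_apply_eq]; simp [pxF]
    · unfold ptF; rw [hd.fderiv]
      simp only [ContinuousLinearMap.comp_apply]; rw [fderiv_apply_eq]; simp [ptF]
  have hcons : ∀ z, ptF (mol (ker n) u) (S z) = - pxF (mol (ker n) E) (S z) := by
    intro z
    rw [ptF_mol (ker_smooth n) (ker_cpt n) hu, pxF_mol (ker_smooth n) (ker_cpt n) hE]
    have hsub : ∀ y, HasFDerivAt (fun y : ℝ × ℝ => y - S z) (ContinuousLinearMap.id ℝ (ℝ × ℝ)) y :=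
      fun y => (hasFDerivAt_id y).sub_const _
    have hk : ∀ y, fderiv ℝ (fun y => ker n (y - S z)) y = fderiv ℝ (ker n) (y - S z) := by
      intro y
      have hd : HasFDerivAt (fun y => ker n (y - S z)) _ y :=
        HasFDerivAt.comp (g := ker n) (f := fun y => y - S z) y
          (((ker_smooth n).differentiable (by simp)) (y - S z)).hasFDerivAt (hsub y)
      rw [hd.fderiv]; simp
    let φ : TTest T := ⟨fun y => ker n (y - S z), (ker_smooth n).comp (contDiff_id.sub contDiff_const),
      shift_cpt (ker_cpt n) _, by
        intro y hy
        have h1 : ‖y - S z‖ < 2 / ((n : ℝ) + 1) := by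
          by_contra hc
          exact hy (ker_zero n (not_lt.1 hc))
        have h2 : |y.1 - s z.1| < 2 / ((n : ℝ) + 1) := by
          have := norm_fst_le (y - S z)
          rw [Real.norm_eq_abs] at this
          exact lt_of_le_of_lt this h1
        have h3 := abs_lt.1 h2
        have h4 := abs_le.1 (hs1 z.1)
        refine ⟨⟨?_, ?_⟩, mem_univ _⟩ <;> linarith [h3.1, h3.2, h4.1, h4.2]⟩
    have := hcl φ
    have e1 : ∫ p, u p * ptF φ.toFun p = mol (ptF (ker n)) u (S z) := by
      unfold mol
      congr 1; funext y
      simp only [φ, ptF, hk]; ring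
    have e2 : ∫ p, E p * pxF φ.toFun p = mol (pxF (ker n)) E (S z) := by
      unfold mol
      congr 1; funext y
      simp only [φ, pxF, hk]; ring
    rw [e1, e2] at this
    linarith
  obtain ⟨w, hw, hwt, hwx⟩ := exists_potential
    (B1 := fun z => (-(deriv s z.1) / κ) * mol (ker n) E (S z))
    (B2 := fun z => mol (ker n) u (S z))
    ((((hds.comp contDiff_fst).neg).div_const κ).mul (hmE.comp hSs)) (hmu.comp hSs) (by
      intro z
      rw [(hcomp _ hmu z).2, hcons]
      have h1 : HasFDerivAt (fun z : ℝ × ℝ => -(deriv s z.1) / κ)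
          ((-deriv (deriv s) z.1 / κ) • ContinuousLinearMap.fst ℝ ℝ ℝ) z :=
        HasDerivAt.comp_hasFDerivAt (h₂ := fun t => -(deriv s t) / κ) z
          ((((hds.differentiable (by simp)) z.1).hasDerivAt.neg).div_const κ) hasFDerivAt_fst
      have h2 : HasFDerivAt (fun z => mol (ker n) E (S z)) _ z :=
        (((hmE.comp hSs).differentiable (by simp)) z).hasFDerivAt
      have h3 : HasFDerivAt (fun z : ℝ × ℝ => (-(deriv s z.1) / κ) * mol (ker n) E (S z)) _ z :=
        h1.mul h2
      have e := (hcomp _ hmE z).1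
      unfold pxF at e ⊢
      rw [h3.fderiv]
      have e' : (fderiv ℝ (mol (ker n) E ∘ S) z) (0, 1) = κ * fderiv ℝ (mol (ker n) E) (S z) (0, 1) := e
      simp [e']
      field_simp)
  refine ⟨w, hw, fun z hz => ?_, hwx⟩
  rw [hwt, hs2 z.1 hz.1, neg_div, div_self hκ, neg_one_mul]

/-! ### Regularization of a path of finite cost -/

/-- The affine contraction of factor `1 - 4 d / T`, with `d = 2 / (n + 1)`, which leaves room
for mollification in `[0, T]`. -/
def squ (T : ℝ) (n : ℕ) (z : ℝ × ℝ) : ℝ × ℝ :=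
  (T / 2 + (1 - 4 * (2 / ((n : ℝ) + 1)) / T) * (z.1 - T / 2),
    (1 - 4 * (2 / ((n : ℝ) + 1)) / T) * z.2)

lemma ae_mol_tendsto_shift {h : ℝ × ℝ → ℝ} (hh : LocallyIntegrable h)
    (S : ℕ → ℝ × ℝ → ℝ × ℝ)
    (hS : ∀ z, ∃ K : ℕ, ∀ n, dist z (S n z) ≤ K * (2 / ((n : ℝ) + 1))) :
    ∀ᵐ z, Tendsto (fun n => mol (ker n) h (S n z)) atTop (𝓝 (h z)) := by
  have h0 : ∀ᵐ z, ∀ K : ℕ, Tendsto (fun n => ⨍ y in Metric.closedBall (S n z) (2 / ((n : ℝ) + 1)),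
      ‖h y - h z‖) atTop (𝓝 0) ∨ ¬ ∀ n, dist z (S n z) ≤ K * (2 / ((n : ℝ) + 1)) := by
    rw [ae_all_iff]
    intro K
    filter_upwards [IsUnifLocDoublingMeasure.ae_tendsto_average_norm_sub (μ := volume) hh K]
      with z hz
    by_cases hc : ∀ n, dist z (S n z) ≤ K * (2 / ((n : ℝ) + 1))
    · left
      refine hz (fun n => S n z) (fun n => 2 / ((n : ℝ) + 1)) ?_ (Eventually.of_forall fun n => hc n)
      exact tendsto_nhdsWithin_iff.2 ⟨rad_tendsto, Eventually.of_forall fun n => by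
        simp only [mem_Ioi]; positivity⟩
    · right; exact hc
  filter_upwards [h0] with z hz
  obtain ⟨K, hK⟩ := hS z
  have hz' := (hz K).resolve_right (not_not.2 hK)
  have := tendsto_integral_smul_of_tendsto_average_norm_sub (μ := volume)
    (g := fun n y => ker n (y - S n z)) ((2 : ℝ) ^ (Module.finrank ℝ (ℝ × ℝ))) hz'
    (Eventually.of_forall fun n => hh.integrableOn_isCompact (isCompact_closedBall _ _))
    (tendsto_const_nhds.congr fun n => by rw [integral_shift, ker_integral])
    (Eventually.of_forall fun n y hy => by
      rw [Metric.mem_closedBall, dist_eq_norm]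
      by_contra hc
      exact hy (ker_zero n (not_le.1 hc).le))
    (Eventually.of_forall fun n y => by
      rw [abs_of_nonneg (ker_nonneg _ _), Measure.addHaar_real_closedBall_center]
      exact (bmp n).normed_le_div_measure_closedBall_rOut _ 2 (by simp [bmp]; ring_nf; rfl) _)
  simpa [mol] using this

lemma dist_squ {T : ℝ} (hT : 0 < T) (z : ℝ × ℝ) :
    ∃ K : ℕ, ∀ n : ℕ, dist z (squ T n z) ≤ K * (2 / ((n : ℝ) + 1)) := by
  obtain ⟨K, hK⟩ := exists_nat_ge (4 / T * max |z.1 - T / 2| |z.2|)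
  refine ⟨K, fun n => ?_⟩
  have hd : (0 : ℝ) < 2 / ((n : ℝ) + 1) := by positivity
  set d := 2 / ((n : ℝ) + 1) with hdd
  refine le_trans ?_ (mul_le_mul_of_nonneg_right hK hd.le)
  rw [Prod.dist_eq, Real.dist_eq, Real.dist_eq]
  have e1 : z.1 - (squ T n z).1 = (4 / T * d) * (z.1 - T / 2) := by
    simp only [squ, ← hdd]; ring
  have e2 : z.2 - (squ T n z).2 = (4 / T * d) * z.2 := by
    simp only [squ, ← hdd]; ring
  have hp : 0 ≤ 4 / T * d := by positivity
  rw [e1, e2, abs_mul _ (z.1 - T / 2), abs_mul _ z.2, abs_of_nonneg hp, ← mul_max_of_nonneg _ _ hp]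
  exact le_of_eq (by ring)

lemma continuous_squ (T : ℝ) (n : ℕ) : Continuous (squ T n) := by
  unfold squ; fun_prop

lemma locallyIntegrable_of_bdd₂ {h : ℝ × ℝ → ℝ} (hm : Measurable h) {C : ℝ}
    (hC : ∀ z, |h z| ≤ C) : LocallyIntegrable h volume :=
  (locallyIntegrable_const C).mono hm.aestronglyMeasurable (Eventually.of_forall fun z => by
    rw [Real.norm_eq_abs, Real.norm_eq_abs]; exact (hC z).trans (le_abs_self C))

lemma abs_mol_ker_le {h : ℝ × ℝ → ℝ} {C : ℝ} (hm : Measurable h) (hC : ∀ z, |h z| ≤ C)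
    (n : ℕ) (z : ℝ × ℝ) : |mol (ker n) h z| ≤ C := by
  refine (abs_mol_le (ker_nonneg n) z).trans ?_
  have h1 := mol_mono (ρ := ker n) (ker_cont n) (ker_cpt n) (ker_nonneg n)
    (locallyIntegrable_of_bdd₂ (h := fun y => |h y|) (C := C) hm.abs (by intro z; rw [abs_abs]; exact hC z))
    (locallyIntegrable_const C) hC z
  refine h1.trans (le_of_eq ?_)
  unfold mol
  rw [integral_mul_const, integral_shift, ker_integral, one_mul]

lemma tendsto_test_squ {T : ℝ} (hT : 0 < T) {h : ℝ × ℝ → ℝ} {C : ℝ} (hm : Measurable h)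
    (hC : ∀ z, |h z| ≤ C) {k : ℝ × ℝ → ℝ} (hk : Continuous k) (hkc : HasCompactSupport k) :
    Tendsto (fun n => ∫ p in Om T, mol (ker n) h (squ T n p) * k p) atTop
      (𝓝 (∫ p in Om T, h p * k p)) := by
  have hLI := locallyIntegrable_of_bdd₂ hm hC
  refine tendsto_integral_of_dominated_convergence (fun p => C * |k p|) ?_ ?_ ?_ ?_
  · intro n
    exact (((contDiff_mol (ker_smooth n) (ker_cpt n) hLI).continuous.comp
      (continuous_squ T n)).mul hk).aestronglyMeasurable
  · exact ((hk.integrable_of_hasCompactSupport hkc).abs.const_mul C).restrict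
  · intro n
    refine Eventually.of_forall fun p => ?_
    rw [Real.norm_eq_abs, abs_mul]
    exact mul_le_mul_of_nonneg_right (abs_mol_ker_le hm hC n _) (abs_nonneg _)
  · refine ae_restrict_of_ae ?_
    filter_upwards [ae_mol_tendsto_shift hLI (squ T) (dist_squ hT)] with z hz
    exact hz.mul_const _

/-- Cauchy–Schwarz for mollifications. -/
lemma mol_sq_le {ρ s P : ℝ × ℝ → ℝ} (hρ : Continuous ρ) (hc : HasCompactSupport ρ)
    (h0 : ∀ z, 0 ≤ ρ z) (hs0 : ∀ z, 0 ≤ s z) (hs : LocallyIntegrable s)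
    (h1 : LocallyIntegrable (fun y => s y * P y)) (h2 : LocallyIntegrable (fun y => s y * P y ^ 2))
    (z : ℝ × ℝ) :
    mol ρ (fun y => s y * P y) z ^ 2 ≤ mol ρ s z * mol ρ (fun y => s y * P y ^ 2) z := by
  have key : ∀ x : ℝ, 0 ≤ mol ρ s z * (x * x) + (2 * mol ρ (fun y => s y * P y) z) * x +
      mol ρ (fun y => s y * P y ^ 2) z := by
    intro x
    have i0 := mol_integrable hρ hc hs z
    have i1 := mol_integrable hρ hc h1 z
    have i2 := mol_integrable hρ hc h2 z
    have e : mol ρ s z * (x * x) + (2 * mol ρ (fun y => s y * P y) z) * x +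
        mol ρ (fun y => s y * P y ^ 2) z =
        ∫ y, ((ρ (y - z) * s y) * (x * x) + (ρ (y - z) * (s y * P y)) * (2 * x)) +
          ρ (y - z) * (s y * P y ^ 2) := by
      have e1 := integral_add ((i0.mul_const (x * x)).add (i1.mul_const (2 * x))) i2
      have e2 := integral_add (i0.mul_const (x * x)) (i1.mul_const (2 * x))
      simp only [Pi.add_apply] at e1
      rw [e1, e2, integral_mul_const, integral_mul_const]
      simp only [mol]; ring
    rw [e]
    refine integral_nonneg fun y => ?_
    have : (ρ (y - z) * s y) * (x * x) + (ρ (y - z) * (s y * P y)) * (2 * x) +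
          ρ (y - z) * (s y * P y ^ 2) = ρ (y - z) * s y * (x + P y) ^ 2 := by ring
    simp only [Pi.zero_apply]
    rw [this]
    exact mul_nonneg (mul_nonneg (h0 _) (hs0 _)) (sq_nonneg _)
  have := discrim_le_zero key
  rw [discrim] at this
  nlinarith

lemma integral_squ_le {T : ℝ} {n : ℕ} (hκ : 0 < 1 - 4 * (2 / ((n : ℝ) + 1)) / T)
    {g : ℝ × ℝ → ℝ} (hg : Integrable g) (h0 : ∀ z, 0 ≤ g z) :
    IntegrableOn (fun z => g (squ T n z)) (Om T) ∧
    ∫ z in Om T, g (squ T n z) ≤ ((1 - 4 * (2 / ((n : ℝ) + 1)) / T) ^ 2)⁻¹ * ∫ z, g z := by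
  set κ := 1 - 4 * (2 / ((n : ℝ) + 1)) / T with hκd
  set b : ℝ × ℝ := ((1 - κ) * (T / 2), 0) with hb
  have e : ∀ z, squ T n z = κ • z + b := by
    intro z
    simp only [squ, ← hκd, hb]
    ext
    · simp; ring
    · simp
  have hi : Integrable (fun z => g (squ T n z)) := by
    have := (hg.comp_add_right b).comp_smul hκ.ne'
    simpa only [e] using this
  refine ⟨hi.integrableOn, ?_⟩
  refine (setIntegral_le_integral hi (Eventually.of_forall fun z => h0 _)).trans (le_of_eq ?_)
  have h1 := Measure.integral_comp_smul (volume : Measure (ℝ × ℝ)) (fun z => g (z + b)) κ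
  simp only [e]
  rw [h1, integral_add_right_eq_self (fun z => g z) b]
  simp

/-- Mollification of a measure-valued path of finite cost.  The density is `w_x`, the current is
`-w_t = μ(f) + G` after mollification, and `H` dominates the density of the cost. -/
theorem layerA {T : ℝ} (hT : 0 < T) {f σ : ℝ → ℝ} (hf : Continuous f) (hσ : Continuous σ)
    (hσ0 : ∀ l ∈ Icc (0 : ℝ) 1, 0 ≤ σ l) (μ : YM T) {c : ℝ} (hc : 0 ≤ c)
    (hμ : calI f σ T μ ≤ ENNReal.ofReal c) (J : ℕ) {F : ℕ → ℝ → ℝ} {k : ℕ → ℝ × ℝ → ℝ}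
    (hF : ∀ j, Continuous (F j)) (hk : ∀ j, Continuous (k j)) (hkc : ∀ j, HasCompactSupport (k j))
    {η : ℝ} (hη : 0 < η) :
    ∃ (n : ℕ) (S : ℝ × ℝ → ℝ × ℝ) (w G H : ℝ × ℝ → ℝ), Continuous S ∧
      ContDiff ℝ (⊤ : ℕ∞) w ∧ Continuous G ∧ Continuous H ∧
      (∀ z, pxF w z = mol (ker n) (μ.mom fun l => l) (S z)) ∧
      (∀ z ∈ Om T, - ptF w z = mol (ker n) (μ.mom f) (S z) + G z) ∧
      (∀ z, 0 ≤ H z) ∧ (∀ z, G z ^ 2 ≤ mol (ker n) (μ.mom σ) (S z) * H z) ∧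
      IntegrableOn H (Om T) ∧ ∫ z in Om T, H z ≤ 2 * c + η ∧
      ∀ j < J, |(∫ p in Om T, mol (ker n) (μ.mom (F j)) (S p) * k j p) -
        ∫ p in Om T, μ.mom (F j) p * k j p| ≤ η := by
  obtain ⟨P, hPm, hPi, hPc, hPeq⟩ := exists_riesz hf hσ hσ0 μ hc hμ
  have hsm : Measurable (μ.mom σ) := μ.meas σ hσ
  have hfm : Measurable (μ.mom f) := μ.meas f hf
  have hum : Measurable (μ.mom fun l => l) := μ.meas _ continuous_id
  have hbd : ∀ {g : ℝ → ℝ}, Continuous g → ∃ C, 0 ≤ C ∧ ∀ z, |μ.mom g z| ≤ C := by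
    intro g hg
    obtain ⟨C, hC0, hC⟩ := exists_bound_01 hg
    exact ⟨C, hC0, fun z => μ.mom_bound z hC⟩
  have hLI : ∀ {g : ℝ → ℝ}, Continuous g → LocallyIntegrable (μ.mom g) volume := by
    intro g hg
    obtain ⟨C, _, hC⟩ := hbd hg
    exact locallyIntegrable_of_bdd₂ (μ.meas g hg) hC
  set Q : ℝ × ℝ → ℝ := (Om T).indicator P with hQ
  have hQm : Measurable Q := hPm.indicator (measurableSet_Om T)
  have hs0 : ∀ z, 0 ≤ μ.mom σ z := fun z => μ.mom_nonneg hσ0 z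
  have e2 : (fun z => μ.mom σ z * Q z ^ 2) = (Om T).indicator (fun z => μ.mom σ z * P z ^ 2) := by
    funext z
    by_cases hz : z ∈ Om T <;> simp [hQ, hz]
  have e1 : (fun z => μ.mom σ z * Q z) = (Om T).indicator (fun z => μ.mom σ z * P z) := by
    funext z
    by_cases hz : z ∈ Om T <;> simp [hQ, hz]
  have hi2 : Integrable (fun z => μ.mom σ z * Q z ^ 2) := by
    rw [e2]; exact IntegrableOn.integrable_indicator hPi (measurableSet_Om T)
  have hI2 : ∫ z, μ.mom σ z * Q z ^ 2 ≤ 2 * c := by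
    rw [e2, integral_indicator (measurableSet_Om T)]; exact hPc
  have hL1 : LocallyIntegrable (fun z => μ.mom σ z * Q z) := by
    refine ((hLI hσ).add hi2.locallyIntegrable).mono (hsm.mul hQm).aestronglyMeasurable
      (Eventually.of_forall fun z => ?_)
    rw [Real.norm_eq_abs, Real.norm_eq_abs, abs_mul, abs_of_nonneg (hs0 z)]
    refine le_trans ?_ (le_abs_self _)
    have := hs0 z
    simp only [Pi.add_apply]
    have h3 : |Q z| ≤ 1 + Q z ^ 2 := by
      rw [← sq_abs]; nlinarith [sq_nonneg (|Q z| - 1), abs_nonneg (Q z)]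
    nlinarith
  have hLE : LocallyIntegrable (fun z => μ.mom f z + μ.mom σ z * Q z) := (hLI hf).add hL1
  have hcl : ∀ φ : TTest T, (∫ p, μ.mom (fun l => l) p * ptF φ.toFun p) +
      ∫ p, (μ.mom f p + μ.mom σ p * Q p) * pxF φ.toFun p = 0 := by
    intro φ
    have h1 := hPeq φ
    have hpt : pair T (μ.mom fun l => l) (ptF φ.toFun) = ∫ p, μ.mom (fun l => l) p * ptF φ.toFun p :=
      pair_eq_integral _ φ.pt
    have hpx : pair T (μ.mom f) (pxF φ.toFun) = ∫ p, μ.mom f p * pxF φ.toFun p :=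
      pair_eq_integral _ φ.px
    have h3 : ∫ p in Om T, μ.mom σ p * P p * pxF φ.toFun p =
        ∫ p, (μ.mom σ p * Q p) * pxF φ.toFun p := by
      rw [← integral_indicator (measurableSet_Om T)]
      congr 1; funext z
      by_cases hz : z ∈ Om T <;> simp [hQ, hz]
    have hcx : Continuous (pxF φ.toFun) := φ.px.cont
    have hkx : HasCompactSupport (pxF φ.toFun) := φ.px.cpt
    have h4 : ∫ p, (μ.mom f p + μ.mom σ p * Q p) * pxF φ.toFun p =
        (∫ p, μ.mom f p * pxF φ.toFun p) + ∫ p, (μ.mom σ p * Q p) * pxF φ.toFun p := by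
      rw [← integral_add]
      · congr 1; funext z; ring
      · exact ((hLI hf).integrable_smul_right_of_hasCompactSupport hcx hkx)
      · exact (hL1.integrable_smul_right_of_hasCompactSupport hcx hkx)
    rw [hpt, hpx, h3] at h1
    rw [h4]; linarith
  -- choose the mollification parameter
  have hrad := rad_tendsto
  have ev1 : ∀ᶠ n : ℕ in atTop, 4 * (2 / ((n : ℝ) + 1)) < T := by
    have := hrad.const_mul 4
    rw [mul_zero] at this
    exact (tendsto_order.1 this).2 _ hT
  have ev2 : ∀ᶠ n : ℕ in atTop,
      ((1 - 4 * (2 / ((n : ℝ) + 1)) / T) ^ 2)⁻¹ * (2 * c) < 2 * c + η := by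
    have h1 : Tendsto (fun n : ℕ => ((1 - 4 * (2 / ((n : ℝ) + 1)) / T) ^ 2)⁻¹ * (2 * c)) atTop
        (𝓝 (((1 - 4 * 0 / T) ^ 2)⁻¹ * (2 * c))) :=
      ((((tendsto_const_nhds.sub ((hrad.const_mul 4).div_const T)).pow 2).inv₀ (by simp)).mul_const _)
    simp only [mul_zero, zero_div, sub_zero, one_pow, inv_one, one_mul] at h1
    exact (tendsto_order.1 h1).2 _ (by linarith)
  have ev3 : ∀ᶠ n : ℕ in atTop, ∀ j ∈ Finset.range J,
      |(∫ p in Om T, mol (ker n) (μ.mom (F j)) (squ T n p) * k j p) -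
        ∫ p in Om T, μ.mom (F j) p * k j p| < η := by
    rw [Filter.eventually_all_finset]
    intro j _
    obtain ⟨C, _, hC⟩ := hbd (hF j)
    have := tendsto_test_squ hT (h := μ.mom (F j)) (μ.meas (F j) (hF j)) hC (hk j) (hkc j)
    have := (Metric.tendsto_nhds.1 this) η hη
    simpa [Real.dist_eq] using this
  obtain ⟨n, hn1, hn2, hn3⟩ := (ev1.and (ev2.and ev3)).exists
  have hκ : 0 < 1 - 4 * (2 / ((n : ℝ) + 1)) / T := by
    rw [sub_pos, div_lt_one hT]; exact hn1
  obtain ⟨s, hs, hs1, hs2, hs3⟩ := exists_squeeze (T := T) (d := 2 / ((n : ℝ) + 1)) (by positivity) hn1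
  obtain ⟨w, hw, hwt, hwx⟩ := exists_mol_potential (n := n) (hLI continuous_id) hLE hcl hκ.ne' hs hs1 hs3
  set S : ℝ × ℝ → ℝ × ℝ := fun z => (s z.1, (1 - 4 * (2 / ((n : ℝ) + 1)) / T) * z.2) with hS
  have hSc : Continuous S := (hs.continuous.comp continuous_fst).prodMk (by fun_prop)
  have hSO : ∀ z ∈ Om T, S z = squ T n z := by
    intro z hz
    simp only [hS, squ, hs2 z.1 hz.1]
  have hmc : ∀ {h : ℝ × ℝ → ℝ}, LocallyIntegrable h → Continuous fun z => mol (ker n) h (S z) :=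
    fun hh => (contDiff_mol (ker_smooth n) (ker_cpt n) hh).continuous.comp hSc
  have hIH := integral_squ_le (T := T) (n := n) hκ (mol_integrable' (ker_cont n) (ker_cpt n) hi2)
    (fun z => integral_nonneg fun y => mul_nonneg (ker_nonneg _ _) (mul_nonneg (hs0 _) (sq_nonneg _)))
  refine ⟨n, S, w, fun z => mol (ker n) (fun z => μ.mom σ z * Q z) (S z),
    fun z => mol (ker n) (fun z => μ.mom σ z * Q z ^ 2) (S z), hSc, hw, hmc hL1,
    hmc hi2.locallyIntegrable, hwx, ?_, ?_, ?_, ?_, ?_, ?_⟩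
  · intro z hz
    rw [hwt z hz, neg_neg]
    unfold mol
    rw [← integral_add]
    · congr 1; funext y; ring
    · exact mol_integrable (ker_cont n) (ker_cpt n) (hLI hf) _
    · exact mol_integrable (ker_cont n) (ker_cpt n) hL1 _
  · intro z
    exact integral_nonneg fun y => mul_nonneg (ker_nonneg _ _) (mul_nonneg (hs0 _) (sq_nonneg _))
  · intro z
    exact mol_sq_le (ker_cont n) (ker_cpt n) (ker_nonneg n) hs0 (hLI hσ) hL1 hi2.locallyIntegrable _
  · exact hIH.1.congr_fun (fun z hz => by simp only [hSO z hz]) (measurableSet_Om T)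
  · rw [setIntegral_congr_fun (measurableSet_Om T) (g := fun z =>
      mol (ker n) (fun z => μ.mom σ z * Q z ^ 2) (squ T n z)) (fun z hz => by simp only [hSO z hz])]
    refine hIH.2.trans (le_trans ?_ hn2.le)
    rw [integral_mol (ker_cont n) (ker_cpt n) hi2, ker_integral, one_mul]
    gcongr
  · intro j hj
    rw [setIntegral_congr_fun (measurableSet_Om T) (g := fun z =>
      mol (ker n) (μ.mom (F j)) (squ T n z) * k j z) (fun z hz => by simp only [hSO z hz])]
    exact (hn3 j (Finset.mem_range.2 hj)).le

/-! ### Regular fields with finitely many atoms -/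

/-- A continuous field of averaging functionals on `C([0,1])`: for every point `z`, the map
`F ↦ ν F z` is a normalized positive linear functional. -/
structure IsAvg (ν : (ℝ → ℝ) → ℝ × ℝ → ℝ) : Prop where
  cont : ∀ F, Continuous F → Continuous (ν F)
  sum : ∀ (N : ℕ) (F : ℕ → ℝ → ℝ) (c : ℕ → ℝ), (∀ i, Continuous (F i)) → ∀ z,
    ν (fun l => ∑ i ∈ Finset.range N, c i * F i l) z = ∑ i ∈ Finset.range N, c i * ν (F i) z
  close : ∀ F G, Continuous F → Continuous G → ∀ η, (∀ l ∈ Icc (0 : ℝ) 1, |F l - G l| ≤ η) →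
    ∀ z, |ν F z - ν G z| ≤ η
  nonneg : ∀ F, Continuous F → (∀ l ∈ Icc (0 : ℝ) 1, 0 ≤ F l) → ∀ z, 0 ≤ ν F z
  one : ∀ z, ν (fun _ => 1) z = 1

lemma IsAvg.congr {ν : (ℝ → ℝ) → ℝ × ℝ → ℝ} (h : IsAvg ν) {F G : ℝ → ℝ} (hF : Continuous F)
    (hG : Continuous G) (hFG : ∀ l ∈ Icc (0 : ℝ) 1, F l = G l) (z : ℝ × ℝ) : ν F z = ν G z := by
  have := h.close F G hF hG 0 (fun l hl => by rw [hFG l hl]; simp) z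
  exact sub_eq_zero.1 (abs_nonpos_iff.1 this)

lemma IsAvg.abs_le {ν : (ℝ → ℝ) → ℝ × ℝ → ℝ} (h : IsAvg ν) {F : ℝ → ℝ} (hF : Continuous F) {C : ℝ}
    (hC : ∀ l ∈ Icc (0 : ℝ) 1, |F l| ≤ C) (z : ℝ × ℝ) : |ν F z| ≤ C := by
  have h0 : ν (fun _ => 0) z = 0 := by
    have := h.sum 0 (fun _ => F) (fun _ => 0) (fun _ => hF) z
    simpa using this
  have := h.close F (fun _ => 0) hF continuous_const C (fun l hl => by simpa using hC l hl) z
  simpa [h0] using this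

lemma isAvg_mol {T : ℝ} (μ : YM T) (n : ℕ) {S : ℝ × ℝ → ℝ × ℝ} (hS : Continuous S) {r : ℝ}
    (hr0 : 0 ≤ r) (hr1 : r ≤ 1) :
    IsAvg (fun F z => (1 - r) * mol (ker n) (μ.mom F) (S z) + r * F (1 / 2)) := by
  have hLI : ∀ {g : ℝ → ℝ}, Continuous g → LocallyIntegrable (μ.mom g) volume := by
    intro g hg
    obtain ⟨C, _, hC⟩ := exists_bound_01 hg
    exact locallyIntegrable_of_bdd₂ (μ.meas g hg) fun z => μ.mom_bound z hC
  have hhalf : (1 / 2 : ℝ) ∈ Icc (0 : ℝ) 1 := by constructor <;> norm_num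
  refine ⟨?_, ?_, ?_, ?_, ?_⟩
  · intro F hF
    have := (contDiff_mol (ker_smooth n) (ker_cpt n) (hLI hF)).continuous.comp hS
    exact (continuous_const.mul this).add continuous_const
  · intro N F c hF z
    have e : mol (ker n) (μ.mom fun l => ∑ i ∈ Finset.range N, c i * F i l) (S z) =
        ∑ i ∈ Finset.range N, c i * mol (ker n) (μ.mom (F i)) (S z) := by
      unfold mol
      have : ∀ y, ker n (y - S z) * μ.mom (fun l => ∑ i ∈ Finset.range N, c i * F i l) y =
          ∑ i ∈ Finset.range N, c i * (ker n (y - S z) * μ.mom (F i) y) := by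
        intro y
        rw [YM.mom_sum μ _ c hF, Finset.mul_sum]
        exact Finset.sum_congr rfl fun i _ => by ring
      simp only [this]
      rw [integral_finsetSum]
      · exact Finset.sum_congr rfl fun i _ => integral_const_mul _ _
      · intro i _
        exact (mol_integrable (ker_cont n) (ker_cpt n) (hLI (hF i)) (S z)).const_mul _
    simp only [e]
    rw [Finset.mul_sum, Finset.mul_sum, ← Finset.sum_add_distrib]
    exact Finset.sum_congr rfl fun i _ => by ring
  · intro F G hF hG η hη z
    have e : mol (ker n) (μ.mom F) (S z) - mol (ker n) (μ.mom G) (S z) =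
        mol (ker n) (μ.mom fun l => F l - G l) (S z) := by
      rw [← mol_sub (ker_cont n) (ker_cpt n) (hLI hF) (hLI hG)]
      congr 1; funext y; rw [YM.mom_sub μ hF hG]
    have h1 : |mol (ker n) (μ.mom F) (S z) - mol (ker n) (μ.mom G) (S z)| ≤ η := by
      rw [e]
      exact abs_mol_ker_le (μ.meas _ (hF.sub hG)) (fun y => μ.mom_bound y hη) n _
    have h2 := hη _ hhalf
    calc _ = |(1 - r) * (mol (ker n) (μ.mom F) (S z) - mol (ker n) (μ.mom G) (S z)) +
          r * (F (1 / 2) - G (1 / 2))| := by congr 1; ring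
      _ ≤ (1 - r) * η + r * η := by
          refine (abs_add_le _ _).trans ?_
          rw [abs_mul, abs_mul, abs_of_nonneg hr0, abs_of_nonneg (sub_nonneg.2 hr1)]
          gcongr
      _ = η := by ring
  · intro F hF h0 z
    have h1 : 0 ≤ mol (ker n) (μ.mom F) (S z) :=
      integral_nonneg fun y => mul_nonneg (ker_nonneg _ _) (μ.mom_nonneg h0 _)
    have := h0 _ hhalf
    have := sub_nonneg.2 hr1
    positivity
  · intro z
    have : mol (ker n) (μ.mom fun _ => 1) (S z) = 1 := by
      unfold mol
      simp only [YM.mom_const, mul_one]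
      rw [integral_shift, ker_integral]
    simp only [this]; ring

lemma pxF_of_hasDeriv {w : ℝ × ℝ → ℝ} {z : ℝ × ℝ} {a b : ℝ}
    (h : HasFDerivAt w (a • ContinuousLinearMap.fst ℝ ℝ ℝ + b • ContinuousLinearMap.snd ℝ ℝ ℝ) z) :
    ptF w z = a ∧ pxF w z = b := by
  constructor <;> simp [ptF, pxF, h.fderiv]

lemma hasFDerivAt_of_smooth {w : ℝ × ℝ → ℝ} (hw : ContDiff ℝ (⊤ : ℕ∞) w) (z : ℝ × ℝ) :
    HasFDerivAt w (ptF w z • ContinuousLinearMap.fst ℝ ℝ ℝ +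
      pxF w z • ContinuousLinearMap.snd ℝ ℝ ℝ) z := by
  refine ((hw.differentiable (by simp)) z).hasFDerivAt.congr_fderiv ?_
  ext <;> simp [ptF, pxF]

/-- Mollification followed by mixing with the constant state `1/2`, which makes the averaged
mobility uniformly positive. -/
theorem layerB {T : ℝ} (hT : 0 < T) {f σ : ℝ → ℝ} (hf : Continuous f) (hσ : Continuous σ)
    (hσ0 : ∀ l ∈ Icc (0 : ℝ) 1, 0 ≤ σ l) (hσ1 : 0 < σ (1 / 2)) (μ : YM T) {c : ℝ} (hc : 0 ≤ c)
    (hμ : calI f σ T μ ≤ ENNReal.ofReal c) (J : ℕ) {F : ℕ → ℝ → ℝ} {k : ℕ → ℝ × ℝ → ℝ}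
    (hF : ∀ j, Continuous (F j)) (hk : ∀ j, Continuous (k j)) (hkc : ∀ j, HasCompactSupport (k j))
    {η : ℝ} (hη : 0 < η) :
    ∃ (ν : (ℝ → ℝ) → ℝ × ℝ → ℝ) (r : ℝ) (w G H : ℝ × ℝ → ℝ), IsAvg ν ∧ 0 < r ∧
      ContDiff ℝ (⊤ : ℕ∞) w ∧ Continuous G ∧ Continuous H ∧
      (∀ z, pxF w z = ν (fun l => l) z) ∧ (∀ z, r / 2 ≤ ν (fun l => l) z) ∧
      (∀ z ∈ Om T, - ptF w z = ν f z + G z) ∧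
      (∀ z, 0 ≤ H z) ∧ (∀ z, G z ^ 2 ≤ ν σ z * H z) ∧ (∀ z, r * σ (1 / 2) ≤ ν σ z) ∧
      IntegrableOn H (Om T) ∧ ∫ z in Om T, H z ≤ 2 * c + η ∧
      ∀ j < J, |(∫ p in Om T, ν (F j) p * k j p) - ∫ p in Om T, μ.mom (F j) p * k j p| ≤ η := by
  obtain ⟨n, S, w, G, H, hS, hw, hG, hH, hwx, hwt, hH0, hGH, hHi, hHc, htest⟩ :=
    layerA hT hf hσ hσ0 μ hc hμ J hF hk hkc (half_pos hη)
  have hLI : ∀ {g : ℝ → ℝ}, Continuous g → LocallyIntegrable (μ.mom g) volume := by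
    intro g hg
    obtain ⟨C, _, hC⟩ := exists_bound_01 hg
    exact locallyIntegrable_of_bdd₂ (μ.meas g hg) fun z => μ.mom_bound z hC
  -- the size of the test integrals
  choose C hC0 hC using fun j => exists_bound_01 (hF j)
  have hki : ∀ j, Integrable (k j) := fun j => (hk j).integrable_of_hasCompactSupport (hkc j)
  set B : ℝ := ∑ j ∈ Finset.range J, 2 * C j * ∫ p in Om T, |k j p| with hB
  have hBj0 : ∀ j, 0 ≤ 2 * C j * ∫ p in Om T, |k j p| := fun j =>
    mul_nonneg (mul_nonneg (by norm_num) (hC0 j)) (integral_nonneg fun _ => abs_nonneg _)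
  have hB0 : 0 ≤ B := Finset.sum_nonneg fun j _ => hBj0 j
  obtain ⟨r, hr0, hr1, hrB⟩ : ∃ r : ℝ, 0 < r ∧ r ≤ 1 ∧ r * B ≤ η / 2 := by
    refine ⟨min 1 (η / 2 / (B + 1)), lt_min one_pos (by positivity), min_le_left _ _, ?_⟩
    calc min 1 (η / 2 / (B + 1)) * B ≤ η / 2 / (B + 1) * (B + 1) := by
          gcongr
          · exact min_le_right _ _
          · linarith
      _ = η / 2 := by field_simp
  have hav := isAvg_mol μ n hS hr0.le hr1
  have hhalf : (1 / 2 : ℝ) ∈ Icc (0 : ℝ) 1 := by constructor <;> norm_num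
  have hder : ∀ z, HasFDerivAt (fun z : ℝ × ℝ => (1 - r) * w z + r * ((1 / 2) * z.2 - f (1 / 2) * z.1))
      (((1 - r) * ptF w z - r * f (1 / 2)) • ContinuousLinearMap.fst ℝ ℝ ℝ +
        ((1 - r) * pxF w z + r / 2) • ContinuousLinearMap.snd ℝ ℝ ℝ) z := by
    intro z
    have h1 := (hasFDerivAt_of_smooth hw z).const_mul (1 - r)
    have h2 := ((((hasFDerivAt_snd (𝕜 := ℝ) (p := z)).const_mul (1 / 2 : ℝ)).sub
      ((hasFDerivAt_fst (𝕜 := ℝ) (p := z)).const_mul (f (1 / 2)))).const_mul r)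
    refine (h1.add h2).congr_fderiv ?_
    ext <;> simp <;> ring
  refine ⟨_, r, fun z => (1 - r) * w z + r * ((1 / 2) * z.2 - f (1 / 2) * z.1), fun z => (1 - r) * G z, H,
    hav, hr0, ?_, continuous_const.mul hG, hH, ?_, ?_, ?_, hH0, ?_, ?_, hHi, by linarith, ?_⟩
  · exact (contDiff_const.mul hw).add (contDiff_const.mul
      ((contDiff_const.mul contDiff_snd).sub (contDiff_const.mul contDiff_fst)))
  · intro z
    rw [(pxF_of_hasDeriv (hder z)).2, hwx z]; ring
  · intro z
    have : 0 ≤ mol (ker n) (μ.mom fun l => l) (S z) :=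
      integral_nonneg fun y => mul_nonneg (ker_nonneg _ _) (μ.mom_nonneg (fun l hl => hl.1) _)
    have := mul_nonneg (sub_nonneg.2 hr1) this
    simp only; linarith
  · intro z hz
    rw [(pxF_of_hasDeriv (hder z)).1]
    have := hwt z hz
    simp only
    have e : ptF w z = - (mol (ker n) (μ.mom f) (S z) + G z) := by linarith
    rw [e]; ring
  · intro z
    have h1 := hGH z
    have h2 : 0 ≤ mol (ker n) (μ.mom σ) (S z) :=
      integral_nonneg fun y => mul_nonneg (ker_nonneg _ _) (μ.mom_nonneg hσ0 _)
    have h3 := hH0 z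
    have h4 := sub_nonneg.2 hr1
    simp only
    have h5 : (1 - r) * (mol (ker n) (μ.mom σ) (S z) * H z) * (1 - r) ≤
        (1 - r) * (mol (ker n) (μ.mom σ) (S z) * H z) * 1 := by
      gcongr; linarith
    have h6 : 0 ≤ r * σ (1 / 2) * H z := by positivity
    have h7 : (1 - r) ^ 2 * G z ^ 2 ≤ (1 - r) ^ 2 * (mol (ker n) (μ.mom σ) (S z) * H z) := by gcongr
    nlinarith
  · intro z
    have h2 : 0 ≤ mol (ker n) (μ.mom σ) (S z) :=
      integral_nonneg fun y => mul_nonneg (ker_nonneg _ _) (μ.mom_nonneg hσ0 _)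
    have := mul_nonneg (sub_nonneg.2 hr1) h2
    linarith
  · intro j hj
    have h1 := htest j hj
    have hmc : Continuous fun z => mol (ker n) (μ.mom (F j)) (S z) :=
      (contDiff_mol (ker_smooth n) (ker_cpt n) (hLI (hF j))).continuous.comp hS
    have i1 : Integrable (fun p => mol (ker n) (μ.mom (F j)) (S p) * k j p) :=
      (hmc.mul (hk j)).integrable_of_hasCompactSupport ((hkc j).mul_left)
    have e : (∫ p in Om T, ((1 - r) * mol (ker n) (μ.mom (F j)) (S p) + r * F j (1 / 2)) * k j p) -
        ∫ p in Om T, mol (ker n) (μ.mom (F j)) (S p) * k j p =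
        ∫ p in Om T, r * ((F j (1 / 2) - mol (ker n) (μ.mom (F j)) (S p)) * k j p) := by
      rw [← integral_sub]
      · congr 1; funext p; ring
      · exact ((((continuous_const.mul hmc).add continuous_const).mul
          (hk j)).integrable_of_hasCompactSupport ((hkc j).mul_left)).integrableOn
      · exact i1.integrableOn
    have h2 : |∫ p in Om T, r * ((F j (1 / 2) - mol (ker n) (μ.mom (F j)) (S p)) * k j p)| ≤
        r * (2 * C j * ∫ p in Om T, |k j p|) := by
      rw [integral_const_mul, abs_mul, abs_of_pos hr0]
      refine mul_le_mul_of_nonneg_left ?_ hr0.le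
      rw [← integral_const_mul, ← Real.norm_eq_abs]
      refine norm_integral_le_of_norm_le (((hki j).abs.const_mul _).integrableOn)
        (Eventually.of_forall fun p => ?_)
      rw [Real.norm_eq_abs, abs_mul]
      refine mul_le_mul_of_nonneg_right ?_ (abs_nonneg _)
      have a1 := hC j _ hhalf
      have a2 := abs_mol_ker_le (μ.meas (F j) (hF j)) (fun y => μ.mom_bound y (hC j)) n (S p)
      calc _ ≤ |F j (1 / 2)| + |mol (ker n) (μ.mom (F j)) (S p)| := abs_sub _ _
        _ ≤ C j + C j := add_le_add a1 a2
        _ = 2 * C j := by ring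
    have h3 : r * (2 * C j * ∫ p in Om T, |k j p|) ≤ r * B := by
      refine mul_le_mul_of_nonneg_left ?_ hr0.le
      exact Finset.single_le_sum (f := fun j => 2 * C j * ∫ p in Om T, |k j p|)
        (fun j _ => hBj0 j) (Finset.mem_range.2 hj)
    rw [← e] at h2
    have := abs_le.1 h1
    have := abs_le.1 (h2.trans (h3.trans hrB))
    rw [abs_le]; constructor <;> linarith [this.1, this.2]

/-! ### Discretization of the averages -/

/-- The discretization of `F` at the interior nodes `(j + 2) / (N + 4)`, interpolated by hat
functions. -/
def disc (N : ℕ) (F : ℝ → ℝ) (l : ℝ) : ℝ :=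
  ∑ j ∈ Finset.range (N + 2), F (((j : ℝ) + 2) / ((N : ℝ) + 4)) * hat ((N : ℝ) * l - j)

lemma continuous_hat_comp (N j : ℕ) : Continuous fun l : ℝ => hat ((N : ℝ) * l - j) :=
  continuous_hat.comp (by fun_prop)

lemma continuous_disc (N : ℕ) (F : ℝ → ℝ) : Continuous (disc N F) :=
  continuous_finsetSum _ fun j _ => continuous_const.mul (continuous_hat_comp N j)

lemma disc_close {F : ℝ → ℝ} (hF : Continuous F) {η : ℝ} (hη : 0 < η) :
    ∃ N₀ : ℕ, ∀ N ≥ N₀, ∀ l ∈ Icc (0 : ℝ) 1, |disc N F l - F l| ≤ η := by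
  have huc : UniformContinuousOn F (Icc (-1 : ℝ) 2) :=
    isCompact_Icc.uniformContinuousOn_of_continuous hF.continuousOn
  obtain ⟨δ, hδ, hFδ⟩ := Metric.uniformContinuousOn_iff.1 huc η hη
  obtain ⟨N₀, hN₀⟩ := exists_nat_gt (3 / min δ 1)
  refine ⟨N₀, fun N hN l hl => ?_⟩
  have hm : 0 < min δ 1 := lt_min hδ one_pos
  have hN4 : (0 : ℝ) < (N : ℝ) + 4 := by positivity
  have h3 : 3 / ((N : ℝ) + 4) < min δ 1 := by
    rw [div_lt_iff₀ hm] at hN₀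
    rw [div_lt_iff₀ hN4]
    have : (N₀ : ℝ) ≤ N := by exact_mod_cast hN
    nlinarith
  have key := hat_approx (N := N) (y := (N : ℝ) * l) (by have := hl.1; positivity)
    (by nlinarith [hl.2, Nat.cast_nonneg (α := ℝ) N]) (c := fun j => F (((j : ℝ) + 2) / ((N : ℝ) + 4)))
    (g := F l) (η := η) ?_
  · unfold disc
    simpa only [mul_comm] using key
  · intro j hj
    have hd : |((j : ℝ) + 2) / ((N : ℝ) + 4) - l| ≤ 3 / ((N : ℝ) + 4) := by
      have e : ((j : ℝ) + 2) / ((N : ℝ) + 4) - l = (j + 2 - N * l - 4 * l) / ((N : ℝ) + 4) := by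
        field_simp; ring
      rw [e, abs_div, abs_of_pos hN4]
      gcongr
      rw [abs_lt] at hj
      rw [abs_le]; constructor <;> linarith [hj.1, hj.2, hl.1, hl.2]
    have hd2 := lt_of_le_of_lt hd h3
    have hd3 := abs_lt.1 (lt_of_lt_of_le hd2 (min_le_right _ _))
    have := hFδ (((j : ℝ) + 2) / ((N : ℝ) + 4)) ⟨by linarith [hl.1, hd3.1], by linarith [hl.2, hd3.2]⟩
      l ⟨by linarith [hl.1], by linarith [hl.2]⟩
      (by rw [Real.dist_eq]; exact lt_of_lt_of_le hd2 (min_le_left _ _))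
    rw [Real.dist_eq] at this
    exact this.le

lemma avg_disc {ν : (ℝ → ℝ) → ℝ × ℝ → ℝ} (h : IsAvg ν) (N : ℕ) (F : ℝ → ℝ) (z : ℝ × ℝ) :
    ν (disc N F) z = ∑ j ∈ Finset.range (N + 2), F (((j : ℝ) + 2) / ((N : ℝ) + 4)) *
      ν (fun l => hat ((N : ℝ) * l - j)) z :=
  h.sum (N + 2) (fun j l => hat ((N : ℝ) * l - j)) (fun j => F (((j : ℝ) + 2) / ((N : ℝ) + 4)))
    (fun j => continuous_hat_comp N j) z

lemma avg_hat_sum {ν : (ℝ → ℝ) → ℝ × ℝ → ℝ} (h : IsAvg ν) (N : ℕ) (z : ℝ × ℝ) :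
    ∑ j ∈ Finset.range (N + 2), ν (fun l => hat ((N : ℝ) * l - j)) z = 1 := by
  have h1 := avg_disc h N (fun _ => 1) z
  simp only [one_mul] at h1
  rw [← h1]
  refine Eq.trans (h.congr (continuous_disc _ _) (G := fun _ => 1) continuous_const
    (fun l hl => ?_) z) (h.one z)
  simp only [disc, one_mul]
  exact hat_sum_one (by have := hl.1; positivity) (by nlinarith [hl.2, Nat.cast_nonneg (α := ℝ) N])

lemma avg_hat_id {ν : (ℝ → ℝ) → ℝ × ℝ → ℝ} (h : IsAvg ν) (N : ℕ) (z : ℝ × ℝ) :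
    ∑ j ∈ Finset.range (N + 2), (((j : ℝ) + 2) / ((N : ℝ) + 4)) * ν (fun l => hat ((N : ℝ) * l - j)) z =
      (N * ν (fun l => l) z + 2) / ((N : ℝ) + 4) := by
  have h1 := avg_disc h N (fun l => l) z
  rw [← h1]
  have h2 : ν (disc N fun l => l) z = ν (fun l => ∑ i ∈ Finset.range 2,
      (if i = 0 then (N : ℝ) / (N + 4) else 2 / (N + 4)) * (if i = 0 then fun l : ℝ => l else fun _ => 1) l) z := by
    refine h.congr (continuous_disc _ _) (by simp [Finset.sum_range_succ]; fun_prop) (fun l hl => ?_) z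
    have a1 := hat_sum_one (N := N) (y := N * l) (by have := hl.1; positivity)
      (by nlinarith [hl.2, Nat.cast_nonneg (α := ℝ) N])
    have a2 := hat_sum_id (N := N) (y := N * l) (by have := hl.1; positivity)
      (by nlinarith [hl.2, Nat.cast_nonneg (α := ℝ) N])
    have e : disc N (fun l => l) l = (∑ j ∈ Finset.range (N + 2), hat (N * l - j) * (j : ℝ)) / ((N : ℝ) + 4) +
        2 / ((N : ℝ) + 4) * ∑ j ∈ Finset.range (N + 2), hat (N * l - j) := by
      unfold disc
      rw [Finset.sum_div, Finset.mul_sum, ← Finset.sum_add_distrib]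
      exact Finset.sum_congr rfl fun j _ => by ring
    rw [e, a1, a2]
    simp [Finset.sum_range_succ]; ring
  rw [h2]
  have := h.sum 2 (fun i => if i = 0 then fun l : ℝ => l else fun _ => 1)
    (fun i => if i = 0 then (N : ℝ) / (N + 4) else 2 / (N + 4))
    (fun i => by split_ifs <;> fun_prop) z
  rw [this]
  simp [Finset.sum_range_succ, h.one]; ring

/-- A cutoff `χ` together with its primitive `R`; composing a potential with `R` multiplies its
gradient by `χ`. -/
lemma exists_cutoff {k : ℝ} (hk : 0 < k) : ∃ R χ : ℝ → ℝ, ContDiff ℝ (⊤ : ℕ∞) R ∧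
    Continuous χ ∧ (∀ y, HasDerivAt R (χ y) y) ∧ (∀ y, 0 ≤ χ y) ∧ (∀ y, χ y ≤ 1) ∧
    (∀ y, |y| ≤ k → χ y = 1) ∧ ∀ y, 2 * k ≤ |y| → χ y = 0 := by
  let b : ContDiffBump (0 : ℝ) := ⟨k, 2 * k, hk, by linarith⟩
  have hb : ContDiff ℝ (⊤ : ℕ∞) b := b.contDiff (n := (⊤ : ℕ∞))
  have hd : ∀ y, HasDerivAt (fun y => ∫ s in (0 : ℝ)..y, b s) (b y) y := fun y =>
    intervalIntegral.integral_hasDerivAt_right (hb.continuous.intervalIntegrable _ _)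
      (hb.continuous.stronglyMeasurableAtFilter _ _) hb.continuous.continuousAt
  refine ⟨fun y => ∫ s in (0 : ℝ)..y, b s, b, ?_, hb.continuous, hd, fun y => b.nonneg,
    fun y => b.le_one, fun y hy => ?_, fun y hy => ?_⟩
  · refine (contDiff_infty_iff_deriv (𝕜 := ℝ)).2 ⟨fun y => (hd y).differentiableAt, ?_⟩
    have : deriv (fun y => ∫ s in (0 : ℝ)..y, b s) = b := funext fun y => (hd y).deriv
    rw [this]; exact hb
  · exact b.one_of_mem_closedBall (by simpa [b] using hy)
  · exact b.zero_of_le_dist (by simpa [b] using hy)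

/-- Perturbation of the density `G² / S ≤ H` when the weight `S` and the current `G` move by at
most `δ` and are then damped by a factor `β ∈ [0, 1]`. -/
lemma density_le {G H S s a β D δ s0 CH CG η : ℝ} (hβ0 : 0 ≤ β) (hβ1 : β ≤ 1) (hδ : 0 < δ)
    (hδ1 : δ ≤ 1) (hS : s0 ≤ S) (hGS : G ^ 2 ≤ S * H) (hH : 0 ≤ H) (hHC : H ≤ CH)
    (hGC : |G| ≤ CG) (ha : |a - G| ≤ δ) (hs : |s - S| ≤ δ) (hδs : δ ≤ s0 / 2)
    (hδη : δ * (CH + 2 * CG + 1) ≤ η * (s0 / 2)) (hη : 0 ≤ η) (hD : β * s ≤ D) (hD0 : 0 < D) :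
    (β * a) ^ 2 / D ≤ H + η := by
  have hsS := abs_le.1 hs
  have hs2 : s0 / 2 ≤ s := by linarith
  have ha2 : a ^ 2 ≤ s * (H + η) := by
    have h1 : a ^ 2 = G ^ 2 + 2 * G * (a - G) + (a - G) ^ 2 := by ring
    have h2 : G * (a - G) ≤ CG * δ := by
      calc G * (a - G) ≤ |G * (a - G)| := le_abs_self _
        _ = |G| * |a - G| := abs_mul _ _
        _ ≤ CG * δ := by gcongr; exact (abs_nonneg _).trans hGC
    have h3 : (a - G) ^ 2 ≤ δ * 1 := by
      calc (a - G) ^ 2 = |a - G| ^ 2 := (sq_abs _).symm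
        _ ≤ δ ^ 2 := by gcongr
        _ ≤ δ * 1 := by nlinarith
    have h4 : S * H ≤ s * H + δ * CH := by nlinarith
    have h5 : η * (s0 / 2) ≤ η * s := by gcongr
    nlinarith
  rw [div_le_iff₀ hD0]
  calc (β * a) ^ 2 = β * (β * a ^ 2) := by ring
    _ ≤ 1 * (β * (s * (H + η))) := by gcongr
    _ = (H + η) * (β * s) := by ring
    _ ≤ (H + η) * D := by gcongr

lemma abs_ge_of_deriv_ge {v : ℝ → ℝ} {v' : ℝ → ℝ} {r C : ℝ} (hv : ∀ x, HasDerivAt v (v' x) x)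
    (hr : ∀ x, r ≤ v' x) (h0 : |v 0| ≤ C) (x : ℝ) : r * |x| - C ≤ |v x| := by
  have hd : Differentiable ℝ v := fun x => (hv x).differentiableAt
  have hle : ∀ x, r ≤ deriv v x := fun x => by rw [(hv x).deriv]; exact hr x
  have h0' := abs_le.1 h0
  rcases le_total 0 x with hx | hx
  · have := mul_sub_le_image_sub_of_le_deriv hd hle hx
    rw [abs_of_nonneg hx]
    linarith [le_abs_self (v x), h0'.1]
  · have := mul_sub_le_image_sub_of_le_deriv hd hle hx
    rw [abs_of_nonpos hx]
    linarith [neg_le_abs (v x), h0'.2]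

lemma exists_bound_strip {g : ℝ × ℝ → ℝ} (hg : Continuous g) (T L : ℝ) :
    ∃ C, 0 ≤ C ∧ ∀ z ∈ Icc 0 T ×ˢ Icc (-L) L, |g z| ≤ C := by
  obtain ⟨C, hC⟩ := (isCompact_Icc.prod isCompact_Icc :
    IsCompact (Icc (0 : ℝ) T ×ˢ Icc (-L) L)).exists_bound_of_continuousOn hg.continuousOn
  exact ⟨max C 0, le_max_right _ _, fun z hz => (hC z hz).trans (le_max_left _ _)⟩

lemma exists_supp_bound {k : ℕ → ℝ × ℝ → ℝ} (hkc : ∀ j, HasCompactSupport (k j)) (J : ℕ) :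
    ∃ R > 0, ∀ j < J, ∀ z, R ≤ |z.2| → k j z = 0 := by
  induction J with
  | zero => exact ⟨1, one_pos, fun j hj => absurd hj (Nat.not_lt_zero _)⟩
  | succ J ih =>
    obtain ⟨R, hR, h⟩ := ih
    obtain ⟨R', hR'⟩ := (hkc J).isCompact.isBounded.exists_norm_le
    refine ⟨max R (|R'| + 1), lt_max_of_lt_left hR, fun j hj z hz => ?_⟩
    rcases Nat.lt_succ_iff_lt_or_eq.1 hj with h1 | rfl
    · exact h j h1 z ((le_max_left _ _).trans hz)
    · by_contra hne
      have h1 := hR' z (subset_tsupport _ hne)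
      have h2 : |z.2| ≤ ‖z‖ := norm_snd_le z
      have h3 := (le_max_right _ _).trans hz
      linarith [le_abs_self R']

lemma exists_l1_bound (k : ℕ → ℝ × ℝ → ℝ) (J : ℕ) :
    ∃ K > 0, ∀ j < J, ∫ z, |k j z| ≤ K := by
  refine ⟨1 + ∑ j ∈ Finset.range J, ∫ z, |k j z|, ?_, fun j hj => ?_⟩
  · have : 0 ≤ ∑ j ∈ Finset.range J, ∫ z, |k j z| :=
      Finset.sum_nonneg fun j _ => integral_nonneg fun z => abs_nonneg _
    linarith
  · have := Finset.single_le_sum (f := fun j => ∫ z, |k j z|)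
      (fun j _ => integral_nonneg fun z => abs_nonneg _) (Finset.mem_range.2 hj)
    linarith

lemma exists_N_disc (J : ℕ) {F : ℕ → ℝ → ℝ} (hF : ∀ j, Continuous (F j)) {η : ℝ} (hη : 0 < η) :
    ∃ N₀ : ℕ, ∀ N ≥ N₀, ∀ j < J, ∀ l ∈ Icc (0 : ℝ) 1, |disc N (F j) l - F j l| ≤ η := by
  choose N hN using fun j => disc_close (hF j) hη
  exact ⟨∑ j ∈ Finset.range J, N j, fun n hn j hj => hN j n
    ((Finset.single_le_sum (fun j _ => Nat.zero_le _) (Finset.mem_range.2 hj)).trans hn)⟩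

/-- The weights of a convex combination: `1 - β` for the node of index `0`, and `β` times the average
of the hat functions for the other nodes. -/
def blend (ν : (ℝ → ℝ) → ℝ × ℝ → ℝ) (N : ℕ) (β : ℝ × ℝ → ℝ) (i : ℕ) (z : ℝ × ℝ) : ℝ :=
  if i = 0 then 1 - β z else β z * ν (fun l => hat ((N : ℝ) * l - ((i - 1 : ℕ) : ℝ))) z

/-- The interior node `(i + 1) / (N + 4)`. -/
def node (N i : ℕ) : ℝ := ((i : ℝ) + 1) / ((N : ℝ) + 4)

lemma strictMono_node (N : ℕ) : StrictMono (node N) := by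
  intro i j hij
  unfold node
  have : (i : ℝ) < j := by exact_mod_cast hij
  gcongr

lemma node_mem {N i : ℕ} (hi : i ≤ N + 2) : node N i ∈ Ioo (0 : ℝ) 1 := by
  unfold node
  have : (i : ℝ) ≤ N + 2 := by exact_mod_cast hi
  refine ⟨by positivity, ?_⟩
  rw [div_lt_one (by positivity)]
  linarith

lemma blend_sum {ν : (ℝ → ℝ) → ℝ × ℝ → ℝ} (h : IsAvg ν) (N : ℕ) (β : ℝ × ℝ → ℝ) (z : ℝ × ℝ)
    (F : ℝ → ℝ) :
    ∑ i ∈ Finset.range (N + 2 + 1), blend ν N β i z * F (node N i) =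
      (1 - β z) * F (node N 0) + β z * ν (disc N F) z := by
  rw [Finset.sum_range_succ', avg_disc h N F z, Finset.mul_sum, add_comm]
  congr 1
  refine Finset.sum_congr rfl fun j _ => ?_
  have : node N (j + 1) = ((j : ℝ) + 2) / ((N : ℝ) + 4) := by
    unfold node; push_cast; ring
  rw [this]
  simp only [blend, Nat.add_eq_zero_iff, one_ne_zero, and_false, if_false, Nat.add_sub_cancel]
  ring

lemma blend_sum_one {ν : (ℝ → ℝ) → ℝ × ℝ → ℝ} (h : IsAvg ν) (N : ℕ) (β : ℝ × ℝ → ℝ) (z : ℝ × ℝ) :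
    ∑ i ∈ Finset.range (N + 2 + 1), blend ν N β i z = 1 := by
  have h1 := blend_sum h N β z (fun _ => 1)
  have h2 := avg_disc h N (fun _ => 1) z
  simp only [one_mul, avg_hat_sum h] at h2
  simp only [mul_one, h2] at h1
  rw [h1]; ring

lemma blend_sum_id {ν : (ℝ → ℝ) → ℝ × ℝ → ℝ} (h : IsAvg ν) (N : ℕ) (β : ℝ × ℝ → ℝ) (z : ℝ × ℝ) :
    ∑ i ∈ Finset.range (N + 2 + 1), blend ν N β i z * node N i =
      (1 - β z) * node N 0 + β z * ((N * ν (fun l => l) z + 2) / ((N : ℝ) + 4)) := by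
  have h1 := blend_sum h N β z (fun l => l)
  rw [avg_disc h N (fun l => l) z, avg_hat_id h] at h1
  exact h1

lemma blend_nonneg {ν : (ℝ → ℝ) → ℝ × ℝ → ℝ} (h : IsAvg ν) (N : ℕ) {β : ℝ × ℝ → ℝ} {z : ℝ × ℝ}
    (h0 : 0 ≤ β z) (h1 : β z ≤ 1) (i : ℕ) : 0 ≤ blend ν N β i z := by
  unfold blend
  split_ifs
  · linarith
  · exact mul_nonneg h0 (h.nonneg _ (continuous_hat_comp _ _) (fun l _ => hat_nonneg _) z)

lemma continuous_blend {ν : (ℝ → ℝ) → ℝ × ℝ → ℝ} (h : IsAvg ν) (N : ℕ) {β : ℝ × ℝ → ℝ}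
    (hβ : Continuous β) (i : ℕ) : Continuous (blend ν N β i) := by
  unfold blend
  split_ifs
  · fun_prop
  · exact hβ.mul (h.cont _ (continuous_hat_comp _ _))

set_option maxHeartbeats 1000000 in
/-- The discretized field.  Outside of a bounded strip it is the constant state `node N 0`; inside
it is a finite convex combination of constant states in `(0, 1)`, with a smooth potential, whose
cost exceeds `2 c` by little and which is close to `μ` on finitely many tests. -/
theorem layerC {T : ℝ} (hT : 0 < T) {f σ : ℝ → ℝ} (hf : Continuous f) (hσ : Continuous σ)
    (hσ0 : ∀ l ∈ Icc (0 : ℝ) 1, 0 ≤ σ l) (hσpos : ∀ l ∈ Ioo (0 : ℝ) 1, 0 < σ l) (μ : YM T) {c : ℝ}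
    (hc : 0 ≤ c) (hμ : calI f σ T μ ≤ ENNReal.ofReal c) (J : ℕ) {F : ℕ → ℝ → ℝ}
    {k : ℕ → ℝ × ℝ → ℝ} (hF : ∀ j, Continuous (F j)) (hk : ∀ j, Continuous (k j))
    (hkc : ∀ j, HasCompactSupport (k j)) {η : ℝ} (hη : 0 < η) :
    ∃ (L : ℝ) (m : ℕ) (Λ : ℕ → ℝ) (θ : ℕ → ℝ × ℝ → ℝ) (w : ℝ × ℝ → ℝ),
      0 < L ∧ StrictMono Λ ∧ (∀ i ≤ m, Λ i ∈ Ioo (0 : ℝ) 1) ∧ (∀ i, Continuous (θ i)) ∧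
      (∀ i z, 0 ≤ θ i z) ∧ (∀ z, ∑ i ∈ Finset.range (m + 1), θ i z = 1) ∧
      ContDiff ℝ (⊤ : ℕ∞) w ∧
      (∀ z, pxF w z = ∑ i ∈ Finset.range (m + 1), θ i z * Λ i) ∧
      (∀ z ∈ Om T, L ≤ |z.2| → pxF w z = Λ 0 ∧ -ptF w z = f (Λ 0)) ∧
      (∫ z in Ioo 0 T ×ˢ Ioo (-L) L,
        (-ptF w z - ∑ i ∈ Finset.range (m + 1), θ i z * f (Λ i)) ^ 2 /
          (∑ i ∈ Finset.range (m + 1), θ i z * σ (Λ i)) ≤ 2 * c + η) ∧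
      ∀ j < J, (∀ z, L ≤ |z.2| → k j z = 0) ∧
        |(∫ z in Om T, (∑ i ∈ Finset.range (m + 1), θ i z * F j (Λ i)) * k j z) -
          ∫ z in Om T, μ.mom (F j) z * k j z| ≤ η := by
  have hσh : 0 < σ (1 / 2) := hσpos _ ⟨by norm_num, by norm_num⟩
  obtain ⟨ν, r, w1, G, H, hν, hr, hw1, hG, hH, hpx, hr2, hpt, hH0, hGH, hσr, hHi, hHc, htest⟩ :=
    layerB hT hf hσ hσ0 hσh μ hc hμ J hF hk hkc (half_pos hη)
  obtain ⟨Cf, hCf0, hCf⟩ := exists_bound_01 hf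
  obtain ⟨R, hR, hkR⟩ := exists_supp_bound hkc J
  obtain ⟨K, hK, hkK⟩ := exists_l1_bound k J
  obtain ⟨CR, hCR0, hCR⟩ := exists_bound_strip hw1.continuous T R
  obtain ⟨C0, hC00, hC0⟩ := exists_bound_strip hw1.continuous T 1
  set κ : ℝ := CR + R + Cf * T + 1 with hκ
  have hκ0 : 0 < κ := by positivity
  obtain ⟨Rk, χ, hRk, hχ, hRχ, hχ0, hχ1, hχk, hχ2⟩ := exists_cutoff hκ0
  set C1 : ℝ := C0 + Cf * T
  have hC1 : 0 ≤ C1 := by positivity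
  set L : ℝ := max R ((2 * κ + C1) / (r / 4)) with hL
  have hL0 : 0 < L := lt_max_of_lt_left hR
  obtain ⟨CG, hCG0, hCG⟩ := exists_bound_strip hG T L
  obtain ⟨CH, hCH0, hCH⟩ := exists_bound_strip hH T L
  set s0 : ℝ := r * σ (1 / 2) with hs0
  have hs0p : 0 < s0 := by positivity
  set η₂ : ℝ := η / 2 / (2 * L * T) with hη₂
  have hη₂p : 0 < η₂ := by positivity
  set δ : ℝ := min (min 1 (s0 / 2)) (η₂ * (s0 / 2) / (CH + 2 * CG + 1)) with hδ
  have hδp : 0 < δ := by positivity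
  have hδ1 : δ ≤ 1 := (min_le_left _ _).trans (min_le_left _ _)
  have hδs : δ ≤ s0 / 2 := (min_le_left _ _).trans (min_le_right _ _)
  have hδη : δ * (CH + 2 * CG + 1) ≤ η₂ * (s0 / 2) := by
    rw [← le_div_iff₀ (by positivity)]; exact min_le_right _ _
  obtain ⟨N1, hN1⟩ := disc_close hf (half_pos hδp)
  obtain ⟨N2, hN2⟩ := disc_close hσ hδp
  obtain ⟨N3, hN3⟩ := exists_N_disc J hF (show 0 < η / 2 / K by positivity)
  obtain ⟨N4, hN4⟩ := exists_nat_gt (4 * (Cf + CG) / (δ / 2))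
  set N : ℕ := N1 + N2 + N3 + N4 + 4 with hN
  have hn : (0 : ℝ) < (N : ℝ) + 4 := by positivity
  have hN44 : 4 / ((N : ℝ) + 4) * (Cf + CG) ≤ δ / 2 := by
    rw [div_lt_iff₀ (by positivity)] at hN4
    have : (N4 : ℝ) ≤ (N : ℝ) + 4 := by
      have : N4 ≤ N := by omega
      have : (N4 : ℝ) ≤ N := by exact_mod_cast this
      linarith
    rw [div_mul_eq_mul_div, div_le_iff₀ hn]
    nlinarith
  set c0 : ℝ := node N 0 with hc0
  have hc0m : c0 ∈ Ioo (0 : ℝ) 1 := node_mem (by omega)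
  have hc0e : c0 = 1 / ((N : ℝ) + 4) := by simp [hc0, node]
  have hfc : |f c0| ≤ Cf := hCf _ ⟨hc0m.1.le, hc0m.2.le⟩
  set v : ℝ × ℝ → ℝ := fun z => N / ((N : ℝ) + 4) * w1 z + 1 / ((N : ℝ) + 4) * z.2 + f c0 * z.1
    with hv
  set β : ℝ × ℝ → ℝ := fun z => χ (v z) with hβ
  have hvs : ContDiff ℝ (⊤ : ℕ∞) v := by
    have : ContDiff ℝ (⊤ : ℕ∞) w1 := hw1
    fun_prop
  have hβc : Continuous β := hχ.comp hvs.continuous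
  set vx : ℝ × ℝ → ℝ := fun z => (N * ν (fun l => l) z + 1) / ((N : ℝ) + 4) with hvx
  set vt : ℝ × ℝ → ℝ := fun z => N / ((N : ℝ) + 4) * ptF w1 z + f c0 with hvt
  have hvd : ∀ z, HasFDerivAt v (vt z • ContinuousLinearMap.fst ℝ ℝ ℝ +
      vx z • ContinuousLinearMap.snd ℝ ℝ ℝ) z := by
    intro z
    have h1 := (hasFDerivAt_of_smooth hw1 z).const_mul (N / ((N : ℝ) + 4))
    have h2 : HasFDerivAt (fun z : ℝ × ℝ => 1 / ((N : ℝ) + 4) * z.2) _ z :=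
      (hasFDerivAt_snd (𝕜 := ℝ) (p := z)).const_mul (1 / ((N : ℝ) + 4))
    have h3 : HasFDerivAt (fun z : ℝ × ℝ => f c0 * z.1) _ z :=
      (hasFDerivAt_fst (𝕜 := ℝ) (p := z)).const_mul (f c0)
    refine ((h1.add h2).add h3).congr_fderiv ?_
    ext
    · simp [hvt]
    · simp [hvx, hpx]; ring
  set w : ℝ × ℝ → ℝ := fun z => c0 * z.2 - f c0 * z.1 + Rk (v z) with hw
  have hws : ContDiff ℝ (⊤ : ℕ∞) w := by
    have := hRk.comp hvs
    have h2 : ContDiff ℝ (⊤ : ℕ∞) fun z : ℝ × ℝ => c0 * z.2 - f c0 * z.1 := by fun_prop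
    exact h2.add this
  have hwd : ∀ z, HasFDerivAt w ((-f c0 + β z * vt z) • ContinuousLinearMap.fst ℝ ℝ ℝ +
      (c0 + β z * vx z) • ContinuousLinearMap.snd ℝ ℝ ℝ) z := by
    intro z
    have h1 : HasFDerivAt (fun z => Rk (v z)) _ z := (hRχ (v z)).comp_hasFDerivAt z (hvd z)
    have h2 : HasFDerivAt (fun z : ℝ × ℝ => c0 * z.2) _ z :=
      (hasFDerivAt_snd (𝕜 := ℝ) (p := z)).const_mul c0
    have h3 : HasFDerivAt (fun z : ℝ × ℝ => f c0 * z.1) _ z :=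
      (hasFDerivAt_fst (𝕜 := ℝ) (p := z)).const_mul (f c0)
    refine ((h2.sub h3).add h1).congr_fderiv ?_
    ext
    · simp [hβ]
    · simp [hβ]
  have hwx : ∀ z, pxF w z = c0 + β z * vx z := fun z => (pxF_of_hasDeriv (hwd z)).2
  have hwt : ∀ z, ptF w z = -f c0 + β z * vt z := fun z => (pxF_of_hasDeriv (hwd z)).1
  have hβ0 : ∀ z, 0 ≤ β z := fun z => hχ0 _
  have hβ1 : ∀ z, β z ≤ 1 := fun z => hχ1 _
  -- the potential grows linearly in `x`, so that the cutoff acts in a bounded strip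
  have hfar : ∀ z ∈ Om T, L ≤ |z.2| → β z = 0 := by
    rintro ⟨t, x⟩ hz hx
    have ht : t ∈ Icc 0 T := hz.1
    have hd : ∀ y, HasDerivAt (fun y => v (t, y)) (vx (t, y)) y := by
      intro y
      have h1 : HasDerivAt (fun y => v (t, y)) _ y :=
        (hvd (t, y)).comp_hasDerivAt y ((hasDerivAt_const y t).prodMk (hasDerivAt_id y))
      exact h1.congr_deriv (by simp)
    have hge : ∀ y, r / 4 ≤ vx (t, y) := by
      intro y
      rw [hvx]
      simp only
      rw [le_div_iff₀ hn]
      have h1 := hr2 (t, y)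
      have h2 : (4 : ℝ) ≤ N := by exact_mod_cast (show 4 ≤ N by omega)
      nlinarith
    have h0 : |v (t, 0)| ≤ C1 := by
      have e : v (t, 0) = N / ((N : ℝ) + 4) * w1 (t, 0) + f c0 * t := by simp [hv]
      rw [e]
      have h1 : |w1 (t, 0)| ≤ C0 := hC0 _ ⟨ht, by simp⟩
      have h2 : (N : ℝ) / ((N : ℝ) + 4) ≤ 1 := by rw [div_le_one hn]; linarith
      calc _ ≤ |N / ((N : ℝ) + 4) * w1 (t, 0)| + |f c0 * t| := abs_add_le _ _
        _ = N / ((N : ℝ) + 4) * |w1 (t, 0)| + |f c0| * t := by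
          rw [abs_mul, abs_mul, abs_of_nonneg ht.1, abs_of_nonneg (by positivity)]
        _ ≤ 1 * C0 + Cf * T := by gcongr; exact ht.1; exact ht.2
        _ = C1 := by rw [one_mul]
    have h1 := abs_ge_of_deriv_ge hd hge h0 x
    refine hχ2 _ (le_trans ?_ h1)
    have h2 := (le_max_right _ _).trans hx
    rw [div_le_iff₀ (by positivity)] at h2
    simp only at h2 ⊢
    linarith
  have hnear : ∀ z ∈ Om T, |z.2| ≤ R → β z = 1 := by
    rintro ⟨t, x⟩ hz hx
    have ht : t ∈ Icc 0 T := hz.1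
    refine hχk _ ?_
    have h1 : |w1 (t, x)| ≤ CR := hCR _ ⟨ht, abs_le.1 hx⟩
    have h2 : (N : ℝ) / ((N : ℝ) + 4) ≤ 1 := by rw [div_le_one hn]; linarith
    have h3 : 1 / ((N : ℝ) + 4) ≤ 1 := by rw [div_le_one hn]; linarith [Nat.cast_nonneg (α := ℝ) N]
    calc |v (t, x)| ≤ |N / ((N : ℝ) + 4) * w1 (t, x)| + |1 / ((N : ℝ) + 4) * x| + |f c0 * t| :=
          (abs_add_le _ _).trans (add_le_add_left (abs_add_le _ _) _)
      _ = N / ((N : ℝ) + 4) * |w1 (t, x)| + 1 / ((N : ℝ) + 4) * |x| + |f c0| * t := by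
          rw [abs_mul, abs_mul, abs_mul, abs_of_nonneg ht.1,
            abs_of_nonneg (show (0 : ℝ) ≤ N / ((N : ℝ) + 4) by positivity),
            abs_of_nonneg (show (0 : ℝ) ≤ 1 / ((N : ℝ) + 4) by positivity)]
      _ ≤ 1 * CR + 1 * R + Cf * T := by
          gcongr
          · exact ht.1
          · exact ht.2
      _ ≤ κ := by rw [hκ]; linarith
  have hDpos : ∀ z, 0 < (1 - β z) * σ c0 + β z * ν (disc N σ) z := by
    intro z
    have h1 : 0 < σ c0 := hσpos _ hc0m
    have h2 : 0 < ν (disc N σ) z := by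
      have := abs_le.1 (hν.close _ _ (continuous_disc N σ) hσ δ (hN2 N (by omega)) z)
      linarith [hσr z, this.1]
    rcases eq_or_lt_of_le (hβ0 z) with h | h
    · rw [← h]; simpa using h1
    · have := mul_pos h h2
      nlinarith [hβ1 z]
  have hdens : ∀ z ∈ Ioo 0 T ×ˢ Ioo (-L) L,
      (-ptF w z - ((1 - β z) * f c0 + β z * ν (disc N f) z)) ^ 2 /
        ((1 - β z) * σ c0 + β z * ν (disc N σ) z) ≤ H z + η₂ := by
    intro z hz
    have hzc : z ∈ Icc 0 T ×ˢ Icc (-L) L := prod_mono Ioo_subset_Icc_self Ioo_subset_Icc_self hz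
    set a : ℝ := N / ((N : ℝ) + 4) * (ν f z + G z) - ν (disc N f) z with ha
    have e : -ptF w z - ((1 - β z) * f c0 + β z * ν (disc N f) z) = β z * a := by
      rw [hwt, ha, ← hpt z ⟨hzc.1, mem_univ _⟩, hvt]; ring
    rw [e]
    have h1 := hν.abs_le hf hCf z
    have h2 := hν.close _ _ (continuous_disc N f) hf _ (hN1 N (by omega)) z
    have h3 := hCG z hzc
    refine density_le (S := ν σ z) (s := ν (disc N σ) z) (hβ0 z) (hβ1 z) hδp hδ1 (hσr z) (hGH z)
      (hH0 z) ((le_abs_self _).trans (hCH z hzc)) h3 ?_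
      (hν.close _ _ (continuous_disc N σ) hσ δ (hN2 N (by omega)) z) hδs hδη hη₂p.le ?_ (hDpos z)
    · have e2 : a - G z = -(4 / ((N : ℝ) + 4) * (ν f z + G z)) - (ν (disc N f) z - ν f z) := by
        have e3 : N / ((N : ℝ) + 4) = 1 - 4 / ((N : ℝ) + 4) := by
          rw [eq_sub_iff_add_eq, ← add_div, div_self hn.ne']
        rw [ha, e3]; ring
      rw [e2]
      calc _ ≤ |-(4 / ((N : ℝ) + 4) * (ν f z + G z))| + |ν (disc N f) z - ν f z| := abs_sub _ _
        _ = 4 / ((N : ℝ) + 4) * |ν f z + G z| + |ν (disc N f) z - ν f z| := by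
          rw [abs_neg, abs_mul, abs_of_nonneg (show (0 : ℝ) ≤ 4 / ((N : ℝ) + 4) by positivity)]
        _ ≤ 4 / ((N : ℝ) + 4) * (Cf + CG) + δ / 2 := by
          gcongr
          exact (abs_add_le _ _).trans (add_le_add h1 h3)
        _ ≤ δ := by linarith
    · have := (hσpos _ hc0m).le
      nlinarith [hβ1 z, mul_nonneg (sub_nonneg.2 (hβ1 z)) this]
  refine ⟨L, N + 2, node N, blend ν N β, w, hL0, strictMono_node N, fun i hi => node_mem hi,
    continuous_blend hν N hβc, fun i z => blend_nonneg hν N (hβ0 z) (hβ1 z) i,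
    blend_sum_one hν N β, hws, fun z => ?_, fun z hz hzL => ?_, ?_, fun j hj => ⟨fun z hz => ?_, ?_⟩⟩
  · rw [blend_sum_id hν, hwx, ← hc0, hvx, hc0e]; ring
  · rw [hwx, hwt, hfar z hz hzL]; simp [hc0]
  · simp_rw [blend_sum hν]
    have hUm : MeasurableSet (Ioo 0 T ×ˢ Ioo (-L) L) := measurableSet_Ioo.prod measurableSet_Ioo
    have hsub : Ioo 0 T ×ˢ Ioo (-L) L ⊆ Om T := prod_mono Ioo_subset_Icc_self (subset_univ _)
    have hvol : (volume : Measure (ℝ × ℝ)).real (Ioo 0 T ×ˢ Ioo (-L) L) = 2 * L * T := by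
      rw [Measure.volume_eq_prod, measureReal_prod_prod, Real.volume_real_Ioo_of_le hT.le,
        Real.volume_real_Ioo_of_le (by linarith)]
      ring
    have hfin : volume (Ioo 0 T ×ˢ Ioo (-L) L) ≠ ⊤ := by
      rw [Measure.volume_eq_prod, Measure.prod_prod, Real.volume_Ioo, Real.volume_Ioo]
      exact ENNReal.mul_ne_top ENNReal.ofReal_ne_top ENNReal.ofReal_ne_top
    have hHU : IntegrableOn H (Ioo 0 T ×ˢ Ioo (-L) L) := hHi.mono_set hsub
    calc _ ≤ ∫ z in Ioo 0 T ×ˢ Ioo (-L) L, (H z + η₂) := by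
          refine integral_mono_of_nonneg (ae_of_all _ fun z => ?_)
            (hHU.add (integrableOn_const hfin)) ?_
          · exact div_nonneg (sq_nonneg _) (hDpos z).le
          · exact (ae_restrict_iff' hUm).2 (ae_of_all _ hdens)
      _ = (∫ z in Ioo 0 T ×ˢ Ioo (-L) L, H z) + η₂ * (2 * L * T) := by
          rw [integral_add hHU (integrableOn_const hfin), setIntegral_const, hvol, smul_eq_mul,
            mul_comm η₂]
      _ ≤ (∫ z in Om T, H z) + η / 2 := by
          refine add_le_add (setIntegral_mono_set hHi (ae_of_all _ hH0) hsub.eventuallyLE) ?_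
          rw [hη₂, div_mul_cancel₀ _ (by positivity)]
      _ ≤ 2 * c + η := by linarith
  · exact hkR j hj z ((le_max_left _ _).trans hz)
  · simp_rw [blend_sum hν]
    have e : ∀ z ∈ Om T, ((1 - β z) * F j (node N 0) + β z * ν (disc N (F j)) z) * k j z =
        ν (disc N (F j)) z * k j z := by
      intro z hz
      rcases le_total |z.2| R with h | h
      · rw [hnear z hz h]; ring
      · rw [hkR j hj z h]; ring
    rw [setIntegral_congr_fun (measurableSet_Om T) e]
    have hi : ∀ Φ : ℝ → ℝ, Continuous Φ → Integrable (fun z => ν Φ z * k j z) := fun Φ hΦ =>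
      ((hν.cont Φ hΦ).mul (hk j)).integrable_of_hasCompactSupport (hkc j).mul_left
    have h1 : |(∫ z in Om T, ν (disc N (F j)) z * k j z) - ∫ z in Om T, ν (F j) z * k j z| ≤ η / 2 := by
      rw [← integral_sub (hi _ (continuous_disc N _)).integrableOn (hi _ (hF j)).integrableOn,
        ← Real.norm_eq_abs]
      have hki : Integrable fun z => |k j z| :=
        ((hk j).integrable_of_hasCompactSupport (hkc j)).abs
      calc _ ≤ ∫ z in Om T, η / 2 / K * |k j z| := by
            refine norm_integral_le_of_norm_le (hki.const_mul _).integrableOn (ae_of_all _ fun z => ?_)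
            rw [← sub_mul, norm_mul, Real.norm_eq_abs, Real.norm_eq_abs]
            gcongr
            exact hν.close _ _ (continuous_disc N _) (hF j) _ (hN3 N (by omega) j hj) z
        _ ≤ ∫ z, η / 2 / K * |k j z| :=
            setIntegral_le_integral (hki.const_mul _) (ae_of_all _ fun z => by positivity)
        _ = η / 2 / K * ∫ z, |k j z| := integral_const_mul _ _
        _ ≤ η / 2 / K * K := by gcongr; exact hkK j hj
        _ = η / 2 := by field_simp
    have h2 := htest j hj
    have := abs_sub_le (∫ z in Om T, ν (disc N (F j)) z * k j z) (∫ z in Om T, ν (F j) z * k j z)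
      (∫ z in Om T, μ.mom (F j) z * k j z)
    linarith

/-! ### Averaging of rapid oscillations -/

/-- A smooth `1`-periodic profile with values in `[0, 1]`, approximating, as `n → ∞`, the periodic
indicator function of a set of density `θ`. -/
def tau (θ : ℝ) (n : ℕ) (s : ℝ) : ℝ :=
  Real.smoothTransition (((n : ℝ) + 1) * (Real.cos (2 * Real.pi * s) - Real.cos (Real.pi * θ)))

/-- The pointwise limit of the profiles `tau θ n`. -/
def stripe (θ : ℝ) (s : ℝ) : ℝ :=
  if Real.cos (Real.pi * θ) < Real.cos (2 * Real.pi * s) then 1 else 0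

lemma contDiff_tau (θ : ℝ) (n : ℕ) : ContDiff ℝ (⊤ : ℕ∞) (tau θ n) := by
  unfold tau
  refine (Real.smoothTransition.contDiff (n := (⊤ : ℕ∞))).comp ?_
  have : ContDiff ℝ (⊤ : ℕ∞) fun s : ℝ => Real.cos (2 * Real.pi * s) :=
    Real.contDiff_cos.comp (by fun_prop)
  fun_prop

lemma tau_mem (θ : ℝ) (n : ℕ) (s : ℝ) : tau θ n s ∈ Icc (0 : ℝ) 1 :=
  ⟨Real.smoothTransition.nonneg _, Real.smoothTransition.le_one _⟩

lemma tau_periodic (θ : ℝ) (n : ℕ) : Function.Periodic (tau θ n) 1 := by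
  intro s
  unfold tau
  rw [mul_add, mul_one, Real.cos_add_two_pi]

lemma tau_tendsto (θ s : ℝ) : Tendsto (fun n => tau θ n s) atTop (𝓝 (stripe θ s)) := by
  unfold stripe
  split_ifs with h
  · have h' := sub_pos.2 h
    refine tendsto_const_nhds.congr' ?_
    obtain ⟨N, hN⟩ := exists_nat_gt (1 / (Real.cos (2 * Real.pi * s) - Real.cos (Real.pi * θ)))
    filter_upwards [eventually_ge_atTop N] with n hn
    rw [div_lt_iff₀ h'] at hN
    have : (N : ℝ) ≤ n := by exact_mod_cast hn
    exact (Real.smoothTransition.one_of_one_le (by nlinarith)).symm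
  · refine tendsto_const_nhds.congr fun n => (Real.smoothTransition.zero_of_nonpos ?_).symm
    have : (0 : ℝ) ≤ (n : ℝ) + 1 := by positivity
    exact mul_nonpos_of_nonneg_of_nonpos this (by linarith)

lemma stripe_eq {θ s : ℝ} (h0 : 0 < θ) (h1 : θ < 1) (hs : s ∈ Icc (0 : ℝ) 1) :
    stripe θ s = if s < θ / 2 ∨ 1 - θ / 2 < s then 1 else 0 := by
  have hpi := Real.pi_pos
  have key : ∀ y ∈ Icc (0 : ℝ) (1 / 2),
      (Real.cos (Real.pi * θ) < Real.cos (2 * Real.pi * y) ↔ y < θ / 2) := by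
    intro y hy
    rw [Real.strictAntiOn_cos.lt_iff_gt (by constructor <;> nlinarith)
      (by constructor <;> nlinarith [hy.1, hy.2, mul_nonneg hpi.le hy.1])]
    constructor
    · intro h; nlinarith
    · intro h; nlinarith
  unfold stripe
  congr 1
  rcases le_total s (1 / 2) with h | h
  · rw [key s ⟨hs.1, h⟩]
    exact propext ⟨fun h => Or.inl h, fun h' => h'.elim id fun h'' => by linarith⟩
  · have e : Real.cos (2 * Real.pi * s) = Real.cos (2 * Real.pi * (1 - s)) := by
      rw [← Real.cos_neg (2 * Real.pi * s), ← Real.cos_add_two_pi (-(2 * Real.pi * s))]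
      congr 1; ring
    rw [e, key (1 - s) ⟨by linarith [hs.2], by linarith⟩]
    exact propext ⟨fun h => Or.inr (by linarith), fun h' => h'.elim (fun h'' => by linarith)
      fun h'' => by linarith⟩

lemma integral_stripe {θ : ℝ} (h0 : 0 < θ) (h1 : θ < 1) (Ψ : ℝ → ℝ) :
    ∫ s in (0 : ℝ)..1, Ψ (stripe θ s) = θ * Ψ 1 + (1 - θ) * Ψ 0 := by
  have a1 : EqOn (fun s => Ψ (stripe θ s)) (fun _ => Ψ 1) (Ioo 0 (θ / 2)) := fun s hs => by
    simp only [stripe_eq h0 h1 ⟨hs.1.le, by linarith [hs.2]⟩, if_pos (Or.inl hs.2)]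
  have a2 : EqOn (fun s => Ψ (stripe θ s)) (fun _ => Ψ 0) (Ioo (θ / 2) (1 - θ / 2)) := fun s hs => by
    simp only [stripe_eq h0 h1 (s := s) ⟨by linarith [hs.1], by linarith [hs.2]⟩]
    rw [if_neg]; push Not; exact ⟨hs.1.le, hs.2.le⟩
  have a3 : EqOn (fun s => Ψ (stripe θ s)) (fun _ => Ψ 1) (Ioo (1 - θ / 2) 1) := fun s hs => by
    simp only [stripe_eq h0 h1 (s := s) ⟨by linarith [hs.1], by linarith [hs.2]⟩, if_pos (Or.inr hs.1)]
  have gen : ∀ {a b c : ℝ}, a ≤ b → EqOn (fun s => Ψ (stripe θ s)) (fun _ => c) (Ioo a b) →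
      IntervalIntegrable (fun s => Ψ (stripe θ s)) volume a b ∧
        ∫ s in a..b, Ψ (stripe θ s) = (b - a) * c := by
    intro a b c hab h
    constructor
    · rw [intervalIntegrable_iff_integrableOn_Ioo_of_le hab]
      exact (integrableOn_const (by simp)).congr_fun h.symm measurableSet_Ioo
    · rw [intervalIntegral.integral_of_le hab, integral_Ioc_eq_integral_Ioo,
        setIntegral_congr_fun measurableSet_Ioo h, setIntegral_const, smul_eq_mul,
        Real.volume_real_Ioo_of_le hab]
  obtain ⟨i1, e1⟩ := gen (by linarith) a1
  obtain ⟨i2, e2⟩ := gen (by linarith) a2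
  obtain ⟨i3, e3⟩ := gen (by linarith) a3
  rw [← intervalIntegral.integral_add_adjacent_intervals (i1.trans i2) i3,
    ← intervalIntegral.integral_add_adjacent_intervals i1 i2, e1, e2, e3]
  ring

/-- Uniform continuity in the slow variables of a function periodic in the fast one. -/
lemma osc_unif {Ψ : (ℝ × ℝ) × ℝ × ℝ → ℝ} (hΨ : Continuous Ψ)
    (hper : ∀ z h, Function.Periodic (fun s => Ψ (z, s, h)) 1) (K : Set (ℝ × ℝ)) (hK : IsCompact K)
    {η : ℝ} (hη : 0 < η) : ∃ δ > 0, ∀ z ∈ K, ∀ s, ∀ y : ℝ × ℝ, ∀ h : ℝ, ‖y‖ ≤ δ → |h| ≤ δ →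
      |Ψ (z + y, s, h) - Ψ (z, s, 0)| ≤ η := by
  have hK1 : IsCompact (Metric.cthickening 1 K) := hK.cthickening
  have huc : UniformContinuousOn Ψ (Metric.cthickening 1 K ×ˢ (Icc (0 : ℝ) 1 ×ˢ Icc (-1 : ℝ) 1)) :=
    (hK1.prod (isCompact_Icc.prod isCompact_Icc)).uniformContinuousOn_of_continuous hΨ.continuousOn
  obtain ⟨δ, hδ, H⟩ := Metric.uniformContinuousOn_iff.1 huc η hη
  refine ⟨min (δ / 2) 1, by positivity, fun z hz s y h hy hh => ?_⟩
  have hfr : ∀ z h, Ψ (z, s, h) = Ψ (z, Int.fract s, h) := fun z h => by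
    have := (hper z h).sub_int_mul_eq (x := s) ⌊s⌋
    simp only [mul_one] at this
    rw [← this]; rfl
  rw [hfr, hfr]
  have hs : Int.fract s ∈ Icc (0 : ℝ) 1 := ⟨Int.fract_nonneg s, (Int.fract_lt_one s).le⟩
  have hy1 := hy.trans (min_le_right _ _)
  have hh1 := hh.trans (min_le_right _ _)
  have hz1 : z + y ∈ Metric.cthickening 1 K :=
    Metric.mem_cthickening_of_dist_le (z + y) z 1 K hz (by simpa [dist_eq_norm] using hy1)
  have hz2 : z ∈ Metric.cthickening 1 K := Metric.self_subset_cthickening K hz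
  have := H (z + y, Int.fract s, h) ⟨hz1, hs, abs_le.1 hh1⟩ (z, Int.fract s, 0)
    ⟨hz2, hs, by simp⟩ ?_
  · rw [Real.dist_eq] at this; exact this.le
  · have h1 := hy.trans (min_le_left _ _)
    have h2 := hh.trans (min_le_left _ _)
    have h3 : dist (z + y) z < δ := by rw [dist_eq_norm, add_sub_cancel_left]; linarith
    have h4 : dist h 0 < δ := by rw [Real.dist_eq, sub_zero]; linarith
    exact max_lt h3 (max_lt (by simpa using hδ) h4)

/-- Averaging of rapid oscillations: translating along a vector `e` transversal to the phase `ξ`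
turns the fast variable into a uniform one. -/
lemma osc_limit {Ψ : (ℝ × ℝ) × ℝ × ℝ → ℝ} (hΨ : Continuous Ψ)
    (hper : ∀ z h, Function.Periodic (fun s => Ψ (z, s, h)) 1) {K : Set (ℝ × ℝ)} (hK : IsCompact K)
    (hsupp : ∀ z ∉ K, ∀ s h, Ψ (z, s, h) = 0) {ξ e : ℝ × ℝ} (he : ξ.1 * e.1 + ξ.2 * e.2 = 1)
    {η : ℝ} (hη : 0 < η) : ∃ h₀ > 0, ∀ h, 0 < h → h ≤ h₀ →
      |(∫ z, Ψ (z, (ξ.1 * z.1 + ξ.2 * z.2) / h, h)) - ∫ z, ∫ s in (0 : ℝ)..1, Ψ (z, s, 0)| ≤ η := by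
  set K1 := Metric.cthickening 1 K with hK1d
  have hK1 : IsCompact K1 := hK.cthickening
  have hKK1 : K ⊆ K1 := Metric.self_subset_cthickening K
  have hfin : volume K1 ≠ ⊤ := hK1.measure_lt_top.ne
  set V := (volume : Measure (ℝ × ℝ)).real K1
  obtain ⟨δ, hδ, H⟩ := osc_unif hΨ hper K1 hK1 (show 0 < η / (V + 1) by positivity)
  refine ⟨min δ (min (δ / (‖e‖ + 1)) (1 / (‖e‖ + 1))), by positivity, fun h hh hh0 => ?_⟩
  have hhδ : h ≤ δ := hh0.trans (min_le_left _ _)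
  have hhe : h * (‖e‖ + 1) ≤ δ := by
    rw [← le_div_iff₀ (by positivity)]; exact (hh0.trans (min_le_right _ _)).trans (min_le_left _ _)
  have hhe1 : h * (‖e‖ + 1) ≤ 1 := by
    rw [← le_div_iff₀ (by positivity)]; exact (hh0.trans (min_le_right _ _)).trans (min_le_right _ _)
  set ph : ℝ × ℝ → ℝ := fun z => (ξ.1 * z.1 + ξ.2 * z.2) / h with hph
  have hphc : Continuous ph := by fun_prop
  have hInt : ∀ g : ℝ × ℝ → ℝ, Continuous g → ∀ r, Integrable fun z => Ψ (z, g z, r) := by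
    intro g hg r
    refine (hΨ.comp (by fun_prop : Continuous fun z => (z, g z, r))).integrable_of_hasCompactSupport ?_
    exact HasCompactSupport.intro hK fun z hz => hsupp z hz _ _
  have hshift : ∀ a ∈ Icc (0 : ℝ) 1, |(∫ z, Ψ (z, ph z, h)) - ∫ z, Ψ (z, ph z + a, 0)| ≤ η := by
    intro a ha
    have e1 : ∫ z, Ψ (z, ph z, h) = ∫ z, Ψ (z + (a * h) • e, ph z + a, h) := by
      rw [← integral_add_right_eq_self _ ((a * h) • e)]
      congr 1; ext z
      have : ph (z + (a * h) • e) = ph z + a := by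
        simp only [hph, Prod.fst_add, Prod.snd_add, Prod.smul_fst, Prod.smul_snd, smul_eq_mul]
        rw [div_add' _ _ _ hh.ne']
        congr 1
        linear_combination (a * h) * he
      rw [this]
    have hsm : ‖(a * h) • e‖ ≤ h * (‖e‖ + 1) := by
      rw [norm_smul, Real.norm_eq_abs, abs_of_nonneg (mul_nonneg ha.1 hh.le)]
      have : a * h ≤ h := by nlinarith [ha.2]
      nlinarith [norm_nonneg e]
    have hi1 : Integrable fun z => Ψ (z + (a * h) • e, ph z + a, h) := by
      have := (hInt ph hphc h).comp_add_right ((a * h) • e)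
      refine this.congr (ae_of_all _ fun z => ?_)
      have : ph (z + (a * h) • e) = ph z + a := by
        simp only [hph, Prod.fst_add, Prod.snd_add, Prod.smul_fst, Prod.smul_snd, smul_eq_mul]
        rw [div_add' _ _ _ hh.ne']
        congr 1
        linear_combination (a * h) * he
      simp only [this]
    have hi2 := hInt (fun z => ph z + a) (by fun_prop) 0
    rw [e1, ← integral_sub hi1 hi2, ← Real.norm_eq_abs]
    have hout : ∀ z ∉ K1, Ψ (z + (a * h) • e, ph z + a, h) - Ψ (z, ph z + a, 0) = 0 := by
      intro z hz
      rw [hsupp z (fun hz' => hz (hKK1 hz')), hsupp (z + (a * h) • e) (fun hz' => hz ?_), sub_zero]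
      exact Metric.mem_cthickening_of_dist_le z _ 1 K hz' (by
        rw [dist_eq_norm, sub_add_cancel_left, norm_neg]; exact hsm.trans hhe1)
    rw [← setIntegral_eq_integral_of_forall_compl_eq_zero hout]
    refine (norm_setIntegral_le_of_norm_le_const hfin.lt_top (C := η / (V + 1)) fun z hz => ?_).trans ?_
    · exact H z hz (ph z + a) _ h (hsm.trans hhe) (by rwa [abs_of_pos hh])
    · rw [div_mul_eq_mul_div, div_le_iff₀ (by positivity)]
      have : 0 ≤ V := measureReal_nonneg
      exact mul_le_mul_of_nonneg_left (by linarith) hη.le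
  have e2 : ∫ z, ∫ s in (0 : ℝ)..1, Ψ (z, s, 0) = ∫ a in (0 : ℝ)..1, ∫ z, Ψ (z, ph z + a, 0) := by
    have e3 : ∀ z, ∫ s in (0 : ℝ)..1, Ψ (z, s, 0) = ∫ a in (0 : ℝ)..1, Ψ (z, ph z + a, 0) := by
      intro z
      rw [intervalIntegral.integral_comp_add_left (fun s => Ψ (z, s, 0)) (ph z)]
      have := (hper z 0).intervalIntegral_add_eq (ph z + 0) 0
      rw [zero_add] at this
      rw [← this]; congr 1; ring
    simp_rw [e3, intervalIntegral.integral_of_le zero_le_one]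
    rw [integral_integral_swap]
    have hc : Continuous fun q : (ℝ × ℝ) × ℝ => Ψ (q.1, ph q.1 + q.2, 0) :=
      hΨ.comp (by fun_prop)
    have hon : IntegrableOn (fun q : (ℝ × ℝ) × ℝ => Ψ (q.1, ph q.1 + q.2, 0)) (K ×ˢ Icc (0 : ℝ) 1) :=
      hc.continuousOn.integrableOn_compact (hK.prod isCompact_Icc)
    have hon2 : IntegrableOn (fun q : (ℝ × ℝ) × ℝ => Ψ (q.1, ph q.1 + q.2, 0)) (univ ×ˢ Ioc (0 : ℝ) 1) := by
      refine (hon.mono_set (prod_mono_right Ioc_subset_Icc_self)).of_forall_sdiff_eq_zero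
        (MeasurableSet.univ.prod measurableSet_Ioc) fun q hq => ?_
      exact hsupp _ (fun hq' => hq.2 ⟨hq', hq.1.2⟩) _ _
    rw [IntegrableOn, Measure.volume_eq_prod, ← Measure.prod_restrict, Measure.restrict_univ] at hon2
    exact hon2
  have hcont : Continuous fun a : ℝ => ∫ z, Ψ (z, ph z + a, 0) := by
    have : ∀ a, ∫ z, Ψ (z, ph z + a, 0) = ∫ z in K, Ψ (z, ph z + a, 0) := fun a =>
      (setIntegral_eq_integral_of_forall_compl_eq_zero fun z hz => hsupp z hz _ _).symm
    simp_rw [this]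
    refine continuous_parametric_integral_of_continuous (f := fun a z => Ψ (z, ph z + a, 0)) ?_ hK
    exact hΨ.comp (by fun_prop : Continuous fun q : ℝ × ℝ × ℝ => (q.2, ph q.2 + q.1, (0 : ℝ)))
  rw [e2]
  have e4 : (∫ z, Ψ (z, ph z, h)) - ∫ a in (0 : ℝ)..1, ∫ z, Ψ (z, ph z + a, 0) =
      ∫ a in (0 : ℝ)..1, ((∫ z, Ψ (z, ph z, h)) - ∫ z, Ψ (z, ph z + a, 0)) := by
    rw [intervalIntegral.integral_sub intervalIntegrable_const (hcont.intervalIntegrable _ _)]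
    simp
  rw [e4, ← Real.norm_eq_abs]
  refine (intervalIntegral.norm_integral_le_of_norm_le_const (C := η) fun a ha => ?_).trans (by simp)
  rw [uIoc_of_le zero_le_one] at ha
  exact hshift a ⟨ha.1.le, ha.2⟩

/-- The mean value of the profile `tau θ n`. -/
def tauMean (θ : ℝ) (n : ℕ) : ℝ := ∫ s in (0 : ℝ)..1, tau θ n s

/-- The periodic primitive of the centred profile. -/
def tauPrim (θ : ℝ) (n : ℕ) (s : ℝ) : ℝ := ∫ r in (0 : ℝ)..s, (tau θ n r - tauMean θ n)

lemma continuous_tau (θ : ℝ) (n : ℕ) : Continuous (tau θ n) := (contDiff_tau θ n).continuous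

lemma tauMean_mem (θ : ℝ) (n : ℕ) : tauMean θ n ∈ Icc (0 : ℝ) 1 := by
  constructor
  · exact intervalIntegral.integral_nonneg zero_le_one fun s _ => (tau_mem θ n s).1
  · have : tauMean θ n ≤ ∫ _ in (0 : ℝ)..1, (1 : ℝ) :=
      intervalIntegral.integral_mono_on zero_le_one ((continuous_tau θ n).intervalIntegrable _ _)
        intervalIntegrable_const fun s _ => (tau_mem θ n s).2
    simpa using this

lemma tauMean_tendsto {θ : ℝ} (h0 : 0 < θ) (h1 : θ < 1) :
    Tendsto (tauMean θ) atTop (𝓝 θ) := by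
  have h := intervalIntegral.tendsto_integral_filter_of_dominated_convergence (μ := volume)
    (a := 0) (b := 1) (l := atTop) (F := fun n s => tau θ n s) (f := stripe θ) (fun _ => (1 : ℝ))
    (Eventually.of_forall fun n => (continuous_tau θ n).aestronglyMeasurable)
    (Eventually.of_forall fun n => ae_of_all _ fun s _ => by
      rw [Real.norm_eq_abs, abs_of_nonneg (tau_mem θ n s).1]; exact (tau_mem θ n s).2)
    intervalIntegrable_const (ae_of_all _ fun s _ => tau_tendsto θ s)
  have e := integral_stripe h0 h1 fun x => x
  rw [e] at h
  simp only [mul_one, mul_zero, add_zero] at h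
  exact h

lemma hasDerivAt_tauPrim (θ : ℝ) (n : ℕ) (s : ℝ) :
    HasDerivAt (tauPrim θ n) (tau θ n s - tauMean θ n) s := by
  have hc : Continuous fun r => tau θ n r - tauMean θ n := (continuous_tau θ n).sub continuous_const
  exact intervalIntegral.integral_hasDerivAt_right (hc.intervalIntegrable _ _)
    (hc.stronglyMeasurableAtFilter _ _) hc.continuousAt

lemma contDiff_tauPrim (θ : ℝ) (n : ℕ) : ContDiff ℝ (⊤ : ℕ∞) (tauPrim θ n) := by
  refine (contDiff_infty_iff_deriv (𝕜 := ℝ)).2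
    ⟨fun y => (hasDerivAt_tauPrim θ n y).differentiableAt, ?_⟩
  have : deriv (tauPrim θ n) = fun s => tau θ n s - tauMean θ n :=
    funext fun y => (hasDerivAt_tauPrim θ n y).deriv
  rw [this]
  exact (contDiff_tau θ n).sub contDiff_const

lemma tauPrim_periodic (θ : ℝ) (n : ℕ) : Function.Periodic (tauPrim θ n) 1 := by
  intro s
  have hc : Continuous fun r => tau θ n r - tauMean θ n := (continuous_tau θ n).sub continuous_const
  have hp : Function.Periodic (fun r => tau θ n r - tauMean θ n) 1 := fun r => by
    simp only [tau_periodic θ n r]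
  have hz : ∫ r in (0 : ℝ)..1, (tau θ n r - tauMean θ n) = 0 := by
    rw [intervalIntegral.integral_sub ((continuous_tau θ n).intervalIntegrable _ _)
      intervalIntegrable_const, intervalIntegral.integral_const]
    simp [tauMean]
  unfold tauPrim
  rw [← intervalIntegral.integral_add_adjacent_intervals (hc.intervalIntegrable 0 s)
    (hc.intervalIntegrable s (s + 1)), hp.intervalIntegral_add_eq s 0, zero_add, hz, add_zero]

/-- The averaged energy of the profiles tends to that of the two-phase mixture. -/
lemma tau_limit {E : (ℝ × ℝ) × ℝ × ℝ × ℝ → ℝ} (hE : Continuous E) {K : Set (ℝ × ℝ)}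
    (hK : IsCompact K) (hsupp : ∀ z ∉ K, ∀ q, E (z, q) = 0) {θ : ℝ} (h0 : 0 < θ) (h1 : θ < 1)
    (hmix : ∀ z, θ * E (z, 1, θ, 0) + (1 - θ) * E (z, 0, θ, 0) = 0) :
    Tendsto (fun n => ∫ z, ∫ s in (0 : ℝ)..1, E (z, tau θ n s, tauMean θ n, 0)) atTop (𝓝 0) := by
  obtain ⟨C, hC⟩ := (hK.prod ((isCompact_Icc (a := (0 : ℝ)) (b := 1)).prod
    ((isCompact_Icc (a := (0 : ℝ)) (b := 1)).prod (isCompact_singleton (x := (0 : ℝ)))))).exists_bound_of_continuousOn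
    hE.continuousOn
  have hbd : ∀ z n s, ‖E (z, tau θ n s, tauMean θ n, 0)‖ ≤ K.indicator (fun _ => C) z := by
    intro z n s
    by_cases hz : z ∈ K
    · rw [indicator_of_mem hz]
      exact hC _ ⟨hz, tau_mem θ n s, tauMean_mem θ n, rfl⟩
    · rw [indicator_of_notMem hz, hsupp z hz]; simp
  have hinner : ∀ z, Tendsto (fun n => ∫ s in (0 : ℝ)..1, E (z, tau θ n s, tauMean θ n, 0)) atTop
      (𝓝 0) := by
    intro z
    have h := intervalIntegral.tendsto_integral_filter_of_dominated_convergence (μ := volume)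
      (a := 0) (b := 1) (l := atTop) (F := fun n s => E (z, tau θ n s, tauMean θ n, 0))
      (f := fun s => E (z, stripe θ s, θ, 0)) (fun _ => K.indicator (fun _ => C) z)
      (Eventually.of_forall fun n => (hE.comp (by
        have := continuous_tau θ n
        fun_prop : Continuous fun s => (z, tau θ n s, tauMean θ n, (0 : ℝ)))).aestronglyMeasurable)
      (Eventually.of_forall fun n => ae_of_all _ fun s _ => hbd z n s)
      intervalIntegrable_const (ae_of_all _ fun s _ => ?_)
    · have e := integral_stripe h0 h1 fun x => E (z, x, θ, 0)
      rw [e, hmix z] at h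
      exact h
    · exact (hE.tendsto _).comp (tendsto_const_nhds.prodMk_nhds ((tau_tendsto θ s).prodMk_nhds
        ((tauMean_tendsto h0 h1).prodMk_nhds tendsto_const_nhds)))
  have := tendsto_integral_of_dominated_convergence (μ := (volume : Measure (ℝ × ℝ)))
    (F := fun n z => ∫ s in (0 : ℝ)..1, E (z, tau θ n s, tauMean θ n, 0)) (f := fun _ => 0)
    (K.indicator fun _ => C) (fun n => ?_) ?_ (fun n => ae_of_all _ fun z => ?_)
    (ae_of_all _ hinner)
  · simpa using this
  · refine Continuous.aestronglyMeasurable ?_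
    refine intervalIntegral.continuous_parametric_intervalIntegral_of_continuous'
      (f := fun z s => E (z, tau θ n s, tauMean θ n, 0)) (hE.comp ?_) 0 1
    have := continuous_tau θ n
    fun_prop
  · exact (integrable_indicator_iff hK.measurableSet).2 (integrableOn_const hK.measure_lt_top.ne)
  · refine (intervalIntegral.norm_integral_le_of_norm_le_const fun s _ => hbd z n s).trans ?_
    simp

/-- Choice of the profile and of the scale of a single oscillation, for finitely many
energies. -/
lemma exists_profile (J : ℕ) {E : ℕ → (ℝ × ℝ) × ℝ × ℝ × ℝ → ℝ} (hE : ∀ j, Continuous (E j))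
    {K : Set (ℝ × ℝ)} (hK : IsCompact K) (hsupp : ∀ j, ∀ z ∉ K, ∀ q, E j (z, q) = 0) {θ : ℝ}
    (h0 : 0 < θ) (h1 : θ < 1)
    (hmix : ∀ j z, θ * E j (z, 1, θ, 0) + (1 - θ) * E j (z, 0, θ, 0) = 0)
    {ξ e : ℝ × ℝ} (he : ξ.1 * e.1 + ξ.2 * e.2 = 1) {η : ℝ} (hη : 0 < η) :
    ∃ (n : ℕ) (h : ℝ), 0 < h ∧ |tauMean θ n - θ| ≤ η ∧ (∀ s, |h * tauPrim θ n s| ≤ η) ∧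
      ∀ j < J, |∫ z, E j (z, tau θ n ((ξ.1 * z.1 + ξ.2 * z.2) / h), tauMean θ n,
        h * tauPrim θ n ((ξ.1 * z.1 + ξ.2 * z.2) / h))| ≤ η := by
  have hev : ∀ᶠ n in atTop, ∀ j ∈ {j | j < J},
      |∫ z, ∫ s in (0 : ℝ)..1, E j (z, tau θ n s, tauMean θ n, 0)| < η / 2 := by
    rw [eventually_all_finite (finite_lt_nat J)]
    intro j _
    have := (tau_limit (hE j) hK (hsupp j) h0 h1 (hmix j)).abs
    rw [abs_zero] at this
    exact this.eventually_lt_const (half_pos hη)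
  have hev2 : ∀ᶠ n in atTop, |tauMean θ n - θ| < η := by
    have := ((tauMean_tendsto h0 h1).sub_const θ).abs
    rw [sub_self, abs_zero] at this
    exact this.eventually_lt_const hη
  obtain ⟨n, hn, hn2⟩ := (hev.and hev2).exists
  have hτ := continuous_tau θ n
  have hP : Continuous (tauPrim θ n) := (contDiff_tauPrim θ n).continuous
  obtain ⟨CP, hCP⟩ := (isCompact_Icc (a := (0 : ℝ)) (b := 1)).exists_bound_of_continuousOn
    hP.continuousOn
  have hPb : ∀ s, |tauPrim θ n s| ≤ |CP| := by
    intro s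
    have e1 : tauPrim θ n s = tauPrim θ n (Int.fract s) := by
      have := (tauPrim_periodic θ n).sub_int_mul_eq (x := s) ⌊s⌋
      rw [mul_one] at this
      rw [← this]; rfl
    rw [e1]
    exact (hCP _ ⟨Int.fract_nonneg s, (Int.fract_lt_one s).le⟩).trans (le_abs_self _)
  have hosc : ∀ j, ∃ h₀ > 0, ∀ h, 0 < h → h ≤ h₀ →
      |(∫ z, E j (z, tau θ n ((ξ.1 * z.1 + ξ.2 * z.2) / h), tauMean θ n,
        h * tauPrim θ n ((ξ.1 * z.1 + ξ.2 * z.2) / h))) -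
        ∫ z, ∫ s in (0 : ℝ)..1, E j (z, tau θ n s, tauMean θ n, 0)| ≤ η / 2 := by
    intro j
    have := osc_limit (Ψ := fun q => E j (q.1, tau θ n q.2.1, tauMean θ n, q.2.2 * tauPrim θ n q.2.1))
      ((hE j).comp (by fun_prop)) (fun z h s => by
        simp only [tau_periodic θ n s, tauPrim_periodic θ n s]) hK (fun z hz s h => hsupp j z hz _) he
      (half_pos hη)
    simpa only [zero_mul] using this
  choose h₀ hh₀ hosc using hosc
  have hex : ∃ h > 0, h ≤ η / (|CP| + 1) ∧ ∀ j < J, h ≤ h₀ j := by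
    have hev : ∀ᶠ h in 𝓝[>] (0 : ℝ), 0 < h ∧ h ≤ η / (|CP| + 1) ∧ ∀ j ∈ {j | j < J}, h ≤ h₀ j := by
      refine eventually_mem_nhdsWithin.and (Eventually.and ?_ ?_)
      · exact (eventually_le_nhds (show (0 : ℝ) < η / (|CP| + 1) by positivity)).filter_mono
          nhdsWithin_le_nhds
      · rw [eventually_all_finite (finite_lt_nat J)]
        intro j _
        exact (eventually_le_nhds (hh₀ j)).filter_mono nhdsWithin_le_nhds
    obtain ⟨h, h1, h2, h3⟩ := hev.exists
    exact ⟨h, h1, h2, h3⟩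
  obtain ⟨h, hh, hhC, hhj⟩ := hex
  refine ⟨n, h, hh, hn2.le, fun s => ?_, fun j hj => ?_⟩
  · rw [abs_mul, abs_of_pos hh]
    rw [le_div_iff₀ (by positivity)] at hhC
    have := hPb s
    nlinarith [abs_nonneg CP]
  · have a1 := abs_le.1 (hosc j h hh (hhj j hj))
    have a2 := abs_lt.1 (hn j hj)
    exact abs_le.2 ⟨by linarith, by linarith⟩

/-! ### Realization of finite mixtures by oscillating potentials -/

/-- A vector is a multiple of a nonzero phase `ξ`, normalized against some direction `e`; the case
`n = 0` is included. -/
lemma exists_phase (n : ℝ × ℝ) : ∃ (c : ℝ) (ξ e : ℝ × ℝ), c • ξ = n ∧ ξ.1 * e.1 + ξ.2 * e.2 = 1 := by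
  by_cases h : n = 0
  · exact ⟨0, (0, 1), (0, 1), by simp [h], by simp⟩
  · have hne : n.1 ^ 2 + n.2 ^ 2 ≠ 0 := by
      intro h0
      apply h
      have h1 : n.1 = 0 := by nlinarith [sq_nonneg n.1, sq_nonneg n.2]
      have h2 : n.2 = 0 := by nlinarith [sq_nonneg n.1, sq_nonneg n.2]
      exact Prod.ext h1 h2
    refine ⟨1, n, (1 / (n.1 ^ 2 + n.2 ^ 2)) • n, by simp, ?_⟩
    simp only [Prod.smul_fst, Prod.smul_snd, smul_eq_mul]
    field_simp

lemma continuous_grad {w : ℝ × ℝ → ℝ} (hw : ContDiff ℝ (⊤ : ℕ∞) w) : Continuous (grad w) :=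
  (contDiff_ptF hw).continuous.prodMk (contDiff_pxF hw).continuous

lemma grad_eq_off {w v : ℝ × ℝ → ℝ} {K : Set (ℝ × ℝ)} (hK : IsClosed K)
    (h : ∀ z ∉ K, v z = w z) {z : ℝ × ℝ} (hz : z ∉ K) : grad v z = grad w z := by
  have he : v =ᶠ[𝓝 z] w := by
    filter_upwards [hK.isOpen_compl.mem_nhds hz] with y hy using h y hy
  unfold grad ptF pxF
  rw [he.fderiv_eq]

/-- The potential with one oscillation added, of amplitude `lam` and scale `h`. -/
def oscPot (w lam : ℝ × ℝ → ℝ) (c : ℝ) (ξ : ℝ × ℝ) (θ : ℝ) (n : ℕ) (h : ℝ) (z : ℝ × ℝ) : ℝ :=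
  w z + h * c * (lam z * tauPrim θ n ((ξ.1 * z.1 + ξ.2 * z.2) / h))

lemma contDiff_phase (ξ : ℝ × ℝ) (h : ℝ) :
    ContDiff ℝ (⊤ : ℕ∞) fun z : ℝ × ℝ => (ξ.1 * z.1 + ξ.2 * z.2) / h := by fun_prop

lemma contDiff_oscPot {w lam : ℝ × ℝ → ℝ} (hw : ContDiff ℝ (⊤ : ℕ∞) w)
    (hl : ContDiff ℝ (⊤ : ℕ∞) lam) (c : ℝ) (ξ : ℝ × ℝ) (θ : ℝ) (n : ℕ) (h : ℝ) :
    ContDiff ℝ (⊤ : ℕ∞) (oscPot w lam c ξ θ n h) :=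
  hw.add (contDiff_const.mul (hl.mul ((contDiff_tauPrim θ n).comp (contDiff_phase ξ h))))

lemma grad_oscPot {w lam : ℝ × ℝ → ℝ} (hw : ContDiff ℝ (⊤ : ℕ∞) w)
    (hl : ContDiff ℝ (⊤ : ℕ∞) lam) (c : ℝ) (ξ : ℝ × ℝ) (θ : ℝ) (n : ℕ) {h : ℝ} (hh : 0 < h)
    (z : ℝ × ℝ) : grad (oscPot w lam c ξ θ n h) z = grad w z +
      (lam z * (tau θ n ((ξ.1 * z.1 + ξ.2 * z.2) / h) - tauMean θ n)) • (c • ξ) +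
      (c * (h * tauPrim θ n ((ξ.1 * z.1 + ξ.2 * z.2) / h))) • grad lam z := by
  set s := (ξ.1 * z.1 + ξ.2 * z.2) / h with hs
  have h0 : HasFDerivAt (fun z : ℝ × ℝ => (ξ.1 * z.1 + ξ.2 * z.2) / h)
      ((ξ.1 / h) • ContinuousLinearMap.fst ℝ ℝ ℝ + (ξ.2 / h) • ContinuousLinearMap.snd ℝ ℝ ℝ) z := by
    have a1 : HasFDerivAt (fun z : ℝ × ℝ => ξ.1 / h * z.1) _ z :=
      (hasFDerivAt_fst (𝕜 := ℝ) (p := z)).const_mul (ξ.1 / h)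
    have a2 : HasFDerivAt (fun z : ℝ × ℝ => ξ.2 / h * z.2) _ z :=
      (hasFDerivAt_snd (𝕜 := ℝ) (p := z)).const_mul (ξ.2 / h)
    refine (a1.add a2).congr_of_eventuallyEq (Eventually.of_forall fun y => ?_)
    simp only [Pi.add_apply]; ring
  have h1 : HasFDerivAt (fun z : ℝ × ℝ => tauPrim θ n ((ξ.1 * z.1 + ξ.2 * z.2) / h)) _ z :=
    HasDerivAt.comp_hasFDerivAt (h₂ := tauPrim θ n) z (hasDerivAt_tauPrim θ n _) h0
  have h2 := (((hasFDerivAt_of_smooth hl z).mul h1).const_mul (h * c))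
  have h3 : HasFDerivAt (oscPot w lam c ξ θ n h)
      ((ptF w z + lam z * (tau θ n s - tauMean θ n) * (c * ξ.1) + c * (h * tauPrim θ n s) * ptF lam z) •
        ContinuousLinearMap.fst ℝ ℝ ℝ +
      (pxF w z + lam z * (tau θ n s - tauMean θ n) * (c * ξ.2) + c * (h * tauPrim θ n s) * pxF lam z) •
        ContinuousLinearMap.snd ℝ ℝ ℝ) z := by
    refine ((hasFDerivAt_of_smooth hw z).add h2).congr_fderiv ?_
    ext
    · simp [← hs]; field_simp; ring
    · simp [← hs]; field_simp; ring
  obtain ⟨e1, e2⟩ := pxF_of_hasDeriv h3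
  unfold grad
  rw [e1, e2]
  ext <;> simp [mul_assoc]

/-- Realization of a homogeneous finite mixture of gradients, damped by a cutoff `lam`: the atoms
are split off one at a time by oscillations on finer and finer scales.  Splitting off the last
atom replaces the remaining ones by atoms with the same differences, damped by the fraction
`1 - τ` of the other phase. -/
theorem relax_tile (J : ℕ) {Φ : ℕ → (ℝ × ℝ) × (ℝ × ℝ) → ℝ} (hΦ : ∀ j, Continuous (Φ j)) (m : ℕ) :
    ∀ (θ : ℕ → ℝ) (a : ℕ → ℝ × ℝ) (w lam : ℝ × ℝ → ℝ), ContDiff ℝ (⊤ : ℕ∞) w →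
      ContDiff ℝ (⊤ : ℕ∞) lam → HasCompactSupport lam → (∀ z, lam z ∈ Icc (0 : ℝ) 1) →
      (∀ i, 0 ≤ θ i) → ∑ i ∈ Finset.range (m + 1), θ i = 1 →
      ∑ i ∈ Finset.range (m + 1), θ i • a i = 0 → ∀ η > 0,
      ∃ v : ℝ × ℝ → ℝ, ContDiff ℝ (⊤ : ℕ∞) v ∧ (∀ z ∉ tsupport lam, v z = w z) ∧
        (∀ z lo hi, (∀ i ≤ m, lo ≤ pxF w z + lam z * (a i).2 ∧ pxF w z + lam z * (a i).2 ≤ hi) →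
          lo - η ≤ pxF v z ∧ pxF v z ≤ hi + η) ∧
        ∀ j < J, |∫ z, (Φ j (z, grad v z) -
          ∑ i ∈ Finset.range (m + 1), θ i * Φ j (z, grad w z + lam z • a i))| ≤ η := by
  induction m with
  | zero =>
    intro θ a w lam hw hl hlc hl01 hθ hθ1 hθa η hη
    simp only [zero_add, Finset.sum_range_one] at hθ1 hθa
    rw [hθ1, one_smul] at hθa
    refine ⟨w, hw, fun z _ => rfl, fun z lo hi h => ?_, fun j _ => ?_⟩
    · have := h 0 le_rfl
      rw [hθa] at this
      simp only [Prod.snd_zero, mul_zero, add_zero] at this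
      exact ⟨by linarith, by linarith⟩
    · simp [hθ1, hθa, hη.le]
  | succ m ih =>
    intro θ a w lam hw hl hlc hl01 hθ hθ1 hθa η hη
    rw [Finset.sum_range_succ] at hθ1 hθa
    have hS0 : 0 ≤ ∑ i ∈ Finset.range (m + 1), θ i := Finset.sum_nonneg fun i _ => hθ i
    rcases eq_or_lt_of_le (hθ (m + 1)) with hz | hpos
    · rw [← hz, add_zero] at hθ1
      rw [← hz, zero_smul, add_zero] at hθa
      obtain ⟨v, hv, hoff, hbox, ht⟩ := ih θ a w lam hw hl hlc hl01 hθ hθ1 hθa η hη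
      refine ⟨v, hv, hoff, fun z lo hi h => hbox z lo hi fun i hi' => h i (by omega), fun j hj => ?_⟩
      have := ht j hj
      simp_rw [Finset.sum_range_succ _ (m + 1), ← hz, zero_mul, add_zero]
      exact this
    rcases eq_or_lt_of_le (show θ (m + 1) ≤ 1 by linarith) with h1 | hlt
    · have hS : ∑ i ∈ Finset.range (m + 1), θ i = 0 := by linarith
      have hi0 : ∀ i ∈ Finset.range (m + 1), θ i = 0 :=
        (Finset.sum_eq_zero_iff_of_nonneg fun i _ => hθ i).1 hS
      have ha0 : a (m + 1) = 0 := by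
        rw [Finset.sum_eq_zero fun i hi => by rw [hi0 i hi, zero_smul], h1, one_smul, zero_add] at hθa
        exact hθa
      refine ⟨w, hw, fun z _ => rfl, fun z lo hi h => ?_, fun j _ => ?_⟩
      · have := h (m + 1) le_rfl
        rw [ha0] at this
        simp only [Prod.snd_zero, mul_zero, add_zero] at this
        exact ⟨by linarith, by linarith⟩
      · have : ∀ z, ∑ i ∈ Finset.range (m + 1 + 1), θ i * Φ j (z, grad w z + lam z • a i) =
            Φ j (z, grad w z) := fun z => by
          rw [Finset.sum_range_succ, Finset.sum_eq_zero fun i hi => by rw [hi0 i hi, zero_mul], h1, ha0]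
          simp
        simp [this, hη.le]
    set t := θ (m + 1) with ht
    have h1t : 0 < 1 - t := by linarith
    obtain ⟨n, han⟩ : ∃ n, a (m + 1) = (1 - t) • n :=
      ⟨(1 / (1 - t)) • a (m + 1), by rw [smul_smul, mul_one_div_cancel h1t.ne', one_smul]⟩
    set θ' : ℕ → ℝ := fun i => θ i / (1 - t) with hθ'
    set a' : ℕ → ℝ × ℝ := fun i => a i + t • n with ha'
    have hθ'1 : ∑ i ∈ Finset.range (m + 1), θ' i = 1 := by
      rw [hθ', ← Finset.sum_div, div_eq_one_iff_eq h1t.ne']; linarith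
    have hθ'a : ∑ i ∈ Finset.range (m + 1), θ' i • a' i = 0 := by
      have e1 : ∀ i, θ' i • a' i = (1 / (1 - t)) • (θ i • a i) + θ' i • (t • n) := fun i => by
        ext <;> simp [hθ', ha'] <;> ring
      simp_rw [e1]
      rw [Finset.sum_add_distrib, ← Finset.smul_sum, ← Finset.sum_smul, hθ'1, one_smul,
        eq_neg_of_add_eq_zero_left hθa, han]
      ext <;> simp <;> field_simp <;> ring
    obtain ⟨c, ξ, e, hcξ, hξe⟩ := exists_phase n
    have hgl : Continuous (grad lam) := continuous_grad hl
    have hgw : Continuous (grad w) := continuous_grad hw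
    have hlcont := hl.continuous
    have hl0 : ∀ z ∉ tsupport lam, lam z = 0 := fun z hz => image_eq_zero_of_notMem_tsupport hz
    have hgl0 : ∀ z ∉ tsupport lam, grad lam z = 0 := fun z hz => by
      rw [grad_eq_off (w := fun _ => 0) (isClosed_tsupport lam) hl0 hz]
      simp [grad, ptF, pxF]
    set E : ℕ → (ℝ × ℝ) × ℝ × ℝ × ℝ → ℝ := fun j q =>
      (∑ i ∈ Finset.range (m + 1), θ' i * Φ j (q.1, grad w q.1 + (lam q.1 * (q.2.1 - q.2.2.1)) • n +
        (c * q.2.2.2) • grad lam q.1 + (lam q.1 * (1 - q.2.1)) • a' i)) -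
      ∑ i ∈ Finset.range (m + 1 + 1), θ i * Φ j (q.1, grad w q.1 + lam q.1 • a i) with hE
    have hEc : ∀ j, Continuous (E j) := fun j => by
      have := hΦ j
      refine (continuous_finsetSum _ fun i _ => ?_).sub (continuous_finsetSum _ fun i _ => ?_) <;> fun_prop
    have hθfull : ∑ i ∈ Finset.range (m + 1 + 1), θ i = 1 := by rw [Finset.sum_range_succ]; exact hθ1
    have hEs : ∀ j, ∀ z ∉ tsupport lam, ∀ q, E j (z, q) = 0 := by
      intro j z hz q
      simp only [hE, hl0 z hz, hgl0 z hz, zero_mul, zero_smul, smul_zero, add_zero]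
      rw [← Finset.sum_mul, ← Finset.sum_mul, hθ'1, hθfull, sub_self]
    have hmix : ∀ j z, t * E j (z, 1, t, 0) + (1 - t) * E j (z, 0, t, 0) = 0 := by
      intro j z
      simp only [hE, mul_zero, zero_smul, add_zero, sub_self, sub_zero, zero_sub, mul_one]
      have e1 : grad w z + (lam z * (1 - t)) • n = grad w z + lam z • a (m + 1) := by
        rw [han, smul_smul]
      have e2 : ∀ i, grad w z + (lam z * -t) • n + lam z • a' i = grad w z + lam z • a i := by
        intro i; ext <;> simp [ha'] <;> ring
      rw [e1]
      simp_rw [e2]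
      rw [← Finset.sum_mul, hθ'1, Finset.sum_range_succ]
      have e3 : ∑ i ∈ Finset.range (m + 1), θ i * Φ j (z, grad w z + lam z • a i) =
          (1 - t) * ∑ i ∈ Finset.range (m + 1), θ' i * Φ j (z, grad w z + lam z • a i) := by
        rw [Finset.mul_sum]
        refine Finset.sum_congr rfl fun i _ => ?_
        rw [hθ']; field_simp
      rw [e3, ← ht]
      ring
    obtain ⟨Cl, hCl⟩ := hlc.isCompact.exists_bound_of_continuousOn
      (contDiff_pxF hl).continuous.continuousOn
    set η' := min (η / 2) (η / 2 / (|n.2| + |c| * |Cl| + 1)) with hη'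
    have hη'p : 0 < η' := by positivity
    obtain ⟨k, h, hh, hmean, hPs, hEt⟩ := exists_profile J hEc hlc.isCompact hEs hpos hlt hmix hξe hη'p
    set w1 := oscPot w lam c ξ t k h with hw1
    have hw1s : ContDiff ℝ (⊤ : ℕ∞) w1 := contDiff_oscPot hw hl c ξ t k h
    set τ : ℝ × ℝ → ℝ := fun z => tau t k ((ξ.1 * z.1 + ξ.2 * z.2) / h) with hτ
    have hτs : ContDiff ℝ (⊤ : ℕ∞) τ := (contDiff_tau t k).comp (contDiff_phase ξ h)
    have hτm : ∀ z, τ z ∈ Icc (0 : ℝ) 1 := fun z => tau_mem _ _ _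
    set lam1 : ℝ × ℝ → ℝ := fun z => lam z * (1 - τ z) with hlam1
    have hts : tsupport lam1 ⊆ tsupport lam := closure_mono fun z hz => by
      intro h0; apply hz; simp [hlam1, h0]
    have hgw1 : ∀ z, grad w1 z = grad w z + (lam z * (τ z - tauMean t k)) • n +
        (c * (h * tauPrim t k ((ξ.1 * z.1 + ξ.2 * z.2) / h))) • grad lam z := fun z => by
      rw [← hcξ]; exact grad_oscPot hw hl c ξ t k hh z
    obtain ⟨v, hv, hoff, hbox, htest⟩ := ih θ' a' w1 lam1 hw1s (hl.mul (contDiff_const.sub hτs))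
      hlc.mul_right (fun z => ⟨mul_nonneg (hl01 z).1 (by linarith [(hτm z).2]),
        mul_le_one₀ (hl01 z).2 (by linarith [(hτm z).2]) (by linarith [(hτm z).1])⟩)
      (fun i => div_nonneg (hθ i) h1t.le) hθ'1 hθ'a (η / 2) (half_pos hη)
    have hoff' : ∀ z ∉ tsupport lam, v z = w z := fun z hz => by
      rw [hoff z fun hz' => hz (hts hz'), hw1]
      simp [oscPot, hl0 z hz]
    refine ⟨v, hv, hoff', fun z lo hi hlh => ?_, fun j hj => ?_⟩
    · have herr : |lam z * (t - tauMean t k) * n.2 +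
          c * (h * tauPrim t k ((ξ.1 * z.1 + ξ.2 * z.2) / h)) * pxF lam z| ≤ η / 2 := by
        have b1 : |lam z * (t - tauMean t k) * n.2| ≤ η' * |n.2| := by
          rw [abs_mul, abs_mul, abs_of_nonneg (hl01 z).1, abs_sub_comm]
          have := (hl01 z).2
          gcongr
          calc lam z * |tauMean t k - t| ≤ 1 * η' := by gcongr
            _ = η' := one_mul _
        have b2 : |c * (h * tauPrim t k ((ξ.1 * z.1 + ξ.2 * z.2) / h)) * pxF lam z| ≤
            |c| * η' * |Cl| := by
          rw [abs_mul, abs_mul]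
          have hpl : |pxF lam z| ≤ |Cl| := by
            by_cases hz : z ∈ tsupport lam
            · exact (hCl z hz).trans (le_abs_self _)
            · have : pxF lam z = 0 := congrArg Prod.snd (hgl0 z hz)
              rw [this, abs_zero]; positivity
          exact mul_le_mul (mul_le_mul_of_nonneg_left (hPs _) (abs_nonneg _)) hpl (abs_nonneg _)
            (by positivity)
        have b3 : η' * (|n.2| + |c| * |Cl| + 1) ≤ η / 2 := by
          rw [← le_div_iff₀ (by positivity)]; exact min_le_right _ _
        refine (abs_add_le _ _).trans ((add_le_add b1 b2).trans ?_)
        nlinarith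
      have herr' := abs_le.1 herr
      have := hbox z (lo - η / 2) (hi + η / 2) fun i hi' => ?_
      · exact ⟨by linarith [this.1], by linarith [this.2]⟩
      · have g1 := hlh i (by omega)
        have g2 := hlh (m + 1) le_rfl
        have hx : pxF w1 z = pxF w z + lam z * (τ z - tauMean t k) * n.2 +
            c * (h * tauPrim t k ((ξ.1 * z.1 + ξ.2 * z.2) / h)) * pxF lam z := by
          simpa [grad] using congrArg Prod.snd (hgw1 z)
        have hx2 : pxF w1 z + lam1 z * (a' i).2 = τ z * (pxF w z + lam z * (a (m + 1)).2) +
            (1 - τ z) * (pxF w z + lam z * (a i).2) + (lam z * (t - tauMean t k) * n.2 +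
            c * (h * tauPrim t k ((ξ.1 * z.1 + ξ.2 * z.2) / h)) * pxF lam z) := by
          rw [hx, han]
          simp only [hlam1, ha', Prod.snd_add, Prod.smul_snd, smul_eq_mul]
          ring
        rw [hx2]
        have t0 := (hτm z).1
        have t1 : 0 ≤ 1 - τ z := by linarith [(hτm z).2]
        constructor
        · nlinarith [mul_le_mul_of_nonneg_left g1.1 t1, mul_le_mul_of_nonneg_left g2.1 t0]
        · nlinarith [mul_le_mul_of_nonneg_left g1.2 t1, mul_le_mul_of_nonneg_left g2.2 t0]
    · have hEeq : ∀ z, E j (z, τ z, tauMean t k, h * tauPrim t k ((ξ.1 * z.1 + ξ.2 * z.2) / h)) =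
          (∑ i ∈ Finset.range (m + 1), θ' i * Φ j (z, grad w1 z + lam1 z • a' i)) -
          ∑ i ∈ Finset.range (m + 1 + 1), θ i * Φ j (z, grad w z + lam z • a i) := fun z => by
        simp only [hE, hgw1 z, hlam1]
      have hgv := continuous_grad hv
      have hgw1c := continuous_grad hw1s
      have hΦj := hΦ j
      have hτc := hτs.continuous
      have hlam1c : Continuous lam1 := hlcont.mul (continuous_const.sub hτc)
      have hi1 : Integrable fun z => Φ j (z, grad v z) -
          ∑ i ∈ Finset.range (m + 1), θ' i * Φ j (z, grad w1 z + lam1 z • a' i) := by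
        refine Continuous.integrable_of_hasCompactSupport ?_
          (HasCompactSupport.intro (f := fun z => Φ j (z, grad v z) -
          ∑ i ∈ Finset.range (m + 1), θ' i * Φ j (z, grad w1 z + lam1 z • a' i)) hlc.isCompact fun z hz => ?_)
        · exact (hΦj.comp (by fun_prop)).sub (continuous_finsetSum _ fun i _ => by fun_prop)
        · have hz1 : z ∉ tsupport lam1 := fun hz' => hz (hts hz')
          have : lam1 z = 0 := by simp [hlam1, hl0 z hz]
          simp only [this, zero_smul, add_zero]
          rw [← Finset.sum_mul, hθ'1, one_mul, grad_eq_off (isClosed_tsupport lam1) hoff hz1, sub_self]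
      have hi2 : Integrable fun z => E j (z, τ z, tauMean t k,
          h * tauPrim t k ((ξ.1 * z.1 + ξ.2 * z.2) / h)) := by
        have hPc := (contDiff_tauPrim t k).continuous
        refine Continuous.integrable_of_hasCompactSupport ((hEc j).comp (by fun_prop))
          (HasCompactSupport.intro (f := fun z => E j (z, τ z, tauMean t k,
          h * tauPrim t k ((ξ.1 * z.1 + ξ.2 * z.2) / h))) hlc.isCompact fun z hz => hEs j z hz _)
      have hsum : ∫ z, (Φ j (z, grad v z) -
          ∑ i ∈ Finset.range (m + 1 + 1), θ i * Φ j (z, grad w z + lam z • a i)) =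
          (∫ z, (Φ j (z, grad v z) -
            ∑ i ∈ Finset.range (m + 1), θ' i * Φ j (z, grad w1 z + lam1 z • a' i))) +
          ∫ z, E j (z, τ z, tauMean t k, h * tauPrim t k ((ξ.1 * z.1 + ξ.2 * z.2) / h)) := by
        rw [← integral_add hi1 hi2]
        congr 1; ext z; rw [hEeq z]; ring
      rw [hsum]
      refine (abs_add_le _ _).trans ((add_le_add (htest j hj) ((hEt j hj).trans (min_le_left _ _))).trans ?_)
      linarith

/-- Vitali packing: a bounded open set is filled, up to a set of small measure, by finitely many
disjoint small closed balls, even after each of them is slightly shrunk. -/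
lemma exists_packing {U : Set (ℝ × ℝ)} (hU : IsOpen U) (hUb : Bornology.IsBounded U) {δ κ : ℝ}
    (hδ : 0 < δ) (hκ : 0 < κ) : ∃ (S : Finset (ℝ × ℝ)) (r r' : ℝ × ℝ → ℝ),
      (∀ c ∈ S, 0 < r' c ∧ r' c < r c ∧ r c < δ ∧ Metric.closedBall c (r c) ⊆ U) ∧
      ((S : Set (ℝ × ℝ)).PairwiseDisjoint fun c => Metric.closedBall c (r c)) ∧
      volume.real (U \ ⋃ c ∈ S, Metric.closedBall c (r' c)) ≤ κ := by
  have hUf : volume U ≠ ⊤ := hUb.measure_lt_top.ne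
  obtain ⟨t, r, htc, htU, hr, hcov, hdis⟩ := Besicovitch.exists_disjoint_closedBall_covering_ae
    (volume : Measure (ℝ × ℝ)) (fun x => {ρ | Metric.closedBall x ρ ⊆ U}) U
    (fun x hx d hd => by
      obtain ⟨e, he, hes⟩ := Metric.isOpen_iff.1 hU x hx
      refine ⟨min e d / 2, ?_, half_pos (lt_min he hd), ?_⟩
      · refine (Metric.closedBall_subset_ball ?_).trans hes
        exact (half_lt_self (lt_min he hd)).trans_le (min_le_left _ _)
      · exact (half_lt_self (lt_min he hd)).trans_le (min_le_right _ _))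
    (fun _ => δ) (fun _ _ => hδ)
  have : Countable t := htc.to_subtype
  set B : ℝ × ℝ → Set (ℝ × ℝ) := fun c => Metric.closedBall c (r c) with hB
  have hBU : ∀ c ∈ t, B c ⊆ U := fun c hc => (hr c hc).1
  have hsum : ∑' c : t, volume (B c) ≠ ⊤ := by
    rw [← measure_biUnion htc hdis fun c _ => Metric.isClosed_closedBall.measurableSet]
    exact ((measure_mono (iUnion₂_subset hBU)).trans_lt hUf.lt_top).ne
  have hev := (ENNReal.tendsto_tsum_compl_atTop_zero hsum).eventually
    (gt_mem_nhds (ENNReal.ofReal_pos.2 (half_pos hκ)))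
  obtain ⟨S0, hS0⟩ := hev.exists
  set S : Finset (ℝ × ℝ) := S0.map (Function.Embedding.subtype _) with hS
  have hSt : ∀ c ∈ S, c ∈ t := fun c hc => by
    obtain ⟨x, _, rfl⟩ := Finset.mem_map.1 hc
    exact x.2
  have htail : volume (U \ ⋃ c ∈ S, B c) ≤ ENNReal.ofReal (κ / 2) := by
    have hsub : U \ ⋃ c ∈ S, B c ⊆ (U \ ⋃ c ∈ t, B c) ∪ ⋃ c : {x : t // x ∉ S0}, B c.1 := by
      intro z hz
      by_cases h : z ∈ ⋃ c ∈ t, B c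
      · right
        simp only [mem_iUnion] at h ⊢
        obtain ⟨c, hc, hzc⟩ := h
        refine ⟨⟨⟨c, hc⟩, fun hS0' => hz.2 ?_⟩, hzc⟩
        simp only [mem_iUnion]
        exact ⟨c, Finset.mem_map.2 ⟨⟨c, hc⟩, hS0', rfl⟩, hzc⟩
      · exact Or.inl ⟨hz.1, h⟩
    refine (measure_mono hsub).trans ((measure_union_le _ _).trans ?_)
    rw [hcov, zero_add]
    exact (measure_iUnion_le _).trans hS0.le
  set V := volume.real U with hV
  have hV0 : 0 ≤ V := measureReal_nonneg
  obtain ⟨d, hd0, hd1, hdV⟩ : ∃ d : ℝ, 0 < d ∧ d < 1 ∧ 2 * d * V ≤ κ / 2 := by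
    refine ⟨min (1 / 2) (κ / 4 / (V + 1)), by positivity,
      (min_le_left _ _).trans_lt (by norm_num), ?_⟩
    have : min (1 / 2) (κ / 4 / (V + 1)) * (V + 1) ≤ κ / 4 := by
      rw [← le_div_iff₀ (by positivity)]; exact min_le_right _ _
    have h0 : 0 < min (1 / 2) (κ / 4 / (V + 1)) := by positivity
    nlinarith
  set r' : ℝ × ℝ → ℝ := fun c => (1 - d) * r c with hr'
  have hrp : ∀ c ∈ S, 0 < r c := fun c hc => (hr c (hSt c hc)).2.1
  have hpos : ∀ c ∈ S, 0 < r' c ∧ r' c < r c := fun c hc =>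
    ⟨mul_pos (by linarith) (hrp c hc), by have := hrp c hc; simp only [hr']; nlinarith⟩
  have hdisS : (S : Set (ℝ × ℝ)).PairwiseDisjoint B := hdis.subset fun c hc => hSt c hc
  refine ⟨S, r, r', fun c hc => ⟨(hpos c hc).1, (hpos c hc).2, (hr c (hSt c hc)).2.2,
    hBU c (hSt c hc)⟩, hdisS, ?_⟩
  have hann : ∀ c ∈ S, volume.real (B c \ Metric.closedBall c (r' c)) ≤ 2 * d * volume.real (B c) := by
    intro c hc
    rw [measureReal_sdiff (Metric.closedBall_subset_closedBall (hpos c hc).2.le)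
      Metric.isClosed_closedBall.measurableSet measure_closedBall_lt_top.ne]
    simp only [hB]
    rw [Measure.addHaar_real_closedBall _ _ (hrp c hc).le,
      Measure.addHaar_real_closedBall _ _ (hpos c hc).1.le]
    have hfr : Module.finrank ℝ (ℝ × ℝ) = 2 := by simp
    rw [hfr]
    have h0 : 0 ≤ volume.real (Metric.ball (0 : ℝ × ℝ) 1) := measureReal_nonneg
    have h1 : r c ^ 2 - r' c ^ 2 ≤ 2 * d * r c ^ 2 := by
      simp only [hr']; nlinarith [mul_nonneg (sq_nonneg d) (sq_nonneg (r c))]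
    nlinarith [mul_le_mul_of_nonneg_right h1 h0]
  have hsub : U \ ⋃ c ∈ S, Metric.closedBall c (r' c) ⊆
      (U \ ⋃ c ∈ S, B c) ∪ ⋃ c ∈ S, (B c \ Metric.closedBall c (r' c)) := by
    intro z hz
    by_cases h : z ∈ ⋃ c ∈ S, B c
    · right
      simp only [mem_iUnion] at h ⊢
      obtain ⟨c, hc, hzc⟩ := h
      refine ⟨c, hc, hzc, fun hz' => hz.2 ?_⟩
      simp only [mem_iUnion]
      exact ⟨c, hc, hz'⟩
    · exact Or.inl ⟨hz.1, h⟩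
  have hf1 : volume (⋃ c ∈ S, (B c \ Metric.closedBall c (r' c))) ≠ ⊤ :=
    ((measure_mono (iUnion₂_subset fun c hc => sdiff_subset.trans (hBU c (hSt c hc)))).trans_lt
      hUf.lt_top).ne
  have hf2 : volume (U \ ⋃ c ∈ S, B c) ≠ ⊤ := ((measure_mono sdiff_subset).trans_lt hUf.lt_top).ne
  have hsumB : ∑ c ∈ S, volume.real (B c) ≤ V := by
    rw [← measureReal_biUnion_finset hdisS (fun c _ => Metric.isClosed_closedBall.measurableSet)
      (fun c hc => ((measure_mono (hBU c (hSt c hc))).trans_lt hUf.lt_top).ne)]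
    exact measureReal_mono (iUnion₂_subset fun c hc => hBU c (hSt c hc)) hUf
  calc volume.real (U \ ⋃ c ∈ S, Metric.closedBall c (r' c))
      ≤ volume.real ((U \ ⋃ c ∈ S, B c) ∪ ⋃ c ∈ S, (B c \ Metric.closedBall c (r' c))) :=
        measureReal_mono hsub (measure_union_lt_top hf2.lt_top hf1.lt_top).ne
    _ ≤ volume.real (U \ ⋃ c ∈ S, B c) + volume.real (⋃ c ∈ S, (B c \ Metric.closedBall c (r' c))) :=
        measureReal_union_le _ _
    _ ≤ κ / 2 + ∑ c ∈ S, volume.real (B c \ Metric.closedBall c (r' c)) := by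
        refine add_le_add ?_ (measureReal_biUnion_finset_le _ _)
        exact ENNReal.toReal_le_of_le_ofReal (half_pos hκ).le htail
    _ ≤ κ / 2 + ∑ c ∈ S, 2 * d * volume.real (B c) := by gcongr with c hc; exact hann c hc
    _ ≤ κ / 2 + κ / 2 := by
        rw [← Finset.mul_sum]
        gcongr
        refine le_trans ?_ hdV
        gcongr
    _ = κ := by ring

set_option maxHeartbeats 1000000 in
/-- Realization of a continuously varying finite mixture of gradients: on a fine packing by small
balls the mixture is almost homogeneous, and `relax_tile` applies on each ball. -/
theorem relax_field (J m : ℕ) {Φ : ℕ → (ℝ × ℝ) × (ℝ × ℝ) → ℝ} (hΦ : ∀ j, Continuous (Φ j))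
    {U : Set (ℝ × ℝ)} (hU : IsOpen U) (hUb : Bornology.IsBounded U) {w : ℝ × ℝ → ℝ}
    (hw : ContDiff ℝ (⊤ : ℕ∞) w) {θ : ℕ → ℝ × ℝ → ℝ} {A : ℕ → ℝ × ℝ → ℝ × ℝ}
    (hθc : ∀ i, Continuous (θ i)) (hAc : ∀ i, Continuous (A i)) (hθ0 : ∀ i z, 0 ≤ θ i z)
    (hθ1 : ∀ z, ∑ i ∈ Finset.range (m + 1), θ i z = 1)
    (hbar : ∀ z, ∑ i ∈ Finset.range (m + 1), θ i z • A i z = grad w z) {lo hi : ℝ}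
    (hbox : ∀ i ≤ m, ∀ z ∈ U, lo ≤ (A i z).2 ∧ (A i z).2 ≤ hi) {η : ℝ} (hη : 0 < η) :
    ∃ v : ℝ × ℝ → ℝ, ContDiff ℝ (⊤ : ℕ∞) v ∧
      (∃ K, IsCompact K ∧ K ⊆ U ∧ ∀ z ∉ K, v z = w z) ∧
      (∀ z ∈ U, lo - η ≤ pxF v z ∧ pxF v z ≤ hi + η) ∧
      ∀ j < J, |(∫ z in U, Φ j (z, grad v z)) -
        ∫ z in U, ∑ i ∈ Finset.range (m + 1), θ i z * Φ j (z, A i z)| ≤ η := by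
  have hcl : IsCompact (closure U) := hUb.isCompact_closure
  have hgw : Continuous (grad w) := continuous_grad hw
  set V := volume.real U with hV
  have hV0 : 0 ≤ V := measureReal_nonneg
  set Ψ : ℕ → (ℝ × ℝ) × (ℝ × ℝ) × ℝ → ℝ := fun j q => ∑ i ∈ Finset.range (m + 1),
    θ i q.1 * Φ j (q.2.1, grad w q.2.1 + q.2.2 • (A i q.1 - grad w q.1)) with hΨ
  have hΨc : ∀ j, Continuous (Ψ j) := fun j => by
    have := hΦ j
    refine continuous_finsetSum _ fun i _ => ?_
    have := hθc i
    have := hAc i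
    fun_prop
  have hΨ0 : ∀ j c z, Ψ j (c, z, 0) = Φ j (z, grad w z) := fun j c z => by
    simp only [hΨ, zero_smul, add_zero]
    rw [← Finset.sum_mul, hθ1, one_mul]
  have hΨ1 : ∀ j z, Ψ j (z, z, 1) = ∑ i ∈ Finset.range (m + 1), θ i z * Φ j (z, A i z) := fun j z => by
    simp only [hΨ, one_smul, add_sub_cancel]
  set Q : Set ((ℝ × ℝ) × (ℝ × ℝ) × ℝ) := closure U ×ˢ closure U ×ˢ Icc (0 : ℝ) 1 with hQ
  have hQc : IsCompact Q := hcl.prod (hcl.prod isCompact_Icc)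
  have hvec : Continuous fun q => fun j : Fin J => Ψ j q := continuous_pi fun j => hΨc j
  obtain ⟨C, hC⟩ := hQc.exists_bound_of_continuousOn hvec.continuousOn
  set ω := η / 3 / (V + 1) with hω
  have hωp : 0 < ω := by positivity
  obtain ⟨δ1, hδ1, hu1⟩ := Metric.uniformContinuousOn_iff.1
    (hQc.uniformContinuousOn_of_continuous hvec.continuousOn) ω hωp
  have hgap : Continuous fun z => fun i : Fin (m + 1) => (A i z).2 - pxF w z :=
    continuous_pi fun i => (hAc i).snd.sub (contDiff_pxF hw).continuous
  obtain ⟨δ2, hδ2, hu2⟩ := Metric.uniformContinuousOn_iff.1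
    (hcl.uniformContinuousOn_of_continuous hgap.continuousOn) (η / 2) (half_pos hη)
  set κ := η / 6 / (|C| + 1) with hκ
  obtain ⟨S, r, r', hr, hdis, hmeas⟩ := exists_packing hU hUb (lt_min hδ1 hδ2)
    (show 0 < κ by positivity)
  set ηt := min (η / 2) (η / 3 / (S.card + 1)) with hηt
  have hηtp : 0 < ηt := by positivity
  set B : ℝ × ℝ → Set (ℝ × ℝ) := fun c => Metric.closedBall c (r c) with hB
  have hstep : ∀ c, ∃ (v ρ : ℝ × ℝ → ℝ), c ∈ S → ContDiff ℝ (⊤ : ℕ∞) v ∧ Continuous ρ ∧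
      (∀ z, ρ z ∈ Icc (0 : ℝ) 1) ∧ (∀ z ∉ B c, ρ z = 0) ∧
      (∀ z ∈ Metric.closedBall c (r' c), ρ z = 1) ∧ (∀ z ∉ B c, v z = w z) ∧
      (∀ z lo hi, (∀ i ≤ m, lo ≤ pxF w z + ρ z * (A i c - grad w c).2 ∧
        pxF w z + ρ z * (A i c - grad w c).2 ≤ hi) → lo - ηt ≤ pxF v z ∧ pxF v z ≤ hi + ηt) ∧
      ∀ j < J, |∫ z, (Φ j (z, grad v z) - Ψ j (c, z, ρ z))| ≤ ηt := by
    intro c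
    by_cases hc : c ∈ S
    · set ρ : ContDiffBump c := ⟨r' c, r c, (hr c hc).1, (hr c hc).2.1⟩ with hρ
      have hts : tsupport (ρ : ℝ × ℝ → ℝ) = B c := ρ.tsupport_eq
      have ha0 : ∑ i ∈ Finset.range (m + 1), θ i c • (A i c - grad w c) = 0 := by
        simp_rw [smul_sub]
        rw [Finset.sum_sub_distrib, hbar, ← Finset.sum_smul, hθ1, one_smul, sub_self]
      obtain ⟨v, hv, hoff, hbx, ht⟩ := relax_tile J hΦ m (fun i => θ i c)
        (fun i => A i c - grad w c) w ρ hw (ρ.contDiff (n := (⊤ : ℕ∞))) ρ.hasCompactSupport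
        (fun z => ⟨ρ.nonneg, ρ.le_one⟩) (fun i => hθ0 i c) (hθ1 c) ha0 ηt hηtp
      rw [hts] at hoff
      exact ⟨v, ρ, fun _ => ⟨hv, ρ.continuous, fun z => ⟨ρ.nonneg, ρ.le_one⟩,
        fun z hz => image_eq_zero_of_notMem_tsupport (by rwa [hts]),
        fun z hz => ρ.one_of_mem_closedBall hz, hoff, hbx, ht⟩⟩
    · exact ⟨w, w, fun h => absurd h hc⟩
  choose vc ρ hvc using hstep
  set v : ℝ × ℝ → ℝ := fun z => w z + ∑ c ∈ S, (vc c z - w z) with hv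
  have hvs : ContDiff ℝ (⊤ : ℕ∞) v :=
    hw.add (ContDiff.sum fun c hc => ((hvc c hc).1).sub hw)
  have hBcl : ∀ c, IsClosed (B c) := fun c => Metric.isClosed_closedBall
  have huniq : ∀ c ∈ S, ∀ c' ∈ S, c' ≠ c → ∀ z ∈ B c, z ∉ B c' := fun c hc c' hc' hne z hz hz' =>
    (disjoint_left.1 (hdis hc' hc hne)) hz' hz
  have hgin : ∀ c ∈ S, ∀ z ∈ B c, grad v z = grad (vc c) z := by
    intro c hc z hz
    refine grad_eq_off (K := ⋃ c' ∈ S.erase c, B c')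
      ((S.erase c).finite_toSet.isClosed_biUnion fun c' _ => hBcl c') (fun y hy => ?_) ?_
    · simp only [mem_iUnion, not_exists] at hy
      simp only [hv]
      rw [Finset.sum_eq_single c (fun c' hc' hne => ?_) fun h => absurd hc h]
      · ring
      · rw [(hvc c' hc').2.2.2.2.2.1 y (hy c' (Finset.mem_erase.2 ⟨hne, hc'⟩)), sub_self]
    · simp only [mem_iUnion, not_exists]
      intro c' hc'
      exact huniq c hc c' (Finset.mem_of_mem_erase hc') (Finset.ne_of_mem_erase hc') z hz
  have hvoff : ∀ z ∉ ⋃ c ∈ S, B c, v z = w z := by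
    intro z hz
    simp only [mem_iUnion, not_exists] at hz
    simp only [hv]
    rw [Finset.sum_eq_zero fun c hc => by rw [(hvc c hc).2.2.2.2.2.1 z (hz c hc), sub_self], add_zero]
  have hKcl : IsClosed (⋃ c ∈ S, B c) := S.finite_toSet.isClosed_biUnion fun c' _ => hBcl c'
  have hcU : ∀ c ∈ S, c ∈ closure U := fun c hc =>
    subset_closure ((hr c hc).2.2.2 (Metric.mem_closedBall_self ((hr c hc).1.trans (hr c hc).2.1).le))
  have hbw : ∀ z ∈ U, lo ≤ pxF w z ∧ pxF w z ≤ hi := by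
    intro z hz
    have e : pxF w z = ∑ i ∈ Finset.range (m + 1), θ i z * (A i z).2 := by
      have := congrArg Prod.snd (hbar z)
      rw [Prod.snd_sum] at this
      exact this.symm
    have e1 : ∀ s : ℝ, ∑ i ∈ Finset.range (m + 1), θ i z * s = s := fun s => by
      rw [← Finset.sum_mul, hθ1, one_mul]
    rw [e]
    constructor
    · rw [← e1 lo]
      exact Finset.sum_le_sum fun i hi' => mul_le_mul_of_nonneg_left
        (hbox i (by simpa [Nat.lt_succ_iff] using hi') z hz).1 (hθ0 i z)
    · rw [← e1 hi]
      exact Finset.sum_le_sum fun i hi' => mul_le_mul_of_nonneg_left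
        (hbox i (by simpa [Nat.lt_succ_iff] using hi') z hz).2 (hθ0 i z)
  refine ⟨v, hvs, ⟨_, S.finite_toSet.isCompact_biUnion fun c _ => isCompact_closedBall c (r c),
    iUnion₂_subset fun c hc => (hr c hc).2.2.2, hvoff⟩, fun z hz => ?_, fun j hj => ?_⟩
  · have hwz := hbw z hz
    by_cases hzK : z ∈ ⋃ c ∈ S, B c
    · simp only [mem_iUnion] at hzK
      obtain ⟨c, hc, hzc⟩ := hzK
      obtain ⟨_, _, hρ01, _, _, _, hbx, _⟩ := hvc c hc
      have hpx : pxF v z = pxF (vc c) z := congrArg Prod.snd (hgin c hc z hzc)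
      have := hbx z (lo - η / 2) (hi + η / 2) fun i hi' => ?_
      · rw [hpx]
        have := min_le_left (η / 2) (η / 3 / (S.card + 1))
        exact ⟨by linarith, by linarith⟩
      · have hd : dist c z < δ2 := by
          rw [dist_comm]
          exact (Metric.mem_closedBall.1 hzc).trans_lt ((hr c hc).2.2.1.trans_le (min_le_right _ _))
        have h1 := hu2 c (hcU c hc) z (subset_closure hz) hd
        have h2 := (dist_le_pi_dist _ _ (⟨i, by omega⟩ : Fin (m + 1))).trans h1.le
        rw [Real.dist_eq] at h2
        have h3 := abs_le.1 h2
        simp only at h3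
        have hb := hbox i hi' z hz
        obtain ⟨p0, p1⟩ := hρ01 z
        have e : pxF w z + ρ c z * (A i c - grad w c).2 = (1 - ρ c z) * pxF w z + ρ c z * (A i z).2 +
            ρ c z * ((A i c).2 - pxF w c - ((A i z).2 - pxF w z)) := by
          simp only [grad, Prod.snd_sub]; ring
        rw [e]
        have q1 : 0 ≤ 1 - ρ c z := by linarith
        constructor
        · nlinarith [mul_le_mul_of_nonneg_left hwz.1 q1, mul_le_mul_of_nonneg_left hb.1 p0,
            mul_le_mul_of_nonneg_left h3.1 p0]
        · nlinarith [mul_le_mul_of_nonneg_left hwz.2 q1, mul_le_mul_of_nonneg_left hb.2 p0,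
            mul_le_mul_of_nonneg_left h3.2 p0]
    · have hpx : pxF v z = pxF w z := congrArg Prod.snd (grad_eq_off hKcl hvoff hzK)
      rw [hpx]
      exact ⟨by linarith, by linarith⟩
  · set X : ℝ × ℝ → ℝ × ℝ → ℝ := fun c z => Φ j (z, grad (vc c) z) - Ψ j (c, z, ρ c z) with hX
    have hΦj := hΦ j
    have hXc : ∀ c ∈ S, Continuous (X c) := fun c hc => by
      have h1 := continuous_grad (hvc c hc).1
      have h2 := (hvc c hc).2.1
      have h3 := hΨc j
      exact (hΦj.comp (by fun_prop)).sub (h3.comp (by fun_prop))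
    have hX0 : ∀ c ∈ S, ∀ z ∉ B c, X c z = 0 := fun c hc z hz => by
      simp only [hX]
      rw [(hvc c hc).2.2.2.1 z hz, hΨ0, grad_eq_off (hBcl c) (hvc c hc).2.2.2.2.2.1 hz, sub_self]
    set Y : ℝ × ℝ → ℝ := fun z => Φ j (z, grad v z) - Ψ j (z, z, 1) - ∑ c ∈ S, X c z with hY
    have hgv := continuous_grad hvs
    have c1 : Continuous fun z => Φ j (z, grad v z) := hΦj.comp (by fun_prop)
    have c2 : Continuous fun z => Ψ j (z, z, 1) := (hΨc j).comp (by fun_prop)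
    have c3 : Continuous fun z => ∑ c ∈ S, X c z := continuous_finsetSum _ fun c hc => hXc c hc
    have hYc : Continuous Y := (c1.sub c2).sub c3
    have hInt : ∀ {g : ℝ × ℝ → ℝ}, Continuous g → IntegrableOn g U := fun hg =>
      (hg.continuousOn.integrableOn_compact hcl).mono_set subset_closure
    have hCb : ∀ q ∈ Q, |Ψ j q| ≤ |C| := fun q hq =>
      (norm_le_pi_norm (fun j : Fin J => Ψ j q) ⟨j, hj⟩).trans ((hC q hq).trans (le_abs_self _))
    have hQm : ∀ c ∈ closure U, ∀ z ∈ U, ∀ s ∈ Icc (0 : ℝ) 1, (c, z, s) ∈ Q := fun c hc z hz s hs =>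
      ⟨hc, subset_closure hz, hs⟩
    have hYin : ∀ c ∈ S, ∀ z ∈ B c, Y z = Ψ j (c, z, ρ c z) - Ψ j (z, z, 1) := by
      intro c hc z hz
      simp only [hY]
      rw [Finset.sum_eq_single c (fun c' hc' hne => hX0 c' hc' z (huniq c hc c' hc' hne z hz))
        fun h => absurd hc h, hgin c hc z hz]
      simp only [hX]; ring
    have hYout : ∀ z ∉ ⋃ c ∈ S, B c, Y z = Ψ j (z, z, 0) - Ψ j (z, z, 1) := by
      intro z hz
      simp only [hY]
      rw [hΨ0, grad_eq_off hKcl hvoff hz]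
      simp only [mem_iUnion, not_exists] at hz
      rw [Finset.sum_eq_zero fun c hc => hX0 c hc z (hz c hc), sub_zero]
    have hY2 : ∀ z ∈ U, |Y z| ≤ 2 * |C| := by
      intro z hz
      have h1 := hCb _ (hQm z (subset_closure hz) z hz 1 (by simp))
      by_cases hzK : z ∈ ⋃ c ∈ S, B c
      · simp only [mem_iUnion] at hzK
        obtain ⟨c, hc, hzc⟩ := hzK
        rw [hYin c hc z hzc]
        have h2 := hCb _ (hQm c (hcU c hc) z hz _ ((hvc c hc).2.2.1 z))
        exact (abs_sub _ _).trans (by linarith)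
      · rw [hYout z hzK]
        have h2 := hCb _ (hQm z (subset_closure hz) z hz 0 (by simp))
        exact (abs_sub _ _).trans (by linarith)
    set I : Set (ℝ × ℝ) := ⋃ c ∈ S, Metric.closedBall c (r' c) with hI
    have hIm : MeasurableSet I :=
      (S.finite_toSet.isClosed_biUnion fun c' _ => Metric.isClosed_closedBall).measurableSet
    have hYI : ∀ z ∈ U ∩ I, |Y z| ≤ ω := by
      rintro z ⟨hz, hzI⟩
      simp only [hI, mem_iUnion] at hzI
      obtain ⟨c, hc, hzc⟩ := hzI
      have hzB : z ∈ B c := Metric.closedBall_subset_closedBall (hr c hc).2.1.le hzc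
      rw [hYin c hc z hzB, (hvc c hc).2.2.2.2.1 z hzc]
      have hd : dist ((c, z, 1) : (ℝ × ℝ) × (ℝ × ℝ) × ℝ) (z, z, 1) < δ1 := by
        have : dist c z < δ1 := by
          rw [dist_comm]
          exact (Metric.mem_closedBall.1 hzB).trans_lt ((hr c hc).2.2.1.trans_le (min_le_left _ _))
        simpa [Prod.dist_eq, hδ1] using this
      have h1 := hu1 _ (hQm c (hcU c hc) z hz 1 (by simp)) _ (hQm z (subset_closure hz) z hz 1 (by simp)) hd
      exact (dist_le_pi_dist _ _ (⟨j, hj⟩ : Fin J)).trans h1.le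
    have hUf : volume U < ⊤ := hUb.measure_lt_top
    have hYint : |∫ z in U, Y z| ≤ η / 3 + η / 3 := by
      rw [← integral_inter_add_sdiff hIm (hInt hYc)]
      refine (abs_add_le _ _).trans (add_le_add ?_ ?_)
      · refine (norm_setIntegral_le_of_norm_le_const (f := Y)
          ((measure_mono inter_subset_left).trans_lt hUf) hYI).trans ?_
        calc ω * volume.real (U ∩ I) ≤ ω * (V + 1) := by
              have := measureReal_mono (inter_subset_left : U ∩ I ⊆ U) hUf.ne
              gcongr; linarith
          _ = η / 3 := div_mul_cancel₀ _ (by positivity)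
      · refine (norm_setIntegral_le_of_norm_le_const (f := Y)
          ((measure_mono sdiff_subset).trans_lt hUf) fun z hz => hY2 z hz.1).trans ?_
        calc 2 * |C| * volume.real (U \ I) ≤ 2 * (|C| + 1) * κ := by gcongr; linarith
          _ = η / 3 := by rw [hκ]; field_simp; norm_num
    have hXint : |∫ z in U, ∑ c ∈ S, X c z| ≤ η / 3 := by
      rw [integral_finsetSum _ fun c hc => hInt (hXc c hc)]
      have e : ∀ c ∈ S, |∫ z in U, X c z| ≤ ηt := fun c hc => by
        rw [setIntegral_eq_integral_of_forall_compl_eq_zero fun z hz =>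
          hX0 c hc z fun hz' => hz ((hr c hc).2.2.2 hz')]
        exact (hvc c hc).2.2.2.2.2.2.2 j hj
      refine (Finset.abs_sum_le_sum_abs _ _).trans ((Finset.sum_le_sum e).trans ?_)
      rw [Finset.sum_const, nsmul_eq_mul]
      have h1 : ηt * (S.card + 1) ≤ η / 3 := by
        rw [← le_div_iff₀ (by positivity)]; exact min_le_right _ _
      nlinarith
    have hfin : (∫ z in U, Φ j (z, grad v z)) -
        ∫ z in U, ∑ i ∈ Finset.range (m + 1), θ i z * Φ j (z, A i z) =
        (∫ z in U, Y z) + ∫ z in U, ∑ c ∈ S, X c z := by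
      simp_rw [← hΨ1]
      rw [← integral_sub (hInt c1) (hInt c2), ← integral_add (hInt hYc) (hInt c3)]
      congr 1; ext z; simp only [hY]; ring
    rw [hfin]
    exact (abs_add_le _ _).trans (by linarith)

/-! ### Recovery sequences -/

lemma setIntegral_Om_eq {T L : ℝ} {g : ℝ × ℝ → ℝ} (hg : ∀ z, L ≤ |z.2| → g z = 0) :
    ∫ z in Om T, g z = ∫ z in Ioo 0 T ×ˢ Ioo (-L) L, g z := by
  have h1 : ∫ z in Om T, g z = ∫ z in Icc 0 T ×ˢ Ioo (-L) L, g z := by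
    refine setIntegral_eq_of_subset_of_forall_sdiff_eq_zero (measurableSet_Om T)
      (prod_mono_right (subset_univ _)) fun z hz => hg z ?_
    by_contra h
    push Not at h
    exact hz.2 ⟨hz.1.1, abs_lt.1 h⟩
  rw [h1]
  refine setIntegral_congr_set ?_
  exact Measure.set_prod_ae_eq Ioo_ae_eq_Icc.symm (ae_eq_refl _)

set_option maxHeartbeats 1000000 in
/-- Every Young measure of finite cost is approximated by the gradient structure of a smooth
potential `w`: the density is `w_x`, the current is `-w_t`, and the cost of the current is computed
with the mobility of the density itself. -/
theorem exists_approx_potential {T : ℝ} (hT : 0 < T) {f σ : ℝ → ℝ} (hf : Continuous f) (hσ : Continuous σ)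
    (hσ0 : ∀ l ∈ Icc (0 : ℝ) 1, 0 ≤ σ l) (hσpos : ∀ l ∈ Ioo (0 : ℝ) 1, 0 < σ l) (μ : YM T) {c : ℝ}
    (hc : 0 ≤ c) (hμ : calI f σ T μ ≤ ENNReal.ofReal c) (J : ℕ) {F : ℕ → ℝ → ℝ}
    {k : ℕ → ℝ × ℝ → ℝ} (hF : ∀ j, Continuous (F j)) (hk : ∀ j, Continuous (k j))
    (hkc : ∀ j, HasCompactSupport (k j)) {η : ℝ} (hη : 0 < η) :
    ∃ (L l lo hi : ℝ) (w : ℝ × ℝ → ℝ), 0 < L ∧ 0 < lo ∧ hi < 1 ∧ l ∈ Icc lo hi ∧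
      ContDiff ℝ (⊤ : ℕ∞) w ∧
      (∀ z, pxF w z ∈ Icc lo hi) ∧
      (∀ z ∈ Om T, L ≤ |z.2| → pxF w z = l ∧ -ptF w z = f l) ∧
      ∫ z in Ioo 0 T ×ˢ Ioo (-L) L, (-ptF w z - f (pxF w z)) ^ 2 / σ (pxF w z) ≤ 2 * c + η ∧
      ∀ j < J, |(∫ z in Om T, F j (pxF w z) * k j z) - ∫ z in Om T, μ.mom (F j) z * k j z| ≤ η := by
  obtain ⟨L, m, Λ, θ, w, hL, hΛ, hΛm, hθc, hθ0, hθ1, hw, hwx, hout, hcost, htest⟩ :=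
    layerC hT hf hσ hσ0 hσpos μ hc hμ J hF hk hkc (half_pos hη)
  have hΛ0 := hΛm 0 (Nat.zero_le _)
  have hΛl := hΛm m le_rfl
  have hΛb : ∀ i ≤ m, Λ 0 ≤ Λ i ∧ Λ i ≤ Λ m := fun i hi =>
    ⟨hΛ.monotone (Nat.zero_le _), hΛ.monotone hi⟩
  have hrange : ∀ i ∈ Finset.range (m + 1), i ≤ m := fun i hi => by
    simpa [Nat.lt_succ_iff] using hi
  set lo := Λ 0 / 2 with hlo
  set hi := (1 + Λ m) / 2 with hhi
  have hlo0 : 0 < lo := half_pos hΛ0.1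
  have hloΛ : lo ≤ Λ 0 := by have := hΛ0.1; rw [hlo]; linarith
  have hhiΛ : Λ m ≤ hi := by have := hΛl.2; rw [hhi]; linarith
  have hhi1 : hi < 1 := by have := hΛl.2; rw [hhi]; linarith
  have hlohi : lo ≤ hi := hloΛ.trans ((hΛb m le_rfl).1.trans hhiΛ)
  obtain ⟨x0, hx0, hmin⟩ := isCompact_Icc.exists_isMinOn (nonempty_Icc.2 hlohi) hσ.continuousOn
  set s0 := σ x0 with hs0
  have hs0p : 0 < s0 := hσpos x0 ⟨hlo0.trans_le hx0.1, hx0.2.trans_lt hhi1⟩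
  have hsl : ∀ l ∈ Icc lo hi, s0 ≤ σ l := fun l hl => hmin hl
  have hΛI : ∀ i ≤ m, Λ i ∈ Icc lo hi := fun i him =>
    ⟨hloΛ.trans (hΛb i him).1, (hΛb i him).2.trans hhiΛ⟩
  set Θs : ℝ × ℝ → ℝ := fun z => ∑ i ∈ Finset.range (m + 1), θ i z * σ (Λ i) with hΘs
  set Θf : ℝ × ℝ → ℝ := fun z => ∑ i ∈ Finset.range (m + 1), θ i z * f (Λ i) with hΘf
  have hΘsc : Continuous Θs := continuous_finsetSum _ fun i _ => (hθc i).mul continuous_const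
  have hΘfc : Continuous Θf := continuous_finsetSum _ fun i _ => (hθc i).mul continuous_const
  have hΘsp : ∀ z, 0 < Θs z := fun z => by
    refine hs0p.trans_le ?_
    calc s0 = ∑ i ∈ Finset.range (m + 1), θ i z * s0 := by rw [← Finset.sum_mul, hθ1, one_mul]
      _ ≤ Θs z := Finset.sum_le_sum fun i hi' =>
        mul_le_mul_of_nonneg_left (hsl _ (hΛI i (hrange i hi'))) (hθ0 i z)
  set P : ℝ × ℝ → ℝ := fun z => (-ptF w z - Θf z) / Θs z with hP
  have hPc : Continuous P := ((contDiff_ptF hw).continuous.neg.sub hΘfc).div₀ hΘsc fun z => (hΘsp z).ne'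
  set A : ℕ → ℝ × ℝ → ℝ × ℝ := fun i z => (-(f (Λ i) + σ (Λ i) * P z), Λ i) with hA
  have hAc : ∀ i, Continuous (A i) := fun i => by simp only [hA]; fun_prop
  have hbar : ∀ z, ∑ i ∈ Finset.range (m + 1), θ i z • A i z = grad w z := by
    intro z
    ext
    · rw [Prod.fst_sum]
      have e : ∀ i, (θ i z • A i z).1 = -(θ i z * f (Λ i)) - θ i z * σ (Λ i) * P z := fun i => by
        simp only [hA, Prod.smul_fst, smul_eq_mul]; ring
      simp_rw [e]
      rw [Finset.sum_sub_distrib, Finset.sum_neg_distrib, ← Finset.sum_mul]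
      change -Θf z - Θs z * P z = ptF w z
      simp only [hP]
      rw [mul_div_cancel₀ _ (hΘsp z).ne']; ring
    · rw [Prod.snd_sum]
      exact (hwx z).symm
  set U : Set (ℝ × ℝ) := Ioo 0 T ×ˢ Ioo (-L) L with hU
  have hUo : IsOpen U := isOpen_Ioo.prod isOpen_Ioo
  have hUb : Bornology.IsBounded U := (Metric.isBounded_Ioo 0 T).prod (Metric.isBounded_Ioo (-L) L)
  set Φ : ℕ → (ℝ × ℝ) × (ℝ × ℝ) → ℝ := fun j q => Nat.casesOn j
    ((-q.2.1 - f q.2.2) ^ 2 / max (σ q.2.2) s0) (fun j => F j q.2.2 * k j q.1) with hΦ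
  have hΦ0 : ∀ q, Φ 0 q = (-q.2.1 - f q.2.2) ^ 2 / max (σ q.2.2) s0 := fun _ => rfl
  have hΦs : ∀ j q, Φ (j + 1) q = F j q.2.2 * k j q.1 := fun _ _ => rfl
  have hΦc : ∀ j, Continuous (Φ j) := by
    intro j
    cases j with
    | zero =>
      simp only [hΦ]
      exact Continuous.div₀ (by fun_prop) (by fun_prop) fun q => (lt_max_of_lt_right hs0p).ne'
    | succ j =>
      have := hF j
      have := hk j
      simp only [hΦ]; fun_prop
  set ηr := min (η / 2) (min (Λ 0 / 2) ((1 - Λ m) / 2)) with hηr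
  have hηrp : 0 < ηr := lt_min (half_pos hη) (lt_min hlo0 (by have := hΛl.2; linarith))
  have hηr1 : ηr ≤ η / 2 := min_le_left _ _
  have hηr2 : ηr ≤ Λ 0 / 2 := (min_le_right _ _).trans (min_le_left _ _)
  have hηr3 : ηr ≤ (1 - Λ m) / 2 := (min_le_right _ _).trans (min_le_right _ _)
  obtain ⟨v, hv, ⟨K, hK, hKU, hoff⟩, hvbox, hvt⟩ := relax_field (J + 1) m hΦc hUo hUb hw hθc hAc hθ0
    hθ1 hbar (lo := Λ 0) (hi := Λ m) (fun i him z _ => hΛb i him) hηrp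
  have hgoff : ∀ z ∉ K, grad v z = grad w z := fun z hz => grad_eq_off hK.isClosed hoff hz
  have hvI : ∀ z, pxF v z ∈ Icc lo hi := by
    intro z
    by_cases hz : z ∈ K
    · have := hvbox z (hKU hz)
      exact ⟨by rw [hlo]; linarith, by rw [hhi]; linarith⟩
    · have e : pxF v z = pxF w z := congrArg Prod.snd (hgoff z hz)
      have e1 : ∀ s : ℝ, ∑ i ∈ Finset.range (m + 1), θ i z * s = s := fun s => by
        rw [← Finset.sum_mul, hθ1, one_mul]
      rw [e, hwx]
      constructor
      · rw [← e1 lo]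
        exact Finset.sum_le_sum fun i hi' => mul_le_mul_of_nonneg_left (hΛI i (hrange i hi')).1 (hθ0 i z)
      · rw [← e1 hi]
        exact Finset.sum_le_sum fun i hi' => mul_le_mul_of_nonneg_left (hΛI i (hrange i hi')).2 (hθ0 i z)
  refine ⟨L, Λ 0, lo, hi, v, hL, hlo0, hhi1, hΛI 0 (Nat.zero_le _), hv, hvI, fun z hz hzL => ?_, ?_,
    fun j hj => ?_⟩
  · have hzK : z ∉ K := fun h => not_lt.2 hzL (abs_lt.2 (hKU h).2)
    have e := hgoff z hzK
    have e1 : ptF v z = ptF w z := congrArg Prod.fst e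
    have e2 : pxF v z = pxF w z := congrArg Prod.snd e
    rw [e1, e2]
    exact hout z hz hzL
  · have h0 := (abs_le.1 (hvt 0 (Nat.succ_pos _))).2
    have e1 : ∫ z in U, Φ 0 (z, grad v z) =
        ∫ z in U, (-ptF v z - f (pxF v z)) ^ 2 / σ (pxF v z) := by
      refine integral_congr_ae (Eventually.of_forall fun z => ?_)
      simp only [hΦ0, grad]
      rw [max_eq_left (hsl _ (hvI z))]
    have e2 : ∫ z in U, ∑ i ∈ Finset.range (m + 1), θ i z * Φ 0 (z, A i z) =
        ∫ z in U, (-ptF w z - Θf z) ^ 2 / Θs z := by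
      refine integral_congr_ae (Eventually.of_forall fun z => ?_)
      have e3 : ∀ i ∈ Finset.range (m + 1), θ i z * Φ 0 (z, A i z) = θ i z * σ (Λ i) * P z ^ 2 := by
        intro i hi'
        have hs := hsl _ (hΛI i (hrange i hi'))
        have hsp : 0 < σ (Λ i) := hs0p.trans_le hs
        simp only [hΦ0, hA]
        rw [max_eq_left hs]
        field_simp
        ring
      simp only
      rw [Finset.sum_congr rfl e3, ← Finset.sum_mul]
      change Θs z * P z ^ 2 = _
      simp only [hP]
      have := (hΘsp z).ne'
      field_simp
    rw [e1, e2] at h0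
    linarith
  · obtain ⟨hk0, hkt⟩ := htest j hj
    have h0 := hvt (j + 1) (by omega)
    have e1 : ∫ z in U, Φ (j + 1) (z, grad v z) = ∫ z in Om T, F j (pxF v z) * k j z := by
      rw [setIntegral_Om_eq fun z hz => by rw [hk0 z hz, mul_zero]]
      rfl
    have e2 : ∫ z in U, ∑ i ∈ Finset.range (m + 1), θ i z * Φ (j + 1) (z, A i z) =
        ∫ z in Om T, (∑ i ∈ Finset.range (m + 1), θ i z * F j (Λ i)) * k j z := by
      rw [setIntegral_Om_eq fun z hz => by rw [hk0 z hz, mul_zero]]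
      refine integral_congr_ae (Eventually.of_forall fun z => ?_)
      simp only [hΦs, hA, Finset.sum_mul, mul_assoc]
    rw [e1, e2] at h0
    calc _ ≤ _ := abs_sub_le _ (∫ z in Om T, (∑ i ∈ Finset.range (m + 1), θ i z * F j (Λ i)) * k j z) _
      _ ≤ η := by linarith

/-- The density `w_x` of a potential `w`, as a continuous path. -/
def potU {T : ℝ} {w : ℝ × ℝ → ℝ} (hw : ContDiff ℝ (⊤ : ℕ∞) w)
    (h01 : ∀ z, pxF w z ∈ Icc (0 : ℝ) 1) : cU T where
  toFun := pxF w
  meas := (contDiff_pxF hw).continuous.measurable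
  mem01 := h01
  cont := by
    intro t₀ ht₀ δ hδ
    obtain ⟨N, hN, δ', hδ', H⟩ := dU_lt_of_potential hδ
    have hc := (contDiff_pxF hw).continuous
    have huc := Metric.uniformContinuousOn_iff.1
      ((isCompact_Icc.prod isCompact_Icc : IsCompact (Icc 0 T ×ˢ Icc (-N) N)).uniformContinuousOn_of_continuous
        hw.continuous.continuousOn) (δ' / 2) (half_pos hδ')
    obtain ⟨ζ, hζ, hu⟩ := huc
    refine ⟨ζ, hζ, fun t ht htt => H _ _ (hc.comp (by fun_prop)).measurable
      (hc.comp (by fun_prop)).measurable (fun x => h01 _) (fun x => h01 _) fun x hx => ?_⟩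
    have hInt : ∀ s, ∫ y in (0 : ℝ)..x, pxF w (s, y) = w (s, x) - w (s, 0) := by
      intro s
      refine intervalIntegral.integral_eq_sub_of_hasDerivAt (f := fun y => w (s, y)) (fun y _ => ?_)
        (Continuous.intervalIntegrable (hc.comp (by fun_prop)) _ _)
      have h1 : HasDerivAt (fun y : ℝ => (s, y)) ((0 : ℝ), (1 : ℝ)) y :=
        (hasDerivAt_const y s).prodMk (hasDerivAt_id y)
      exact ((hw.differentiable (by simp) (s, y)).hasFDerivAt.comp_hasDerivAt y h1)
    have hii : ∀ s, IntervalIntegrable (fun y => pxF w (s, y)) volume 0 x := fun s =>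
      Continuous.intervalIntegrable (hc.comp (by fun_prop)) _ _
    rw [intervalIntegral.integral_sub (hii t) (hii t₀), hInt, hInt]
    have hd : ∀ y ∈ Icc (-N) N, |w (t, y) - w (t₀, y)| < δ' / 2 := fun y hy =>
      hu (t, y) ⟨ht, hy⟩ (t₀, y) ⟨ht₀, hy⟩ (by simpa [Prod.dist_eq, Real.dist_eq, hζ] using htt)
    have h1 := abs_lt.1 (hd x hx)
    have h2 := abs_lt.1 (hd 0 ⟨by linarith, hN.le⟩)
    rw [abs_le]
    constructor <;> linarith [h1.1, h1.2, h2.1, h2.2]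

lemma ptF_pxF_comm {φ : ℝ × ℝ → ℝ} (hφ : ContDiff ℝ (⊤ : ℕ∞) φ) (z : ℝ × ℝ) :
    ptF (pxF φ) z = pxF (ptF φ) z := by
  have hd : DifferentiableAt ℝ (fderiv ℝ φ) z :=
    ((hφ.fderiv_right (m := (⊤ : ℕ∞)) (by simp)).differentiable (by simp)) z
  have hsymm : IsSymmSndFDerivAt ℝ φ z :=
    hφ.contDiffAt.isSymmSndFDerivAt (by simp; exact WithTop.coe_le_coe.2 (le_top : (2 : ℕ∞) ≤ ⊤))
  have e : ∀ a b : ℝ × ℝ, fderiv ℝ (fun y => fderiv ℝ φ y a) z b = fderiv ℝ (fderiv ℝ φ) z b a := by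
    intro a b
    rw [(hd.hasFDerivAt.clm_apply (hasFDerivAt_const a z)).fderiv]
    simp
  change fderiv ℝ (fun y => fderiv ℝ φ y (0, 1)) z (1, 0) = fderiv ℝ (fun y => fderiv ℝ φ y (1, 0)) z (0, 1)
  rw [e, e]
  exact hsymm _ _

/-- The continuity equation `∂_t w_x = ∂_x w_t`, in weak form. -/
lemma integral_px_pt {w φ : ℝ × ℝ → ℝ} (hw : ContDiff ℝ (⊤ : ℕ∞) w) (hφ : ContDiff ℝ (⊤ : ℕ∞) φ)
    (hc : HasCompactSupport φ) : ∫ z, pxF w z * ptF φ z = ∫ z, ptF w z * pxF φ z := by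
  rw [integral_ptF_parts (contDiff_pxF hw) hφ hc, integral_pxF_parts (contDiff_ptF hw) hφ hc]
  simp_rw [ptF_pxF_comm hw]

set_option maxHeartbeats 1000000 in
/-- The cost of the path of a potential, bounded by completing the square in the test function.
The domain of integration is enlarged so that its complement stays away from the region where the
density varies. -/
lemma Ieps_potU_le {T : ℝ} {f D σ : ℝ → ℝ} (hf : Continuous f) (hD : Continuous D)
    (hσ : Continuous σ) (hσpos : ∀ l ∈ Ioo (0 : ℝ) 1, 0 < σ l) {L l lo hi : ℝ} {w : ℝ × ℝ → ℝ}
    (hlo : 0 < lo) (hhi : hi < 1) (hw : ContDiff ℝ (⊤ : ℕ∞) w) (hbox : ∀ z, pxF w z ∈ Icc lo hi)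
    (h01 : ∀ z, pxF w z ∈ Icc (0 : ℝ) 1)
    (hout : ∀ z ∈ Om T, L ≤ |z.2| → pxF w z = l ∧ -ptF w z = f l) (ε : ℝ) :
    Ieps f D σ T ε (potU hw h01) ≤ ENNReal.ofReal (1 / 2 *
      ∫ z in Ioo 0 T ×ˢ Ioo (-(L + 1)) (L + 1), (-ptF w z - f (pxF w z) +
        ε / 2 * (D (pxF w z) * pxF (pxF w) z)) ^ 2 / σ (pxF w z)) := by
  set u : cU T := potU hw h01 with hu
  set U : Set (ℝ × ℝ) := Ioo 0 T ×ˢ Ioo (-(L + 1)) (L + 1) with hU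
  have hut : u.toFun = pxF w := rfl
  have hus := contDiff_pxF hw
  have huc := hus.continuous
  have huxc := (contDiff_pxF hus).continuous
  have hwtc := (contDiff_ptF hw).continuous
  have hσu : ∀ z, 0 < σ (pxF w z) := fun z =>
    hσpos _ ⟨hlo.trans_le (hbox z).1, (hbox z).2.trans_lt hhi⟩
  have hL2 : L2loc T (pxF (pxF w)) := ⟨huxc.measurable, fun R _ =>
    (huxc.pow 2).continuousOn.integrableOn_compact (isCompact_Icc.prod isCompact_Icc)⟩
  have hweak : HasWeakDx T u.toFun (pxF (pxF w)) := fun φ => by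
    have h1 := pair_eq_integral (pxF w) φ.px
    have h2 := pair_eq_integral (pxF (pxF w)) φ
    rw [h2, ← integral_pxF_parts hus φ.smooth φ.cpt]
    exact h1
  have hd : hasDx T u.toFun := ⟨_, hL2, hweak⟩
  have hs : L2loc T (wDx T u.toFun) ∧ HasWeakDx T u.toFun (wDx T u.toFun) := by
    rw [wDx, dif_pos hd]; exact hd.choose_spec
  rw [Ieps, if_pos hd]
  refine iSup_le fun φ => ENNReal.ofReal_le_ofReal ?_
  rw [Iexpr_eq_testExpr hD ε u hs.1 hs.2 φ, ← Iexpr_eq_testExpr hD ε u hL2 hweak φ]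
  set H : ℝ × ℝ → ℝ := fun z => -ptF w z - f (pxF w z) + ε / 2 * (D (pxF w z) * pxF (pxF w) z) with hH
  have hHc : Continuous H := by simp only [hH]; fun_prop
  have hpc : Continuous (pxF φ.toFun) := φ.px.cont
  have hpk : HasCompactSupport (pxF φ.toFun) := φ.px.cpt
  have hI : ∀ {g : ℝ × ℝ → ℝ}, Continuous g → Integrable fun z => g z * pxF φ.toFun z := fun hg =>
    (hg.mul hpc).integrable_of_hasCompactSupport hpk.mul_left
  have hexpr : IexprW f D σ T ε u.toFun (pxF (pxF w)) φ =
      ∫ z, (H z * pxF φ.toFun z - 1 / 2 * (σ (pxF w z) * pxF φ.toFun z * pxF φ.toFun z)) := by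
    have p1 : pair T (pxF w) (ptF φ.toFun) = ∫ z, ptF w z * pxF φ.toFun z :=
      (pair_eq_integral (pxF w) φ.pt).trans (integral_px_pt hw φ.smooth φ.cpt)
    have p2 : ∀ g, pair T g (pxF φ.toFun) = ∫ z, g z * pxF φ.toFun z := fun g =>
      pair_eq_integral g φ.px
    rw [IexprW, hut, p1, p2, p2, p2]
    have i1 := hI hwtc
    have i2 := hI (hf.comp huc)
    have i3 := hI (g := fun z => D (pxF w z) * pxF (pxF w) z) (by fun_prop)
    have i4 := hI (g := fun z => σ (pxF w z) * pxF φ.toFun z) (by fun_prop)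
    simp only [Function.comp_def] at i2
    have i1' : Integrable fun z => -(ptF w z * pxF φ.toFun z) := i1.neg
    have i12 : Integrable fun z => -(ptF w z * pxF φ.toFun z) - f (pxF w z) * pxF φ.toFun z :=
      i1'.sub i2
    have i123 : Integrable fun z => -(ptF w z * pxF φ.toFun z) - f (pxF w z) * pxF φ.toFun z +
        ε / 2 * (D (pxF w z) * pxF (pxF w) z * pxF φ.toFun z) := i12.add (i3.const_mul _)
    rw [← integral_const_mul, ← integral_const_mul, ← integral_neg, ← integral_sub i1' i2,
      ← integral_add i12 (i3.const_mul _), ← integral_sub i123 (i4.const_mul _)]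
    congr 1; ext z; simp only [hH]; ring
  rw [hexpr]
  have hH0 : ∀ z ∈ Ioo 0 T ×ˢ (univ : Set ℝ), L < |z.2| → H z = 0 := by
    intro z hz hzL
    have hzO : z ∈ Om T := ⟨Ioo_subset_Icc_self hz.1, mem_univ _⟩
    obtain ⟨e1, e2⟩ := hout z hzO hzL.le
    have hop : IsOpen ((Ioo 0 T ×ˢ (univ : Set ℝ)) ∩ {y : ℝ × ℝ | L < |y.2|}) :=
      (isOpen_Ioo.prod isOpen_univ).inter (isOpen_lt continuous_const (by fun_prop))
    have hev : pxF w =ᶠ[𝓝 z] fun _ => l := by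
      filter_upwards [hop.mem_nhds ⟨hz, hzL⟩] with y hy
      exact (hout y ⟨Ioo_subset_Icc_self hy.1.1, mem_univ _⟩ (le_of_lt hy.2)).1
    have e3 : pxF (pxF w) z = 0 := by
      change fderiv ℝ (pxF w) z (0, 1) = 0
      rw [hev.fderiv_eq]; simp
    simp only [hH, e1, e2, e3]; ring
  set G : ℝ × ℝ → ℝ := fun z => 1 / 2 * (H z ^ 2 / σ (pxF w z)) with hG
  have hGc : Continuous G := continuous_const.mul ((hHc.pow 2).div₀ (hσ.comp huc) fun z => (hσu z).ne')
  have hUm : MeasurableSet U := measurableSet_Ioo.prod measurableSet_Ioo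
  have hGi : IntegrableOn G U := (hGc.continuousOn.integrableOn_compact
    (isCompact_Icc.prod isCompact_Icc : IsCompact (Icc 0 T ×ˢ Icc (-(L + 1)) (L + 1)))).mono_set
    (prod_mono Ioo_subset_Icc_self Ioo_subset_Icc_self)
  rw [← integral_const_mul, ← integral_indicator hUm]
  have iL : Integrable fun z => H z * pxF φ.toFun z - 1 / 2 * (σ (pxF w z) * pxF φ.toFun z * pxF φ.toFun z) :=
    (hI hHc).sub ((hI (g := fun z => σ (pxF w z) * pxF φ.toFun z) (by fun_prop)).const_mul _)
  refine integral_mono iL (hGi.integrable_indicator hUm) fun z => ?_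
  have hsz := hσu z
  by_cases hz : z ∈ U
  · rw [indicator_of_mem hz]
    change _ ≤ 1 / 2 * (H z ^ 2 / σ (pxF w z))
    have : 0 ≤ (H z - σ (pxF w z) * pxF φ.toFun z) ^ 2 / σ (pxF w z) := by positivity
    have e : (H z - σ (pxF w z) * pxF φ.toFun z) ^ 2 / σ (pxF w z) = H z ^ 2 / σ (pxF w z) -
        2 * (H z * pxF φ.toFun z) + σ (pxF w z) * pxF φ.toFun z * pxF φ.toFun z := by
      field_simp; ring
    linarith
  · rw [indicator_of_notMem hz]
    by_cases hzt : z ∈ Ioo 0 T ×ˢ (univ : Set ℝ)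
    · have hzL : L < |z.2| := by
        by_contra h
        push Not at h
        have := abs_le.1 h
        exact hz ⟨hzt.1, by linarith, by linarith⟩
      rw [hH0 z hzt hzL]
      nlinarith [mul_nonneg hsz.le (mul_self_nonneg (pxF φ.toFun z))]
    · have : pxF φ.toFun z = 0 := by
        by_contra h
        exact hzt (φ.px.supp h)
      simp [this]

set_option maxHeartbeats 1000000 in
/-- Approximate recovery: for small viscosity the viscous correction to the cost of a fixed smooth
path is negligible. -/
lemma exists_recovery {T : ℝ} (hT : 0 < T) {f D σ : ℝ → ℝ} (hf : Continuous f) (hD : Continuous D)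
    (hσ : Continuous σ) (hσ0 : ∀ l ∈ Icc (0 : ℝ) 1, 0 ≤ σ l) (hσpos : ∀ l ∈ Ioo (0 : ℝ) 1, 0 < σ l)
    (μ : YM T) {c : ℝ} (hc : 0 ≤ c) (hμ : calI f σ T μ ≤ ENNReal.ofReal c) (J : ℕ) {F : ℕ → ℝ → ℝ}
    {k : ℕ → ℝ × ℝ → ℝ} (hF : ∀ j, Continuous (F j)) (hk : ∀ j, Continuous (k j))
    (hkc : ∀ j, HasCompactSupport (k j)) {η : ℝ} (hη : 0 < η) :
    ∃ (u : cU T) (ε₀ : ℝ), 0 < ε₀ ∧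
      (∀ ε, 0 < ε → ε < ε₀ → Ieps f D σ T ε u ≤ ENNReal.ofReal (c + η)) ∧
      ∀ j < J, |(∫ z in Om T, F j (u.toFun z) * k j z) - ∫ z in Om T, μ.mom (F j) z * k j z| ≤ η := by
  obtain ⟨L, l, lo, hi, w, hL, hlo, hhi, hl, hw, hbox, hout, hcost, htest⟩ :=
    exists_approx_potential hT hf hσ hσ0 hσpos μ hc hμ J hF hk hkc hη
  have h01 : ∀ z, pxF w z ∈ Icc (0 : ℝ) 1 := fun z =>
    ⟨hlo.le.trans (hbox z).1, (hbox z).2.trans hhi.le⟩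
  have hus := contDiff_pxF hw
  have huc := hus.continuous
  have huxc := (contDiff_pxF hus).continuous
  have hwtc := (contDiff_ptF hw).continuous
  have hσu : ∀ z, σ (pxF w z) ≠ 0 := fun z =>
    (hσpos _ ⟨hlo.trans_le (hbox z).1, (hbox z).2.trans_lt hhi⟩).ne'
  set U : Set (ℝ × ℝ) := Ioo 0 T ×ˢ Ioo (-(L + 1)) (L + 1) with hU
  set G : ℝ × ℝ → ℝ := fun z => -ptF w z - f (pxF w z) with hG
  set q : ℝ × ℝ → ℝ := fun z => D (pxF w z) * pxF (pxF w) z with hq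
  have hGc : Continuous G := by simp only [hG]; fun_prop
  have hqc : Continuous q := by simp only [hq]; fun_prop
  have hInt : ∀ {g : ℝ × ℝ → ℝ}, Continuous g → IntegrableOn (fun z => g z / σ (pxF w z)) U := fun hg =>
    ((hg.div₀ (hσ.comp huc) hσu).continuousOn.integrableOn_compact
    (isCompact_Icc.prod isCompact_Icc : IsCompact (Icc 0 T ×ˢ Icc (-(L + 1)) (L + 1)))).mono_set
    (prod_mono Ioo_subset_Icc_self Ioo_subset_Icc_self)
  have i0 : IntegrableOn (fun z => G z ^ 2 / σ (pxF w z)) U := hInt (hGc.pow 2)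
  have i1 : IntegrableOn (fun z => G z * q z / σ (pxF w z)) U := hInt (hGc.mul hqc)
  have i2 : IntegrableOn (fun z => q z ^ 2 / σ (pxF w z)) U := hInt (hqc.pow 2)
  have hG0 : ∫ z in U, G z ^ 2 / σ (pxF w z) ≤ 2 * c + η := by
    refine le_trans (le_of_eq ?_) hcost
    refine setIntegral_eq_of_subset_of_forall_sdiff_eq_zero
      (measurableSet_Ioo.prod measurableSet_Ioo)
      (prod_mono_right (Ioo_subset_Ioo (by linarith) (by linarith))) fun z hz => ?_
    have hzL : L ≤ |z.2| := by
      by_contra h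
      push Not at h
      exact hz.2 ⟨hz.1.1, abs_lt.1 h⟩
    obtain ⟨e1, e2⟩ := hout z ⟨Ioo_subset_Icc_self hz.1.1, mem_univ _⟩ hzL
    have hGz : G z = 0 := by
      simp only [hG]
      rw [e1, e2]
      ring
    rw [hGz]; simp
  set C1 := ∫ z in U, G z * q z / σ (pxF w z) with hC1
  set C2 := ∫ z in U, q z ^ 2 / σ (pxF w z) with hC2
  have hexp : ∀ ε : ℝ, ∫ z in U, (G z + ε / 2 * q z) ^ 2 / σ (pxF w z) =
      (∫ z in U, G z ^ 2 / σ (pxF w z)) + ε * C1 + ε ^ 2 / 4 * C2 := by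
    intro ε
    rw [hC1, hC2, ← integral_const_mul, ← integral_const_mul, ← integral_add i0 (i1.const_mul ε)]
    have i01 : IntegrableOn (fun z => G z ^ 2 / σ (pxF w z) + ε * (G z * q z / σ (pxF w z))) U :=
      i0.add (i1.const_mul ε)
    rw [← integral_add i01 (i2.const_mul _)]
    congr 1; ext z; ring
  have hcont : Tendsto (fun ε : ℝ => ε * C1 + ε ^ 2 / 4 * C2) (𝓝 0) (𝓝 0) := by
    have : Continuous fun ε : ℝ => ε * C1 + ε ^ 2 / 4 * C2 := by fun_prop
    simpa using this.tendsto 0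
  obtain ⟨ε₀, hε₀, hball⟩ := Metric.eventually_nhds_iff.1 (hcont.eventually (gt_mem_nhds hη))
  refine ⟨potU hw h01, ε₀, hε₀, fun ε h0 h1 => ?_, htest⟩
  refine (Ieps_potU_le hf hD hσ hσpos hlo hhi hw hbox h01 hout ε).trans (ENNReal.ofReal_le_ofReal ?_)
  change 1 / 2 * ∫ z in U, (G z + ε / 2 * q z) ^ 2 / σ (pxF w z) ≤ c + η
  rw [hexp]
  have := hball (show dist ε 0 < ε₀ by rw [Real.dist_eq, sub_zero, abs_of_pos h0]; exact h1)
  linarith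

/-- A diagonal choice: properties that hold eventually for each index hold eventually along indices
growing to infinity. -/
lemma exists_diag {P : ℕ → ℕ → Prop} (h : ∀ J, ∀ᶠ n in atTop, P J n) :
    ∃ Jn : ℕ → ℕ, Tendsto Jn atTop atTop ∧ ∀ᶠ n in atTop, P (Jn n) n := by
  refine ⟨fun n => Nat.findGreatest (fun J => P J n) n, tendsto_atTop.2 fun J => ?_, ?_⟩
  · filter_upwards [h J, eventually_ge_atTop J] with n h1 h2 using Nat.le_findGreatest h2 h1
  · filter_upwards [h 0] with n hn
    exact Nat.findGreatest_spec (P := fun J => P J n) (Nat.zero_le n) hn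

/-- The Γ-limsup inequality: the approximate recoveries for the first `J` tests and error
`1 / (J + 1)` are combined by a diagonal choice of `J`. -/
theorem gammaLimsup {T : ℝ} (hT : 0 < T) {f D σ : ℝ → ℝ} (hf : Continuous f) (hD : Continuous D)
    (hσ : Continuous σ) (hσ0 : ∀ l ∈ Icc (0 : ℝ) 1, 0 ≤ σ l) (hσpos : ∀ l ∈ Ioo (0 : ℝ) 1, 0 < σ l)
    {dw : YM T → YM T → ℝ} (hdw : GeneratesWeakStar T dw) :
    GammaLimsupLE (dM T dw) (fun ε => calIeps f D σ T ε) (calI f σ T) := by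
  intro x e he0 he
  by_cases htop : calI f σ T x = ⊤
  · refine ⟨fun _ => x, ?_, by rw [htop]; exact le_top⟩
    have h1 : Tendsto (fun _ : ℕ => dw x x) atTop (𝓝 0) :=
      (dw_iff hdw (fun _ => x) x).2 fun F _ k _ _ => tendsto_const_nhds
    simpa [dM, dcU_self] using h1
  set c := (calI f σ T x).toReal with hc
  have hc0 : 0 ≤ c := ENNReal.toReal_nonneg
  have hcx : calI f σ T x = ENNReal.ofReal c := (ENNReal.ofReal_toReal htop).symm
  obtain ⟨F, k, hF, hk, hkc, htests⟩ := exists_tests T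
  choose u ε₀ hε₀ hcost htest using fun J : ℕ => exists_recovery hT hf hD hσ hσ0 hσpos x hc0 hcx.le J
    hF hk hkc (Nat.one_div_pos_of_nat (α := ℝ) (n := J))
  obtain ⟨Jn, hJn, hev⟩ := exists_diag (P := fun J n => e n < ε₀ J) fun J =>
    he.eventually (gt_mem_nhds (hε₀ J))
  have hη : Tendsto (fun n => 1 / ((Jn n : ℝ) + 1)) atTop (𝓝 0) :=
    tendsto_one_div_add_atTop_nhds_zero_nat.comp hJn
  set xs : ℕ → YM T := fun n => diracYM (u (Jn n)) with hxs
  have hb : ∀ᶠ n in atTop, calIeps f D σ T (e n) (xs n) ≤ ENNReal.ofReal (c + 1 / ((Jn n : ℝ) + 1)) := by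
    filter_upwards [hev] with n hn
    rw [hxs, calIeps_dirac]
    exact hcost (Jn n) (e n) (he0 n) hn
  have hW : WConv xs x := by
    refine htests xs x fun j => ?_
    rw [tendsto_iff_dist_tendsto_zero]
    refine squeeze_zero' (Eventually.of_forall fun n => dist_nonneg) ?_ hη
    filter_upwards [hJn.eventually_gt_atTop j] with n hn
    rw [Real.dist_eq, hxs]
    simp only [diracYM_mom]
    exact htest (Jn n) j hn
  have hd : Tendsto (fun n => dcU T (xs n).bar x.bar) atTop (𝓝 0) := by
    obtain ⟨ζ, hζ, hKZ⟩ := exists_KZ hT hf hD hσ (M := c + 1) (by linarith)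
    have hall : ∀ᶠ n in atTop, xs n ∈ KZ T ζ := by
      filter_upwards [hb, he.eventually (gt_mem_nhds one_pos)] with n h1 h2
      refine hKZ (e n) ⟨he0 n, h2.le⟩ (xs n) (h1.trans (ENNReal.ofReal_le_ofReal ?_))
      have : 1 / ((Jn n : ℝ) + 1) ≤ 1 := by
        rw [div_le_one (by positivity)]
        linarith [(Nat.cast_nonneg (Jn n) : (0 : ℝ) ≤ Jn n)]
      linarith
    obtain ⟨N, hN⟩ := eventually_atTop.1 hall
    rw [← tendsto_add_atTop_iff_nat N]
    exact dcU_tendsto_of_KZ hT hζ (μ := fun n => xs (n + N)) (fun n => hN _ (Nat.le_add_left _ _))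
      fun F' hF' k' hk' hkc' => (tendsto_add_atTop_iff_nat N).2 (hW F' hF' k' hk' hkc')
  refine ⟨xs, ?_, ?_⟩
  · have := ((dw_iff hdw xs x).2 hW).add hd
    simpa [dM] using this
  · rw [hcx]
    have hlim : Tendsto (fun n => ENNReal.ofReal (c + 1 / ((Jn n : ℝ) + 1))) atTop (𝓝 (ENNReal.ofReal c)) := by
      refine ENNReal.tendsto_ofReal ?_
      simpa using hη.const_add c
    rw [← hlim.limsup_eq]
    exact limsup_le_limsup hb

/-- The sequence `{𝓘_ε}` is equicoercive on `(𝓜, d_𝓜)` and Γ-converges,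
as `ε → 0`, to the functional `𝓘`. -/
theorem gamma_convergence_calIeps (T : ℝ) (hT : 0 < T) (f D σ : ℝ → ℝ)
    (hf : ∃ C : NNReal, LipschitzOnWith C f (Icc 0 1))
    (hD : ContinuousOn D (Icc 0 1)) (hσ : ContinuousOn σ (Icc 0 1))
    (hDpos : ∃ c > 0, ∀ v ∈ Icc (0:ℝ) 1, c ≤ D v)
    (hσpos : ∀ v ∈ Ioo (0:ℝ) 1, 0 < σ v)
    (dw : YM T → YM T → ℝ) (hdw : GeneratesWeakStar T dw) :
    Equicoercive (dM T dw) (fun ε => calIeps f D σ T ε) ∧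
    GammaConvergesTo (dM T dw) (fun ε => calIeps f D σ T ε) (calI f σ T) := by
  obtain ⟨C, hfL⟩ := hf
  have hf' : Continuous fun l => f (clip l) := continuous_comp_clip hfL.continuousOn
  have hD' : Continuous fun l => D (clip l) := continuous_comp_clip hD
  have hσ' : Continuous fun l => σ (clip l) := continuous_comp_clip hσ
  have hσp : ∀ l ∈ Ioo (0 : ℝ) 1, 0 < σ (clip l) := fun l hl => by
    rw [clip_of_mem (Ioo_subset_Icc_self hl)]; exact hσpos l hl
  have hσ0 : ∀ l ∈ Icc (0 : ℝ) 1, 0 ≤ σ (clip l) := by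
    have hcl : closure (Ioo (0 : ℝ) 1) ⊆ {l | 0 ≤ σ (clip l)} :=
      closure_minimal (fun l hl => (hσp l hl).le) (isClosed_le continuous_const hσ')
    rwa [closure_Ioo zero_ne_one] at hcl
  have h1 := equicoercive hT hf' hD' hσ' hdw
  have h2 := gammaLiminf hf' hD' hσ' hdw
  have h3 := gammaLimsup hT hf' hD' hσ' hσ0 hσp hdw
  simp only [calIeps_clip, calI_clip] at h1 h2 h3
  exact ⟨h1, h2, h3⟩

end GammaSCL
end
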